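/- (Sub/supersolution existence theorem; flat case of Theorem 5.1.) Let n ≥ 3, p > n, γ ∈ (2−n, 0), δ = γ/2. Let (τ, σ, ρ, J) be smooth data with ‖τ‖_{W^{1,p}_{δ−1}} < ∞, σ symmetric trace-free divergence-free with ‖σ‖_{L^∞_{δ−1}} < ∞, ρ ≥ 0 with ‖ρ‖_{L^p_{2δ−2}} < ∞, and ‖J‖_{L^p_{δ−2}} < ∞. Suppose there exist smooth functions φ₋, φ₊ : ℝⁿ → ℝ and constants 0 < α ≤ η with φ₋ − α ∈ W^{2,p}_δ, φ₊ − η ∈ W^{2,p}_δ, 0 < φ₋ ≤ φ₊ pointwise, such that: (a) for every continuous φ with 0 < φ ≤ φ₊ and every smooth W ∈ W^{2,p}_δ solving Δ_L W + ((n−1)/n) φ^N ∇τ + J = 0, one has Δφ₊ + c_n|σ + 𝒟W|² φ₊^{−N−1} − b_n τ² φ₊^{N−1} + c_n ρ φ₊^{−N/2} ≤ 0; and (b) for every continuous φ ≥ φ₋ and every smooth W ∈ W^{2,p}_δ solving the same vector equation with this φ, one has Δφ₋ + c_n|σ + 𝒟W|² φ₋^{−N−1} − b_n τ² φ₋^{N−1}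 + c_n ρ φ₋^{−N/2} ≥ 0. Then there exist a smooth function φ with φ₋ ≤ φ ≤ φ₊ and a smooth vector field W with ‖W‖_{W^{2,p}_δ} < ∞ solving the conformal constraint system (i)–(ii), and moreover φ − A ∈ W^{2,p}_δ for some constant A > 0. -/

import Mathlib

/-!
The proof is a Schauder fixed point argument for integral equations, followed by comparison with the
barriers and bootstrapping.

Let `Γ` be the Newtonian kernel (`gam`) and `msK` the fundamental solution of the vector Laplacian.
For a continuous conformal factor `u` between two positive constants, convolution with `msK` produces
the decaying solution `W(u) = mW τ J u` of the momentum equation, and the Lichnerowicz equation takes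
the form `Δu = F(u, W(u))` with `F = hF`. With `c(φ) = max (φ₋, min (φ, φ₊))`, the map
`φ ↦ α + Γ * F(c(φ), W(c(φ)))` has bounded, equi-Lipschitz range and is continuous for pointwise
convergence (`Hom.cv_decay`, `Hom.cv_lipschitz`, `Dat.tendsto_hF`), so it has a fixed point
(`exists_fixed`, deduced from `brouwer` by interpolation with finite partitions of unity and a
diagonal argument). Brouwer's theorem itself comes from the nonexistence of a `C¹` retraction.

The barrier inequalities are available for smooth conformal factors only through smooth solutions of
the momentum equation; by approximation they extend to `u = c(φ)` and `W(u)` (`Dat.super`, `Dat.sub`).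
Where `φ > φ₊` one has `u = φ₊`, so the maximum principle `le_of_lap_le`, valid for potentials of
merely continuous densities, gives `φ ≤ φ₊`; similarly `φ₋ ≤ φ`. The constant at infinity of `φ` is
`α ≤ η`, which is what the comparison at infinity requires. Hence `c(φ) = φ`, and since a potential of
a `C^k` density is `C^(k+1)`, the solution is smooth (`Dat.exists_solution`).

The solutions lie in `W^{2,p}_δ` by three facts. The Riesz potentials of orders one and two are
bounded between weighted Lebesgue spaces (`schur`), which handles the functions and their first
derivatives. The Calderón–Zygmund inequality `‖∂ᵢ∂ⱼψ‖_p ≤ C ‖Δψ‖_p` for test functions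
(`calderon_zygmund`) is proved by heat flow and a Bellman function: the Hessian of `bell` dominates
`2 |du| |dv|`, so that the Bellman functional along the heat flows of `Δψ` and of a dual function
controls the bilinear form `∫ ∂ᵢ∂ⱼψ g`. Cutting off with the weights then yields the weighted estimate
`weighted_cz` for second derivatives. Conversely, membership in weighted Sobolev spaces gives
pointwise decay by a Morrey type estimate (`morrey`), derived from the representation of a function by
its gradient.
-/

noncomputable section

open MeasureTheory Filter
open scoped ENNReal Topology

/-- `n`-dimensional Euclidean space. -/
abbrev Euc (n : ℕ) := EuclideanSpace ℝ (Fin n)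

/-- The Japanese bracket `⟨x⟩ = (1 + ‖x‖²)^(1/2)`. -/
def jap {n : ℕ} (x : Euc n) : ℝ := Real.sqrt (1 + ‖x‖ ^ 2)

/-- Partial derivative `∂ᵢ f` of a real-valued function. -/
def pd {n : ℕ} (i : Fin n) (f : Euc n → ℝ) (x : Euc n) : ℝ :=
  fderiv ℝ f x (EuclideanSpace.single i 1)

/-- The Euclidean Laplacian `Δf = Σᵢ ∂ᵢ²f`. -/
def lap {n : ℕ} (f : Euc n → ℝ) (x : Euc n) : ℝ :=
  ∑ i, pd i (pd i f) x

/-- Divergence of a vector field. -/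
def divg {n : ℕ} (W : Euc n → Euc n) (x : Euc n) : ℝ :=
  ∑ i, pd i (fun y => W y i) x

/-- The conformal Killing operator `(𝒟W)ᵢⱼ = ∂ᵢWⱼ + ∂ⱼWᵢ − (2/n)(div W)δᵢⱼ`. -/
def confKill {n : ℕ} (W : Euc n → Euc n) (x : Euc n) : Matrix (Fin n) (Fin n) ℝ :=
  Matrix.of fun i j =>
    pd i (fun y => W y j) x + pd j (fun y => W y i) x
      - (2 / (n : ℝ)) * divg W x * (if i = j then 1 else 0)

/-- The Frobenius norm of a matrix. -/
def frob {n : ℕ} (M : Matrix (Fin n) (Fin n) ℝ) : ℝ :=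
  Real.sqrt (∑ i, ∑ j, (M i j) ^ 2)

/-- The vector Laplacian `(Δ_L W)ⱼ = −Σᵢ ∂ᵢ (𝒟W)ᵢⱼ`. -/
def vecLap {n : ℕ} (W : Euc n → Euc n) (x : Euc n) : Euc n :=
  (EuclideanSpace.equiv (Fin n) ℝ).symm
    (fun j => -∑ i, pd i (fun y => confKill W y i j) x)

/-- Weighted `L^p_δ` norm (as an extended nonnegative real). -/
def LpW {n : ℕ} {F : Type*} [NormedAddCommGroup F] (p δ : ℝ) (f : Euc n → F) : ℝ≥0∞ :=
  (∫⁻ x, ENNReal.ofReal ((jap x ^ (-δ - (n : ℝ) / p) * ‖f x‖) ^ p)) ^ (1 / p)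

/-- Weighted Sobolev `W^{k,p}_δ` norm. -/
def SobW {n : ℕ} {F : Type*} [NormedAddCommGroup F] [NormedSpace ℝ F]
    (k : ℕ) (p δ : ℝ) (f : Euc n → F) : ℝ≥0∞ :=
  ∑ j ∈ Finset.range (k + 1),
    (∫⁻ x, ENNReal.ofReal
      ((jap x ^ (-δ - (n : ℝ) / p + (j : ℝ)) * ‖iteratedFDeriv ℝ j f x‖) ^ p)) ^ (1 / p)

/-- Weighted `L^∞_δ` norm. -/
def LinfW {n : ℕ} {F : Type*} [NormedAddCommGroup F] (δ : ℝ) (f : Euc n → F) : ℝ≥0∞ :=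
  ⨆ x, ENNReal.ofReal (jap x ^ (-δ) * ‖f x‖)

/-- Weighted `L^∞_δ` norm of a matrix field, pointwise Frobenius norm. -/
def LinfWM {n : ℕ} (δ : ℝ) (σ : Euc n → Matrix (Fin n) (Fin n) ℝ) : ℝ≥0∞ :=
  ⨆ x, ENNReal.ofReal (jap x ^ (-δ) * frob (σ x))

/-- `N = 2n/(n−2)`. -/
def Nc (n : ℕ) : ℝ := 2 * n / ((n : ℝ) - 2)
/-- `c_n = (n−2)/(4(n−1))`. -/
def cc (n : ℕ) : ℝ := ((n : ℝ) - 2) / (4 * ((n : ℝ) - 1))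
/-- `b_n = (n−2)/(4n)`. -/
def bc (n : ℕ) : ℝ := ((n : ℝ) - 2) / (4 * (n : ℝ))

/-- Componentwise smoothness of a matrix field. -/
def SmoothMat {n : ℕ} (σ : Euc n → Matrix (Fin n) (Fin n) ℝ) : Prop :=
  ∀ i j, ContDiff ℝ (⊤ : ℕ∞) fun x => σ x i j

/-- A matrix field is symmetric, trace-free and divergence-free. -/
def SymTT {n : ℕ} (σ : Euc n → Matrix (Fin n) (Fin n) ℝ) : Prop :=
  (∀ x i j, σ x i j = σ x j i) ∧ (∀ x, ∑ i, σ x i i = 0) ∧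
    (∀ x j, ∑ i, pd i (fun y => σ y i j) x = 0)

/-- The left-hand side of the Lichnerowicz (Hamiltonian) equation (i). -/
def HamExpr {n : ℕ} (τ : Euc n → ℝ) (σ : Euc n → Matrix (Fin n) (Fin n) ℝ)
    (ρ : Euc n → ℝ) (u : Euc n → ℝ) (W : Euc n → Euc n) (x : Euc n) : ℝ :=
  lap u x + cc n * frob (σ x + confKill W x) ^ 2 * u x ^ (-(Nc n) - 1)
    - bc n * τ x ^ 2 * u x ^ (Nc n - 1) + cc n * ρ x * u x ^ (-(Nc n) / 2)

/-- Equation (i): the Lichnerowicz equation. -/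
def HamEq {n : ℕ} (τ : Euc n → ℝ) (σ : Euc n → Matrix (Fin n) (Fin n) ℝ)
    (ρ : Euc n → ℝ) (u : Euc n → ℝ) (W : Euc n → Euc n) : Prop :=
  ∀ x, HamExpr τ σ ρ u W x = 0

/-- Equation (ii): the momentum constraint `Δ_L W + ((n−1)/n) u^N ∇τ + J = 0`. -/
def MomEq {n : ℕ} (τ : Euc n → ℝ) (J : Euc n → Euc n)
    (u : Euc n → ℝ) (W : Euc n → Euc n) : Prop :=
  ∀ x, vecLap W x + ((((n : ℝ) - 1) / n) * u x ^ Nc n) • gradient τ x + J x = 0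

/-- Global supersolution property for `φ₊`. -/
def GlobalSuperSol {n : ℕ} (p δ : ℝ) (τ : Euc n → ℝ)
    (σ : Euc n → Matrix (Fin n) (Fin n) ℝ) (ρ : Euc n → ℝ) (J : Euc n → Euc n)
    (φp : Euc n → ℝ) : Prop :=
  ∀ φ : Euc n → ℝ, Continuous φ → (∀ x, 0 < φ x ∧ φ x ≤ φp x) →
    ∀ W : Euc n → Euc n, ContDiff ℝ (⊤ : ℕ∞) W → SobW 2 p δ W < ⊤ → MomEq τ J φ W →
    ∀ x, HamExpr τ σ ρ φp W x ≤ 0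

/-- Global subsolution property for `φ₋`. -/
def GlobalSubSol {n : ℕ} (p δ : ℝ) (τ : Euc n → ℝ)
    (σ : Euc n → Matrix (Fin n) (Fin n) ℝ) (ρ : Euc n → ℝ) (J : Euc n → Euc n)
    (φm : Euc n → ℝ) : Prop :=
  ∀ φ : Euc n → ℝ, Continuous φ → (∀ x, φm x ≤ φ x) →
    ∀ W : Euc n → Euc n, ContDiff ℝ (⊤ : ℕ∞) W → SobW 2 p δ W < ⊤ → MomEq τ J φ W →
    ∀ x, 0 ≤ HamExpr τ σ ρ φm W x

/-! ### Partial derivatives -/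

section pdCalculus

variable {n : ℕ}

/-- The `i`-th standard basis vector. -/
abbrev eb (i : Fin n) : Euc n := EuclideanSpace.single i (1 : ℝ)

lemma norm_eb (i : Fin n) : ‖(eb i : Euc n)‖ = 1 := by simp [eb]

lemma euc_eq_sum (x : Euc n) : x = ∑ i, x i • (eb i : Euc n) := by
  have := (EuclideanSpace.basisFun (Fin n) ℝ).sum_repr x
  simpa [EuclideanSpace.basisFun_apply] using this.symm

lemma abs_coord_le (x : Euc n) (i : Fin n) : |x i| ≤ ‖x‖ := by
  simpa using EuclideanSpace.norm_eq x ▸ PiLp.norm_apply_le x i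

lemma pd_eq_of_hasFDerivAt {f : Euc n → ℝ} {L : Euc n →L[ℝ] ℝ} {x : Euc n} (i : Fin n)
    (h : HasFDerivAt f L x) : pd i f x = L (eb i) := by
  simp [pd, h.fderiv, eb]

lemma pd_congr {f g : Euc n → ℝ} {x : Euc n} (i : Fin n) (h : f =ᶠ[𝓝 x] g) :
    pd i f x = pd i g x := by
  simp [pd, h.fderiv_eq]

lemma pd_congr_nhds {f g : Euc n → ℝ} {x : Euc n} (i : Fin n) (h : f =ᶠ[𝓝 x] g) :
    pd i f =ᶠ[𝓝 x] pd i g := by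
  filter_upwards [h.eventuallyEq_nhds] with y hy using pd_congr i hy

lemma lap_congr {f g : Euc n → ℝ} {x : Euc n} (h : f =ᶠ[𝓝 x] g) :
    lap f x = lap g x := by
  unfold lap
  exact Finset.sum_congr rfl fun i _ => pd_congr i (pd_congr_nhds i h)

lemma pd_const (i : Fin n) (c : ℝ) (x : Euc n) : pd i (fun _ => c) x = 0 := by
  simp [pd]

lemma pd_add (i : Fin n) {f g : Euc n → ℝ} {x : Euc n} (hf : DifferentiableAt ℝ f x)
    (hg : DifferentiableAt ℝ g x) : pd i (fun y => f y + g y) x = pd i f x + pd i g x := by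
  rw [pd_eq_of_hasFDerivAt i (hf.hasFDerivAt.fun_add hg.hasFDerivAt)]
  simp [pd, eb]

lemma pd_sub (i : Fin n) {f g : Euc n → ℝ} {x : Euc n} (hf : DifferentiableAt ℝ f x)
    (hg : DifferentiableAt ℝ g x) : pd i (fun y => f y - g y) x = pd i f x - pd i g x := by
  rw [pd_eq_of_hasFDerivAt i (hf.hasFDerivAt.fun_sub hg.hasFDerivAt)]
  simp [pd, eb]

lemma pd_neg (i : Fin n) (f : Euc n → ℝ) (x : Euc n) :
    pd i (fun y => - f y) x = - pd i f x := by
  simp [pd, fderiv_fun_neg]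

lemma pd_mul (i : Fin n) {f g : Euc n → ℝ} {x : Euc n} (hf : DifferentiableAt ℝ f x)
    (hg : DifferentiableAt ℝ g x) :
    pd i (fun y => f y * g y) x = pd i f x * g x + f x * pd i g x := by
  rw [pd_eq_of_hasFDerivAt i (hf.hasFDerivAt.fun_mul hg.hasFDerivAt)]
  simp [pd, eb]; ring

lemma pd_const_mul (i : Fin n) (c : ℝ) {f : Euc n → ℝ} {x : Euc n}
    (hf : DifferentiableAt ℝ f x) :
    pd i (fun y => c * f y) x = c * pd i f x := by
  rw [pd_eq_of_hasFDerivAt i (hf.hasFDerivAt.const_mul c)]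
  simp [pd, eb]

lemma pd_sum {ι : Type*} (s : Finset ι) (i : Fin n) {f : ι → Euc n → ℝ} {x : Euc n}
    (hf : ∀ k ∈ s, DifferentiableAt ℝ (f k) x) :
    pd i (fun y => ∑ k ∈ s, f k y) x = ∑ k ∈ s, pd i (f k) x := by
  rw [pd_eq_of_hasFDerivAt i (HasFDerivAt.fun_sum fun k hk => (hf k hk).hasFDerivAt)]
  simp [pd, eb]

lemma pd_comp (i : Fin n) {f : Euc n → ℝ} {F : ℝ → ℝ} {F' : ℝ} {x : Euc n}
    (hF : HasDerivAt F F' (f x)) (hf : DifferentiableAt ℝ f x) :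
    pd i (fun y => F (f y)) x = F' * pd i f x := by
  rw [show (fun y => F (f y)) = F ∘ f from rfl,
    pd_eq_of_hasFDerivAt i (hF.comp_hasFDerivAt x hf.hasFDerivAt)]
  simp [pd, eb]

lemma pd_coord (i j : Fin n) (x : Euc n) :
    pd i (fun y : Euc n => y j) x = if i = j then 1 else 0 := by
  have h : HasFDerivAt (fun y : Euc n => y j) (EuclideanSpace.proj j : Euc n →L[ℝ] ℝ) x :=
    (EuclideanSpace.proj j : Euc n →L[ℝ] ℝ).hasFDerivAt
  rw [pd_eq_of_hasFDerivAt i h]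
  simp [eb, eq_comm]

lemma fderiv_apply_eq_sum_pd (f : Euc n → ℝ) (x v : Euc n) :
    fderiv ℝ f x v = ∑ i, v i * pd i f x := by
  conv_lhs => rw [euc_eq_sum v]
  simp [pd]

lemma hasDerivAt_line {f : Euc n → ℝ} {x : Euc n} (i : Fin n) (t : ℝ)
    (hf : DifferentiableAt ℝ f (x + t • eb i)) :
    HasDerivAt (fun s : ℝ => f (x + s • eb i)) (pd i f (x + t • eb i)) t := by
  have h1 : HasDerivAt (fun s : ℝ => x + s • (eb i : Euc n)) (eb i) t := by
    simpa using ((hasDerivAt_id t).smul_const (eb i : Euc n)).const_add x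
  exact hf.hasFDerivAt.comp_hasDerivAt t h1

lemma abs_pd_le (i : Fin n) (f : Euc n → ℝ) (x : Euc n) : |pd i f x| ≤ ‖fderiv ℝ f x‖ := by
  have := (fderiv ℝ f x).le_opNorm (eb i)
  rw [norm_eb, mul_one] at this
  exact this

lemma norm_fderiv_le_sum_pd (f : Euc n → ℝ) (x : Euc n) :
    ‖fderiv ℝ f x‖ ≤ ∑ i, |pd i f x| := by
  refine ContinuousLinearMap.opNorm_le_bound _ (Finset.sum_nonneg fun i _ => abs_nonneg _) ?_
  intro v
  rw [fderiv_apply_eq_sum_pd, Finset.sum_mul]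
  refine (norm_sum_le _ _).trans (Finset.sum_le_sum fun i _ => ?_)
  rw [norm_mul, Real.norm_eq_abs, Real.norm_eq_abs, mul_comm]
  exact mul_le_mul_of_nonneg_left (abs_coord_le v i) (abs_nonneg _)

lemma ContDiffAt.pdD {f : Euc n → ℝ} {x : Euc n} {k m : WithTop ℕ∞} (hf : ContDiffAt ℝ m f x)
    (hkm : k + 1 ≤ m) (i : Fin n) : ContDiffAt ℝ k (pd i f) x := by
  have := (hf.fderiv_right hkm)
  exact this.clm_apply contDiffAt_const

lemma ContDiff.pdD {f : Euc n → ℝ} {k m : WithTop ℕ∞} (hf : ContDiff ℝ m f)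
    (hkm : k + 1 ≤ m) (i : Fin n) : ContDiff ℝ k (pd i f) :=
  contDiff_iff_contDiffAt.2 fun x => hf.contDiffAt.pdD hkm i

lemma ContDiff.pd_top {f : Euc n → ℝ} (hf : ContDiff ℝ (⊤ : ℕ∞) f) (i : Fin n) :
    ContDiff ℝ (⊤ : ℕ∞) (pd i f) :=
  hf.pdD (by norm_cast) i

lemma ContDiffOn.pd_of_isOpen {f : Euc n → ℝ} {U : Set (Euc n)} {k m : WithTop ℕ∞}
    (hf : ContDiffOn ℝ m f U) (hU : IsOpen U)
    (hkm : k + 1 ≤ m) (i : Fin n) : ContDiffOn ℝ k (pd i f) U := fun x hx =>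
  ((hf.contDiffAt (hU.mem_nhds hx)).pdD hkm i).contDiffWithinAt

lemma ContDiff.lap_top {f : Euc n → ℝ} (hf : ContDiff ℝ (⊤ : ℕ∞) f) :
    ContDiff ℝ (⊤ : ℕ∞) (lap f) := by
  unfold lap
  exact ContDiff.sum fun i _ => ContDiff.pd_top (ContDiff.pd_top hf i) i

lemma pd_comm (i j : Fin n) {f : Euc n → ℝ} {x : Euc n} (hf : ContDiffAt ℝ 2 f x) :
    pd i (pd j f) x = pd j (pd i f) x := by
  have hsymm := hf.isSymmSndFDerivAt (by simp)
  have key : ∀ k : Fin n, ∀ v, fderiv ℝ (pd k f) x v = fderiv ℝ (fderiv ℝ f) x v (eb k) := by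
    intro k v
    have hd : DifferentiableAt ℝ (fderiv ℝ f) x :=
      (hf.fderiv_right (m := 1) (by norm_num)).differentiableAt (by norm_num)
    have : HasFDerivAt (pd k f) ((fderiv ℝ (fderiv ℝ f) x).flip (eb k)) x := by
      have := hd.hasFDerivAt.clm_apply (hasFDerivAt_const (eb k : Euc n) x)
      simp only [ContinuousLinearMap.comp_zero, zero_add] at this
      exact this
    rw [this.fderiv]; rfl
  change fderiv ℝ (pd j f) x (eb i) = fderiv ℝ (pd i f) x (eb j)
  rw [key, key]
  exact hsymm.eq _ _

lemma HasCompactSupport.pdD {f : Euc n → ℝ} (hf : HasCompactSupport f) (i : Fin n) :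
    HasCompactSupport (pd i f) :=
  hf.fderiv_apply ℝ _

lemma pd_continuous {f : Euc n → ℝ} (hf : ContDiff ℝ 1 f) (i : Fin n) : Continuous (pd i f) :=
  (hf.pdD (k := 0) (by norm_num) i).continuous

lemma integral_pd_mul {f g : Euc n → ℝ} (hf : ContDiff ℝ 1 f) (hg : ContDiff ℝ 1 g)
    (hgc : HasCompactSupport g) (i : Fin n) :
    ∫ x, pd i f x * g x = - ∫ x, f x * pd i g x := by
  have h := integral_mul_fderiv_eq_neg_fderiv_mul_of_integrable (𝕜 := ℝ) (μ := (volume : Measure (Euc n)))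
    (f := f) (g := g) (v := eb i) ?_ ?_ ?_ (fun x _ => hf.differentiable (by norm_num) x) (fun x _ => hg.differentiable (by norm_num) x)
  · change ∫ x, f x * pd i g x = - ∫ x, pd i f x * g x at h
    linarith
  · exact ((pd_continuous hf i).mul hg.continuous).integrable_of_hasCompactSupport
      (hgc.mul_left)
  · exact (hf.continuous.mul (pd_continuous hg i)).integrable_of_hasCompactSupport
      ((hgc.pdD i).mul_left)
  · exact (hf.continuous.mul hg.continuous).integrable_of_hasCompactSupport
      (hgc.mul_left)

/-- Second derivative test in terms of the Laplacian. -/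
lemma lap_nonpos_of_isLocalMax {f : Euc n → ℝ} {x : Euc n} (hf : ContDiffAt ℝ 2 f x)
    (hmax : IsLocalMax f x) : lap f x ≤ 0 := by
  refine Finset.sum_nonpos fun i _ => ?_
  by_contra hpos
  push Not at hpos
  have hline : ContinuousAt (fun s : ℝ => x + s • (eb i : Euc n)) 0 := by fun_prop
  have hx0 : x + (0 : ℝ) • (eb i : Euc n) = x := by simp
  have hev : ∀ᶠ s : ℝ in 𝓝 0, HasDerivAt (fun s : ℝ => f (x + s • eb i))
      (pd i f (x + s • eb i)) s := by
    have h1 : ∀ᶠ y in 𝓝 x, DifferentiableAt ℝ f y := by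
      filter_upwards [hf.eventually (by simp)] with y hy
      exact hy.differentiableAt (by norm_num)
    have := hline.tendsto
    rw [hx0] at this
    filter_upwards [this.eventually h1] with s hs using hasDerivAt_line i s hs
  have hderiv : deriv (fun s : ℝ => f (x + s • eb i)) =ᶠ[𝓝 0] fun s => pd i f (x + s • eb i) := by
    filter_upwards [hev] with s hs using hs.deriv
  have hd2 : deriv (deriv (fun s : ℝ => f (x + s • eb i))) 0 = pd i (pd i f) x := by
    rw [hderiv.deriv_eq]
    have := (hasDerivAt_line (f := pd i f) (x := x) i 0 (by
      rw [hx0]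
      exact (hf.pdD (k := 1) (by norm_num) i).differentiableAt (by norm_num)))
    rw [this.deriv, hx0]
  have hmax' : IsLocalMax (fun s : ℝ => f (x + s • eb i)) 0 := by
    have := hline.tendsto
    rw [hx0] at this
    have h2 : ∀ᶠ y in 𝓝 x, f y ≤ f x := hmax
    filter_upwards [this.eventually h2] with s hs
    simpa using hs
  have hmin := isLocalMin_of_deriv_deriv_pos (f := fun s : ℝ => f (x + s • eb i)) (x₀ := 0)
    (by rw [hd2]; exact hpos) (hmax'.deriv_eq_zero) hev.self_of_nhds.continuousAt
  have hconst : (fun s : ℝ => f (x + s • eb i)) =ᶠ[𝓝 0] fun _ => f (x + (0:ℝ) • eb i) := by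
    filter_upwards [hmin, hmax'] with s h1 h2 using le_antisymm h2 h1
  have h0 : deriv (deriv (fun s : ℝ => f (x + s • eb i))) 0 = 0 := by
    have h3 : deriv (fun s : ℝ => f (x + s • eb i)) =ᶠ[𝓝 0] fun _ => 0 := by
      filter_upwards [hconst.eventuallyEq_nhds] with s hs
      rw [hs.deriv_eq]; simp
    rw [h3.deriv_eq]; simp
  rw [hd2] at h0
  linarith

end pdCalculus

/-! ### A Bellman function -/

section bellman

/-- A regularised Bellman function `b vᵠ + y (v + yᵐ)^(2-q)` with `y = u² + ε`; its Hessian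
dominates `2 |du| |dv|`. -/
def bell (b q m ε u v : ℝ) : ℝ := b * v ^ q + (u ^ 2 + ε) * (v + (u ^ 2 + ε) ^ m) ^ (2 - q)

/-- `∂bell/∂u`. -/
def bellU (q m ε u v : ℝ) : ℝ :=
  2 * u * ((v + (u ^ 2 + ε) ^ m) ^ (2 - q)
    + (2 - q) * m * (u ^ 2 + ε) ^ m * (v + (u ^ 2 + ε) ^ m) ^ (1 - q))

/-- `∂bell/∂v`. -/
def bellV (b q m ε u v : ℝ) : ℝ :=
  b * q * v ^ (q - 1) + (2 - q) * (u ^ 2 + ε) * (v + (u ^ 2 + ε) ^ m) ^ (1 - q)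

/-- The Hessian quadratic form of `bell` applied to `(u₁, v₁)`. -/
def bellQ (b q m ε u v u1 v1 : ℝ) : ℝ :=
  let y := u ^ 2 + ε
  let w := v + y ^ m
  let w1 := v1 + m * y ^ (m - 1) * (2 * u * u1)
  (b * q * ((q - 1) * v ^ (q - 2) * v1) + ((2 - q) * (2 * u * u1)) * w ^ (1 - q)
      + (2 - q) * y * ((1 - q) * w ^ (-q) * w1)) * v1
  + (2 * u1 * (w ^ (2 - q) + (2 - q) * m * y ^ m * w ^ (1 - q))
      + 2 * u * ((2 - q) * w ^ (1 - q) * w1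
        + ((2 - q) * m * (m * y ^ (m - 1) * (2 * u * u1))) * w ^ (1 - q)
        + (2 - q) * m * y ^ m * ((1 - q) * w ^ (-q) * w1))) * u1

variable {b q m ε : ℝ}

lemma bell_hasDerivAt {U V : ℝ → ℝ} {U1 V1 t : ℝ} (hε : 0 < ε) (hU : HasDerivAt U U1 t)
    (hV : HasDerivAt V V1 t) (hVpos : 0 < V t) :
    HasDerivAt (fun s => bell b q m ε (U s) (V s))
      (bellU q m ε (U t) (V t) * U1 + bellV b q m ε (U t) (V t) * V1) t := by
  have hy : HasDerivAt (fun s => U s ^ 2 + ε) (2 * U t * U1) t := by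
    simpa using (hU.pow 2).add_const ε
  have hypos : 0 < U t ^ 2 + ε := by positivity
  have hym := hy.rpow_const (p := m) (Or.inl hypos.ne')
  have hw := hV.add hym
  have hwpos : 0 < V t + (U t ^ 2 + ε) ^ m := by positivity
  have hwk := hw.rpow_const (p := 2 - q) (Or.inl hwpos.ne')
  have hVq := hV.rpow_const (p := q) (Or.inl hVpos.ne')
  have := (hVq.const_mul b).add (hy.mul hwk)
  refine this.congr_deriv ?_
  have e1 : (U t ^ 2 + ε) ^ (m - 1) = (U t ^ 2 + ε) ^ m / (U t ^ 2 + ε) :=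
    Real.rpow_sub_one hypos.ne' m
  simp only [bellU, bellV, Pi.add_apply]
  rw [e1, show (2 - q - 1 : ℝ) = 1 - q by ring]
  field_simp
  ring

lemma bell_hasDerivAt2 {U V U1 V1 : ℝ → ℝ} {U2 V2 t : ℝ} (hε : 0 < ε) (hU : HasDerivAt U (U1 t) t)
    (hV : HasDerivAt V (V1 t) t) (hU1 : HasDerivAt U1 U2 t) (hV1 : HasDerivAt V1 V2 t)
    (hVpos : 0 < V t) :
    HasDerivAt (fun s => bellU q m ε (U s) (V s) * U1 s + bellV b q m ε (U s) (V s) * V1 s)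
      (bellU q m ε (U t) (V t) * U2 + bellV b q m ε (U t) (V t) * V2
        + bellQ b q m ε (U t) (V t) (U1 t) (V1 t)) t := by
  have hy : HasDerivAt (fun s => U s ^ 2 + ε) (2 * U t * U1 t) t := by
    simpa using (hU.pow 2).add_const ε
  have hypos : 0 < U t ^ 2 + ε := by positivity
  have hym := hy.rpow_const (p := m) (Or.inl hypos.ne')
  have hw := hV.add hym
  have hwpos : 0 < V t + (U t ^ 2 + ε) ^ m := by positivity
  have hwk := hw.rpow_const (p := 2 - q) (Or.inl hwpos.ne')
  have hwk1 := hw.rpow_const (p := 1 - q) (Or.inl hwpos.ne')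
  have hVq := hV.rpow_const (p := q - 1) (Or.inl hVpos.ne')
  have hBU := (hU.const_mul 2).mul (hwk.add ((hym.const_mul ((2 - q) * m)).mul hwk1))
  have hBV := (hVq.const_mul (b * q)).add ((hy.const_mul (2 - q)).mul hwk1)
  have := (hBU.mul hU1).add (hBV.mul hV1)
  refine this.congr_deriv ?_
  simp only [bellU, bellV, bellQ, Pi.add_apply, Pi.mul_apply]
  rw [show (2 - q - 1 : ℝ) = 1 - q by ring, show (1 - q - 1 : ℝ) = -q by ring,
    show (q - 1 - 1 : ℝ) = q - 2 by ring]
  ring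

/-- The algebraic core of the convexity of `bell`: `r = w^(1-q)`, `Y = yᵐ`, `z = v^(2-q)`. -/
lemma bell_core {κ b q m y w r Y z u u1 v1 : ℝ} (hκ0 : 0 < κ) (hκ1 : κ < 1) (hm : 0 < m)
    (hy : 0 < y) (hw : 0 < w) (hr : 0 < r) (hY : 0 < Y) (hz : 0 < z) (hYw : Y ≤ w)
    (hru : r * |u| ≤ 1) (hyr : y * (r / w) ≤ 1 / z) (hzw : z ≤ w * r)
    (hb : (4 * κ * (1 + m) + 2) ^ 2 / 8 + 1 ≤ b * q * (q - 1)) :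
    2 * |u1 * v1| ≤
      (b * q * ((q - 1) * (1 / z) * v1) + (κ * (2 * u * u1)) * r
        + κ * y * (-(1 - κ) * (r / w) * (v1 + m * (Y / y) * (2 * u * u1)))) * v1
      + (2 * u1 * (w * r + κ * m * Y * r)
        + 2 * u * (κ * r * (v1 + m * (Y / y) * (2 * u * u1))
          + (κ * m * (m * (Y / y) * (2 * u * u1))) * r
          + κ * m * Y * (-(1 - κ) * (r / w) * (v1 + m * (Y / y) * (2 * u * u1))))) * u1 := by
  have hs : Y / w ≤ 1 := (div_le_one hw).2 hYw
  set s := Y / w with hsdef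
  have hs0 : 0 < s := by positivity
  set d := Y / y with hd
  have hd0 : 0 < d := by positivity
  have hYy : Y = d * y := by rw [hd]; field_simp
  have hYs : Y * (r / w) = s * r := by rw [hsdef]; ring
  have hdyr : d * (y * (r / w)) = s * r := by rw [← hYs, hYy]; ring
  set e := y * (r / w) with he
  have he0 : 0 < e := by positivity
  have hYe : Y * (r / w) = s * r := hYs
  -- collect the quadratic form by monomials
  have key : (b * q * ((q - 1) * (1 / z) * v1) + (κ * (2 * u * u1)) * r
        + κ * y * (-(1 - κ) * (r / w) * (v1 + m * d * (2 * u * u1)))) * v1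
      + (2 * u1 * (w * r + κ * m * Y * r)
        + 2 * u * (κ * r * (v1 + m * d * (2 * u * u1))
          + (κ * m * (m * d * (2 * u * u1))) * r
          + κ * m * Y * (-(1 - κ) * (r / w) * (v1 + m * d * (2 * u * u1))))) * u1
      = (b * q * (q - 1) * (1 / z) - κ * (1 - κ) * e) * v1 ^ 2
        + (4 * κ - 4 * κ * (1 - κ) * m * s) * (r * u) * (u1 * v1)
        + (2 * (w * r) + 2 * κ * m * Y * r + 4 * κ * m * d * u ^ 2 * r
          + 4 * κ * m ^ 2 * d * u ^ 2 * r * (1 - (1 - κ) * s)) * u1 ^ 2 := by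
    have : κ * y * (-(1 - κ) * (r / w) * (v1 + m * d * (2 * u * u1)))
        = -κ * (1 - κ) * e * v1 - κ * (1 - κ) * m * 2 * u * u1 * (d * e) := by rw [he]; ring
    rw [this, hdyr]
    have : κ * m * Y * (-(1 - κ) * (r / w) * (v1 + m * d * (2 * u * u1)))
        = -κ * m * (1 - κ) * (Y * (r / w)) * (v1 + m * d * (2 * u * u1)) := by ring
    rw [this, hYe]; ring
  rw [key]
  set M := 4 * κ * (1 + m) + 2 with hM
  have h1 : (M ^ 2 / 8) * (1 / z) * v1 ^ 2
      ≤ (b * q * (q - 1) * (1 / z) - κ * (1 - κ) * e) * v1 ^ 2 := by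
    refine mul_le_mul_of_nonneg_right ?_ (sq_nonneg _)
    have hz' : 0 < 1 / z := by positivity
    have h2 : κ * (1 - κ) * e ≤ 1 / z := by
      have : κ * (1 - κ) ≤ 1 := mul_le_one₀ hκ1.le (by linarith) (by linarith)
      calc κ * (1 - κ) * e ≤ 1 * e := mul_le_mul_of_nonneg_right this he0.le
        _ ≤ 1 / z := by linarith
    have h3 := mul_le_mul_of_nonneg_right hb hz'.le
    rw [add_mul, one_mul] at h3
    linarith
  have h2 : 2 * z * u1 ^ 2 ≤ (2 * (w * r) + 2 * κ * m * Y * r + 4 * κ * m * d * u ^ 2 * r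
          + 4 * κ * m ^ 2 * d * u ^ 2 * r * (1 - (1 - κ) * s)) * u1 ^ 2 := by
    refine mul_le_mul_of_nonneg_right ?_ (sq_nonneg _)
    have a1 : 0 ≤ 2 * κ * m * Y * r := by positivity
    have a2 : 0 ≤ 4 * κ * m * d * u ^ 2 * r := by positivity
    have a3 : 0 ≤ 4 * κ * m ^ 2 * d * u ^ 2 * r * (1 - (1 - κ) * s) := by
      have : 0 ≤ 1 - (1 - κ) * s := by
        have h1 : (1 - κ) * s ≤ 1 := mul_le_one₀ (by linarith) hs0.le hs
        linarith
      positivity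
    linarith
  have h3 : -(4 * κ * (1 + m)) * |u1 * v1|
      ≤ (4 * κ - 4 * κ * (1 - κ) * m * s) * (r * u) * (u1 * v1) := by
    have hc : |(4 * κ - 4 * κ * (1 - κ) * m * s)| ≤ 4 * κ * (1 + m) := by
      have t1 : 0 ≤ (1 - κ) * m * s := by
        have : 0 < 1 - κ := by linarith
        positivity
      have t2 : (1 - κ) * m * s ≤ m := by
        have h1 : (1 - κ) * s ≤ 1 := mul_le_one₀ (by linarith) hs0.le hs
        calc (1 - κ) * m * s = m * ((1 - κ) * s) := by ring
          _ ≤ m * 1 := mul_le_mul_of_nonneg_left h1 hm.le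
          _ = m := mul_one m
      rw [show 4 * κ - 4 * κ * (1 - κ) * m * s = 4 * κ * (1 - (1 - κ) * m * s) by ring, abs_mul,
        abs_of_pos (by positivity : 0 < 4 * κ)]
      refine mul_le_mul_of_nonneg_left ?_ (by positivity)
      rw [abs_le]; constructor <;> linarith
    have hru' : |r * u| ≤ 1 := by rw [abs_mul, abs_of_pos hr]; exact hru
    have : |(4 * κ - 4 * κ * (1 - κ) * m * s) * (r * u) * (u1 * v1)|
        ≤ (4 * κ * (1 + m)) * |u1 * v1| := by
      rw [abs_mul, abs_mul]
      refine mul_le_mul_of_nonneg_right ?_ (abs_nonneg _)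
      calc _ ≤ (4 * κ * (1 + m)) * 1 := mul_le_mul hc hru' (abs_nonneg _) (by positivity)
        _ = _ := by ring
    have := neg_abs_le ((4 * κ - 4 * κ * (1 - κ) * m * s) * (r * u) * (u1 * v1))
    linarith
  have h4 : M * |u1 * v1| ≤ (M ^ 2 / 8) * (1 / z) * v1 ^ 2 + 2 * z * u1 ^ 2 := by
    have hsq : 0 ≤ (M * |v1| - 4 * z * |u1|) ^ 2 / (8 * z) := by positivity
    have e : (M * |v1| - 4 * z * |u1|) ^ 2 / (8 * z)
        = (M ^ 2 / 8) * (1 / z) * |v1| ^ 2 + 2 * z * |u1| ^ 2 - M * (|u1| * |v1|) := by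
      field_simp; ring
    rw [e, sq_abs, sq_abs, ← abs_mul] at hsq
    linarith
  have : M * |u1 * v1| - (4 * κ * (1 + m)) * |u1 * v1| = 2 * |u1 * v1| := by rw [hM]; ring
  linarith

lemma bellQ_ge (hq1 : 1 < q) (hq2 : q < 2) (hm : 2 * m * (q - 1) = 1) (hε : 0 < ε)
    (hb : (4 * (2 - q) * (1 + m) + 2) ^ 2 / 8 + 1 ≤ b * q * (q - 1)) {u v u1 v1 : ℝ} (hv : 0 < v) :
    2 * |u1 * v1| ≤ bellQ b q m ε u v u1 v1 := by
  have hm0 : 0 < m := by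
    by_contra h
    push Not at h
    nlinarith
  have hy : 0 < u ^ 2 + ε := by positivity
  set y := u ^ 2 + ε with hydef
  have hY : 0 < y ^ m := by positivity
  have hw : 0 < v + y ^ m := by positivity
  set w := v + y ^ m with hwdef
  have hyw : y ≤ w ^ (2 * (q - 1)) := by
    have h1 : y = (y ^ m) ^ (2 * (q - 1)) := by
      rw [← Real.rpow_mul hy.le, show m * (2 * (q - 1)) = 1 by linarith, Real.rpow_one]
    rw [h1]
    exact Real.rpow_le_rpow hY.le (by linarith) (by linarith)
  have h := bell_core (κ := 2 - q) (b := b) (q := q) (m := m) (y := y) (w := w)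
    (r := w ^ (1 - q)) (Y := y ^ m) (z := v ^ (2 - q)) (u := u) (u1 := u1) (v1 := v1)
    (by linarith) (by linarith) hm0 hy hw (by positivity) hY (by positivity) (by linarith)
    ?_ ?_ ?_ hb
  · convert h using 1
    simp only [bellQ, ← hydef, ← hwdef]
    have e1 : y ^ (m - 1) = y ^ m / y := Real.rpow_sub_one hy.ne' m
    have e2 : w ^ (-q) = w ^ (1 - q) / w := by
      rw [← Real.rpow_sub_one hw.ne']; ring_nf
    have e3 : w ^ (2 - q) = w * w ^ (1 - q) := by
      rw [show (2 - q : ℝ) = 1 + (1 - q) by ring, Real.rpow_add hw, Real.rpow_one]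
    have e4 : v ^ (q - 2) = 1 / v ^ (2 - q) := by
      rw [one_div, ← Real.rpow_neg hv.le]; ring_nf
    rw [e1, e2, e3, e4]
    ring
  · have h1 : |u| ≤ w ^ (q - 1) := by
      refine abs_le_of_sq_le_sq ?_ (by positivity)
      calc u ^ 2 ≤ y := by linarith
        _ ≤ w ^ (2 * (q - 1)) := hyw
        _ = (w ^ (q - 1)) ^ 2 := by
          rw [← Real.rpow_natCast, ← Real.rpow_mul hw.le]; congr 1; push_cast; ring
    calc w ^ (1 - q) * |u| ≤ w ^ (1 - q) * w ^ (q - 1) :=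
          mul_le_mul_of_nonneg_left h1 (by positivity)
      _ = 1 := by rw [← Real.rpow_add hw]; simp
  · calc y * (w ^ (1 - q) / w) ≤ w ^ (2 * (q - 1)) * (w ^ (1 - q) / w) :=
          mul_le_mul_of_nonneg_right hyw (by positivity)
      _ = w ^ (q - 2) := by
          rw [← Real.rpow_sub_one hw.ne', ← Real.rpow_add hw]; ring_nf
      _ ≤ v ^ (q - 2) := Real.rpow_le_rpow_of_nonpos hv (by linarith) (by linarith)
      _ = 1 / v ^ (2 - q) := by rw [one_div, ← Real.rpow_neg hv.le]; ring_nf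
  · calc v ^ (2 - q) ≤ w ^ (2 - q) := Real.rpow_le_rpow hv.le (by linarith) (by linarith)
      _ = w * w ^ (1 - q) := by
        rw [show (2 - q : ℝ) = 1 + (1 - q) by ring, Real.rpow_add hw, Real.rpow_one]

lemma bell_nonneg (hb : 0 ≤ b) (hε : 0 < ε) {u v : ℝ} (hv : 0 < v) : 0 ≤ bell b q m ε u v := by
  unfold bell; positivity

lemma add_rpow_le' {a c r : ℝ} (ha : 0 ≤ a) (hc : 0 ≤ c) (hr : 0 ≤ r) :
    (a + c) ^ r ≤ 2 ^ r * (a ^ r + c ^ r) := by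
  rcases le_total a c with h | h
  · calc (a + c) ^ r ≤ (2 * c) ^ r := Real.rpow_le_rpow (by positivity) (by linarith) hr
      _ = 2 ^ r * c ^ r := Real.mul_rpow (by norm_num) hc
      _ ≤ _ := by
        have := Real.rpow_nonneg ha r
        have h2 : (0:ℝ) ≤ 2 ^ r := by positivity
        nlinarith
  · calc (a + c) ^ r ≤ (2 * a) ^ r := Real.rpow_le_rpow (by positivity) (by linarith) hr
      _ = 2 ^ r * a ^ r := Real.mul_rpow (by norm_num) ha
      _ ≤ _ := by
        have := Real.rpow_nonneg hc r
        have h2 : (0:ℝ) ≤ 2 ^ r := by positivity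
        nlinarith

/-- Growth bound for `bell` in terms of the conjugate powers. -/
lemma bell_le (hb : 0 ≤ b) (hq1 : 1 < q) (hq2 : q < 2) (hm : 2 * m * (q - 1) = 1)
    {p : ℝ} (hp : m * q = p / 2) (hp0 : 0 < p) (hε : 0 < ε)
    {u v : ℝ} (hv : 0 ≤ v) :
    bell b q m ε u (v + ε) ≤
      (b * 2 ^ q + 2 ^ q * 2 ^ q + 2 ^ q * 2 ^ (p / 2)) *
        (|u| ^ p + v ^ q + ε ^ q + ε ^ (p / 2)) := by
  have hy : 0 < u ^ 2 + ε := by positivity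
  have hVpos : 0 < v + ε := by positivity
  have hY : 0 < (u ^ 2 + ε) ^ m := by positivity
  set y := u ^ 2 + ε with hydef
  have hw : 0 < v + ε + y ^ m := by positivity
  have hyw : y ≤ (v + ε + y ^ m) ^ (2 * (q - 1)) := by
    have h1 : y = (y ^ m) ^ (2 * (q - 1)) := by
      rw [← Real.rpow_mul hy.le, show m * (2 * (q - 1)) = 1 by linarith, Real.rpow_one]
    conv_lhs => rw [h1]
    exact Real.rpow_le_rpow hY.le (by linarith) (by linarith)
  have h2 : y * (v + ε + y ^ m) ^ (2 - q) ≤ (v + ε + y ^ m) ^ q := by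
    calc _ ≤ (v + ε + y ^ m) ^ (2 * (q - 1)) * (v + ε + y ^ m) ^ (2 - q) :=
          mul_le_mul_of_nonneg_right hyw (by positivity)
      _ = _ := by rw [← Real.rpow_add hw]; ring_nf
  have h3 : (v + ε + y ^ m) ^ q ≤ 2 ^ q * ((v + ε) ^ q + y ^ (p / 2)) := by
    refine (add_rpow_le' hVpos.le hY.le (by linarith)).trans_eq ?_
    rw [← Real.rpow_mul hy.le, hp]
  have h4 : (v + ε) ^ q ≤ 2 ^ q * (v ^ q + ε ^ q) := add_rpow_le' hv hε.le (by linarith)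
  have h5 : y ^ (p / 2) ≤ 2 ^ (p / 2) * (|u| ^ p + ε ^ (p / 2)) := by
    refine (add_rpow_le' (sq_nonneg u) hε.le (by linarith)).trans_eq ?_
    rw [← sq_abs u, ← Real.rpow_natCast |u| 2, ← Real.rpow_mul (abs_nonneg u)]
    congr 4; push_cast; ring
  have hvq : 0 ≤ v ^ q := by positivity
  have hεq : 0 ≤ ε ^ q := by positivity
  have hup : 0 ≤ |u| ^ p := by positivity
  have hεp : 0 ≤ ε ^ (p / 2) := by positivity
  have h2q : (0 : ℝ) < 2 ^ q := by positivity
  have h2p : (0 : ℝ) < 2 ^ (p / 2) := by positivity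
  unfold bell
  rw [← hydef]
  calc b * (v + ε) ^ q + y * (v + ε + y ^ m) ^ (2 - q)
      ≤ b * (2 ^ q * (v ^ q + ε ^ q)) + 2 ^ q * (2 ^ q * (v ^ q + ε ^ q)
          + 2 ^ (p / 2) * (|u| ^ p + ε ^ (p / 2))) := by
        refine add_le_add (mul_le_mul_of_nonneg_left h4 hb) (h2.trans (h3.trans ?_))
        exact mul_le_mul_of_nonneg_left (add_le_add h4 h5) h2q.le
    _ ≤ _ := by
        have k1 : 0 ≤ b * 2 ^ q * (|u| ^ p + ε ^ (p / 2)) := by positivity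
        have k2 : 0 ≤ 2 ^ q * 2 ^ q * (|u| ^ p + ε ^ (p / 2)) := by positivity
        have k3 : 0 ≤ (2 : ℝ) ^ q * 2 ^ (p / 2) * (v ^ q + ε ^ q) := by positivity
        nlinarith

end bellman

/-! ### The Gaussian semigroup -/

section heat

variable {n : ℕ}

/-- The unnormalised Gaussian `exp(-|z|²/4)`. -/
def gexp (z : Euc n) : ℝ := Real.exp (-(1/4) * ‖z‖ ^ 2)

/-- The Gaussian probability density proportional to `exp(-|z|²/4)`. -/
def gk (z : Euc n) : ℝ := (∫ y : Euc n, gexp y)⁻¹ * gexp z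

lemma gexp_integrable_b {b : ℝ} (hb : 0 < b) :
    Integrable (fun z : Euc n => Real.exp (-b * ‖z‖ ^ 2)) := by
  have h := GaussianFourier.integrable_cexp_neg_mul_sq_norm_add (V := Euc n) (b := (b : ℂ))
    (by simpa using hb) 0 0
  have h2 := h.re
  refine h2.congr (Eventually.of_forall fun z => ?_)
  have : (-(b:ℂ) * (‖z‖:ℂ) ^ 2 + 0 * ((inner ℝ (0 : Euc n) z : ℝ) : ℂ))
      = ((-b * ‖z‖ ^ 2 : ℝ) : ℂ) := by push_cast; ring
  beta_reduce
  rw [this, ← Complex.ofReal_exp]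
  exact Complex.ofReal_re _

lemma gexp_integrable : Integrable (gexp : Euc n → ℝ) := gexp_integrable_b (by norm_num)

lemma gexp_integral_pos : 0 < ∫ y : Euc n, gexp y := by
  have h := GaussianFourier.integral_rexp_neg_mul_sq_norm (V := Euc n) (b := 1/4) (by norm_num)
  have : ∫ y : Euc n, gexp y = _ := h
  rw [this]; positivity

lemma gk_pos (z : Euc n) : 0 < gk z :=
  mul_pos (inv_pos.2 gexp_integral_pos) (Real.exp_pos _)

lemma gk_integrable : Integrable (gk : Euc n → ℝ) := gexp_integrable.const_mul _

lemma gk_integral : ∫ z : Euc n, gk z = 1 := by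
  unfold gk
  rw [integral_const_mul, inv_mul_cancel₀ gexp_integral_pos.ne']

lemma gk_contDiff : ContDiff ℝ (⊤ : ℕ∞) (gk : Euc n → ℝ) := by
  unfold gk gexp
  exact contDiff_const.mul ((contDiff_const.mul (contDiff_norm_sq ℝ)).exp)

lemma gk_le (z : Euc n) : gk z ≤ (∫ y : Euc n, gexp y)⁻¹ := by
  unfold gk
  have h1 : gexp z ≤ 1 := Real.exp_le_one_iff.2 (by nlinarith [sq_nonneg ‖z‖])
  have := inv_pos.2 (gexp_integral_pos (n := n))
  nlinarith

lemma pd_normsq (i : Fin n) (x : Euc n) : pd i (fun y : Euc n => ‖y‖ ^ 2) x = 2 * x i := by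
  rw [pd_eq_of_hasFDerivAt i (HasStrictFDerivAt.hasFDerivAt (hasStrictFDerivAt_norm_sq x))]
  simp [eb, EuclideanSpace.inner_single_right]

lemma pd_gk (i : Fin n) (z : Euc n) : pd i gk z = -(z i / 2) * gk z := by
  have h1 : HasDerivAt (fun t : ℝ => (∫ y : Euc n, gexp y)⁻¹ * Real.exp (-(1/4) * t))
      ((∫ y : Euc n, gexp y)⁻¹ * (Real.exp (-(1/4) * ‖z‖ ^ 2) * (-(1/4)))) (‖z‖ ^ 2) := by
    have := ((hasDerivAt_id (‖z‖ ^ 2)).const_mul (-(1/4) : ℝ)).exp.const_mul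
      (∫ y : Euc n, gexp y)⁻¹
    simpa using this
  have h2 := pd_comp i (f := fun y : Euc n => ‖y‖ ^ 2) h1
    ((contDiff_norm_sq ℝ (n := 1)).differentiable (by norm_num) z)
  have h3 : (gk : Euc n → ℝ) = fun y => (∫ y : Euc n, gexp y)⁻¹ * Real.exp (-(1/4) * ‖y‖ ^ 2) := rfl
  rw [h3, h2, pd_normsq]
  ring

lemma norm_mul_gk_integrable : Integrable (fun z : Euc n => ‖z‖ * gk z) := by
  have h := (gexp_integrable_b (n := n) (b := 1/8) (by norm_num)).const_mul
    (4 * (∫ y : Euc n, gexp y)⁻¹)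
  refine h.mono' (by
    exact (continuous_norm.mul gk_contDiff.continuous).aestronglyMeasurable)
    (Eventually.of_forall fun z => ?_)
  have hI := inv_pos.2 (gexp_integral_pos (n := n))
  have hb : ‖z‖ * Real.exp (-(1/4) * ‖z‖^2) ≤ 4 * Real.exp (-(1/8) * ‖z‖ ^ 2) := by
    have h1 : Real.exp (-(1/4) * ‖z‖^2) = Real.exp (-(1/8) * ‖z‖^2) * Real.exp (-(1/8) * ‖z‖^2) := by
      rw [← Real.exp_add]; ring_nf
    have h2 : ‖z‖ * Real.exp (-(1/8) * ‖z‖^2) ≤ 4 := by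
      have h3 := Real.add_one_le_exp ((1/8) * ‖z‖^2)
      have h4 : Real.exp ((1/8) * ‖z‖^2) * Real.exp (-(1/8) * ‖z‖^2) = 1 := by
        rw [← Real.exp_add]; simp
      have h5 := Real.exp_pos (-(1/8) * ‖z‖^2)
      have h6 : ‖z‖ ≤ 4 * Real.exp ((1/8) * ‖z‖^2) := by nlinarith [sq_nonneg (‖z‖ - 1)]
      nlinarith
    rw [h1, ← mul_assoc]
    exact mul_le_mul_of_nonneg_right h2 (Real.exp_pos _).le
  rw [Real.norm_of_nonneg (mul_nonneg (norm_nonneg _) (gk_pos z).le)]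
  have h7 := mul_le_mul_of_nonneg_left hb hI.le
  calc ‖z‖ * gk z = (∫ y : Euc n, gexp y)⁻¹ * (‖z‖ * Real.exp (-(1/4) * ‖z‖^2)) := by
        unfold gk; rw [show gexp z = Real.exp (-(1/4) * ‖z‖^2) from rfl]; ring
    _ ≤ _ := by linarith

/-- The Gaussian probability measure with density `gk`. -/
def gm (n : ℕ) : Measure (Euc n) := volume.withDensity fun z => ENNReal.ofReal (gk z)

instance : IsProbabilityMeasure (gm n) := by
  constructor
  rw [gm, withDensity_apply _ MeasurableSet.univ, Measure.restrict_univ,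
    ← ofReal_integral_eq_lintegral_ofReal gk_integrable (Eventually.of_forall fun z => (gk_pos z).le),
    gk_integral, ENNReal.ofReal_one]

lemma gk_meas : Measurable fun z : Euc n => ENNReal.ofReal (gk z) :=
  (gk_contDiff.continuous.measurable).ennreal_ofReal

lemma gm_integral (F : Euc n → ℝ) : ∫ z, F z ∂(gm n) = ∫ z, F z * gk z := by
  rw [gm, integral_withDensity_eq_integral_toReal_smul gk_meas
    (Eventually.of_forall fun z => ENNReal.ofReal_lt_top)]
  refine integral_congr_ae (Eventually.of_forall fun z => ?_)
  simp [ENNReal.toReal_ofReal (gk_pos z).le, mul_comm]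

lemma gm_integrable_iff (F : Euc n → ℝ) :
    Integrable F (gm n) ↔ Integrable fun z => F z * gk z := by
  rw [gm, integrable_withDensity_iff_integrable_smul' gk_meas
    (Eventually.of_forall fun z => ENNReal.ofReal_lt_top)]
  refine integrable_congr (Eventually.of_forall fun z => ?_)
  simp [ENNReal.toReal_ofReal (gk_pos z).le, mul_comm]

lemma gm_integrable_norm : Integrable (fun z : Euc n => ‖z‖) (gm n) :=
  (gm_integrable_iff _).2 norm_mul_gk_integrable

/-- The heat flow at time `s²`: `(heat f s)(x) = ∫ f(x + s z) dγ(z)`. -/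
def heat (f : Euc n → ℝ) (s : ℝ) (x : Euc n) : ℝ := ∫ z, f (x + s • z) ∂(gm n)

lemma bdd_of_cc {f : Euc n → ℝ} (hf : Continuous f) (hc : HasCompactSupport f) :
    ∃ M, 0 ≤ M ∧ ∀ x, |f x| ≤ M := by
  obtain ⟨M, hM⟩ := hc.exists_bound_of_continuous hf
  exact ⟨M, (norm_nonneg _).trans (hM 0), hM⟩

lemma int_of_bdd {μ : Measure (Euc n)} [IsFiniteMeasure μ] {F : Euc n → ℝ} (hF : Continuous F)
    {M : ℝ} (hM : ∀ x, |F x| ≤ M) : Integrable F μ :=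
  Integrable.of_bound hF.aestronglyMeasurable M (Eventually.of_forall hM)

lemma heat_cont {f : Euc n → ℝ} (hf : Continuous f) (hc : HasCompactSupport f) :
    Continuous fun q : ℝ × Euc n => heat f q.1 q.2 := by
  obtain ⟨M, -, hM⟩ := bdd_of_cc hf hc
  refine continuous_of_dominated (bound := fun _ => M) ?_ ?_ (integrable_const _) ?_
  · intro q; exact (hf.comp (by fun_prop)).aestronglyMeasurable
  · intro q; exact Eventually.of_forall fun z => hM _
  · exact Eventually.of_forall fun z => hf.comp (by fun_prop)

lemma heat_bdd {f : Euc n → ℝ} {M : ℝ} (hM : ∀ x, |f x| ≤ M)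
    (s : ℝ) (x : Euc n) : |heat f s x| ≤ M := by
  have := norm_integral_le_of_norm_le_const (μ := gm n) (f := fun z => f (x + s • z)) (C := M)
    (Eventually.of_forall fun z => hM _)
  simpa [heat] using this

lemma heat_nonneg {f : Euc n → ℝ} (h0 : ∀ x, 0 ≤ f x) (s : ℝ) (x : Euc n) : 0 ≤ heat f s x :=
  integral_nonneg fun _ => h0 _

lemma heat_zero (f : Euc n → ℝ) (x : Euc n) : heat f 0 x = f x := by
  simp [heat]

lemma heat_hasFDerivAt {f : Euc n → ℝ} (hf : ContDiff ℝ 1 f) (hc : HasCompactSupport f) (s : ℝ)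
    (x : Euc n) : HasFDerivAt (heat f s) (∫ z, fderiv ℝ f (x + s • z) ∂(gm n)) x := by
  have hfc := hf.continuous
  have hdc : Continuous (fderiv ℝ f) := hf.continuous_fderiv (by norm_num)
  obtain ⟨M, -, hM⟩ := bdd_of_cc hfc hc
  obtain ⟨M', hM'⟩ := (hc.fderiv (𝕜 := ℝ)).exists_bound_of_continuous hdc
  refine hasFDerivAt_integral_of_dominated_of_fderiv_le (bound := fun _ => M')
    (F := fun x z => f (x + s • z)) (F' := fun x z => fderiv ℝ f (x + s • z)) univ_mem ?_ ?_ ?_ ?_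
    (integrable_const _) ?_
  · exact Eventually.of_forall fun y => (hfc.comp (by fun_prop)).aestronglyMeasurable
  · exact int_of_bdd (hfc.comp (by fun_prop)) fun z => hM _
  · exact (hdc.comp (by fun_prop)).aestronglyMeasurable
  · exact Eventually.of_forall fun z y _ => hM' _
  · refine Eventually.of_forall fun z y _ => ?_
    have h1 := (hf.differentiable (by norm_num) (y + s • z)).hasFDerivAt
    have h2 : HasFDerivAt (fun y : Euc n => y + s • z) (ContinuousLinearMap.id ℝ (Euc n)) y :=
      (hasFDerivAt_id y).add_const _
    exact (h1.comp y h2).congr_fderiv (by ext; simp)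

lemma pd_heat {f : Euc n → ℝ} (hf : ContDiff ℝ 1 f) (hc : HasCompactSupport f) (s : ℝ)
    (i : Fin n) : pd i (heat f s) = heat (pd i f) s := by
  funext x
  have hdc : Continuous (fderiv ℝ f) := hf.continuous_fderiv (by norm_num)
  obtain ⟨M', hM'⟩ := (hc.fderiv (𝕜 := ℝ)).exists_bound_of_continuous hdc
  rw [pd_eq_of_hasFDerivAt i (heat_hasFDerivAt hf hc s x)]
  rw [ContinuousLinearMap.integral_apply]
  · rfl
  · exact Integrable.of_bound (hdc.comp (by fun_prop)).aestronglyMeasurable M'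
      (Eventually.of_forall fun z => hM' _)

lemma heat_slice_cont {f : Euc n → ℝ} (hf : Continuous f) (hc : HasCompactSupport f) (s : ℝ) :
    Continuous (heat f s) := (heat_cont hf hc).comp (by fun_prop : Continuous fun x : Euc n => (s, x))

lemma contDiff_one_of_pd {f : Euc n → ℝ} (hd : Differentiable ℝ f)
    (hc : ∀ i, Continuous (pd i f)) : ContDiff ℝ 1 f := by
  rw [contDiff_one_iff_fderiv]
  refine ⟨hd, ?_⟩
  rw [continuous_clm_apply]
  intro v
  simp_rw [fderiv_apply_eq_sum_pd]
  exact continuous_finsetSum _ fun i _ => continuous_const.mul (hc i)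

lemma contDiff_succ_of_pd {f : Euc n → ℝ} {k : ℕ} (hd : Differentiable ℝ f)
    (hc : ∀ i, ContDiff ℝ k (pd i f)) : ContDiff ℝ (k + 1) f := by
  rw [contDiff_succ_iff_fderiv]
  refine ⟨hd, by simp, ?_⟩
  rw [contDiff_clm_apply_iff]
  intro v
  simp_rw [fderiv_apply_eq_sum_pd]
  exact ContDiff.sum fun i _ => contDiff_const.mul (hc i)

lemma heat_contDiff {k : ℕ} : ∀ {f : Euc n → ℝ} (_ : ContDiff ℝ k f) (_ : HasCompactSupport f)
    (s : ℝ), ContDiff ℝ k (heat f s) := by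
  induction k with
  | zero =>
    intro f hf hc s
    exact contDiff_zero.2 (heat_slice_cont hf.continuous hc s)
  | succ k ih =>
    intro f hf hc s
    have hf1 : ContDiff ℝ 1 f := hf.of_le (by norm_cast; omega)
    push_cast
    refine contDiff_succ_of_pd (fun x => (heat_hasFDerivAt hf1 hc s x).differentiableAt) fun i => ?_
    rw [pd_heat hf1 hc]
    exact ih (hf.pdD (by push_cast; rfl) i) (hc.pdD i) s

/-- Gaussian integration by parts turns `∫ z_i F(x+sz) dγ` into `2s ∫ ∂_i F(x+sz) dγ`. -/
lemma gauss_ibp {f : Euc n → ℝ} (hf : ContDiff ℝ 1 f) (hc : HasCompactSupport f) (s : ℝ)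
    (x : Euc n) (i : Fin n) :
    ∫ z, z i * f (x + s • z) ∂(gm n) = 2 * s * heat (pd i f) s x := by
  have hfc := hf.continuous
  obtain ⟨M, hM0, hM⟩ := bdd_of_cc hfc hc
  obtain ⟨M', hM0', hM'⟩ := bdd_of_cc (pd_continuous hf i) (hc.pdD i)
  set F : Euc n → ℝ := fun z => f (x + s • z) with hF
  have hFd : ContDiff ℝ 1 F := hf.comp (by fun_prop)
  have hpd : ∀ z, fderiv ℝ F z (eb i) = s * pd i f (x + s • z) := by
    intro z
    have h1 := (hf.differentiable (by norm_num) (x + s • z)).hasFDerivAt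
    have h2 : HasFDerivAt (fun z : Euc n => x + s • z) (s • ContinuousLinearMap.id ℝ (Euc n)) z :=
      ((hasFDerivAt_id z).const_smul s).const_add x
    have h3 : HasFDerivAt F _ z := h1.comp z h2
    rw [h3.fderiv]
    simp [pd, eb]
  have hgpd : ∀ z : Euc n, fderiv ℝ gk z (eb i) = -(z i / 2) * gk z := fun z => pd_gk i z
  have hgc : Continuous (gk : Euc n → ℝ) := gk_contDiff.continuous
  have hci : Continuous fun z : Euc n => z i := by fun_prop
  have key := integral_mul_fderiv_eq_neg_fderiv_mul_of_integrable (𝕜 := ℝ)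
    (μ := (volume : Measure (Euc n))) (f := F) (g := gk) (v := eb i) ?_ ?_ ?_
    (fun z _ => hFd.differentiable (by norm_num) z)
    (fun z _ => gk_contDiff.differentiable (by norm_num) z)
  · rw [gm_integral, heat, gm_integral]
    simp_rw [hpd, hgpd] at key
    have e1 : ∫ z : Euc n, F z * (-(z i / 2) * gk z) = -(1/2) * ∫ z : Euc n, z i * f (x + s • z) * gk z := by
      rw [← integral_const_mul]; congr 1; funext z; simp only [hF]; ring
    have e2 : ∫ z : Euc n, s * pd i f (x + s • z) * gk z = s * ∫ z : Euc n, pd i f (x + s • z) * gk z := by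
      rw [← integral_const_mul]; congr 1; funext z; ring
    rw [e1, e2] at key
    linarith
  · simp_rw [hpd]
    refine (gk_integrable.const_mul (|s| * M')).mono'
      (((continuous_const.mul ((pd_continuous hf i).comp (by fun_prop))).mul hgc).aestronglyMeasurable)
      (Eventually.of_forall fun z => ?_)
    rw [Real.norm_eq_abs, abs_mul, abs_mul, abs_of_pos (gk_pos z)]
    gcongr
    · exact (gk_pos z).le
    · exact hM' _
  · simp_rw [hgpd]
    refine (norm_mul_gk_integrable.const_mul M).mono'
      ((hFd.continuous.mul (by fun_prop)).aestronglyMeasurable)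
      (Eventually.of_forall fun z => ?_)
    rw [Real.norm_eq_abs, abs_mul, abs_mul, abs_of_pos (gk_pos z)]
    have h1 : |-(z i / 2)| ≤ ‖z‖ := by
      rw [abs_neg, abs_div]
      have := abs_coord_le z i
      have := abs_nonneg (z i)
      norm_num; linarith
    have := gk_pos z
    gcongr
    exact hM _
  · refine (gk_integrable.const_mul M).mono' ((hFd.continuous.mul hgc).aestronglyMeasurable)
      (Eventually.of_forall fun z => ?_)
    rw [Real.norm_eq_abs, abs_mul, abs_of_pos (gk_pos z)]
    have := gk_pos z
    gcongr
    exact hM _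

/-- The heat equation in the variable `s = √t`. -/
lemma heat_hasDerivAt {f : Euc n → ℝ} (hf : ContDiff ℝ 2 f) (hc : HasCompactSupport f) (s : ℝ)
    (x : Euc n) : HasDerivAt (fun s => heat f s x) (2 * s * ∑ i, heat (pd i (pd i f)) s x) s := by
  have hf1 : ContDiff ℝ 1 f := hf.of_le (by norm_num)
  have hfc := hf.continuous
  have hdc : Continuous (fderiv ℝ f) := hf1.continuous_fderiv (by norm_num)
  obtain ⟨M, -, hM⟩ := bdd_of_cc hfc hc
  obtain ⟨M', hM'⟩ := (hc.fderiv (𝕜 := ℝ)).exists_bound_of_continuous hdc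
  have h := hasDerivAt_integral_of_dominated_loc_of_deriv_le (μ := gm n) (x₀ := s) (s := Set.univ)
    (F := fun s z => f (x + s • z)) (F' := fun s z => fderiv ℝ f (x + s • z) z)
    (bound := fun z => M' * ‖z‖) univ_mem ?_ ?_ ?_ ?_ ?_ ?_
  · refine h.2.congr_deriv ?_
    simp_rw [fderiv_apply_eq_sum_pd]
    rw [integral_finsetSum, Finset.mul_sum]
    · refine Finset.sum_congr rfl fun i _ => ?_
      exact gauss_ibp (hf.pdD (by norm_num) i) (hc.pdD i) s x i
    · intro i _
      obtain ⟨M₂, hM0₂, hM₂⟩ := bdd_of_cc (pd_continuous hf1 i) (hc.pdD i)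
      refine (gm_integrable_norm.mul_const M₂).mono'
        (Continuous.aestronglyMeasurable (((by fun_prop : Continuous fun z : Euc n => z i)).mul
          ((pd_continuous hf1 i).comp (by fun_prop)))) (Eventually.of_forall fun z => ?_)
      rw [Real.norm_eq_abs, abs_mul]
      gcongr
      · exact abs_coord_le z i
      · exact hM₂ _
  · exact Eventually.of_forall fun y => (hfc.comp (by fun_prop)).aestronglyMeasurable
  · exact int_of_bdd (hfc.comp (by fun_prop)) fun z => hM _
  · exact ((hdc.comp (by fun_prop)).clm_apply continuous_id).aestronglyMeasurable
  · refine Eventually.of_forall fun z y _ => ((fderiv ℝ f (x + y • z)).le_opNorm z).trans ?_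
    gcongr; exact hM' _
  · exact gm_integrable_norm.const_mul _
  · refine Eventually.of_forall fun z y _ => ?_
    have h1 := (hf1.differentiable (by norm_num) (x + y • z)).hasFDerivAt
    have h2 : HasDerivAt (fun y : ℝ => x + y • z) z y := by
      simpa using ((hasDerivAt_id y).smul_const z).const_add x
    exact h1.comp_hasDerivAt y h2

lemma heat_lintegral {F : Euc n → ℝ} (hF : Continuous F) (hc : HasCompactSupport F)
    (h0 : ∀ x, 0 ≤ F x) (s : ℝ) :
    ∫⁻ x, ENNReal.ofReal (heat F s x) = ∫⁻ x, ENNReal.ofReal (F x) := by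
  obtain ⟨M, -, hM⟩ := bdd_of_cc hF hc
  have h1 : ∀ x, ENNReal.ofReal (heat F s x) = ∫⁻ z, ENNReal.ofReal (F (x + s • z)) ∂(gm n) := by
    intro x
    rw [heat, ofReal_integral_eq_lintegral_ofReal
      (int_of_bdd (F := fun z => F (x + s • z)) (hF.comp (by fun_prop)) fun z => hM _) (Eventually.of_forall fun z => h0 _)]
  simp_rw [h1]
  rw [lintegral_lintegral_swap]
  · have : ∀ z : Euc n, ∫⁻ x, ENNReal.ofReal (F (x + s • z)) = ∫⁻ x, ENNReal.ofReal (F x) :=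
      fun z => lintegral_add_right_eq_self (fun x => ENNReal.ofReal (F x)) _
    simp [this]
  · have : Continuous (fun q : Euc n × Euc n => F (q.1 + s • q.2)) := hF.comp (by fun_prop)
    exact this.measurable.ennreal_ofReal.aemeasurable

/-- The heat flow contracts `L^r`, `r ≥ 1`. -/
lemma heat_rpow_le {f : Euc n → ℝ} (hf : Continuous f) (hc : HasCompactSupport f) {r : ℝ}
    (hr : 1 ≤ r) (s : ℝ) :
    Integrable (fun x => |heat f s x| ^ r) ∧ ∫ x, |heat f s x| ^ r ≤ ∫ x, |f x| ^ r := by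
  have hr0 : 0 < r := by linarith
  set F : Euc n → ℝ := fun x => |f x| ^ r with hF
  have hFc : Continuous F := hf.abs.rpow_const fun x => Or.inr hr0.le
  have hFcc : HasCompactSupport F :=
    hc.comp_left (g := fun t : ℝ => |t| ^ r) (by simp [hr0.ne'])
  have hF0 : ∀ x, 0 ≤ F x := fun x => by positivity
  obtain ⟨M, -, hM⟩ := bdd_of_cc hf hc
  obtain ⟨M', -, hM'⟩ := bdd_of_cc hFc hFcc
  have hjen : ∀ x, |heat f s x| ^ r ≤ heat F s x := by
    intro x
    have h1 : |heat f s x| ≤ ∫ z, |f (x + s • z)| ∂(gm n) := abs_integral_le_integral_abs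
    refine (Real.rpow_le_rpow (abs_nonneg _) h1 hr0.le).trans ?_
    exact (convexOn_rpow hr).map_integral_le (μ := gm n) (f := fun z => |f (x + s • z)|)
      (continuousOn_id.rpow_const fun x _ => Or.inr hr0.le) isClosed_Ici
      (Eventually.of_forall fun z => Set.mem_Ici.2 (abs_nonneg _))
      (int_of_bdd ((hf.comp (by fun_prop)).abs) (M := M) fun z => by rw [abs_abs]; exact hM _)
      (int_of_bdd (hFc.comp (by fun_prop : Continuous fun z : Euc n => x + s • z)) fun z => hM' _)
  have hlt : ∫⁻ x, ENNReal.ofReal (|heat f s x| ^ r) ≤ ∫⁻ x, ENNReal.ofReal (F x) := by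
    rw [← heat_lintegral hFc hFcc hF0 s]
    exact lintegral_mono fun x => ENNReal.ofReal_le_ofReal (hjen x)
  have hFi : Integrable F := hFc.integrable_of_hasCompactSupport hFcc
  rw [← ofReal_integral_eq_lintegral_ofReal hFi (Eventually.of_forall hF0)] at hlt
  have hmeas : AEStronglyMeasurable (fun x => |heat f s x| ^ r) volume :=
    ((heat_slice_cont hf hc s).abs.rpow_const fun x => Or.inr hr0.le).aestronglyMeasurable
  have hintg : Integrable (fun x => |heat f s x| ^ r) := by
    refine ⟨hmeas, ?_⟩
    rw [hasFiniteIntegral_iff_ofReal (Eventually.of_forall fun x => by positivity)]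
    exact hlt.trans_lt ENNReal.ofReal_lt_top
  refine ⟨hintg, ?_⟩
  rw [← ofReal_integral_eq_lintegral_ofReal hintg (Eventually.of_forall fun x => by positivity)] at hlt
  exact (ENNReal.ofReal_le_ofReal_iff (integral_nonneg hF0)).1 hlt

/-- Large-time decay of the heat flow. -/
lemma heat_decay {f : Euc n → ℝ} (hf : Continuous f) (hc : HasCompactSupport f) {s : ℝ} (hs : 0 < s)
    (x : Euc n) : |heat f s x| ≤ (s ^ n)⁻¹ * ((∫ y : Euc n, gexp y)⁻¹ * ∫ y, |f y|) := by
  have hfi : Integrable (fun y => |f y|) := (hf.integrable_of_hasCompactSupport hc).abs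
  have hfi2 : Integrable fun z : Euc n => |f (x + s • z)| := by
    have := (hfi.comp_add_left x).comp_smul hs.ne'
    exact this
  have hI := inv_pos.2 (gexp_integral_pos (n := n))
  calc |heat f s x| ≤ ∫ z, |f (x + s • z)| ∂(gm n) := abs_integral_le_integral_abs
    _ = ∫ z, |f (x + s • z)| * gk z := gm_integral _
    _ ≤ ∫ z, |f (x + s • z)| * (∫ y : Euc n, gexp y)⁻¹ := by
        refine integral_mono_of_nonneg
          (Eventually.of_forall fun z => mul_nonneg (abs_nonneg _) (gk_pos z).le)
          (hfi2.mul_const _) (Eventually.of_forall fun z => ?_)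
        exact mul_le_mul_of_nonneg_left (gk_le z) (abs_nonneg _)
    _ = _ := by
        rw [integral_mul_const]
        have h1 := Measure.integral_comp_smul (volume : Measure (Euc n)) (fun z => |f (x + z)|) s
        rw [h1, integral_add_left_eq_self (fun z => |f z|)]
        simp [abs_of_pos hs]
        ring

end heat

/-! ### Dissipation of the Bellman functional -/

section CZ

variable {n : ℕ}

lemma pd_eq_deriv_line {f : Euc n → ℝ} {x : Euc n} {c : ℝ} (k : Fin n) (hf : DifferentiableAt ℝ f x)
    (h : HasDerivAt (fun s : ℝ => f (x + s • eb k)) c 0) : pd k f x = c := by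
  have h1 := hasDerivAt_line (f := f) (x := x) k 0 (by simpa using hf)
  have := h1.unique h
  simpa using this

lemma line_hasDerivAt {f : Euc n → ℝ} {x : Euc n} (k : Fin n) (hf : DifferentiableAt ℝ f x) :
    HasDerivAt (fun s : ℝ => f (x + s • eb k)) (pd k f x) 0 := by
  have h1 := hasDerivAt_line (f := f) (x := x) k 0 (by simpa using hf)
  simpa using h1

variable {b q m ε : ℝ}

lemma bell_contDiff {u v : Euc n → ℝ} {k : WithTop ℕ∞} (hε : 0 < ε) (hu : ContDiff ℝ k u)
    (hv : ContDiff ℝ k v) (hvp : ∀ x, 0 < v x) :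
    ContDiff ℝ k fun x => bell b q m ε (u x) (v x) := by
  unfold bell
  have hy : ContDiff ℝ k fun x => u x ^ 2 + ε := (hu.pow 2).add contDiff_const
  have hyp : ∀ x, u x ^ 2 + ε ≠ 0 := fun x => by positivity
  have hym : ContDiff ℝ k fun x => (u x ^ 2 + ε) ^ m := hy.rpow_const_of_ne hyp
  refine (contDiff_const.mul (hv.rpow_const_of_ne fun x => (hvp x).ne')).add (hy.mul ?_)
  refine (hv.add hym).rpow_const_of_ne fun x => ?_
  have := hvp x
  positivity

lemma pd_bell {u v : Euc n → ℝ} (hε : 0 < ε) (hu : ContDiff ℝ 1 u)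
    (hv : ContDiff ℝ 1 v) (hvp : ∀ x, 0 < v x) (k : Fin n) (x : Euc n) :
    pd k (fun x => bell b q m ε (u x) (v x)) x
      = bellU q m ε (u x) (v x) * pd k u x + bellV b q m ε (u x) (v x) * pd k v x := by
  refine pd_eq_deriv_line k ((bell_contDiff hε hu hv hvp).differentiable (by norm_num) x) ?_
  have := bell_hasDerivAt (b := b) (q := q) (m := m) hε
    (line_hasDerivAt k (hu.differentiable (by norm_num) x))
    (line_hasDerivAt k (hv.differentiable (by norm_num) x)) (by simpa using hvp x)
  simpa using this

lemma lap_bell {u v : Euc n → ℝ} (hε : 0 < ε) (hu : ContDiff ℝ 2 u)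
    (hv : ContDiff ℝ 2 v) (hvp : ∀ x, 0 < v x) (x : Euc n) :
    lap (fun x => bell b q m ε (u x) (v x)) x
      = bellU q m ε (u x) (v x) * lap u x + bellV b q m ε (u x) (v x) * lap v x
        + ∑ k, bellQ b q m ε (u x) (v x) (pd k u x) (pd k v x) := by
  have hu1 : ContDiff ℝ 1 u := hu.of_le (by norm_num)
  have hv1 : ContDiff ℝ 1 v := hv.of_le (by norm_num)
  unfold lap
  rw [Finset.mul_sum, Finset.mul_sum, ← Finset.sum_add_distrib, ← Finset.sum_add_distrib]
  refine Finset.sum_congr rfl fun k _ => ?_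
  have hB := (bell_contDiff (b := b) (q := q) (m := m) hε hu hv hvp).pdD (k := 1) (by norm_num) k
  refine pd_eq_deriv_line k (hB.differentiable (by norm_num) x) ?_
  have heq : (fun s : ℝ => pd k (fun x => bell b q m ε (u x) (v x)) (x + s • eb k)) =
      fun s : ℝ => bellU q m ε (u (x + s • eb k)) (v (x + s • eb k)) * pd k u (x + s • eb k)
        + bellV b q m ε (u (x + s • eb k)) (v (x + s • eb k)) * pd k v (x + s • eb k) := by
    funext s; exact pd_bell hε hu1 hv1 hvp k _
  rw [heq]
  have := bell_hasDerivAt2 (b := b) (q := q) (m := m) (t := 0) (U := fun s => u (x + s • eb k))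
    (V := fun s => v (x + s • eb k)) (U1 := fun s => pd k u (x + s • eb k))
    (V1 := fun s => pd k v (x + s • eb k)) hε
    (by simpa using line_hasDerivAt k (hu1.differentiable (by norm_num) x))
    (by simpa using line_hasDerivAt k (hv1.differentiable (by norm_num) x))
    (line_hasDerivAt k ((hu.pdD (k := 1) (by norm_num) k).differentiable (by norm_num) x))
    (line_hasDerivAt k ((hv.pdD (k := 1) (by norm_num) k).differentiable (by norm_num) x))
    (by simpa using hvp x)
  simpa using this

lemma bellQ_quad (u v u1 v1 : ℝ) : bellQ b q m ε u v u1 v1 =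
    bellQ b q m ε u v 1 0 * u1 ^ 2
      + (bellQ b q m ε u v 1 1 - bellQ b q m ε u v 1 0 - bellQ b q m ε u v 0 1) * (u1 * v1)
      + bellQ b q m ε u v 0 1 * v1 ^ 2 := by
  unfold bellQ
  simp only
  ring

/-- The convexity of the Bellman function controls the product of different components of two
gradients, because its Hessian acts diagonally on vectors. -/
lemma bellQ_sum_ge {Q : ℝ → ℝ → ℝ} {c11 c12 c22 : ℝ}
    (hQ : ∀ a c, Q a c = c11 * a ^ 2 + c12 * (a * c) + c22 * c ^ 2)
    (hpos : ∀ a c, 2 * |a * c| ≤ Q a c) (ξ ζ : Fin n → ℝ) (i j : Fin n) :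
    2 * |ξ i * ζ j| ≤ ∑ k, Q (ξ k) (ζ k) := by
  set A := Real.sqrt (∑ k, ξ k ^ 2)
  set B := Real.sqrt (∑ k, ζ k ^ 2)
  have hA2 : A ^ 2 = ∑ k, ξ k ^ 2 := Real.sq_sqrt (Finset.sum_nonneg fun k _ => sq_nonneg _)
  have hB2 : B ^ 2 = ∑ k, ζ k ^ 2 := Real.sq_sqrt (Finset.sum_nonneg fun k _ => sq_nonneg _)
  have hA0 : 0 ≤ A := Real.sqrt_nonneg _
  have hB0 : 0 ≤ B := Real.sqrt_nonneg _
  have hsum : ∑ k, Q (ξ k) (ζ k) = c11 * A ^ 2 + c12 * (∑ k, ξ k * ζ k) + c22 * B ^ 2 := by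
    simp_rw [hQ]
    rw [Finset.sum_add_distrib, Finset.sum_add_distrib, hA2, hB2, Finset.mul_sum, Finset.mul_sum,
      Finset.mul_sum]
  have hcs : |∑ k, ξ k * ζ k| ≤ A * B := by
    refine abs_le_of_sq_le_sq ?_ (by positivity)
    rw [mul_pow, hA2, hB2]
    exact Finset.sum_mul_sq_le_sq_mul_sq _ _ _
  have hi : |ξ i| ≤ A := by
    refine abs_le_of_sq_le_sq ?_ hA0
    rw [hA2]
    exact Finset.single_le_sum (f := fun k => ξ k ^ 2) (fun k _ => sq_nonneg _) (Finset.mem_univ i)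
  have hj : |ζ j| ≤ B := by
    refine abs_le_of_sq_le_sq ?_ hB0
    rw [hB2]
    exact Finset.single_le_sum (f := fun k => ζ k ^ 2) (fun k _ => sq_nonneg _) (Finset.mem_univ j)
  have h1 : |ξ i * ζ j| ≤ A * B := by
    rw [abs_mul]; exact mul_le_mul hi hj (abs_nonneg _) hA0
  have h2 : 2 * (A * B) ≤ c11 * A ^ 2 - |c12| * (A * B) + c22 * B ^ 2 := by
    have e1 := hpos A B
    have e2 := hpos A (-B)
    rw [hQ] at e1 e2
    have : |A * -B| = A * B := by rw [mul_neg, abs_neg, abs_of_nonneg (by positivity)]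
    rw [this] at e2
    rw [abs_of_nonneg (by positivity)] at e1
    rcases abs_cases c12 with ⟨h, _⟩ | ⟨h, _⟩ <;> rw [h] <;> nlinarith
  have h3 : -(|c12| * (A * B)) ≤ c12 * ∑ k, ξ k * ζ k := by
    have : |c12 * ∑ k, ξ k * ζ k| ≤ |c12| * (A * B) := by
      rw [abs_mul]; gcongr
    exact (abs_le.1 this).1
  rw [hsum]; linarith

lemma integral_lap_mul {w η : Euc n → ℝ} (hw : ContDiff ℝ 2 w) (hη : ContDiff ℝ 2 η)
    (hc : HasCompactSupport η) : ∫ x, lap w x * η x = ∫ x, w x * lap η x := by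
  unfold lap
  simp_rw [Finset.sum_mul, Finset.mul_sum]
  have hw1 := fun k => hw.pdD (k := 1) (by norm_num) k
  have hη1 := fun k => hη.pdD (k := 1) (by norm_num) k
  rw [integral_finsetSum, integral_finsetSum]
  · refine Finset.sum_congr rfl fun k _ => ?_
    rw [integral_pd_mul (hw1 k) (hη.of_le (by norm_num)) hc k]
    have := integral_pd_mul (hw.of_le (by norm_num)) (hη1 k) (hc.pdD k) k
    rw [this, neg_neg]
  · intro k _
    exact ((hw.continuous.mul (pd_continuous (hη1 k) k)).integrable_of_hasCompactSupport
      (((hc.pdD k).pdD k).mul_left))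
  · intro k _
    exact (((pd_continuous (hw1 k) k).mul hη.continuous).integrable_of_hasCompactSupport
      hc.mul_left)

lemma lap_mul {f g : Euc n → ℝ} {x : Euc n} (hf : ContDiff ℝ 2 f) (hg : ContDiff ℝ 2 g) :
    lap (fun y => f y * g y) x
      = lap f x * g x + 2 * ∑ k, pd k f x * pd k g x + f x * lap g x := by
  unfold lap
  rw [Finset.sum_mul, Finset.mul_sum, Finset.mul_sum, ← Finset.sum_add_distrib,
    ← Finset.sum_add_distrib]
  refine Finset.sum_congr rfl fun k _ => ?_
  have hfd := hf.differentiable (by norm_num)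
  have hgd := hg.differentiable (by norm_num)
  have hf1 := (hf.pdD (k := 1) (by norm_num) k).differentiable (by norm_num)
  have hg1 := (hg.pdD (k := 1) (by norm_num) k).differentiable (by norm_num)
  have h1 : pd k (fun y => f y * g y) = fun y => pd k f y * g y + f y * pd k g y := by
    funext y; exact pd_mul k (hfd y) (hgd y)
  rw [h1, pd_add k ((hf1 x).fun_mul (hgd x)) ((hfd x).fun_mul (hg1 x)), pd_mul k (hf1 x) (hgd x),
    pd_mul k (hfd x) (hg1 x)]
  ring

lemma lap_cont {f : Euc n → ℝ} (hf : ContDiff ℝ 2 f) : Continuous (lap f) := by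
  unfold lap
  exact continuous_finsetSum _ fun k _ => pd_continuous (hf.pdD (k := 1) (by norm_num) k) k

lemma HasCompactSupport.lapD {f : Euc n → ℝ} (hf : HasCompactSupport f) :
    HasCompactSupport (lap f) := by
  have h : (lap f) = fun x => ∑ k, pd k (pd k f) x := rfl
  rw [h]
  refine HasCompactSupport.intro hf fun x hx => Finset.sum_eq_zero fun k _ => ?_
  have h2 : tsupport (pd k (pd k f)) ⊆ tsupport f :=
    (tsupport_fderiv_apply_subset ℝ _).trans (tsupport_fderiv_apply_subset ℝ _)
  exact image_eq_zero_of_notMem_tsupport fun h => hx (h2 h)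

lemma tsupport_pd_subset (f : Euc n → ℝ) (k : Fin n) : tsupport (pd k f) ⊆ tsupport f :=
  tsupport_fderiv_apply_subset ℝ _

lemma lap_zero_off {f : Euc n → ℝ} {x : Euc n} (hx : x ∉ tsupport f) : lap f x = 0 := by
  refine Finset.sum_eq_zero fun k _ => ?_
  exact image_eq_zero_of_notMem_tsupport fun h =>
    hx (tsupport_pd_subset f k (tsupport_pd_subset _ k h))

/-- The dissipation inequality for the Bellman functional at a fixed time. -/
lemma cz_static (hb0 : 0 ≤ b) (hq1 : 1 < q) (hq2 : q < 2) (hm : 2 * m * (q - 1) = 1) (hε : 0 < ε)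
    (hb : (4 * (2 - q) * (1 + m) + 2) ^ 2 / 8 + 1 ≤ b * q * (q - 1))
    {u v H η : Euc n → ℝ} (hu : ContDiff ℝ 2 u) (hv : ContDiff ℝ 2 v) (hH : ContDiff ℝ 2 H)
    (hη : ContDiff ℝ 2 η) (hηc : HasCompactSupport η) (hv0 : ∀ x, 0 ≤ v x) (hη0 : ∀ x, 0 ≤ η x)
    (i j : Fin n) (hHu : ∀ x, lap H x = pd j (pd i u) x) {M κ : ℝ} (hκ0 : 0 ≤ κ)
    (hM1 : ∀ x, |pd i u x| ≤ M) (hM2 : ∀ k x, |pd k H x| ≤ M) (hM3 : ∀ x, |H x| ≤ M)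
    (hκ1 : ∀ k x, |pd k η x| ≤ κ) (hκ2 : ∀ x, |lap η x| ≤ κ) (hvi : Integrable v) :
    ∫ x, (bellU q m ε (u x) (v x + ε) * lap u x + bellV b q m ε (u x) (v x + ε) * lap v x
        - (lap H x * v x + H x * lap v x)) * η x
      ≤ κ * ((∫ x in tsupport η, bell b q m ε (u x) (v x + ε)) + (3 + 2 * n) * M * ∫ x, v x) := by
  have hvε : ContDiff ℝ 2 fun x => v x + ε := hv.add contDiff_const
  have hvεp : ∀ x, 0 < v x + ε := fun x => by have := hv0 x; linarith
  set B : Euc n → ℝ := fun x => bell b q m ε (u x) (v x + ε) with hBdef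
  have hB : ContDiff ℝ 2 B := bell_contDiff hε hu hvε hvεp
  have hB0 : ∀ x, 0 ≤ B x := fun x => bell_nonneg hb0 hε (hvεp x)
  have hlapv : ∀ x, lap (fun x => v x + ε) x = lap v x := by
    intro x
    unfold lap
    refine Finset.sum_congr rfl fun k _ => ?_
    congr 1
    funext y
    rw [pd_add k (hv.differentiable (by norm_num) y) (differentiableAt_const _), pd_const, add_zero]
  have hpdv : ∀ k x, pd k (fun x => v x + ε) x = pd k v x := by
    intro k y
    rw [pd_add k (hv.differentiable (by norm_num) y) (differentiableAt_const _), pd_const, add_zero]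
  have hlapB : ∀ x, lap B x = bellU q m ε (u x) (v x + ε) * lap u x
      + bellV b q m ε (u x) (v x + ε) * lap v x
        + ∑ k, bellQ b q m ε (u x) (v x + ε) (pd k u x) (pd k v x) := by
    intro x
    have := lap_bell (b := b) (q := q) (m := m) hε hu hvε hvεp x
    simp only [hlapv, hpdv] at this
    exact this
  have hQ : ∀ x, 2 * (pd i u x * pd j v x) ≤
      ∑ k, bellQ b q m ε (u x) (v x + ε) (pd k u x) (pd k v x) := by
    intro x
    refine le_trans ?_ (bellQ_sum_ge (Q := bellQ b q m ε (u x) (v x + ε))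
      (fun a c => bellQ_quad _ _ a c) (fun a c => bellQ_ge hq1 hq2 hm hε hb (hvεp x))
      (fun k => pd k u x) (fun k => pd k v x) i j)
    linarith [le_abs_self (pd i u x * pd j v x)]
  have hu1 := fun k => hu.pdD (k := 1) (by norm_num) k
  have cu : ∀ k, Continuous (pd k u) := fun k => (hu1 k).continuous
  have cv : ∀ k, Continuous (pd k v) := fun k => pd_continuous (hv.of_le (by norm_num)) k
  have cH : ∀ k, Continuous (pd k H) := fun k => pd_continuous (hH.of_le (by norm_num)) k
  have cη : ∀ k, Continuous (pd k η) := fun k => pd_continuous (hη.of_le (by norm_num)) k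
  have cη0 := hη.continuous
  have cv0 := hv.continuous
  have cH0 := hH.continuous
  have clv := lap_cont hv
  have clH := lap_cont hH
  have clη := lap_cont hη
  have clB := lap_cont hB
  have cB := hB.continuous
  -- integrability of every term carrying the cut-off
  have int1 : ∀ {F : Euc n → ℝ}, Continuous F → Integrable (fun x => F x * η x) := fun hF =>
    (hF.mul cη0).integrable_of_hasCompactSupport hηc.mul_left
  have int2 : ∀ {F : Euc n → ℝ} (k : Fin n), Continuous F → Integrable (fun x => F x * pd k η x) :=
    fun k hF => (hF.mul (cη k)).integrable_of_hasCompactSupport (hηc.pdD k).mul_left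
  have int3 : ∀ {F : Euc n → ℝ}, Continuous F → Integrable (fun x => F x * lap η x) := fun hF =>
    (hF.mul clη).integrable_of_hasCompactSupport hηc.lapD.mul_left
  have I1 : ∫ x, lap B x * η x = ∫ x, B x * lap η x := integral_lap_mul hB hη hηc
  have iuv : Integrable fun x => (pd i u x * pd j v x) * η x := int1 ((cu i).mul (cv j))
  have iuη : Integrable fun x => (pd i u x * v x) * pd j η x := int2 j ((cu i).mul cv0)
  have iHv : Integrable fun x => (lap H x * v x) * η x := int1 (clH.mul cv0)
  have ivH : Integrable fun x => (H x * lap v x) * η x := int1 (cH0.mul clv)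
  have ivk : ∀ k, Integrable fun x => (v x * pd k H x) * pd k η x := fun k => int2 k (cv0.mul (cH k))
  have ivl : Integrable fun x => (v x * H x) * lap η x := int3 (cv0.mul cH0)
  have I2 : ∫ x, (lap H x * v x) * η x
      = - (∫ x, (pd i u x * pd j v x) * η x) - ∫ x, (pd i u x * v x) * pd j η x := by
    have h1 : ∀ x, (lap H x * v x) * η x = pd j (pd i u) x * (v x * η x) := by
      intro x; rw [hHu]; ring
    simp_rw [h1]
    rw [integral_pd_mul (hu1 i) ((hv.mul hη).of_le (by norm_num)) hηc.mul_left j,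
      ← neg_add', ← integral_add iuv iuη]
    congr 2
    funext x
    rw [pd_mul j (hv.differentiable (by norm_num) x) (hη.differentiable (by norm_num) x)]
    ring
  have I3 : ∫ x, (H x * lap v x) * η x = (∫ x, (lap H x * v x) * η x)
      + 2 * (∑ k, ∫ x, (v x * pd k H x) * pd k η x) + ∫ x, (v x * H x) * lap η x := by
    have i2 : Integrable fun x => 2 * ∑ k, (v x * pd k H x) * pd k η x :=
      (integrable_finsetSum _ fun k _ => ivk k).const_mul 2
    have i3 : Integrable fun x => (lap H x * v x) * η x + 2 * ∑ k, (v x * pd k H x) * pd k η x :=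
      iHv.add i2
    have h1 : ∀ x, (H x * lap v x) * η x = lap v x * (H x * η x) := by intro x; ring
    simp_rw [h1]
    rw [integral_lap_mul hv (hH.mul hη) hηc.mul_left, ← integral_finsetSum _ (fun k _ => ivk k),
      ← integral_const_mul, ← integral_add iHv i2, ← integral_add i3 ivl]
    congr 1
    funext x
    rw [lap_mul hH hη]
    have : ∑ k, v x * pd k H x * pd k η x = v x * ∑ k, pd k H x * pd k η x := by
      rw [Finset.mul_sum]; refine Finset.sum_congr rfl fun k _ => by ring
    rw [this]; ring
  have cQ : Continuous fun x => ∑ k, bellQ b q m ε (u x) (v x + ε) (pd k u x) (pd k v x) := by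
    have : (fun x => ∑ k, bellQ b q m ε (u x) (v x + ε) (pd k u x) (pd k v x)) =
        fun x => lap B x - (bellU q m ε (u x) (v x + ε) * lap u x
      + bellV b q m ε (u x) (v x + ε) * lap v x) := by
      funext x; rw [hlapB]; ring
    have hy : ∀ x, u x ^ 2 + ε ≠ 0 := fun x => by positivity
    have hw : ∀ x, v x + ε + (u x ^ 2 + ε) ^ m ≠ 0 := fun x => by
      have := hvεp x
      positivity
    have cu0 := hu.continuous
    have cvε : Continuous fun x => v x + ε := hvε.continuous
    have c1 : Continuous fun x => (u x ^ 2 + ε) ^ m :=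
      Continuous.rpow_const (by fun_prop) fun x => Or.inl (hy x)
    have c2 : ∀ r : ℝ, Continuous fun x => (v x + ε + (u x ^ 2 + ε) ^ m) ^ r := fun r =>
      Continuous.rpow_const (by fun_prop) fun x => Or.inl (hw x)
    have c3 : ∀ r : ℝ, Continuous fun x => (v x + ε) ^ r := fun r =>
      Continuous.rpow_const (by fun_prop) fun x => Or.inl (hvεp x).ne'
    have clu := lap_cont hu
    rw [this]
    unfold bellU bellV
    have := c2 (2 - q)
    have := c2 (1 - q)
    have := c3 (q - 1)
    fun_prop
  have hsplit : ∀ x, (bellU q m ε (u x) (v x + ε) * lap u x + bellV b q m ε (u x) (v x + ε) * lap v x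
        - (lap H x * v x + H x * lap v x)) * η x
      = lap B x * η x - (∑ k, bellQ b q m ε (u x) (v x + ε) (pd k u x) (pd k v x)) * η x
        - ((lap H x * v x) * η x + (H x * lap v x) * η x) := by
    intro x; rw [hlapB]; ring
  simp_rw [hsplit]
  have iB := int1 clB
  have iQ := int1 cQ
  have iBQ : Integrable fun x => lap B x * η x
      - (∑ k, bellQ b q m ε (u x) (v x + ε) (pd k u x) (pd k v x)) * η x := iB.sub iQ
  have iHH : Integrable fun x => (lap H x * v x) * η x + (H x * lap v x) * η x := iHv.add ivH
  rw [integral_sub iBQ iHH, integral_sub iB iQ, integral_add iHv ivH, I3, I2, I1]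
  have J1 : 2 * ∫ x, (pd i u x * pd j v x) * η x ≤
      ∫ x, (∑ k, bellQ b q m ε (u x) (v x + ε) (pd k u x) (pd k v x)) * η x := by
    rw [← integral_const_mul]
    refine integral_mono (iuv.const_mul 2) iQ fun x => ?_
    have := mul_le_mul_of_nonneg_right (hQ x) (hη0 x)
    simp only
    linarith
  have J2 : ∫ x, B x * lap η x ≤ κ * ∫ x in tsupport η, B x := by
    have e1 : ∫ x, B x * lap η x = ∫ x in tsupport η, B x * lap η x := by
      rw [setIntegral_eq_integral_of_forall_compl_eq_zero]
      intro x hx; rw [lap_zero_off hx, mul_zero]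
    rw [e1, ← integral_const_mul]
    have hBi : IntegrableOn B (tsupport η) := cB.continuousOn.integrableOn_compact hηc
    refine integral_mono (int3 cB).integrableOn (hBi.const_mul κ) fun x => ?_
    have h1 := (abs_le.1 (hκ2 x)).2
    have := mul_le_mul_of_nonneg_left h1 (hB0 x)
    simp only
    linarith
  -- the remaining terms are linear in `v` with bounded coefficients
  have hvint : 0 ≤ ∫ x, v x := integral_nonneg hv0
  have hM0 : 0 ≤ M := (abs_nonneg _).trans (hM3 0)
  have J : ∀ (a e : Euc n → ℝ), (∀ x, |a x| ≤ M) → (∀ x, |e x| ≤ κ) →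
      |∫ x, (v x * a x) * e x| ≤ κ * (M * ∫ x, v x) := by
    intro a e ha he
    rw [← integral_const_mul, ← integral_const_mul, ← Real.norm_eq_abs]
    refine norm_integral_le_of_norm_le ((hvi.const_mul M).const_mul κ)
      (Eventually.of_forall fun x => ?_)
    rw [Real.norm_eq_abs, abs_mul, abs_mul, abs_of_nonneg (hv0 x)]
    have h1 := ha x
    have h2 := he x
    have h3 := hv0 x
    calc v x * |a x| * |e x| ≤ v x * M * κ := by gcongr
      _ = _ := by ring
  have K1 := (abs_le.1 (J (pd i u) (pd j η) hM1 (hκ1 j))).2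
  have K2 : ∀ k, -(κ * (M * ∫ x, v x)) ≤ ∫ x, (v x * pd k H x) * pd k η x := fun k =>
    (abs_le.1 (J (pd k H) (pd k η) (hM2 k) (hκ1 k))).1
  have K3 := (abs_le.1 (J H (lap η) hM3 hκ2)).1
  have K4 : -((n : ℝ) * (κ * (M * ∫ x, v x))) ≤ ∑ k, ∫ x, (v x * pd k H x) * pd k η x := by
    have := Finset.card_nsmul_le_sum Finset.univ (fun k => ∫ x, (v x * pd k H x) * pd k η x) _
      (fun k _ => K2 k)
    simp at this
    linarith
  have e5 : ∫ x, (pd i u x * v x) * pd j η x = ∫ x, (v x * pd i u x) * pd j η x := by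
    congr 1; funext x; ring
  rw [e5]
  nlinarith

end CZ

/-! ### Cut-off functions -/

section cutoff

variable {n : ℕ}

lemma pd_scale (k : Fin n) {f : Euc n → ℝ} {x : Euc n} (c : ℝ) (hf : DifferentiableAt ℝ f (c • x)) :
    pd k (fun y => f (c • y)) x = c * pd k f (c • x) := by
  have h2 : HasFDerivAt (fun y : Euc n => c • y) (c • ContinuousLinearMap.id ℝ (Euc n)) x :=
    (hasFDerivAt_id x).const_smul c
  have h3 : HasFDerivAt (fun y => f (c • y)) _ x := hf.hasFDerivAt.comp x h2
  rw [pd_eq_of_hasFDerivAt k h3]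
  simp [pd, eb]

/-- A fixed smooth bump function, equal to `1` on the unit ball, supported in the ball of radius
two. -/
def bump0 (n : ℕ) : ContDiffBump (0 : Euc n) := ⟨1, 2, by norm_num, by norm_num⟩

/-- The rescaled cut-off function `x ↦ χ(x/R)`. -/
def cut (R : ℝ) (x : Euc n) : ℝ := bump0 n (R⁻¹ • x)

lemma bump0_contDiff : ContDiff ℝ (⊤ : ℕ∞) (bump0 n : Euc n → ℝ) := (bump0 n).contDiff

lemma cut_contDiff (R : ℝ) : ContDiff ℝ (⊤ : ℕ∞) (cut R : Euc n → ℝ) :=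
  bump0_contDiff.comp (contDiff_const_smul _)

lemma cut_nonneg (R : ℝ) (x : Euc n) : 0 ≤ cut R x := (bump0 n).nonneg

lemma cut_le_one (R : ℝ) (x : Euc n) : cut R x ≤ 1 := (bump0 n).le_one

lemma cut_eq_one {R : ℝ} (hR : 0 < R) {x : Euc n} (hx : ‖x‖ ≤ R) : cut R x = 1 := by
  refine (bump0 n).one_of_mem_closedBall ?_
  rw [mem_closedBall_zero_iff, norm_smul, norm_inv, Real.norm_of_nonneg hR.le]
  show _ ≤ (1 : ℝ)
  rw [inv_mul_le_iff₀ hR]; linarith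

lemma cut_eq_zero {R : ℝ} (hR : 0 < R) {x : Euc n} (hx : 2 * R ≤ ‖x‖) : cut R x = 0 := by
  refine (bump0 n).zero_of_le_dist ?_
  rw [dist_zero_right, norm_smul, norm_inv, Real.norm_of_nonneg hR.le]
  show (2 : ℝ) ≤ _
  rw [le_inv_mul_iff₀ hR]; linarith

lemma cut_tsupport {R : ℝ} (hR : 0 < R) :
    tsupport (cut R : Euc n → ℝ) ⊆ Metric.closedBall 0 (2 * R) := by
  refine closure_minimal (fun x hx => ?_) Metric.isClosed_closedBall
  rw [mem_closedBall_zero_iff]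
  by_contra h
  exact hx (cut_eq_zero hR (not_le.1 h).le)

lemma cut_hasCompactSupport {R : ℝ} (hR : 0 < R) : HasCompactSupport (cut R : Euc n → ℝ) :=
  HasCompactSupport.of_support_subset_isCompact (isCompact_closedBall 0 (2 * R))
    ((subset_tsupport _).trans (cut_tsupport hR))

lemma pd_cut (R : ℝ) (k : Fin n) (x : Euc n) :
    pd k (cut R) x = R⁻¹ * pd k (bump0 n) (R⁻¹ • x) :=
  pd_scale k R⁻¹ (bump0_contDiff.differentiable (by norm_num) _)

lemma pd_pd_cut (R : ℝ) (k l : Fin n) (x : Euc n) :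
    pd l (pd k (cut R)) x = R⁻¹ * (R⁻¹ * pd l (pd k (bump0 n)) (R⁻¹ • x)) := by
  have h : pd k (cut R : Euc n → ℝ) = fun x => R⁻¹ * pd k (bump0 n) (R⁻¹ • x) :=
    funext (pd_cut R k)
  have hd := ((ContDiff.pd_top (bump0_contDiff (n := n)) k).differentiable (by norm_num))
  have hd2 : DifferentiableAt ℝ (fun x => pd k (bump0 n) (R⁻¹ • x)) x :=
    DifferentiableAt.comp x (hd (R⁻¹ • x)) (by fun_prop)
  rw [h, pd_const_mul l _ hd2, pd_scale l R⁻¹ (hd _)]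

lemma bump0_bounds (n : ℕ) : ∃ C : ℝ, 0 < C ∧ (∀ k (x : Euc n), |pd k (bump0 n) x| ≤ C) ∧
    (∀ k l (x : Euc n), |pd l (pd k (bump0 n)) x| ≤ C) := by
  have h1 : ∀ k : Fin n, ∃ M, 0 ≤ M ∧ ∀ x, |pd k (bump0 n) x| ≤ M := fun k =>
    bdd_of_cc (ContDiff.pd_top (bump0_contDiff (n := n)) k).continuous
      ((bump0 n).hasCompactSupport.pdD k)
  have h2 : ∀ q : Fin n × Fin n, ∃ M, 0 ≤ M ∧ ∀ x, |pd q.2 (pd q.1 (bump0 n)) x| ≤ M := fun q =>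
    bdd_of_cc (ContDiff.pd_top (ContDiff.pd_top (bump0_contDiff (n := n)) q.1) q.2).continuous
      (((bump0 n).hasCompactSupport.pdD q.1).pdD q.2)
  choose M1 hM10 hM1 using h1
  choose M2 hM20 hM2 using h2
  refine ⟨1 + (∑ k, M1 k + ∑ q, M2 q), ?_, fun k x => ?_, fun k l x => ?_⟩
  · have := Finset.sum_nonneg fun k (_ : k ∈ Finset.univ) => hM10 k
    have := Finset.sum_nonneg fun k (_ : k ∈ Finset.univ) => hM20 k
    positivity
  · have h3 := Finset.single_le_sum (fun k _ => hM10 k) (Finset.mem_univ k)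
    have := Finset.sum_nonneg fun k (_ : k ∈ Finset.univ) => hM20 k
    linarith [hM1 k x]
  · have h3 := Finset.single_le_sum (fun k _ => hM20 k) (Finset.mem_univ (k, l))
    have := Finset.sum_nonneg fun k (_ : k ∈ Finset.univ) => hM10 k
    linarith [hM2 (k, l) x]

/-- First derivatives of the cut-off are `O(1/R)`, second ones `O(1/R²)`. -/
lemma cut_bounds (n : ℕ) : ∃ C : ℝ, 0 < C ∧ ∀ R : ℝ, 0 < R →
    (∀ k (x : Euc n), |pd k (cut R) x| ≤ C * R⁻¹) ∧
    (∀ k l (x : Euc n), |pd l (pd k (cut R)) x| ≤ C * (R⁻¹ * R⁻¹)) := by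
  obtain ⟨C, hC, h1, h2⟩ := bump0_bounds n
  refine ⟨C, hC, fun R hR => ⟨fun k x => ?_, fun k l x => ?_⟩⟩
  · rw [pd_cut, abs_mul, abs_of_pos (inv_pos.2 hR), mul_comm]
    have := inv_pos.2 hR
    gcongr
    exact h1 k _
  · rw [pd_pd_cut, abs_mul, abs_mul, abs_of_pos (inv_pos.2 hR), ← mul_assoc, mul_comm]
    have := inv_pos.2 hR
    gcongr
    exact h2 k l _

end cutoff

/-! ### The Bellman functional along the heat flow -/

section CZdyn

variable {n : ℕ}

lemma lap_heat {f : Euc n → ℝ} (hf : ContDiff ℝ 2 f) (hc : HasCompactSupport f) (s : ℝ) (x : Euc n) :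
    lap (heat f s) x = ∑ k, heat (pd k (pd k f)) s x := by
  unfold lap
  refine Finset.sum_congr rfl fun k _ => ?_
  rw [pd_heat (hf.of_le (by norm_num)) hc, pd_heat (hf.pdD (by norm_num) k) (hc.pdD k)]

lemma lap_heat_cont {f : Euc n → ℝ} (hf : ContDiff ℝ 2 f) (hc : HasCompactSupport f) :
    Continuous fun r : ℝ × Euc n => lap (heat f r.1) r.2 := by
  simp_rw [lap_heat hf hc]
  exact continuous_finsetSum _ fun k _ =>
    heat_cont (pd_continuous (hf.pdD (by norm_num) k) k) ((hc.pdD k).pdD k)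

lemma heat_sum {ι : Type*} (t : Finset ι) {F : ι → Euc n → ℝ} (hF : ∀ k ∈ t, Continuous (F k))
    (hc : ∀ k ∈ t, HasCompactSupport (F k)) (s : ℝ) (x : Euc n) :
    heat (fun y => ∑ k ∈ t, F k y) s x = ∑ k ∈ t, heat (F k) s x := by
  unfold heat
  rw [integral_finsetSum]
  intro k hk
  obtain ⟨M, -, hM⟩ := bdd_of_cc (hF k hk) (hc k hk)
  exact int_of_bdd (F := fun z => F k (x + s • z)) ((hF k hk).comp (by fun_prop)) fun z => hM _

lemma lap_pd_pd {ψ : Euc n → ℝ} (hψ : ContDiff ℝ (⊤ : ℕ∞) ψ) (i j : Fin n) :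
    lap (pd j (pd i ψ)) = pd j (pd i (lap ψ)) := by
  have hs := fun k => ContDiff.pd_top hψ k
  have hss := fun k l => ContDiff.pd_top (hs k) l
  have two : ∀ {f : Euc n → ℝ} {x}, ContDiff ℝ (⊤ : ℕ∞) f → ContDiffAt ℝ 2 f x := fun hf =>
    (hf.of_le (by norm_cast)).contDiffAt
  have hcomm : ∀ {f : Euc n → ℝ} (k l), ContDiff ℝ (⊤ : ℕ∞) f → pd k (pd l f) = pd l (pd k f) :=
    fun k l hf => funext fun x => pd_comm k l (two hf)
  have e1 : pd i (lap ψ) = fun x => ∑ k, pd i (pd k (pd k ψ)) x := by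
    funext x
    exact pd_sum _ i fun k _ => (hss k k).differentiable (by norm_num) x
  funext x
  rw [e1, pd_sum _ j fun k _ => (ContDiff.pd_top (hss k k) i).differentiable (by norm_num) x]
  unfold lap
  refine Finset.sum_congr rfl fun k _ => ?_
  rw [hcomm k j (hs i), hcomm k j (ContDiff.pd_top (hs i) k), hcomm k i hψ, hcomm k i (hs k)]

variable {b q m ε p : ℝ}

set_option maxHeartbeats 1000000 in
/-- The dissipation of the Bellman functional, integrated along the heat flows of `Δψ` and `g` up to
time `S²`, bounds the pairing of `∂ᵢ∂ⱼψ` with `g`. The error terms vanish as the regularisation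
`ε`, the cut-off derivatives `κ` and `1 / S` tend to zero in this order. -/
lemma cz_dyn (hb0 : 0 ≤ b) (hq1 : 1 < q) (hq2 : q < 2) (hm : 2 * m * (q - 1) = 1) (hε : 0 < ε)
    (hb : (4 * (2 - q) * (1 + m) + 2) ^ 2 / 8 + 1 ≤ b * q * (q - 1))
    (hmq : m * q = p / 2) (hp1 : 1 ≤ p)
    {ψ g η : Euc n → ℝ} (hψ : ContDiff ℝ (⊤ : ℕ∞) ψ) (hψc : HasCompactSupport ψ)
    (hg : ContDiff ℝ 2 g) (hgc : HasCompactSupport g) (hg0 : ∀ x, 0 ≤ g x) (i j : Fin n)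
    (hη : ContDiff ℝ 2 η) (hηc : HasCompactSupport η) (hη0 : ∀ x, 0 ≤ η x) (hη1 : ∀ x, η x ≤ 1)
    {M κ S : ℝ} (hκ0 : 0 ≤ κ) (hS : 0 < S)
    (hM1 : ∀ x, |pd i (lap ψ) x| ≤ M) (hM2 : ∀ k x, |pd k (pd j (pd i ψ)) x| ≤ M)
    (hM3 : ∀ x, |pd j (pd i ψ) x| ≤ M)
    (hκ1 : ∀ k x, |pd k η x| ≤ κ) (hκ2 : ∀ x, |lap η x| ≤ κ) :
    ∫ x, pd j (pd i ψ) x * g x * η x ≤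
      (1 + 2 * S ^ 2 * κ) * ((b * 2 ^ q + 2 ^ q * 2 ^ q + 2 ^ q * 2 ^ (p / 2)) *
        ((∫ x, |lap ψ x| ^ p) + (∫ x, |g x| ^ q)
          + (ε ^ q + ε ^ (p / 2)) * volume.real (tsupport η)))
      + ((S ^ n)⁻¹ * ((∫ y : Euc n, gexp y)⁻¹ * ∫ y, |pd j (pd i ψ) y|)
        + 2 * S ^ 2 * κ * ((3 + 2 * n) * M)) * ∫ x, |g x| := by
  have two : ∀ {f : Euc n → ℝ}, ContDiff ℝ (⊤ : ℕ∞) f → ContDiff ℝ 2 f := fun hf =>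
    hf.of_le (by norm_cast)
  have hM0 : 0 ≤ M := (abs_nonneg _).trans (hM3 0)
  set f := lap ψ with hf
  set H := pd j (pd i ψ) with hH
  have hfs : ContDiff ℝ (⊤ : ℕ∞) f := hψ.lap_top
  have hHs : ContDiff ℝ (⊤ : ℕ∞) H := ContDiff.pd_top (ContDiff.pd_top hψ i) j
  have hfc : HasCompactSupport f := hψc.lapD
  have hHc : HasCompactSupport H := (hψc.pdD i).pdD j
  have hf2 := two hfs
  have hH2 := two hHs
  set CB := b * 2 ^ q + 2 ^ q * 2 ^ q + 2 ^ q * 2 ^ (p / 2) with hCB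
  have hCB0 : 0 ≤ CB := by positivity
  set e := ε ^ q + ε ^ (p / 2) with he
  have he0 : 0 ≤ e := by positivity
  have hv0 : ∀ s x, 0 ≤ heat g s x := fun s x => heat_nonneg hg0 s x
  have hvεp : ∀ s x, 0 < heat g s x + ε := fun s x => by have := hv0 s x; linarith
  have cu := heat_cont hf2.continuous hfc
  have cv := heat_cont hg.continuous hgc
  have cH := heat_cont hH2.continuous hHc
  have clu := lap_heat_cont hf2 hfc
  have clv := lap_heat_cont hg hgc
  have clH := lap_heat_cont hH2 hHc
  have u2 : ∀ s, ContDiff ℝ 2 (heat f s) := fun s => heat_contDiff (k := 2) hf2 hfc s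
  have v2 : ∀ s, ContDiff ℝ 2 (heat g s) := fun s => heat_contDiff (k := 2) hg hgc s
  have H2 : ∀ s, ContDiff ℝ 2 (heat H s) := fun s => heat_contDiff (k := 2) hH2 hHc s
  have vi : ∀ s, Integrable (heat g s) ∧ ∫ x, heat g s x ≤ ∫ x, |g x| := by
    intro s
    have := heat_rpow_le hg.continuous hgc (r := 1) le_rfl s
    simpa [abs_of_nonneg (hv0 s _)] using this
  -- the Bellman functional, its integrand and the time derivative of the integrand
  set L : ℝ → Euc n → ℝ := fun s x =>
    (bell b q m ε (heat f s x) (heat g s x + ε) - heat H s x * heat g s x) * η x with hL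
  set D : ℝ → Euc n → ℝ := fun s x =>
    (bellU q m ε (heat f s x) (heat g s x + ε) * lap (heat f s) x
      + bellV b q m ε (heat f s x) (heat g s x + ε) * lap (heat g s) x
      - (lap (heat H s) x * heat g s x + heat H s x * lap (heat g s) x)) * η x with hD
  have hder : ∀ s x, HasDerivAt (fun s => L s x) (2 * s * D s x) s := by
    intro s x
    have h1 := heat_hasDerivAt hf2 hfc s x
    have h2 := heat_hasDerivAt hg hgc s x
    have h3 := heat_hasDerivAt hH2 hHc s x
    rw [← lap_heat hf2 hfc] at h1
    rw [← lap_heat hg hgc] at h2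
    rw [← lap_heat hH2 hHc] at h3
    have h4 := ((bell_hasDerivAt (b := b) (q := q) (m := m) hε h1 (h2.add_const ε)
      (hvεp s x)).sub (h3.mul h2)).mul_const (η x)
    refine h4.congr_deriv ?_
    simp only [hD]; ring
  have cbase : Continuous fun r : ℝ × Euc n => heat g r.1 r.2 + ε := cv.add continuous_const
  have cy : Continuous fun r : ℝ × Euc n => heat f r.1 r.2 ^ 2 + ε :=
    (cu.pow 2).add continuous_const
  have cym : Continuous fun r : ℝ × Euc n => (heat f r.1 r.2 ^ 2 + ε) ^ m :=
    cy.rpow_const fun r => Or.inl (ne_of_gt (add_pos_of_nonneg_of_pos (sq_nonneg _) hε))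
  have cw : ∀ t : ℝ, Continuous fun r : ℝ × Euc n =>
      (heat g r.1 r.2 + ε + (heat f r.1 r.2 ^ 2 + ε) ^ m) ^ t := fun t =>
    (cbase.add cym).rpow_const fun r => Or.inl (ne_of_gt (add_pos_of_pos_of_nonneg (hvεp r.1 r.2)
      (Real.rpow_nonneg (add_nonneg (sq_nonneg _) hε.le) _)))
  have cvt : ∀ t : ℝ, Continuous fun r : ℝ × Euc n => (heat g r.1 r.2 + ε) ^ t := fun t =>
    cbase.rpow_const fun r => Or.inl (hvεp r.1 r.2).ne'
  have cη : Continuous fun r : ℝ × Euc n => η r.2 := hη.continuous.comp continuous_snd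
  have cD : Continuous fun r : ℝ × Euc n => D r.1 r.2 := by
    simp only [hD, bellU, bellV]
    have := cw (2 - q)
    have := cw (1 - q)
    have := cvt (q - 1)
    fun_prop
  have cL : Continuous fun r : ℝ × Euc n => L r.1 r.2 := by
    simp only [hL, bell]
    have := cw (2 - q)
    have := cvt q
    fun_prop
  have sl : ∀ {G : ℝ → Euc n → ℝ} (s : ℝ), Continuous (fun r : ℝ × Euc n => G r.1 r.2) →
      Continuous (G s) := fun s hG => hG.comp (by fun_prop : Continuous fun x : Euc n => (s, x))
  have hLi : ∀ s, Integrable (L s) := fun s =>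
    (sl s cL).integrable_of_hasCompactSupport hηc.mul_left
  have hΨ : ∀ s, HasDerivAt (fun s => ∫ x, L s x) (∫ x, 2 * s * D s x) s := by
    intro s
    have hKc : IsCompact (Set.Icc (s - 1) (s + 1) ×ˢ tsupport η) := isCompact_Icc.prod hηc
    have cD2 : Continuous fun r : ℝ × Euc n => 2 * r.1 * D r.1 r.2 := by fun_prop
    obtain ⟨B0, hB0⟩ := hKc.exists_bound_of_continuousOn cD2.continuousOn
    refine (hasDerivAt_integral_of_dominated_loc_of_deriv_le (s := Set.Icc (s - 1) (s + 1))
      (F' := fun s x => 2 * s * D s x) (bound := (tsupport η).indicator fun _ => B0)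
      (Icc_mem_nhds (by linarith) (by linarith))
      (Eventually.of_forall fun y => (hLi y).aestronglyMeasurable) (hLi s)
      (sl (G := fun s x => 2 * s * D s x) s cD2).aestronglyMeasurable
      (Eventually.of_forall fun x y hy => ?_) ?_ (Eventually.of_forall fun x y _ => hder y x)).2
    · by_cases hx : x ∈ tsupport η
      · rw [Set.indicator_of_mem hx]
        exact hB0 (y, x) ⟨hy, hx⟩
      · rw [Set.indicator_of_notMem hx]
        simp [hD, image_eq_zero_of_notMem_tsupport hx]
    · rw [integrable_indicator_iff (isClosed_tsupport η).measurableSet]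
      exact integrableOn_const hηc.measure_lt_top.ne
  -- integral bounds for the Bellman function along the flow
  have hBint : ∀ s, ∫ x in tsupport η, bell b q m ε (heat f s x) (heat g s x + ε) ≤
      CB * ((∫ x, |f x| ^ p) + (∫ x, |g x| ^ q) + e * volume.real (tsupport η)) := by
    intro s
    have h1 := heat_rpow_le hf2.continuous hfc hp1 s
    have h2 := heat_rpow_le hg.continuous hgc hq1.le s
    have ic : IntegrableOn (fun _ : Euc n => e) (tsupport η) :=
      integrableOn_const hηc.measure_lt_top.ne
    have ii : IntegrableOn (fun x => CB * (|heat f s x| ^ p + |heat g s x| ^ q + e)) (tsupport η) :=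
      ((h1.1.integrableOn.add h2.1.integrableOn).add ic).const_mul CB
    calc ∫ x in tsupport η, bell b q m ε (heat f s x) (heat g s x + ε)
        ≤ ∫ x in tsupport η, CB * (|heat f s x| ^ p + |heat g s x| ^ q + e) := by
          refine integral_mono ?_ ii fun x => ?_
          · have : Continuous fun x => bell b q m ε (heat f s x) (heat g s x + ε) :=
              (bell_contDiff (k := 2) hε (u2 s) ((v2 s).add contDiff_const) (hvεp s)).continuous
            exact this.continuousOn.integrableOn_compact hηc
          · have := bell_le hb0 hq1 hq2 hm hmq (by linarith) hε (u := heat f s x) (hv0 s x)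
            simp only
            rw [abs_of_nonneg (hv0 s x), he]
            linarith
      _ = CB * ((∫ x in tsupport η, |heat f s x| ^ p) + (∫ x in tsupport η, |heat g s x| ^ q)
            + e * volume.real (tsupport η)) := by
          have ia : IntegrableOn (fun x => |heat f s x| ^ p + |heat g s x| ^ q) (tsupport η) :=
            h1.1.integrableOn.add h2.1.integrableOn
          rw [integral_const_mul, integral_add ia ic,
            integral_add h1.1.integrableOn h2.1.integrableOn, setIntegral_const, smul_eq_mul,
            mul_comm e]
      _ ≤ _ := by
          have a1 := (setIntegral_le_integral (s := tsupport η) h1.1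
            (Eventually.of_forall fun x => by positivity)).trans h1.2
          have a2 := (setIntegral_le_integral (s := tsupport η) h2.1
            (Eventually.of_forall fun x => by positivity)).trans h2.2
          gcongr
  set X := CB * ((∫ x, |f x| ^ p) + (∫ x, |g x| ^ q) + e * volume.real (tsupport η)) with hX
  have hX0 : 0 ≤ X := by
    have a1 : 0 ≤ ∫ x, |f x| ^ p := integral_nonneg fun x => by positivity
    have a2 : 0 ≤ ∫ x, |g x| ^ q := integral_nonneg fun x => by positivity
    positivity
  have hG1 : 0 ≤ ∫ x, |g x| := integral_nonneg fun x => abs_nonneg _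
  set E := κ * (X + (3 + 2 * n) * M * ∫ x, |g x|) with hE
  have hE0 : 0 ≤ E := by positivity
  have hstat : ∀ s, ∫ x, D s x ≤ E := by
    intro s
    refine (cz_static hb0 hq1 hq2 hm hε hb (u2 s) (v2 s) (H2 s) hη hηc (hv0 s) hη0 i j ?_ hκ0
      (M := M) ?_ ?_ (fun x => heat_bdd hM3 s x) hκ1 hκ2 (vi s).1).trans ?_
    · intro x
      rw [pd_heat (hf2.of_le (by norm_num)) hfc, pd_heat (hf2.pdD (by norm_num) i) (hfc.pdD i),
        ← lap_pd_pd hψ, lap_heat hH2 hHc]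
      have := heat_sum (n := n) Finset.univ (F := fun k => pd k (pd k H))
        (fun k _ => (ContDiff.pd_top (ContDiff.pd_top hHs k) k).continuous)
        (fun k _ => (hHc.pdD k).pdD k) s x
      rw [← this]; rfl
    · intro x
      rw [pd_heat (hf2.of_le (by norm_num)) hfc]; exact heat_bdd hM1 s x
    · intro k x
      rw [pd_heat (hH2.of_le (by norm_num)) hHc]; exact heat_bdd (hM2 k) s x
    · have a1 := mul_le_mul_of_nonneg_left (hBint s) hκ0
      have a2 := mul_le_mul_of_nonneg_left (vi s).2
        (by positivity : 0 ≤ κ * ((3 + 2 * (n:ℝ)) * M))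
      rw [hE]
      linarith
  have hmono := Convex.image_sub_le_mul_sub_of_deriv_le (f := fun s => ∫ x, L s x)
    (convex_Icc (0:ℝ) S) (fun s _ => (hΨ s).continuousAt.continuousWithinAt)
    (fun s _ => (hΨ s).differentiableAt.differentiableWithinAt) (C := 2 * S * E) (by
      intro s hs
      rw [interior_Icc] at hs
      rw [(hΨ s).deriv, integral_const_mul]
      have := hstat s
      calc 2 * s * ∫ x, D s x ≤ 2 * s * E := by
            have : 0 ≤ 2 * s := by linarith [hs.1]
            gcongr
        _ ≤ 2 * S * E := by gcongr; exact hs.2.le)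
    0 ⟨le_rfl, hS.le⟩ S ⟨hS.le, le_rfl⟩ hS.le
  -- endpoint estimates
  have hend : -((S ^ n)⁻¹ * ((∫ y : Euc n, gexp y)⁻¹ * ∫ y, |H y|) * ∫ x, |g x|) ≤ ∫ x, L S x := by
    set d := (S ^ n)⁻¹ * ((∫ y : Euc n, gexp y)⁻¹ * ∫ y, |H y|) with hd
    have hd0 : 0 ≤ d := by
      have := gexp_integral_pos (n := n)
      have : 0 ≤ ∫ y, |H y| := integral_nonneg fun x => abs_nonneg _
      positivity
    have h1 : -(d * ∫ x, heat g S x) ≤ ∫ x, L S x := by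
      rw [← integral_const_mul, ← integral_neg]
      refine integral_mono ((vi S).1.const_mul d).neg (hLi S) fun x => ?_
      have h2 := (abs_le.1 (heat_decay hH2.continuous hHc hS x)).2
      have h3 : 0 ≤ bell b q m ε (heat f S x) (heat g S x + ε) := bell_nonneg hb0 hε (hvεp S x)
      have h4 := hv0 S x
      have h5 := mul_le_mul_of_nonneg_right h2 h4
      have h6 := hη0 x
      have h7 := hη1 x
      have h8 : 0 ≤ d * heat g S x := by positivity
      simp only [hL]
      have h9 : -(d * heat g S x) ≤ bell b q m ε (heat f S x) (heat g S x + ε)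
          - heat H S x * heat g S x := by linarith
      have h10 := mul_le_mul_of_nonneg_right h9 h6
      have h11 := mul_le_mul_of_nonneg_left h7 h8
      linarith
    have := mul_le_mul_of_nonneg_left (vi S).2 hd0
    linarith
  have hstart : ∫ x, L 0 x ≤ X - ∫ x, H x * g x * η x := by
    have i1 : Integrable fun x => bell b q m ε (heat f 0 x) (heat g 0 x + ε) * η x := by
      have : Continuous fun x => bell b q m ε (heat f 0 x) (heat g 0 x + ε) :=
        (bell_contDiff (k := 2) hε (u2 0) ((v2 0).add contDiff_const) (hvεp 0)).continuous
      exact (this.mul hη.continuous).integrable_of_hasCompactSupport hηc.mul_left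
    have i2 : Integrable fun x => H x * g x * η x :=
      ((hH2.continuous.mul hg.continuous).mul hη.continuous).integrable_of_hasCompactSupport
        hηc.mul_left
    have e1 : ∫ x, L 0 x = (∫ x, bell b q m ε (heat f 0 x) (heat g 0 x + ε) * η x)
        - ∫ x, H x * g x * η x := by
      rw [← integral_sub i1 i2]
      congr 1; funext x
      simp only [hL, heat_zero]; ring
    rw [e1]
    have e2 : ∫ x, bell b q m ε (heat f 0 x) (heat g 0 x + ε) * η x
        ≤ ∫ x in tsupport η, bell b q m ε (heat f 0 x) (heat g 0 x + ε) := by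
      rw [← setIntegral_eq_integral_of_forall_compl_eq_zero (s := tsupport η) (f := fun x =>
        bell b q m ε (heat f 0 x) (heat g 0 x + ε) * η x)
        (fun x hx => by rw [image_eq_zero_of_notMem_tsupport hx, mul_zero])]
      refine integral_mono i1.integrableOn ?_ fun x => ?_
      · have : Continuous fun x => bell b q m ε (heat f 0 x) (heat g 0 x + ε) :=
          (bell_contDiff (k := 2) hε (u2 0) ((v2 0).add contDiff_const) (hvεp 0)).continuous
        exact this.continuousOn.integrableOn_compact hηc
      · exact mul_le_of_le_one_right (bell_nonneg hb0 hε (hvεp 0 x)) (hη1 x)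
    linarith [hBint 0]
  simp only [sub_zero] at hmono
  have : 2 * S * E * S = 2 * S ^ 2 * κ * X + 2 * S ^ 2 * κ * ((3 + 2 * n) * M) * ∫ x, |g x| := by
    rw [hE]; ring
  rw [this] at hmono
  nlinarith

end CZdyn

/-! ### The Calderón–Zygmund inequality -/

section CZ

variable {n : ℕ}

lemma posPart_rpow_hasDerivAt {r : ℝ} (hr : 1 < r) (t : ℝ) :
    HasDerivAt (fun t : ℝ => max t 0 ^ r) (r * max t 0 ^ (r - 1)) t := by
  have hne : ∀ y : ℝ, y ≠ 0 → HasDerivAt (fun t : ℝ => max t 0 ^ r) (r * max y 0 ^ (r - 1)) y := by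
    intro y hy
    rcases lt_or_gt_of_ne hy with h | h
    · have e : (fun t : ℝ => max t 0 ^ r) =ᶠ[𝓝 y] fun _ => 0 := by
        filter_upwards [Iio_mem_nhds h] with z hz
        rw [max_eq_right (le_of_lt hz), Real.zero_rpow (by linarith)]
      rw [max_eq_right h.le, Real.zero_rpow (by linarith), mul_zero]
      exact (hasDerivAt_const y (0:ℝ)).congr_of_eventuallyEq e
    · have e : (fun t : ℝ => max t 0 ^ r) =ᶠ[𝓝 y] fun t => t ^ r := by
        filter_upwards [Ioi_mem_nhds h] with z hz
        rw [max_eq_left (le_of_lt hz)]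
      rw [max_eq_left h.le]
      exact (Real.hasDerivAt_rpow_const (Or.inl hy)).congr_of_eventuallyEq e
  rcases eq_or_ne t 0 with rfl | ht
  · refine hasDerivAt_of_hasDerivAt_of_ne (g := fun y => r * max y 0 ^ (r - 1)) hne ?_ ?_
    · exact ((continuous_id.max continuous_const).rpow_const
        fun _ => Or.inr (by linarith)).continuousAt
    · exact (((continuous_id.max continuous_const).rpow_const
        fun _ => Or.inr (by linarith)).const_mul r).continuousAt
  · exact hne t ht

lemma posPart_rpow_contDiff_two {r : ℝ} (hr : 2 < r) :
    ContDiff ℝ 2 (fun t : ℝ => max t 0 ^ r) := by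
  have c : ∀ s : ℝ, 0 ≤ s → Continuous fun t : ℝ => max t 0 ^ s := fun s hs =>
    (continuous_id.max continuous_const).rpow_const fun _ => Or.inr hs
  have h1 : ∀ s : ℝ, 1 < s → ContDiff ℝ 1 (fun t : ℝ => max t 0 ^ s) := by
    intro s hs
    rw [contDiff_one_iff_deriv]
    refine ⟨fun t => (posPart_rpow_hasDerivAt hs t).differentiableAt, ?_⟩
    rw [funext fun t => (posPart_rpow_hasDerivAt hs t).deriv]
    exact (c (s - 1) (by linarith)).const_mul s
  rw [show (2 : WithTop ℕ∞) = 1 + 1 by norm_num, contDiff_succ_iff_deriv]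
  refine ⟨fun t => (posPart_rpow_hasDerivAt (by linarith) t).differentiableAt, by simp, ?_⟩
  rw [funext fun t => (posPart_rpow_hasDerivAt (by linarith : 1 < r) t).deriv]
  exact contDiff_const.mul (h1 (r - 1) (by linarith))

/-- The bilinear embedding: pairing second derivatives of `ψ` with a nonnegative `g` is controlled
by `‖Δψ‖_p^p + ‖g‖_q^q`. The cut-off, the regularisation and the time horizon of the Bellman
argument are removed one after the other. -/
lemma cz_bilinear (hn : 0 < n) {p : ℝ} (hp : 3 < p) : ∃ C : ℝ, 0 < C ∧
    ∀ ψ : Euc n → ℝ, ContDiff ℝ (⊤ : ℕ∞) ψ → HasCompactSupport ψ →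
    ∀ g : Euc n → ℝ, ContDiff ℝ 2 g → HasCompactSupport g → (∀ x, 0 ≤ g x) → ∀ i j : Fin n,
      ∫ x, pd j (pd i ψ) x * g x ≤
        C * ((∫ x, |lap ψ x| ^ p) + ∫ x, |g x| ^ (p / (p - 1))) := by
  have hp1 : 0 < p - 1 := by linarith
  set q := p / (p - 1) with hq
  have hqe : q - 1 = 1 / (p - 1) := by rw [hq]; field_simp; ring
  have hq1 : 1 < q := by have : 0 < 1 / (p - 1) := by positivity
                         linarith
  have hq2 : q < 2 := by
    have : 1 / (p - 1) < 1 := by rw [div_lt_one hp1]; linarith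
    linarith
  set m := (p - 1) / 2 with hm
  have hm1 : 2 * m * (q - 1) = 1 := by rw [hqe, hm]; field_simp
  have hmq : m * q = p / 2 := by rw [hm, hq]; field_simp
  have hqq : 0 < q * (q - 1) := mul_pos (by linarith) (by linarith)
  set b := ((4 * (2 - q) * (1 + m) + 2) ^ 2 / 8 + 1) / (q * (q - 1)) with hb
  have hb0 : 0 ≤ b := by positivity
  have hb1 : (4 * (2 - q) * (1 + m) + 2) ^ 2 / 8 + 1 ≤ b * q * (q - 1) := by
    rw [mul_assoc b, hb, div_mul_cancel₀ _ hqq.ne']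
  refine ⟨b * 2 ^ q + 2 ^ q * 2 ^ q + 2 ^ q * 2 ^ (p / 2), by positivity, ?_⟩
  intro ψ hψ hψc g hg hgc hg0 i j
  set C := b * 2 ^ q + 2 ^ q * 2 ^ q + 2 ^ q * 2 ^ (p / 2) with hC
  obtain ⟨B, hB0, hB⟩ := cut_bounds n
  have hls : ContDiff ℝ (⊤ : ℕ∞) (lap ψ) := hψ.lap_top
  have hHs : ContDiff ℝ (⊤ : ℕ∞) (pd j (pd i ψ)) := ContDiff.pd_top (ContDiff.pd_top hψ i) j
  have hHc : HasCompactSupport (pd j (pd i ψ)) := (hψc.pdD i).pdD j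
  obtain ⟨M1, h10, hM1⟩ := bdd_of_cc (ContDiff.pd_top hls i).continuous (hψc.lapD.pdD i)
  choose M2 h20 hM2 using fun k => bdd_of_cc (ContDiff.pd_top hHs k).continuous (hHc.pdD k)
  obtain ⟨M3, h30, hM3⟩ := bdd_of_cc hHs.continuous hHc
  have h2s : 0 ≤ ∑ k, M2 k := Finset.sum_nonneg fun k _ => h20 k
  set M := M1 + ∑ k, M2 k + M3 with hM
  set X := (∫ x, |lap ψ x| ^ p) + ∫ x, |g x| ^ q with hX
  set D := ((∫ y : Euc n, gexp y)⁻¹ * ∫ y, |pd j (pd i ψ) y|) with hD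
  have key : ∀ S : ℝ, 0 < S → ∀ R : ℝ, 0 < R → ∀ ε : ℝ, 0 < ε →
      ∫ x, pd j (pd i ψ) x * g x * cut R x ≤
      (1 + 2 * S ^ 2 * (B * R⁻¹ + n * (B * (R⁻¹ * R⁻¹)))) * (C *
        (X + (ε ^ q + ε ^ (p / 2)) * volume.real (tsupport (cut R : Euc n → ℝ))))
      + ((S ^ n)⁻¹ * D + 2 * S ^ 2 * (B * R⁻¹ + n * (B * (R⁻¹ * R⁻¹))) * ((3 + 2 * n) * M))
        * ∫ x, |g x| := by
    intro S hS R hR ε hε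
    have hRi := inv_pos.2 hR
    refine cz_dyn hb0 hq1 hq2 hm1 hε hb1 hmq (by linarith) hψ hψc hg hgc hg0 i j
      ((cut_contDiff R).of_le (by norm_cast)) (cut_hasCompactSupport hR) (cut_nonneg R)
      (cut_le_one R) (by positivity) hS (fun x => ?_) (fun k x => ?_) (fun x => ?_)
      (fun k x => ?_) (fun x => ?_)
    · linarith [hM1 x]
    · have := Finset.single_le_sum (fun k _ => h20 k) (Finset.mem_univ k)
      linarith [hM2 k x]
    · linarith [hM3 x]
    · have : 0 ≤ n * (B * (R⁻¹ * R⁻¹)) := by positivity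
      linarith [(hB R hR).1 k x]
    · have : 0 ≤ B * R⁻¹ := by positivity
      unfold lap
      refine (Finset.abs_sum_le_sum_abs _ _).trans ?_
      refine (Finset.sum_le_sum fun k _ => (hB R hR).2 k k x).trans ?_
      simp only [Finset.sum_const, Finset.card_univ, Fintype.card_fin, nsmul_eq_mul]
      linarith
  -- let `ε → 0`
  have key2 : ∀ S : ℝ, 0 < S → ∀ R : ℝ, 0 < R →
      ∫ x, pd j (pd i ψ) x * g x * cut R x ≤
      (1 + 2 * S ^ 2 * (B * R⁻¹ + n * (B * (R⁻¹ * R⁻¹)))) * (C * (X + (0 ^ q + 0 ^ (p / 2)) *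
        volume.real (tsupport (cut R : Euc n → ℝ))))
      + ((S ^ n)⁻¹ * D + 2 * S ^ 2 * (B * R⁻¹ + n * (B * (R⁻¹ * R⁻¹))) * ((3 + 2 * n) * M))
        * ∫ x, |g x| := by
    intro S hS R hR
    have c1 : Continuous fun ε : ℝ => ε ^ q := Real.continuous_rpow_const (by linarith)
    have c2 : Continuous fun ε : ℝ => ε ^ (p / 2) := Real.continuous_rpow_const (by linarith)
    have c3 : Continuous fun ε : ℝ =>
      (1 + 2 * S ^ 2 * (B * R⁻¹ + n * (B * (R⁻¹ * R⁻¹)))) * (C *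
        (X + (ε ^ q + ε ^ (p / 2)) * volume.real (tsupport (cut R : Euc n → ℝ))))
      + ((S ^ n)⁻¹ * D + 2 * S ^ 2 * (B * R⁻¹ + n * (B * (R⁻¹ * R⁻¹))) * ((3 + 2 * n) * M))
        * ∫ x, |g x| := by fun_prop
    refine ge_of_tendsto ((c3.tendsto 0).mono_left (nhdsWithin_le_nhds (s := Set.Ioi 0))) ?_
    filter_upwards [self_mem_nhdsWithin] with ε hε using key S hS R hR ε hε
  -- let `R → ∞`
  have key3 : ∀ S : ℝ, 0 < S → ∫ x, pd j (pd i ψ) x * g x ≤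
      C * X + ((S ^ n)⁻¹ * D) * ∫ x, |g x| := by
    intro S hS
    obtain ⟨R0, hR0⟩ := hgc.isBounded.subset_closedBall 0
    have t0 : Tendsto (fun R : ℝ => B * R⁻¹ + n * (B * (R⁻¹ * R⁻¹))) atTop (𝓝 0) := by
      have := tendsto_inv_atTop_zero (𝕜 := ℝ)
      have h := (this.const_mul B).add (((this.mul this).const_mul B).const_mul (n:ℝ))
      simpa using h
    have t1 := (((t0.const_mul (2 * S ^ 2)).const_add 1).mul_const (C * X)).add
      ((((t0.const_mul (2 * S ^ 2)).mul_const ((3 + 2 * n) * M)).const_add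
        ((S ^ n)⁻¹ * D)).mul_const (∫ x, |g x|))
    simp only [mul_zero, add_zero, zero_mul, one_mul] at t1
    refine ge_of_tendsto t1 ?_
    filter_upwards [eventually_ge_atTop R0, eventually_gt_atTop 0] with R hR1 hR2
    have h1 := key2 S hS R hR2
    rw [Real.zero_rpow (by linarith), Real.zero_rpow (by linarith), add_zero, zero_mul,
      add_zero] at h1
    have h2 : (fun x => pd j (pd i ψ) x * g x * cut R x) = fun x => pd j (pd i ψ) x * g x := by
      funext x
      by_cases hx : x ∈ tsupport g
      · have := hR0 hx
        rw [mem_closedBall_zero_iff] at this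
        rw [cut_eq_one hR2 (this.trans hR1), mul_one]
      · rw [image_eq_zero_of_notMem_tsupport hx]; simp
    rw [h2] at h1
    exact h1
  -- let `S → ∞`
  have t2 : Tendsto (fun S : ℝ => C * X + ((S ^ n)⁻¹ * D) * ∫ x, |g x|) atTop (𝓝 (C * X)) := by
    have h := (((tendsto_inv_atTop_zero (𝕜 := ℝ)).comp (tendsto_pow_atTop hn.ne')).mul_const
      D).mul_const (∫ x, |g x|)
    have h2 := h.const_add (C * X)
    simpa using h2
  refine ge_of_tendsto t2 ?_
  filter_upwards [eventually_gt_atTop 0] with S hS using key3 S hS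

lemma lap_const_mul {f : Euc n → ℝ} (hf : ContDiff ℝ (⊤ : ℕ∞) f) (c : ℝ) :
    lap (fun x => c * f x) = fun x => c * lap f x := by
  funext x
  unfold lap
  rw [Finset.mul_sum]
  refine Finset.sum_congr rfl fun k _ => ?_
  have : pd k (fun x => c * f x) = fun x => c * pd k f x := funext fun y =>
    pd_const_mul k c (hf.differentiable (by norm_num) y)
  rw [this, pd_const_mul k c ((ContDiff.pd_top hf k).differentiable (by norm_num) x)]

/-- The Calderón–Zygmund inequality: second derivatives of test functions are controlled in `L^p`
by the Laplacian. -/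
theorem calderon_zygmund (hn : 0 < n) {p : ℝ} (hp : 3 < p) : ∃ C : ℝ, 0 < C ∧
    ∀ ψ : Euc n → ℝ, ContDiff ℝ (⊤ : ℕ∞) ψ → HasCompactSupport ψ → ∀ i j : Fin n,
      ∫ x, |pd j (pd i ψ) x| ^ p ≤ C * ∫ x, |lap ψ x| ^ p := by
  obtain ⟨C, hC, h⟩ := cz_bilinear hn hp
  have hpos : ∀ ψ : Euc n → ℝ, ContDiff ℝ (⊤ : ℕ∞) ψ → HasCompactSupport ψ → ∀ i j : Fin n,
      ∫ x, max (pd j (pd i ψ) x) 0 ^ p ≤ (2 * C) ^ p * ∫ x, |lap ψ x| ^ p := by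
    intro ψ hψ hψc i j
    have hHs : ContDiff ℝ (⊤ : ℕ∞) (pd j (pd i ψ)) := ContDiff.pd_top (ContDiff.pd_top hψ i) j
    have hHc : HasCompactSupport (pd j (pd i ψ)) := (hψc.pdD i).pdD j
    have h1 := h (fun x => 2 * C * ψ x) (contDiff_const.mul hψ) hψc.mul_left
      (fun x => max (pd j (pd i ψ) x) 0 ^ (p - 1))
      ((posPart_rpow_contDiff_two (by linarith)).comp (hHs.of_le (by norm_cast)))
      (hHc.comp_left (g := fun t => max t 0 ^ (p - 1)) (by simp; rw [Real.zero_rpow (by linarith)]))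
      (fun x => by positivity) i j
    have e1 : pd j (pd i fun x => 2 * C * ψ x) = fun x => 2 * C * pd j (pd i ψ) x := by
      funext x
      have : pd i (fun x => 2 * C * ψ x) = fun x => 2 * C * pd i ψ x := funext fun y =>
        pd_const_mul i _ (hψ.differentiable (by norm_num) y)
      rw [this, pd_const_mul j _ ((ContDiff.pd_top hψ i).differentiable (by norm_num) x)]
    rw [e1, lap_const_mul hψ] at h1
    have e2 : ∀ t : ℝ, 2 * C * t * max t 0 ^ (p - 1) = 2 * C * max t 0 ^ p := by
      intro t
      rcases le_total t 0 with ht | ht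
      · rw [max_eq_right ht, Real.zero_rpow (by linarith), Real.zero_rpow (by linarith)]; simp
      · rw [max_eq_left ht, mul_assoc]
        congr 1
        rcases ht.eq_or_lt with rfl | ht
        · rw [Real.zero_rpow (by linarith), Real.zero_rpow (by linarith)]; simp
        · rw [Real.rpow_sub_one ht.ne']; field_simp
    have e3 : ∀ t : ℝ, |max t 0 ^ (p - 1)| ^ (p / (p - 1)) = max t 0 ^ p := by
      intro t
      rw [abs_of_nonneg (by positivity), ← Real.rpow_mul (by positivity)]
      congr 1
      have : p - 1 ≠ 0 := by linarith
      field_simp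
    have e4 : ∀ t : ℝ, |2 * C * t| ^ p = (2 * C) ^ p * |t| ^ p := by
      intro t
      rw [abs_mul, abs_of_pos (by linarith : 0 < 2 * C), Real.mul_rpow (by linarith) (abs_nonneg _)]
    simp only [e2, e3, e4, integral_const_mul] at h1
    set A := ∫ x, max (pd j (pd i ψ) x) 0 ^ p
    set B := ∫ x, |lap ψ x| ^ p
    have h2 : C * A ≤ C * ((2 * C) ^ p * B) := by linarith
    exact le_of_mul_le_mul_left h2 hC
  refine ⟨2 * (2 * C) ^ p, by positivity, fun ψ hψ hψc i j => ?_⟩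
  have hHs : ContDiff ℝ (⊤ : ℕ∞) (pd j (pd i ψ)) := ContDiff.pd_top (ContDiff.pd_top hψ i) j
  have hHc : HasCompactSupport (pd j (pd i ψ)) := (hψc.pdD i).pdD j
  have h1 := hpos ψ hψ hψc i j
  have h2 := hpos (fun x => (-1) * ψ x) (contDiff_const.mul hψ) hψc.mul_left i j
  have e1 : pd j (pd i fun x => (-1) * ψ x) = fun x => (-1) * pd j (pd i ψ) x := by
    funext x
    have : pd i (fun x => (-1) * ψ x) = fun x => (-1) * pd i ψ x := funext fun y =>
      pd_const_mul i _ (hψ.differentiable (by norm_num) y)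
    rw [this, pd_const_mul j _ ((ContDiff.pd_top hψ i).differentiable (by norm_num) x)]
  rw [e1, lap_const_mul hψ] at h2
  simp only [neg_mul, one_mul, abs_neg] at h2
  have ii : ∀ c : ℝ, Integrable fun x => max (c * pd j (pd i ψ) x) 0 ^ p := by
    intro c
    refine Continuous.integrable_of_hasCompactSupport
      (((hHs.continuous.const_mul c).max continuous_const).rpow_const
        fun _ => Or.inr (by linarith)) ?_
    exact hHc.comp_left (g := fun t => max (c * t) 0 ^ p)
      (by simp; rw [Real.zero_rpow (by linarith)])
  have i1 := ii 1
  have i2 := ii (-1)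
  simp only [one_mul, neg_mul] at i1 i2
  have e2 : ∀ t : ℝ, |t| ^ p = max t 0 ^ p + max (-t) 0 ^ p := by
    intro t
    rcases le_total t 0 with ht | ht
    · rw [max_eq_right ht, max_eq_left (by linarith), abs_of_nonpos ht,
        Real.zero_rpow (by linarith), zero_add]
    · rw [max_eq_left ht, max_eq_right (by linarith), abs_of_nonneg ht,
        Real.zero_rpow (by linarith), add_zero]
  simp only [e2 (pd j (pd i ψ) _)]
  rw [integral_add i1 i2]
  linarith

end CZ

/-! ### The Japanese bracket -/

section japanese

variable {n : ℕ}

lemma one_le_jap (x : Euc n) : 1 ≤ jap x := by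
  unfold jap
  rw [Real.one_le_sqrt]; nlinarith [sq_nonneg ‖x‖]

lemma jap_pos (x : Euc n) : 0 < jap x := lt_of_lt_of_le one_pos (one_le_jap x)

lemma jap_sq (x : Euc n) : jap x ^ 2 = 1 + ‖x‖ ^ 2 := Real.sq_sqrt (by positivity)

lemma norm_le_jap (x : Euc n) : ‖x‖ ≤ jap x := by
  unfold jap
  exact Real.le_sqrt_of_sq_le (by linarith)

lemma jap_le (x : Euc n) : jap x ≤ 1 + ‖x‖ := by
  unfold jap
  rw [Real.sqrt_le_left (by positivity)]
  nlinarith [norm_nonneg x]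

lemma jap_rpow_eq (x : Euc n) (s : ℝ) : jap x ^ s = (1 + ‖x‖ ^ 2) ^ (s / 2) := by
  unfold jap
  rw [Real.sqrt_eq_rpow, ← Real.rpow_mul (by positivity)]
  congr 1; ring

lemma jap_rpow_pos (x : Euc n) (s : ℝ) : 0 < jap x ^ s := Real.rpow_pos_of_pos (jap_pos x) s

lemma jap_rpow_add (x : Euc n) (s t : ℝ) : jap x ^ (s + t) = jap x ^ s * jap x ^ t :=
  Real.rpow_add (jap_pos x) s t

lemma jap_rpow_mono (x : Euc n) {s t : ℝ} (h : s ≤ t) : jap x ^ s ≤ jap x ^ t :=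
  Real.rpow_le_rpow_of_exponent_le (one_le_jap x) h

lemma jap_rpow_contDiff (s : ℝ) : ContDiff ℝ (⊤ : ℕ∞) fun x : Euc n => jap x ^ s := by
  simp_rw [jap_rpow_eq]
  exact (contDiff_const.add (contDiff_norm_sq ℝ)).rpow_const_of_ne fun x => by positivity

lemma jap_continuous : Continuous (jap : Euc n → ℝ) := by
  unfold jap; fun_prop

lemma jap_rpow_continuous (s : ℝ) : Continuous fun x : Euc n => jap x ^ s :=
  (jap_rpow_contDiff s).continuous

lemma pd_jap_rpow (k : Fin n) (s : ℝ) :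
    pd k (fun x : Euc n => jap x ^ s) = fun x => s * (x k * jap x ^ (s - 2)) := by
  funext x
  simp_rw [jap_rpow_eq]
  have hd : DifferentiableAt ℝ (fun y : Euc n => 1 + ‖y‖ ^ 2) x :=
    (contDiff_const.add (contDiff_norm_sq ℝ)).differentiable (n := 1) (by norm_num) x
  have hd' : DifferentiableAt ℝ (fun y : Euc n => ‖y‖ ^ 2) x :=
    (contDiff_norm_sq ℝ).differentiable (n := 1) (by norm_num) x
  rw [pd_comp k (f := fun y : Euc n => 1 + ‖y‖ ^ 2) (F := fun t => t ^ (s / 2)) (F' := s / 2 * (1 + ‖x‖ ^ 2) ^ (s / 2 - 1))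
    (Real.hasDerivAt_rpow_const (Or.inl (by positivity))) hd,
    pd_add k (differentiableAt_const _) hd', pd_normsq, pd_const]
  rw [show (s - 2) / 2 = s / 2 - 1 by ring]
  ring

lemma abs_pd_jap_rpow_le (k : Fin n) (s : ℝ) (x : Euc n) :
    |pd k (fun x : Euc n => jap x ^ s) x| ≤ |s| * jap x ^ (s - 1) := by
  rw [pd_jap_rpow, abs_mul, abs_mul, abs_of_pos (jap_rpow_pos x _)]
  have h1 : |x k| ≤ jap x := (abs_coord_le x k).trans (norm_le_jap x)
  have h2 : jap x ^ (s - 1) = jap x * jap x ^ (s - 2) := by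
    rw [show s - 1 = 1 + (s - 2) by ring, jap_rpow_add, Real.rpow_one]
  rw [h2]
  have := jap_rpow_pos x (s - 2)
  gcongr

lemma abs_pd_pd_jap_rpow_le (k l : Fin n) (s : ℝ) (x : Euc n) :
    |pd l (pd k (fun x : Euc n => jap x ^ s)) x| ≤ (|s| + |s| * |s - 2|) * jap x ^ (s - 2) := by
  have hdj : DifferentiableAt ℝ (fun x : Euc n => jap x ^ (s - 2)) x :=
    (jap_rpow_contDiff (s - 2)).differentiable (by norm_num) x
  have hdc : DifferentiableAt ℝ (fun y : Euc n => y k) x := by fun_prop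
  rw [pd_jap_rpow, pd_const_mul l s (hdc.fun_mul hdj), pd_mul l hdc hdj, abs_mul]
  have h1 : |x k| ≤ jap x := (abs_coord_le x k).trans (norm_le_jap x)
  have h2 := abs_pd_jap_rpow_le l (s - 2) x
  have h3 : |pd l (fun y : Euc n => y k) x| ≤ 1 := by
    rw [pd_coord]; split_ifs <;> simp
  have h4 : jap x ^ (s - 2) = jap x * jap x ^ (s - 2 - 1) := by
    rw [show s - 2 = 1 + (s - 2 - 1) by ring, jap_rpow_add, Real.rpow_one]
    ring_nf
  have hp := jap_rpow_pos x (s - 2)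
  have a1 : |pd l (fun y : Euc n => y k) x * jap x ^ (s - 2)| ≤ jap x ^ (s - 2) := by
    rw [abs_mul, abs_of_pos hp]
    exact mul_le_of_le_one_left hp.le h3
  have a2 : |x k * pd l (fun x : Euc n => jap x ^ (s - 2)) x| ≤ |s - 2| * jap x ^ (s - 2) := by
    rw [abs_mul]
    calc |x k| * |pd l (fun x : Euc n => jap x ^ (s - 2)) x|
        ≤ jap x * (|s - 2| * jap x ^ (s - 2 - 1)) :=
          mul_le_mul h1 h2 (abs_nonneg _) (jap_pos x).le
      _ = |s - 2| * jap x ^ (s - 2) := by rw [h4]; ring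
  have a3 := (abs_add_le (pd l (fun y : Euc n => y k) x * jap x ^ (s - 2))
    (x k * pd l (fun x : Euc n => jap x ^ (s - 2)) x)).trans (add_le_add a1 a2)
  have := mul_le_mul_of_nonneg_left a3 (abs_nonneg s)
  linarith

end japanese

/-! ### Weighted Lebesgue spaces -/

section weighted

variable {n : ℕ}

/-- Membership in the weighted Lebesgue space: `⟨x⟩^s f ∈ L^p`. -/
def MW (p s : ℝ) (f : Euc n → ℝ) : Prop :=
  MemLp (fun x => jap x ^ s * f x) (ENNReal.ofReal p) volume

variable {p s : ℝ} {f g : Euc n → ℝ}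

lemma MW.mono (hg : MW p s g) (hf : AEStronglyMeasurable f volume) {C : ℝ}
    (h : ∀ x, |f x| ≤ C * |g x|) : MW p s f := by
  refine MemLp.mono (g := fun x => C * (jap x ^ s * g x)) (MemLp.const_mul hg C)
    ((jap_rpow_continuous s).aestronglyMeasurable.mul hf) (Eventually.of_forall fun x => ?_)
  have hj := jap_rpow_pos x s
  simp only [norm_mul, Real.norm_eq_abs, abs_of_pos hj]
  have := mul_le_mul_of_nonneg_left (h x) hj.le
  have h3 : C * |g x| ≤ |C| * |g x| := mul_le_mul_of_nonneg_right (le_abs_self C) (abs_nonneg _)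
  have h4 := mul_le_mul_of_nonneg_left h3 hj.le
  linarith

lemma MW.add (hf : MW p s f) (hg : MW p s g) : MW p s fun x => f x + g x := by
  unfold MW; simp_rw [mul_add]; exact MemLp.add hf hg

lemma MW.sub (hf : MW p s f) (hg : MW p s g) : MW p s fun x => f x - g x := by
  unfold MW; simp_rw [mul_sub]; exact MemLp.sub hf hg

lemma MW.const_mul (hf : MW p s f) (c : ℝ) : MW p s fun x => c * f x := by
  unfold MW; simp_rw [mul_left_comm]; exact MemLp.const_mul hf c

lemma MW.sum {ι : Type*} (t : Finset ι) {F : ι → Euc n → ℝ} (h : ∀ k ∈ t, MW p s (F k)) :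
    MW p s fun x => ∑ k ∈ t, F k x := by
  unfold MW; simp_rw [Finset.mul_sum]; exact memLp_finsetSum t h

lemma MW.abs (hf : MW p s f) : MW p s fun x => |f x| := by
  have := hf.norm
  unfold MW
  refine this.congr_norm ?_ ?_
  · have h2 := this.1
    refine h2.congr (Eventually.of_forall fun x => ?_)
    simp [abs_of_pos (jap_rpow_pos x s)]
  · refine Eventually.of_forall fun x => ?_
    simp [abs_of_pos (jap_rpow_pos x s)]

lemma MW.jap_mul (t : ℝ) : MW p s (fun x => jap x ^ t * f x) ↔ MW p (s + t) f := by
  unfold MW; simp_rw [← mul_assoc, ← jap_rpow_add]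

lemma MW.mono_weight {t : ℝ} (hf : MW p s f) (hfm : AEStronglyMeasurable f volume) (h : t ≤ s) :
    MW p t f := by
  refine MemLp.mono hf ((jap_rpow_continuous t).aestronglyMeasurable.mul hfm)
    (Eventually.of_forall fun x => ?_)
  simp only [norm_mul, Real.norm_eq_abs, abs_of_pos (jap_rpow_pos x _)]
  exact mul_le_mul_of_nonneg_right (jap_rpow_mono x h) (abs_nonneg _)

lemma MW_iff_lintegral (hp : 0 < p) (hf : AEStronglyMeasurable f volume) :
    MW p s f ↔ ∫⁻ x, ENNReal.ofReal ((jap x ^ s * |f x|) ^ p) < ⊤ := by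
  have hm : AEStronglyMeasurable (fun x => jap x ^ s * f x) volume :=
    (jap_rpow_continuous s).aestronglyMeasurable.mul hf
  have e : ∀ x, ‖jap x ^ s * f x‖ₑ ^ (ENNReal.ofReal p).toReal =
      ENNReal.ofReal ((jap x ^ s * |f x|) ^ p) := by
    intro x
    rw [ENNReal.toReal_ofReal hp.le, Real.enorm_eq_ofReal_abs,
      ENNReal.ofReal_rpow_of_nonneg (abs_nonneg _) hp.le, abs_mul, abs_of_pos (jap_rpow_pos x s)]
  unfold MW MemLp
  rw [eLpNorm_lt_top_iff_lintegral_rpow_enorm_lt_top (by simpa using hp) ENNReal.ofReal_ne_top]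
  simp_rw [e]
  exact ⟨fun h => h.2, fun h => ⟨hm, h⟩⟩

lemma MW.integrable (hp : 0 < p) (hf : MW p s f) :
    Integrable fun x => (jap x ^ s * |f x|) ^ p := by
  have := MemLp.integrable_norm_rpow hf (by simpa using hp) ENNReal.ofReal_ne_top
  rw [ENNReal.toReal_ofReal hp.le] at this
  simpa only [norm_mul, Real.norm_eq_abs, abs_of_pos (jap_rpow_pos _ s)] using this

lemma MW_of_integrable (hp : 0 < p) (hf : AEStronglyMeasurable f volume)
    (h : Integrable fun x => (jap x ^ s * |f x|) ^ p) : MW p s f := by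
  have hm : AEStronglyMeasurable (fun x => jap x ^ s * f x) volume :=
    (jap_rpow_continuous s).aestronglyMeasurable.mul hf
  refine (integrable_norm_rpow_iff hm (by simpa using hp) ENNReal.ofReal_ne_top).1 ?_
  rw [ENNReal.toReal_ofReal hp.le]
  simpa only [norm_mul, Real.norm_eq_abs, abs_of_pos (jap_rpow_pos _ s)] using h

lemma jap_integrable {r : ℝ} (hr : (n : ℝ) < r) : Integrable fun x : Euc n => jap x ^ (-r) := by
  simp_rw [jap_rpow_eq]
  exact integrable_rpow_neg_one_add_norm_sq (by simpa using hr)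

/-- Pointwise decay implies weighted integrability. -/
lemma MW_of_bound (hp : 0 < p) (hf : AEStronglyMeasurable f volume) {C a : ℝ}
    (h : ∀ x, |f x| ≤ C * jap x ^ a) (ha : (s + a) * p < -n) : MW p s f := by
  have h1 : MW p s fun x : Euc n => jap x ^ a := by
    refine MW_of_integrable hp (jap_rpow_continuous a).aestronglyMeasurable ?_
    have h2 := jap_integrable (n := n) (r := -((s + a) * p)) (by linarith)
    refine h2.congr (Eventually.of_forall fun x => ?_)
    simp only
    rw [abs_of_pos (jap_rpow_pos x a), ← jap_rpow_add, ← Real.rpow_mul (jap_pos x).le, neg_neg]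
  refine h1.mono hf (C := C) fun x => ?_
  rw [abs_of_pos (jap_rpow_pos x a)]
  exact h x

end weighted

/-! ### The weighted elliptic estimate -/

section globalEstimate

variable {n : ℕ}

lemma pd_pd_mul (k l : Fin n) {f g : Euc n → ℝ} (hf : ContDiff ℝ 2 f) (hg : ContDiff ℝ 2 g)
    (x : Euc n) : pd l (pd k fun y => f y * g y) x =
      pd l (pd k f) x * g x + pd k f x * pd l g x + pd l f x * pd k g x + f x * pd l (pd k g) x := by
  have hfd : Differentiable ℝ f := hf.differentiable (by norm_num)
  have hgd : Differentiable ℝ g := hg.differentiable (by norm_num)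
  have hfk : Differentiable ℝ (pd k f) := (hf.pdD (k := 1) (by norm_num) k).differentiable
    (by norm_num)
  have hgk : Differentiable ℝ (pd k g) := (hg.pdD (k := 1) (by norm_num) k).differentiable
    (by norm_num)
  have e : (pd k fun y => f y * g y) = fun x => pd k f x * g x + f x * pd k g x :=
    funext fun x => pd_mul k (hfd x) (hgd x)
  rw [e, pd_add l ((hfk x).fun_mul (hgd x)) ((hfd x).fun_mul (hgk x)), pd_mul l (hfk x) (hgd x),
    pd_mul l (hfd x) (hgk x)]
  ring

/-- Uniform symbol bounds for the truncated weight `χ(x/R)⟨x⟩^s`. -/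
lemma cut_jap_bounds (n : ℕ) (s : ℝ) : ∃ C : ℝ, 0 < C ∧ ∀ R : ℝ, 1 ≤ R →
    (∀ k (x : Euc n), |pd k (fun y => cut R y * jap y ^ s) x| ≤ C * jap x ^ (s - 1)) ∧
    (∀ k l (x : Euc n), |pd l (pd k (fun y => cut R y * jap y ^ s)) x| ≤ C * jap x ^ (s - 2)) := by
  obtain ⟨B, hB0, hB⟩ := cut_bounds n
  have hc : ∀ (R : ℝ), 1 ≤ R → ∀ x : Euc n, (∀ k, |pd k (cut R) x| ≤ 3 * B * jap x ^ (-1 : ℝ)) ∧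
      (∀ k l, |pd l (pd k (cut R)) x| ≤ 9 * B * jap x ^ (-2 : ℝ)) := by
    intro R hR x
    have hR0 : 0 < R := by linarith
    by_cases hx : ‖x‖ ≤ 2 * R
    · have h1 : jap x ≤ 3 * R := by linarith [jap_le x]
      have h2 : R⁻¹ ≤ 3 * (jap x)⁻¹ := by
        rw [inv_le_comm₀ hR0 (by have := jap_pos x; positivity), mul_inv, inv_inv]; linarith
      have hj : 0 < (jap x)⁻¹ := inv_pos.2 (jap_pos x)
      refine ⟨fun k => ((hB R hR0).1 k x).trans ?_, fun k l => ((hB R hR0).2 k l x).trans ?_⟩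
      · rw [Real.rpow_neg_one]; nlinarith
      · rw [show (-2 : ℝ) = -1 + -1 by norm_num, jap_rpow_add, Real.rpow_neg_one]
        have : R⁻¹ * R⁻¹ ≤ (3 * (jap x)⁻¹) * (3 * (jap x)⁻¹) :=
          mul_le_mul h2 h2 (inv_pos.2 hR0).le (by positivity)
        nlinarith
    · have e : (cut R : Euc n → ℝ) =ᶠ[𝓝 x] fun _ => 0 := by
        have : IsOpen {y : Euc n | 2 * R < ‖y‖} := isOpen_lt continuous_const continuous_norm
        filter_upwards [this.mem_nhds (not_le.1 hx)] with y hy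
        exact cut_eq_zero hR0 (le_of_lt hy)
      have z1 : ∀ k, pd k (cut R) =ᶠ[𝓝 x] fun _ => 0 := fun k => by
        have := pd_congr_nhds k e
        filter_upwards [this] with y hy
        rw [hy, pd_const]
      have hj1 := jap_rpow_pos x (-1)
      have hj2 := jap_rpow_pos x (-2)
      refine ⟨fun k => ?_, fun k l => ?_⟩
      · rw [(z1 k).self_of_nhds]; simp; positivity
      · rw [(pd_congr_nhds l (z1 k)).self_of_nhds, pd_const]; simp; positivity
  refine ⟨9 * B + 2 * (3 * B * |s|) + (|s| + |s| * |s - 2|) + (3 * B + |s|), by positivity,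
    fun R hR => ⟨fun k x => ?_, fun k l x => ?_⟩⟩
  · have hcd : DifferentiableAt ℝ (cut R : Euc n → ℝ) x :=
      (cut_contDiff R).differentiable (by norm_num) x
    have hjd : DifferentiableAt ℝ (fun x : Euc n => jap x ^ s) x :=
      (jap_rpow_contDiff s).differentiable (by norm_num) x
    rw [pd_mul k hcd hjd]
    have a1 : |pd k (cut R) x * jap x ^ s| ≤ 3 * B * jap x ^ (s - 1) := by
      rw [abs_mul, abs_of_pos (jap_rpow_pos x s)]
      refine (mul_le_mul_of_nonneg_right ((hc R hR x).1 k) (jap_rpow_pos x s).le).trans (le_of_eq ?_)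
      rw [mul_assoc, ← jap_rpow_add]; ring_nf
    have a2 : |cut R x * pd k (fun x : Euc n => jap x ^ s) x| ≤ |s| * jap x ^ (s - 1) := by
      rw [abs_mul, abs_of_nonneg (cut_nonneg R x)]
      exact (mul_le_of_le_one_left (abs_nonneg _) (cut_le_one R x)).trans (abs_pd_jap_rpow_le k s x)
    have a3 := (abs_add_le _ _).trans (add_le_add a1 a2)
    refine a3.trans ?_
    have hj := jap_rpow_pos x (s - 1)
    rw [← add_mul]
    refine mul_le_mul_of_nonneg_right ?_ hj.le
    have : 0 ≤ 9 * B + 2 * (3 * B * |s|) + (|s| + |s| * |s - 2|) := by positivity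
    linarith
  · rw [pd_pd_mul k l ((cut_contDiff R).of_le (by norm_cast))
      ((jap_rpow_contDiff s).of_le (by norm_cast))]
    have hj := jap_rpow_pos x (s - 2)
    have a1 : |pd l (pd k (cut R)) x * jap x ^ s| ≤ 9 * B * jap x ^ (s - 2) := by
      rw [abs_mul, abs_of_pos (jap_rpow_pos x s)]
      refine (mul_le_mul_of_nonneg_right ((hc R hR x).2 k l)
        (jap_rpow_pos x s).le).trans (le_of_eq ?_)
      rw [mul_assoc, ← jap_rpow_add]; ring_nf
    have a2 : ∀ k l, |pd k (cut R) x * pd l (fun x : Euc n => jap x ^ s) x| ≤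
        3 * B * |s| * jap x ^ (s - 2) := by
      intro k l
      rw [abs_mul]
      refine (mul_le_mul ((hc R hR x).1 k) (abs_pd_jap_rpow_le l s x) (abs_nonneg _)
        (by have := jap_rpow_pos x (-1); positivity)).trans (le_of_eq ?_)
      rw [show s - 2 = -1 + (s - 1) by ring, jap_rpow_add]; ring
    have a4 : |cut R x * pd l (pd k (fun x : Euc n => jap x ^ s)) x| ≤
        (|s| + |s| * |s - 2|) * jap x ^ (s - 2) := by
      rw [abs_mul, abs_of_nonneg (cut_nonneg R x)]
      exact (mul_le_of_le_one_left (abs_nonneg _) (cut_le_one R x)).trans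
        (abs_pd_pd_jap_rpow_le k l s x)
    have b1 := abs_le.1 a1
    have b2 := abs_le.1 (a2 k l)
    have b3 := abs_le.1 (a2 l k)
    have b4 := abs_le.1 a4
    have : 0 ≤ (3 * B + |s|) * jap x ^ (s - 2) := by positivity
    rw [abs_le]
    constructor <;> linarith

lemma MW.pow_le {p s : ℝ} (hp : 0 < p) {f : Euc n → ℝ} {g : Euc n → ℝ} (hg : MW p s g)
    (hfg : ∀ x, |f x| ≤ jap x ^ s * |g x|) :
    ∫ x, |f x| ^ p ≤ ∫ x, (jap x ^ s * |g x|) ^ p := by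
  refine integral_mono_of_nonneg (Eventually.of_forall fun x => by positivity) (hg.integrable hp)
    (Eventually.of_forall fun x => Real.rpow_le_rpow (abs_nonneg _) (hfg x) hp.le)

/-- The weighted elliptic estimate: `D²v` lies in the same weighted space as `Δv` once `v` and
`∇v` lie in the correspondingly shifted ones. It follows from the Calderón–Zygmund inequality
applied to `χ(x/R)⟨x⟩^s v`. -/
theorem weighted_cz (hn : 0 < n) {p s : ℝ} (hp : 3 < p) {v : Euc n → ℝ}
    (hv : ContDiff ℝ (⊤ : ℕ∞) v) (h0 : MW p (s - 2) v) (h1 : ∀ k, MW p (s - 1) (pd k v))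
    (h2 : MW p s (lap v)) (i j : Fin n) : MW p s (pd j (pd i v)) := by
  have hp0 : 0 < p := by linarith
  obtain ⟨K, hK0, hK⟩ := calderon_zygmund hn hp
  obtain ⟨C, hC0, hC⟩ := cut_jap_bounds n s
  have two : ∀ {f : Euc n → ℝ}, ContDiff ℝ (⊤ : ℕ∞) f → ContDiff ℝ 2 f := fun hf =>
    hf.of_le (by norm_cast)
  have hHs : ContDiff ℝ (⊤ : ℕ∞) (pd j (pd i v)) := ContDiff.pd_top (ContDiff.pd_top hv i) j
  -- the majorant of all lower order terms
  set G : Euc n → ℝ := fun x => |lap v x| + (2 * C * ∑ k, jap x ^ (-1 : ℝ) * |pd k v x|)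
    + (n + 1) * C * (jap x ^ (-2 : ℝ) * |v x|) with hG
  have hGW : MW p s G := by
    have t0 : MW p s fun x => jap x ^ (-2 : ℝ) * |v x| := by
      rw [MW.jap_mul]; exact h0.abs
    have t1 : ∀ k, MW p s fun x => jap x ^ (-1 : ℝ) * |pd k v x| := fun k => by
      rw [MW.jap_mul]; exact (h1 k).abs
    exact (h2.abs.add ((MW.sum _ fun k _ => t1 k).const_mul _)).add (t0.const_mul _)
  have hs0 : ∀ x, 0 ≤ ∑ k, jap x ^ (-1 : ℝ) * |pd k v x| := fun x =>
    Finset.sum_nonneg fun k _ => mul_nonneg (jap_rpow_pos x _).le (abs_nonneg _)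
  have hv0 : ∀ x, 0 ≤ jap x ^ (-2 : ℝ) * |v x| := fun x =>
    mul_nonneg (jap_rpow_pos x _).le (abs_nonneg _)
  have hG0 : ∀ x, 0 ≤ G x := fun x => by
    have := hs0 x; have := hv0 x
    simp only [hG]; positivity
  set I := ∫ x, (jap x ^ s * |G x|) ^ p with hI
  have e1 : ∀ x : Euc n, jap x ^ (s - 1) = jap x ^ s * jap x ^ (-1 : ℝ) := fun x => by
    rw [← jap_rpow_add]; ring_nf
  have e2 : ∀ x : Euc n, jap x ^ (s - 2) = jap x ^ s * jap x ^ (-2 : ℝ) := fun x => by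
    rw [← jap_rpow_add]; ring_nf
  have main : ∀ R : ℝ, 1 ≤ R → ∫ x in Metric.closedBall (0 : Euc n) R,
      ‖(jap x ^ s * |pd j (pd i v) x|) ^ p‖ ≤ 2 ^ p * (K * I + I) := by
    intro R hR
    have hR0 : 0 < R := by linarith
    set ζ : Euc n → ℝ := fun y => cut R y * jap y ^ s with hζ
    have hζs : ContDiff ℝ (⊤ : ℕ∞) ζ := (cut_contDiff R).mul (jap_rpow_contDiff s)
    have hζc : HasCompactSupport ζ := (cut_hasCompactSupport hR0).mul_right
    have hζ0 : ∀ x, 0 ≤ ζ x := fun x => mul_nonneg (cut_nonneg R x) (jap_rpow_pos x s).le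
    have hζ1 : ∀ x, ζ x ≤ jap x ^ s := fun x =>
      mul_le_of_le_one_left (jap_rpow_pos x s).le (cut_le_one R x)
    have hψs : ContDiff ℝ (⊤ : ℕ∞) (fun y => ζ y * v y) := hζs.mul hv
    have hψc : HasCompactSupport (fun y => ζ y * v y) := hζc.mul_right
    obtain ⟨hC1, hC2⟩ := hC R hR
    have hsum : ∀ x, ∑ k, C * jap x ^ (s - 1) * |pd k v x| =
        C * (jap x ^ s * ∑ k, jap x ^ (-1 : ℝ) * |pd k v x|) := fun x => by
      rw [Finset.mul_sum, Finset.mul_sum]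
      refine Finset.sum_congr rfl fun k _ => ?_
      rw [e1]; ring
    have hlap : ∀ x, |lap (fun y => ζ y * v y) x| ≤ jap x ^ s * |G x| := by
      intro x
      rw [lap_mul (two hζs) (two hv), abs_of_nonneg (hG0 x)]
      have a1 : |lap ζ x * v x| ≤ n * C * jap x ^ (s - 2) * |v x| := by
        rw [abs_mul]
        refine mul_le_mul_of_nonneg_right ?_ (abs_nonneg _)
        refine (Finset.abs_sum_le_sum_abs _ _).trans ?_
        refine (Finset.sum_le_sum fun k _ => hC2 k k x).trans (le_of_eq ?_)
        simp only [Finset.sum_const, Finset.card_univ, Fintype.card_fin, nsmul_eq_mul]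
        ring
      have a2 : |∑ k, pd k ζ x * pd k v x| ≤ ∑ k, C * jap x ^ (s - 1) * |pd k v x| := by
        refine (Finset.abs_sum_le_sum_abs _ _).trans (Finset.sum_le_sum fun k _ => ?_)
        rw [abs_mul]
        exact mul_le_mul_of_nonneg_right (hC1 k x) (abs_nonneg _)
      have a3 : |ζ x * lap v x| ≤ jap x ^ s * |lap v x| := by
        rw [abs_mul, abs_of_nonneg (hζ0 x)]
        exact mul_le_mul_of_nonneg_right (hζ1 x) (abs_nonneg _)
      rw [hsum] at a2
      rw [e2] at a1
      have b1 := abs_le.1 a1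
      have b2 := abs_le.1 a2
      have b3 := abs_le.1 a3
      have b4 : 0 ≤ C * (jap x ^ s * (jap x ^ (-2 : ℝ) * |v x|)) :=
        mul_nonneg hC0.le (mul_nonneg (jap_rpow_pos x s).le (hv0 x))
      simp only [hG]
      rw [abs_le]
      constructor <;> linarith
    have hlow : ∀ x, ζ x * |pd j (pd i v) x| ≤
        |pd j (pd i fun y => ζ y * v y) x| + jap x ^ s * |G x| := by
      intro x
      rw [pd_pd_mul i j (two hζs) (two hv), abs_of_nonneg (hG0 x)]
      have a1 : |pd j (pd i ζ) x * v x| ≤ C * jap x ^ (s - 2) * |v x| := by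
        rw [abs_mul]
        exact mul_le_mul_of_nonneg_right (hC2 i j x) (abs_nonneg _)
      have a2 : ∀ k l, |pd k ζ x * pd l v x| ≤ ∑ k, C * jap x ^ (s - 1) * |pd k v x| := by
        intro k l
        rw [abs_mul]
        refine (mul_le_mul_of_nonneg_right (hC1 k x) (abs_nonneg _)).trans ?_
        exact Finset.single_le_sum (f := fun k => C * jap x ^ (s - 1) * |pd k v x|)
          (fun k _ => mul_nonneg (mul_nonneg hC0.le (jap_rpow_pos x _).le) (abs_nonneg _))
          (Finset.mem_univ l)
      have a3 := a2 i j
      have a4 := a2 j i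
      rw [hsum] at a3 a4
      rw [e2] at a1
      have e3 : ζ x * |pd j (pd i v) x| = |ζ x * pd j (pd i v) x| := by
        rw [abs_mul, abs_of_nonneg (hζ0 x)]
      rw [e3]
      set T := pd j (pd i ζ) x * v x
      set T2 := pd i ζ x * pd j v x
      set T3 := pd j ζ x * pd i v x
      set T4 := ζ x * pd j (pd i v) x
      have b : |T4| ≤ |T + T2 + T3 + T4| + (|T| + |T2| + |T3|) := by
        have := abs_sub (T + T2 + T3 + T4) (T + T2 + T3)
        have h5 := abs_add_three T T2 T3
        rw [show T + T2 + T3 + T4 - (T + T2 + T3) = T4 by ring] at this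
        linarith
      have b4 : 0 ≤ (n:ℝ) * (C * (jap x ^ s * (jap x ^ (-2 : ℝ) * |v x|))) :=
        mul_nonneg (Nat.cast_nonneg _)
          (mul_nonneg hC0.le (mul_nonneg (jap_rpow_pos x s).le (hv0 x)))
      have b5 : 0 ≤ jap x ^ s * |lap v x| := mul_nonneg (jap_rpow_pos x s).le (abs_nonneg _)
      simp only [hG]
      linarith
    have hI1 : ∫ x, |lap (fun y => ζ y * v y) x| ^ p ≤ I :=
      hGW.pow_le hp0 hlap
    have hI2 := (hK _ hψs hψc i j).trans (mul_le_mul_of_nonneg_left hI1 hK0.le)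
    have hψ2c : Continuous (pd j (pd i fun y => ζ y * v y)) :=
      (ContDiff.pd_top (ContDiff.pd_top hψs i) j).continuous
    have i1 : Integrable fun x => |pd j (pd i fun y => ζ y * v y) x| ^ p :=
      Continuous.integrable_of_hasCompactSupport
        (hψ2c.abs.rpow_const fun _ => Or.inr hp0.le)
        (((hψc.pdD i).pdD j).comp_left (g := fun t => |t| ^ p)
          (by simp; rw [Real.zero_rpow hp0.ne']))
    have i2 := hGW.integrable hp0
    have i3 : Integrable fun x => 2 ^ p * (|pd j (pd i fun y => ζ y * v y) x| ^ p
        + (jap x ^ s * |G x|) ^ p) := (i1.add i2).const_mul _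
    calc ∫ x in Metric.closedBall (0 : Euc n) R, ‖(jap x ^ s * |pd j (pd i v) x|) ^ p‖
        ≤ ∫ x in Metric.closedBall (0 : Euc n) R,
          2 ^ p * (|pd j (pd i fun y => ζ y * v y) x| ^ p + (jap x ^ s * |G x|) ^ p) := by
          refine integral_mono_of_nonneg (Eventually.of_forall fun x => norm_nonneg _)
            i3.integrableOn ?_
          filter_upwards [ae_restrict_mem Metric.isClosed_closedBall.measurableSet] with x hx
          rw [mem_closedBall_zero_iff] at hx
          have hj := jap_rpow_pos x s
          rw [Real.norm_of_nonneg (by positivity)]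
          have h3 := hlow x
          have h4 : ζ x = jap x ^ s := by simp only [hζ]; rw [cut_eq_one hR0 hx, one_mul]
          rw [h4] at h3
          exact (Real.rpow_le_rpow (by positivity) h3 hp0.le).trans
            (add_rpow_le' (abs_nonneg _) (by positivity) hp0.le)
      _ ≤ ∫ x, 2 ^ p * (|pd j (pd i fun y => ζ y * v y) x| ^ p + (jap x ^ s * |G x|) ^ p) := by
          refine setIntegral_le_integral i3 (Eventually.of_forall fun x => ?_)
          have hj := jap_rpow_pos x s
          simp only [Pi.zero_apply]; positivity
      _ = 2 ^ p * ((∫ x, |pd j (pd i fun y => ζ y * v y) x| ^ p) + I) := by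
          rw [integral_const_mul, integral_add i1 i2]
      _ ≤ _ := by gcongr
  refine MW_of_integrable hp0 hHs.continuous.aestronglyMeasurable ?_
  refine (aecover_closedBall (μ := volume) (x := (0 : Euc n)) (r := fun R : ℝ => R)
    tendsto_id).integrable_of_integral_norm_bounded (2 ^ p * (K * I + I)) (fun R => ?_) ?_
  · have : Continuous fun x => (jap x ^ s * |pd j (pd i v) x|) ^ p :=
      ((jap_rpow_continuous s).mul hHs.continuous.abs).rpow_const fun _ => Or.inr hp0.le
    exact this.continuousOn.integrableOn_compact (isCompact_closedBall _ _)
  · filter_upwards [eventually_ge_atTop 1] with R hR using main R hR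

end globalEstimate

/-! ### Brouwer's fixed point theorem -/

section Brouwer

variable {m : ℕ}

lemma exists_det_poly (A : Euc m →L[ℝ] Euc m) : ∃ P : Polynomial ℝ, P.natDegree ≤ m ∧
    ∀ t : ℝ, P.eval t = (ContinuousLinearMap.id ℝ (Euc m) + t • A).det := by
  set b := (EuclideanSpace.basisFun (Fin m) ℝ).toBasis
  set M := LinearMap.toMatrix b b (A : Euc m →ₗ[ℝ] Euc m) with hM
  refine ⟨(Polynomial.X • M.map Polynomial.C + (1 : Matrix (Fin m) (Fin m) ℝ).map Polynomial.C).det,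
    by simpa using Polynomial.natDegree_det_X_add_C_le M 1, fun t => ?_⟩
  have h1 : (ContinuousLinearMap.id ℝ (Euc m) + t • A).det = (1 + t • M).det := by
    have : (ContinuousLinearMap.id ℝ (Euc m) + t • A).det = LinearMap.det
      ((ContinuousLinearMap.id ℝ (Euc m) + t • A : Euc m →L[ℝ] Euc m) : Euc m →ₗ[ℝ] Euc m) := rfl
    rw [this, ← LinearMap.det_toMatrix b]
    congr 1
    have hid : ((ContinuousLinearMap.id ℝ (Euc m) : Euc m →L[ℝ] Euc m) : Euc m →ₗ[ℝ] Euc m)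
      = LinearMap.id := rfl
    simp only [ContinuousLinearMap.toLinearMap_add, ContinuousLinearMap.toLinearMap_smul,
      map_add, map_smul, hid, LinearMap.toMatrix_id, hM]
  rw [h1, ← Polynomial.coe_evalRingHom, RingHom.map_det]
  congr 1
  ext i j
  simp [Matrix.one_apply, add_comm, apply_ite]
  try ring

lemma det_pos_of_small (A : Euc m →L[ℝ] Euc m) {t : ℝ} (ht : 0 ≤ t) (h : t * ‖A‖ < 1) :
    0 < (ContinuousLinearMap.id ℝ (Euc m) + t • A).det := by
  have hne : ∀ s ∈ Set.Icc 0 t, (ContinuousLinearMap.id ℝ (Euc m) + s • A).det ≠ 0 := by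
    intro s hs h0
    have hlt : ‖-(s • A)‖ < 1 := by
      rw [norm_neg, norm_smul, Real.norm_of_nonneg hs.1]
      exact (mul_le_mul_of_nonneg_right hs.2 (norm_nonneg _)).trans_lt h
    have hu : IsUnit (ContinuousLinearMap.id ℝ (Euc m) + s • A) := by
      have := (Units.oneSub (-(s • A)) hlt).isUnit
      rw [Units.val_oneSub, sub_neg_eq_add] at this
      exact this
    have h2 : IsUnit ((ContinuousLinearMap.id ℝ (Euc m) + s • A : Euc m →L[ℝ] Euc m) :
        Euc m →ₗ[ℝ] Euc m) := hu.map (ContinuousLinearMap.toLinearMapRingHom (R₁ := ℝ) (M₁ := Euc m))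
    have h3 := (LinearMap.isUnit_iff_isUnit_det _).1 h2
    exact h3.ne_zero h0
  have hc : Continuous fun s : ℝ => (ContinuousLinearMap.id ℝ (Euc m) + s • A).det :=
    ContinuousLinearMap.continuous_det.comp (by fun_prop)
  by_contra hle
  have h0 : (ContinuousLinearMap.id ℝ (Euc m) + (0:ℝ) • A).det = 1 := by
    have : ContinuousLinearMap.id ℝ (Euc m) + (0:ℝ) • A = ContinuousLinearMap.id ℝ (Euc m) := by
      ext; simp
    rw [this]; exact LinearMap.det_id
  obtain ⟨s, hs, hs0⟩ := intermediate_value_Icc' ht hc.continuousOn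
    ⟨not_lt.1 hle, by rw [h0]; exact zero_le_one⟩
  exact hne s hs hs0

/-- There is no `C¹` retraction of a ball onto its boundary sphere: the volume of the image of the
ball under `x + t (r x - x)` is a polynomial in `t`, constant for small `t`, but it would vanish
for `t = 1`. -/
lemma no_retraction {r : Euc m → Euc m} (hr : ContDiff ℝ 1 r) {R : ℝ} (hR : 0 < R)
    (hs : ∀ x, ‖r x‖ = R) (hid : ∀ x, ‖x‖ = R → r x = x) : False := by
  have hrd : Differentiable ℝ r := hr.differentiable (by norm_num)
  set g : Euc m → Euc m := fun x => r x - x with hg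
  have hgC : ContDiff ℝ 1 g := hr.sub contDiff_id
  have hgd : Differentiable ℝ g := hgC.differentiable (by norm_num)
  have hgc : Continuous (fderiv ℝ g) := hgC.continuous_fderiv (by norm_num)
  have hKc : IsCompact (Metric.closedBall (0 : Euc m) R) := isCompact_closedBall _ _
  obtain ⟨L0, hL0⟩ := hKc.exists_bound_of_continuousOn hgc.continuousOn
  set L := |L0| + 1 with hL
  have hLpos : 0 < L := by positivity
  have hLb : ∀ x ∈ Metric.closedBall (0 : Euc m) R, ‖fderiv ℝ g x‖ ≤ L := fun x hx =>
    (hL0 x hx).trans (by linarith [le_abs_self L0])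
  set B := Metric.ball (0 : Euc m) R with hB
  set q : ℝ → Euc m → ℝ := fun t x => (ContinuousLinearMap.id ℝ (Euc m) + t • fderiv ℝ g x).det
    with hq
  have hqc : ∀ t, Continuous (q t) := fun t =>
    ContinuousLinearMap.continuous_det.comp (by fun_prop)
  have hqi : ∀ t, IntegrableOn (q t) B := fun t =>
    ((hqc t).continuousOn.integrableOn_compact hKc).mono_set Metric.ball_subset_closedBall
  have hvB : volume B ≠ ⊤ := measure_ball_lt_top.ne
  -- for small `t` the map is a volume preserving bijection of the ball, in the integrated sense
  have hsmall : ∀ t : ℝ, 0 ≤ t → t * L < 1 → t < 1 → ∫ x in B, q t x = volume.real B := by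
    intro t ht0 htL ht1
    set f : Euc m → Euc m := fun x => x + t • g x with hf
    have hfd : ∀ x, HasFDerivAt f (ContinuousLinearMap.id ℝ (Euc m) + t • fderiv ℝ g x) x :=
      fun x => (hasFDerivAt_id x).add ((hgd x).hasFDerivAt.const_smul t)
    have hfC : ContDiff ℝ 1 f := contDiff_id.add (hgC.const_smul t)
    have hpos : ∀ x ∈ B, 0 < q t x := fun x hx => det_pos_of_small _ ht0
      (lt_of_le_of_lt (mul_le_mul_of_nonneg_left (hLb x (Metric.ball_subset_closedBall hx)) ht0) htL)
    have hinj : Set.InjOn f (Metric.closedBall (0 : Euc m) R) := by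
      intro x hx y hy hxy
      have h1 := (convex_closedBall (0 : Euc m) R).norm_image_sub_le_of_norm_fderiv_le
        (fun z _ => hgd z) hLb hx hy
      have h2 : y - x = -(t • (g y - g x)) := by
        simp only [hf] at hxy
        rw [smul_sub]
        have h3 : y - x = (y + t • g y) - (x + t • g x) - (t • g y - t • g x) := by abel
        rw [h3, hxy]; abel
      have h3 : ‖y - x‖ ≤ t * (L * ‖y - x‖) := by
        conv_lhs => rw [h2, norm_neg, norm_smul, Real.norm_of_nonneg ht0]
        exact mul_le_mul_of_nonneg_left h1 ht0
      have h4 : ‖y - x‖ = 0 := by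
        have := norm_nonneg (y - x)
        by_contra hne
        have : 0 < ‖y - x‖ := lt_of_le_of_ne this (Ne.symm hne)
        nlinarith
      rw [norm_eq_zero, sub_eq_zero] at h4
      exact h4.symm
    have hfe : ∀ x, f x = (1 - t) • x + t • r x := fun x => by
      simp only [hf, hg, smul_sub, sub_smul, one_smul]; abel
    have hfB : ∀ x ∈ B, f x ∈ B := by
      intro x hx
      rw [hB, mem_ball_zero_iff] at hx ⊢
      rw [hfe]
      refine (norm_add_le _ _).trans_lt ?_
      rw [norm_smul, norm_smul, Real.norm_of_nonneg ht0, Real.norm_of_nonneg (by linarith), hs]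
      nlinarith
    have hfS : ∀ x, ‖x‖ = R → f x = x := fun x hx => by
      simp only [hf, hg]; rw [hid x hx]; simp
    have himg : Set.image f B = B := by
      refine Set.Subset.antisymm (Set.image_subset_iff.2 hfB) ?_
      have hopen : IsOpen (Set.image f B) := by
        rw [isOpen_iff_mem_nhds]
        rintro _ ⟨x, hx, rfl⟩
        have hst := hfC.hasStrictFDerivAt (x := x) (by norm_num)
        rw [(hfd x).fderiv] at hst
        have hu : IsUnit (LinearMap.det ((ContinuousLinearMap.id ℝ (Euc m) + t • fderiv ℝ g x :
            Euc m →L[ℝ] Euc m) : Euc m →ₗ[ℝ] Euc m)) := isUnit_iff_ne_zero.2 (hpos x hx).ne'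
        have hsurj : ((ContinuousLinearMap.id ℝ (Euc m) + t • fderiv ℝ g x :
            Euc m →L[ℝ] Euc m) : Euc m →ₗ[ℝ] Euc m).range = ⊤ :=
          LinearMap.range_eq_top.2 ((Module.End.isUnit_iff _).1
            ((LinearMap.isUnit_iff_isUnit_det _).2 hu)).2
        rw [← hst.map_nhds_eq_of_surj hsurj]
        exact image_mem_map (Metric.isOpen_ball.mem_nhds hx)
      refine (convex_ball (0 : Euc m) R).isPreconnected.subset_of_closure_inter_subset hopen ?_ ?_
      · exact ⟨f 0, hfB 0 (Metric.mem_ball_self hR), 0, Metric.mem_ball_self hR, rfl⟩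
      · rintro y ⟨hy, hyB⟩
        have hcl : closure (Set.image f B) ⊆ Set.image f (Metric.closedBall 0 R) :=
          closure_minimal (Set.image_mono Metric.ball_subset_closedBall)
            (hKc.image hfC.continuous).isClosed
        obtain ⟨x, hx, rfl⟩ := hcl hy
        refine ⟨x, ?_, rfl⟩
        rw [hB, mem_ball_zero_iff]
        rw [mem_ball_zero_iff] at hyB
        rw [mem_closedBall_zero_iff] at hx
        refine lt_of_le_of_ne hx fun hxe => ?_
        rw [hfS x hxe] at hyB
        exact hyB.ne hxe
    have hl := lintegral_abs_det_fderiv_eq_addHaar_image volume (s := B) (f := f)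
      Metric.isOpen_ball.measurableSet (fun x _ => (hfd x).hasFDerivWithinAt)
      (hinj.mono Metric.ball_subset_closedBall)
    rw [himg] at hl
    rw [integral_eq_lintegral_of_nonneg_ae
      ((ae_restrict_iff' Metric.isOpen_ball.measurableSet).2
        (Eventually.of_forall fun x hx => (hpos x hx).le)) (hqc t).aestronglyMeasurable.restrict,
      measureReal_def, ← hl]
    congr 1
    refine setLIntegral_congr_fun Metric.isOpen_ball.measurableSet fun x hx => ?_
    rw [abs_of_pos (hpos x hx)]
  -- Lagrange interpolation transports the identity to `t = 1`
  set v : ℕ → ℝ := fun i => 1 / ((i : ℝ) + 1 + (L + 1)) with hv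
  have hvinj : Function.Injective v := by
    intro i j hij
    simp only [hv] at hij
    have h1 : (0:ℝ) < (i : ℝ) + 1 + (L + 1) := by positivity
    have h2 : (0:ℝ) < (j : ℝ) + 1 + (L + 1) := by positivity
    rw [div_eq_div_iff h1.ne' h2.ne'] at hij
    have : (i : ℝ) = j := by linarith
    exact_mod_cast this
  have hv1 : ∀ i, ∫ x in B, q (v i) x = volume.real B := by
    intro i
    have h1 : (0:ℝ) < (i : ℝ) + 1 + (L + 1) := by positivity
    have hi : (0:ℝ) ≤ i := Nat.cast_nonneg i
    refine hsmall _ (by positivity) ?_ ?_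
    · simp only [hv]; rw [div_mul_eq_mul_div, div_lt_one h1]; linarith
    · simp only [hv]; rw [div_lt_one h1]; linarith
  set s := Finset.range (m + 1) with hsdef
  have hinjs : Set.InjOn v s := hvinj.injOn
  have hq1 : ∀ x, q 1 x = ∑ i ∈ s, q (v i) x * (Lagrange.basis s v i).eval 1 := by
    intro x
    obtain ⟨P, hPd, hP⟩ := exists_det_poly (fderiv ℝ g x)
    have hdeg : P.degree < s.card := by
      refine (Polynomial.degree_le_of_natDegree_le hPd).trans_lt ?_
      rw [hsdef, Finset.card_range]; exact_mod_cast Nat.lt_succ_self m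
    have h1 := Lagrange.eq_interpolate hinjs hdeg
    have h2 := congrArg (Polynomial.eval 1) h1
    rw [Lagrange.interpolate_apply, Polynomial.eval_finsetSum] at h2
    simp only [Polynomial.eval_mul, Polynomial.eval_C, hP] at h2
    exact h2
  have hone : ∑ i ∈ s, (Lagrange.basis s v i).eval 1 = 1 := by
    rw [← Polynomial.eval_finsetSum, Lagrange.sum_basis hinjs ⟨0, by simp [hsdef]⟩,
      Polynomial.eval_one]
  have hintg : ∫ x in B, q 1 x = volume.real B := by
    simp_rw [hq1]
    rw [integral_finsetSum _ fun i _ => (hqi (v i)).mul_const _]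
    simp_rw [integral_mul_const, hv1, ← Finset.mul_sum]
    rw [hone, mul_one]
  -- the derivative of a map into a sphere is singular
  have hzero : ∀ x, q 1 x = 0 := by
    intro x
    by_contra hne
    have hA : ContinuousLinearMap.id ℝ (Euc m) + (1:ℝ) • fderiv ℝ g x = fderiv ℝ r x := by
      have : fderiv ℝ g x = fderiv ℝ r x - ContinuousLinearMap.id ℝ (Euc m) := by
        exact ((hrd x).hasFDerivAt.sub (hasFDerivAt_id x)).fderiv
      rw [this, one_smul]; abel
    simp only [hq] at hne
    rw [hA] at hne
    have hu : IsUnit (LinearMap.det ((fderiv ℝ r x : Euc m →L[ℝ] Euc m) : Euc m →ₗ[ℝ] Euc m)) :=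
      isUnit_iff_ne_zero.2 hne
    obtain ⟨w, hw⟩ := ((Module.End.isUnit_iff _).1 ((LinearMap.isUnit_iff_isUnit_det _).2 hu)).2 (r x)
    have h1 : HasFDerivAt (fun y => ‖r y‖ ^ 2) (2 • (innerSL ℝ (r x)).comp (fderiv ℝ r x)) x :=
      (hrd x).hasFDerivAt.norm_sq
    have h2 : HasFDerivAt (fun y => ‖r y‖ ^ 2) (0 : Euc m →L[ℝ] ℝ) x := by
      simp only [hs]; exact hasFDerivAt_const _ _
    have h3 := congrArg (fun T : Euc m →L[ℝ] ℝ => T w) (h1.unique h2)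
    have hw2 : fderiv ℝ r x w = r x := hw
    simp [hw2, hs] at h3
    exact hR.ne' h3
  simp only [hzero, integral_zero] at hintg
  have : 0 < volume.real B := ENNReal.toReal_pos (Metric.measure_ball_pos volume 0 hR).ne' hvB
  linarith

/-- Brouwer's theorem for smooth bounded maps. -/
lemma brouwer_smooth {G : Euc m → Euc m} (hG : ContDiff ℝ 1 G) {M : ℝ}
    (hM : ∀ x, ‖G x‖ ≤ M) : ∃ x, G x = x := by
  by_contra hno
  push Not at hno
  have hM0 : 0 ≤ M := (norm_nonneg _).trans (hM 0)
  set R0 := M + 1 with hR0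
  have hR0p : 0 < R0 := by positivity
  set h : Euc m → Euc m := fun x => x - cut R0 x • G x with hh
  have hhC : ContDiff ℝ 1 h := contDiff_id.sub (((cut_contDiff R0).of_le (by norm_cast)).smul hG)
  have hne : ∀ x, h x ≠ 0 := by
    intro x hx
    have hx1 : x = cut R0 x • G x := sub_eq_zero.1 hx
    have hx2 : ‖x‖ ≤ M := by
      rw [hx1, norm_smul, Real.norm_of_nonneg (cut_nonneg _ _)]
      exact (mul_le_of_le_one_left (norm_nonneg _) (cut_le_one _ _)).trans (hM x)
    rw [cut_eq_one hR0p (by linarith), one_smul] at hx1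
    exact hno x hx1.symm
  refine no_retraction (r := fun x => (2 * R0 * ‖h x‖⁻¹) • h x) (R := 2 * R0) ?_ (by positivity)
    (fun x => ?_) (fun x hx => ?_)
  · have h1 : ContDiff ℝ 1 fun x => ‖h x‖ := hhC.norm ℝ hne
    exact (contDiff_const.mul (h1.inv fun x => norm_ne_zero_iff.2 (hne x))).smul hhC
  · have := norm_pos_iff.2 (hne x)
    rw [norm_smul, Real.norm_of_nonneg (by positivity)]
    field_simp
  · have h1 : h x = x := by
      simp only [hh]; rw [cut_eq_zero hR0p hx.ge]; simp
    have h2 : ‖x‖ ≠ 0 := by rw [hx]; positivity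
    simp only [h1]
    rw [← hx, mul_inv_cancel₀ h2, one_smul]

/-- Brouwer's fixed point theorem for bounded continuous self-maps of Euclidean space. -/
theorem brouwer {F : Euc m → Euc m} (hF : Continuous F) {M : ℝ} (hM : ∀ x, ‖F x‖ ≤ M) :
    ∃ x, F x = x := by
  have hk : ∀ k : ℕ, ∃ x, ‖F x - x‖ ≤ 1 / ((k : ℝ) + 1) := by
    intro k
    have hpos : (0:ℝ) < 1 / ((k : ℝ) + 1) := by positivity
    obtain ⟨G, hG, hGF, -⟩ := hF.exists_contDiff_approx 1 (ε := fun _ => 1 / ((k : ℝ) + 1))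
      continuous_const (fun _ => hpos)
    obtain ⟨x, hx⟩ := brouwer_smooth (G := G) (by exact_mod_cast hG)
      (M := M + 1 / ((k : ℝ) + 1)) (fun x => by
        have h1 := (hGF x).le
        rw [dist_eq_norm] at h1
        have h2 := norm_add_le (G x - F x) (F x)
        rw [sub_add_cancel] at h2
        linarith [hM x])
    refine ⟨x, ?_⟩
    have := (hGF x).le
    rwa [hx, dist_comm, dist_eq_norm] at this
  choose x hx using hk
  have hxb : ∀ k, x k ∈ Metric.closedBall (0 : Euc m) (M + 1) := by
    intro k
    rw [mem_closedBall_zero_iff]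
    have h1 := norm_sub_le (F (x k)) (F (x k) - x k)
    rw [sub_sub_cancel] at h1
    have h2 : 1 / ((k : ℝ) + 1) ≤ 1 := by
      rw [div_le_one (by positivity)]; linarith [Nat.cast_nonneg (α := ℝ) k]
    linarith [hM (x k), hx k]
  obtain ⟨y, -, φ, hφ, hy⟩ := (isCompact_closedBall (0 : Euc m) (M + 1)).tendsto_subseq hxb
  refine ⟨y, ?_⟩
  have h1 : Tendsto (fun k => F (x (φ k)) - x (φ k)) atTop (𝓝 (F y - y)) :=
    ((hF.tendsto y).comp hy).sub hy
  have h2 : Tendsto (fun k => F (x (φ k)) - x (φ k)) atTop (𝓝 0) := by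
    refine squeeze_zero_norm (fun k => hx (φ k)) ?_
    exact (tendsto_one_div_add_atTop_nhds_zero_nat (𝕜 := ℝ)).comp hφ.tendsto_atTop
  exact sub_eq_zero.1 (tendsto_nhds_unique h1 h2)

end Brouwer

/-! ### Homogeneous kernels -/

section Kernels

variable {n : ℕ}

/-- `M` is smooth away from the origin and positively homogeneous of degree `d` there.
The value at the origin is irrelevant. -/
def Hom (d : ℝ) (M : Euc n → ℝ) : Prop :=
  ContDiffOn ℝ (⊤ : ℕ∞) M {0}ᶜ ∧ ∀ t : ℝ, 0 < t → ∀ z : Euc n, z ≠ 0 → M (t • z) = t ^ d * M z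

lemma ae_ne_zero (hn : 0 < n) : ∀ᵐ z : Euc n, z ≠ 0 := by
  have : Nonempty (Fin n) := ⟨⟨0, hn⟩⟩
  have : Nontrivial (Euc n) := inferInstance
  exact compl_mem_ae_iff.2 (measure_singleton 0)

variable {d e : ℝ} {M M' : Euc n → ℝ}

lemma Hom.contDiffAt (h : Hom d M) {z : Euc n} (hz : z ≠ 0) : ContDiffAt ℝ (⊤ : ℕ∞) M z :=
  h.1.contDiffAt (isOpen_compl_singleton.mem_nhds hz)

lemma Hom.differentiableAt (h : Hom d M) {z : Euc n} (hz : z ≠ 0) : DifferentiableAt ℝ M z :=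
  (h.contDiffAt hz).differentiableAt (by norm_num)

lemma Hom.measurable (h : Hom d M) : Measurable M :=
  measurable_of_continuousOn_compl_singleton 0 h.1.continuousOn

lemma Hom.add (h : Hom d M) (h' : Hom d M') : Hom d fun z => M z + M' z :=
  ⟨h.1.add h'.1, fun t ht z hz => by
    simp only [h.2 t ht z hz, h'.2 t ht z hz]; ring⟩

lemma Hom.const_mul (h : Hom d M) (c : ℝ) : Hom d fun z => c * M z :=
  ⟨contDiffOn_const.mul h.1, fun t ht z hz => by
    simp only [h.2 t ht z hz]; ring⟩

lemma Hom.coord_mul (h : Hom d M) (i : Fin n) : Hom (d + 1) fun z => z i * M z := by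
  refine ⟨ContDiffOn.mul (ContDiff.contDiffOn (by fun_prop)) h.1, fun t ht z hz => ?_⟩
  simp only [h.2 t ht z hz, Real.rpow_add_one ht.ne']
  simp; ring

lemma Hom.pd (h : Hom d M) (i : Fin n) : Hom (d - 1) (pd i M) := by
  refine ⟨h.1.pd_of_isOpen isOpen_compl_singleton (by norm_cast) i, fun t ht z hz => ?_⟩
  have htz : t • z ≠ 0 := smul_ne_zero ht.ne' hz
  have h1 := pd_scale i t (h.differentiableAt htz)
  have h2 : (fun y => M (t • y)) =ᶠ[𝓝 z] fun y => t ^ d * M y := by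
    filter_upwards [isOpen_compl_singleton.mem_nhds hz] with y hy using h.2 t ht y hy
  rw [pd_congr i h2, pd_const_mul i _ (h.differentiableAt hz)] at h1
  rw [Real.rpow_sub_one ht.ne']
  field_simp
  linarith

lemma Hom_norm (d : ℝ) : Hom d fun z : Euc n => ‖z‖ ^ d := by
  refine ⟨fun z hz => ?_, fun t ht z hz => ?_⟩
  · have := (contDiffAt_norm ℝ (n := (⊤ : ℕ∞)) hz).rpow_const_of_ne (p := d) (norm_ne_zero_iff.2 hz)
    exact this.contDiffWithinAt
  · simp only [norm_smul, Real.norm_of_nonneg ht.le, Real.mul_rpow ht.le (norm_nonneg _)]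

lemma Hom.bound (h : Hom d M) : ∃ C : ℝ, 0 < C ∧ ∀ z : Euc n, z ≠ 0 → |M z| ≤ C * ‖z‖ ^ d := by
  obtain ⟨C, hC⟩ := (isCompact_sphere (0 : Euc n) 1).exists_bound_of_continuousOn
    (h.1.continuousOn.mono fun z hz h0 => by
      rw [Set.mem_singleton_iff.1 h0] at hz; simp at hz)
  refine ⟨|C| + 1, by positivity, fun z hz => ?_⟩
  have hz' := norm_pos_iff.2 hz
  have h1 : z = ‖z‖ • (‖z‖⁻¹ • z) := by rw [smul_smul, mul_inv_cancel₀ hz'.ne', one_smul]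
  have h2 : ‖(‖z‖⁻¹ • z)‖ = 1 := by
    rw [norm_smul, norm_inv, norm_norm, inv_mul_cancel₀ hz'.ne']
  have h3 : ‖z‖⁻¹ • z ≠ 0 := by rw [← norm_ne_zero_iff, h2]; norm_num
  conv_lhs => rw [h1]
  rw [h.2 _ hz' _ h3, abs_mul, abs_of_nonneg (by positivity), mul_comm]
  have h4 := hC (‖z‖⁻¹ • z) (by simp [h2])
  rw [Real.norm_eq_abs] at h4
  gcongr
  linarith [le_abs_self C]

lemma Hom.locallyIntegrable (hn : 0 < n) (h : Hom d M) (hd : -(n : ℝ) < d) :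
    LocallyIntegrable M volume := by
  obtain ⟨C, -, hC⟩ := h.bound
  refine locallyIntegrable_of_norm_le_rpow (C := C) (α := -d) (by simpa using Nat.succ_le_of_lt hn)
    (by simp; linarith) ?_ h.measurable.aestronglyMeasurable
  filter_upwards [ae_ne_zero hn] with z hz
  rw [neg_neg]
  exact hC z hz

/-! #### The bracket weight under translation -/

lemma jap_neg (x : Euc n) : jap (-x) = jap x := by simp [jap]

lemma jap_add_le (a b : Euc n) : jap (a + b) ≤ 2 * jap a * jap b := by
  have h0 : 0 ≤ 2 * jap a * jap b := by
    have := jap_pos a; have := jap_pos b; positivity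
  refine Real.sqrt_le_iff.2 ⟨h0, ?_⟩
  have h1 : ‖a + b‖ ^ 2 ≤ 2 * ‖a‖ ^ 2 + 2 * ‖b‖ ^ 2 := by
    have := norm_add_le a b
    have h3 : ‖a + b‖ ^ 2 ≤ (‖a‖ + ‖b‖) ^ 2 := by gcongr
    nlinarith [sq_nonneg (‖a‖ - ‖b‖)]
  rw [mul_pow, mul_pow, jap_sq, jap_sq]
  nlinarith [sq_nonneg ‖a‖, sq_nonneg ‖b‖, mul_nonneg (sq_nonneg ‖a‖) (sq_nonneg ‖b‖)]

lemma jap_sub_rpow_le {s : ℝ} (hs : 0 ≤ s) (x y : Euc n) :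
    jap (x - y) ^ (-s) ≤ (2 * jap x) ^ s * jap y ^ (-s) := by
  have hx := jap_pos x
  have hy := jap_pos y
  have hxy := jap_pos (x - y)
  have h1 : jap y ≤ 2 * jap x * jap (x - y) := by
    have := jap_add_le x (-(x - y))
    rwa [jap_neg, show x + -(x - y) = y by abel] at this
  have h2 : jap y ^ s ≤ (2 * jap x) ^ s * jap (x - y) ^ s := by
    rw [← Real.mul_rpow (by positivity) hxy.le]
    exact Real.rpow_le_rpow hy.le h1 hs
  rw [Real.rpow_neg hxy.le, Real.rpow_neg hy.le, ← div_eq_mul_inv, le_div_iff₀ (by positivity),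
    inv_mul_le_iff₀ (by positivity)]
  linarith

/-! ### Convolutions -/

/-- Convolution of a kernel with a function. -/
def cv (K f : Euc n → ℝ) (x : Euc n) : ℝ := ∫ y, K (x - y) * f y

lemma cv_eq (K f : Euc n → ℝ) (x : Euc n) : cv K f x = ∫ z, K z * f (x - z) := by
  unfold cv
  rw [← integral_sub_left_eq_self (fun z => K z * f (x - z)) volume x]
  simp

/-- Integrability against the decay rate `⟨y⟩^{2-n}` of the Newtonian potential. -/
def WI (f : Euc n → ℝ) : Prop := Integrable fun y => jap y ^ (2 - (n : ℝ)) * f y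

/-- Smooth kernels which are homogeneous of degree at most `2 - n` outside a ball. -/
def Far (S : Euc n → ℝ) : Prop :=
  ContDiff ℝ (⊤ : ℕ∞) S ∧ ∃ d : ℝ, d ≤ 2 - n ∧ ∃ M : Euc n → ℝ, Hom d M ∧
    ∀ z, 2 < ‖z‖ → S z = M z

lemma Far.pd {S : Euc n → ℝ} (h : Far S) (i : Fin n) : Far (pd i S) := by
  obtain ⟨hS, d, hd, M, hM, he⟩ := h
  refine ⟨ContDiff.pd_top hS i, d - 1, by linarith, _, hM.pd i, fun z hz => pd_congr i ?_⟩
  have : IsOpen {z : Euc n | 2 < ‖z‖} := isOpen_lt continuous_const continuous_norm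
  filter_upwards [this.mem_nhds hz] with y hy using he y hy

lemma Far.bound (hn : 3 ≤ n) {S : Euc n → ℝ} (h : Far S) :
    ∃ C : ℝ, 0 < C ∧ ∀ z, |S z| ≤ C * jap z ^ (2 - (n : ℝ)) := by
  obtain ⟨hS, d, hd, M, hM, he⟩ := h
  obtain ⟨C1, hC1, h1⟩ := hM.bound
  have hn' : (3 : ℝ) ≤ n := by exact_mod_cast hn
  obtain ⟨C2, h2⟩ := (isCompact_closedBall (0 : Euc n) 2).exists_bound_of_continuousOn
    (f := fun z => S z * jap z ^ ((n : ℝ) - 2))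
    (hS.continuous.mul (jap_rpow_continuous _)).continuousOn
  refine ⟨C1 * 2 ^ ((n : ℝ) - 2) + |C2|, by positivity, fun z => ?_⟩
  have hj := jap_pos z
  rcases le_or_gt ‖z‖ 2 with hz | hz
  · have h3 := h2 z (by simpa using hz)
    rw [Real.norm_eq_abs, abs_mul, abs_of_pos (jap_rpow_pos z _)] at h3
    have h4 : |S z| = (|S z| * jap z ^ ((n : ℝ) - 2)) * jap z ^ (2 - (n : ℝ)) := by
      rw [mul_assoc, ← Real.rpow_add hj]; simp
    rw [h4]
    gcongr
    have : 0 ≤ C1 * 2 ^ ((n : ℝ) - 2) := by positivity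
    linarith [le_abs_self C2]
  · have hz0 : 0 < ‖z‖ := by linarith
    rw [he z hz]
    refine (h1 z (norm_pos_iff.1 hz0)).trans ?_
    have h5 : ‖z‖ ^ d ≤ ‖z‖ ^ (2 - (n : ℝ)) :=
      Real.rpow_le_rpow_of_exponent_le (by linarith) hd
    have h6 : ‖z‖ ^ (2 - (n : ℝ)) ≤ (jap z / 2) ^ (2 - (n : ℝ)) :=
      Real.rpow_le_rpow_of_nonpos (by positivity) (by linarith [jap_le z]) (by linarith)
    have h7 : (jap z / 2) ^ (2 - (n : ℝ)) = 2 ^ ((n : ℝ) - 2) * jap z ^ (2 - (n : ℝ)) := by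
      rw [Real.div_rpow hj.le (by norm_num), show (2 - (n : ℝ)) = -((n : ℝ) - 2) by ring,
        Real.rpow_neg (x := 2) (by norm_num) ((n : ℝ) - 2), div_inv_eq_mul, mul_comm]
    calc C1 * ‖z‖ ^ d ≤ C1 * (2 ^ ((n : ℝ) - 2) * jap z ^ (2 - (n : ℝ))) := by
          gcongr; linarith
      _ ≤ _ := by
          rw [← mul_assoc]; gcongr; linarith [abs_nonneg C2]

lemma far_dom (hn : 3 ≤ n) {S : Euc n → ℝ} {C : ℝ} (hC : 0 < C)
    (hS : ∀ z, |S z| ≤ C * jap z ^ (2 - (n : ℝ))) (f : Euc n → ℝ) (x y : Euc n) :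
    |S (x - y) * f y| ≤ C * (2 * jap x) ^ ((n : ℝ) - 2) * |jap y ^ (2 - (n : ℝ)) * f y| := by
  have hn' : (3 : ℝ) ≤ n := by exact_mod_cast hn
  have h1 := jap_sub_rpow_le (s := (n : ℝ) - 2) (by linarith) x y
  rw [neg_sub] at h1
  rw [abs_mul, abs_mul, abs_of_pos (jap_rpow_pos y _), ← mul_assoc]
  gcongr
  refine (hS _).trans ?_
  rw [mul_assoc]
  gcongr

lemma WI.aesm {f : Euc n → ℝ} (hf : WI f) : AEStronglyMeasurable f volume := by
  have h1 : AEStronglyMeasurable (fun y => jap y ^ ((n : ℝ) - 2) * (jap y ^ (2 - (n : ℝ)) * f y))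
    volume := (jap_rpow_continuous _).aestronglyMeasurable.mul hf.1
  refine h1.congr (Eventually.of_forall fun y => ?_)
  simp only
  rw [← mul_assoc, ← Real.rpow_add (jap_pos y)]; simp

lemma Far.integrable (hn : 3 ≤ n) {S f : Euc n → ℝ} (h : Far S) (hf : WI f) (x : Euc n) :
    Integrable fun y => S (x - y) * f y := by
  obtain ⟨C, hC, hb⟩ := h.bound hn
  refine Integrable.mono' (hf.norm.const_mul (C * (2 * jap x) ^ ((n : ℝ) - 2)))
    (((h.1.continuous.comp (by fun_prop)).aestronglyMeasurable).mul hf.aesm)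
    (Eventually.of_forall fun y => ?_)
  exact far_dom hn hC hb f x y

lemma Far.hasFDerivAt (hn : 3 ≤ n) {S f : Euc n → ℝ} (h : Far S) (hf : WI f) (x : Euc n) :
    HasFDerivAt (cv S f) (∫ y, f y • fderiv ℝ S (x - y)) x := by
  have hn' : (3 : ℝ) ≤ n := by exact_mod_cast hn
  choose C hC hb using fun i => (h.pd i).bound hn
  have hfc : Continuous (fderiv ℝ S) := h.1.continuous_fderiv (by norm_num)
  have hsd : Differentiable ℝ S := h.1.differentiable (by norm_num)
  unfold cv
  refine hasFDerivAt_integral_of_dominated_of_fderiv_le (F := fun x y => S (x - y) * f y)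
    (F' := fun x y => f y • fderiv ℝ S (x - y)) (s := Metric.ball x 1)
    (bound := fun y => (∑ i, C i * (2 * (1 + ‖x‖ + 1)) ^ ((n : ℝ) - 2)) *
      |jap y ^ (2 - (n : ℝ)) * f y|) (Metric.ball_mem_nhds x one_pos)
    (Eventually.of_forall fun x' => (h.integrable hn hf x').1) (h.integrable hn hf x)
    (hf.aesm.smul (hfc.comp (by fun_prop)).aestronglyMeasurable)
    (Eventually.of_forall fun y x' hx' => ?_) (hf.norm.const_mul _)
    (Eventually.of_forall fun y x' _ => ?_)
  · rw [norm_smul, Real.norm_eq_abs, Finset.sum_mul]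
    have h1 := norm_fderiv_le_sum_pd S (x' - y)
    have hx2 : jap x' ≤ 1 + ‖x‖ + 1 := by
      have h2 := jap_le x'
      have h3 : ‖x'‖ ≤ ‖x‖ + ‖x' - x‖ := by
        have := norm_add_le x (x' - x); rwa [add_sub_cancel] at this
      rw [mem_ball_iff_norm] at hx'
      linarith
    calc |f y| * ‖fderiv ℝ S (x' - y)‖ ≤ |f y| * ∑ i, |_root_.pd i S (x' - y)| := by gcongr
      _ = ∑ i, |_root_.pd i S (x' - y) * f y| := by
          rw [Finset.mul_sum]; refine Finset.sum_congr rfl fun i _ => ?_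
          rw [abs_mul, mul_comm]
      _ ≤ _ := by
          refine Finset.sum_le_sum fun i _ => (far_dom hn (hC i) (hb i) f x' y).trans ?_
          have := hC i
          have := jap_pos x'
          gcongr
          linarith
  · have h1 : HasFDerivAt (fun x' => S (x' - y)) (fderiv ℝ S (x' - y)) x' := by
      have := (hsd (x' - y)).hasFDerivAt.comp x' ((hasFDerivAt_id x').sub_const y)
      rwa [ContinuousLinearMap.comp_id] at this
    exact h1.mul_const (f y)

lemma Far.pd_cv (hn : 3 ≤ n) {S f : Euc n → ℝ} (h : Far S) (hf : WI f) (i : Fin n) :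
    _root_.pd i (cv S f) = cv (_root_.pd i S) f := by
  funext x
  rw [pd_eq_of_hasFDerivAt i (h.hasFDerivAt hn hf x)]
  have hI : Integrable fun y => f y • fderiv ℝ S (x - y) := by
    refine Integrable.mono' (integrable_finsetSum Finset.univ fun k _ =>
      ((h.pd k).integrable hn hf x).abs) (hf.aesm.smul ((h.1.continuous_fderiv (by norm_num)).comp
        (by fun_prop)).aestronglyMeasurable) (Eventually.of_forall fun y => ?_)
    rw [norm_smul, Real.norm_eq_abs]
    have h1 := norm_fderiv_le_sum_pd S (x - y)
    refine (mul_le_mul_of_nonneg_left h1 (abs_nonneg _)).trans_eq ?_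
    rw [Finset.mul_sum]; refine Finset.sum_congr rfl fun i _ => ?_
    rw [abs_mul, mul_comm]
  rw [ContinuousLinearMap.integral_apply hI]
  unfold cv
  congr 1
  funext y
  simp [_root_.pd, eb, mul_comm]

lemma Far.contDiff_cv (hn : 3 ≤ n) {f : Euc n → ℝ} (hf : WI f) (k : ℕ) :
    ∀ {S : Euc n → ℝ}, Far S → ContDiff ℝ k (cv S f) := by
  induction k with
  | zero =>
    intro S h
    have hd : Differentiable ℝ (cv S f) := fun x => (h.hasFDerivAt hn hf x).differentiableAt
    exact contDiff_zero.2 hd.continuous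
  | succ k ih =>
    intro S h
    have hd : Differentiable ℝ (cv S f) := fun x => (h.hasFDerivAt hn hf x).differentiableAt
    push_cast
    refine contDiff_succ_of_pd hd fun i => ?_
    rw [h.pd_cv hn hf i]
    exact ih (h.pd i)

/-! #### Compactly supported integrable kernels -/

lemma near_bound {f : Euc n → ℝ} (hf : Continuous f) (x : Euc n) :
    ∃ B : ℝ, 0 ≤ B ∧ ∀ x' ∈ Metric.ball x 1, ∀ z : Euc n, ‖z‖ ≤ 2 → |f (x' - z)| ≤ B := by
  obtain ⟨B, hB⟩ := (isCompact_closedBall x 3).exists_bound_of_continuousOn hf.continuousOn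
  refine ⟨|B|, abs_nonneg B, fun x' hx' z hz => (hB _ ?_).trans (le_abs_self B)⟩
  rw [mem_closedBall_iff_norm]
  rw [mem_ball_iff_norm] at hx'
  have := norm_sub_le (x' - x) z
  rw [show x' - z - x = x' - x - z by abel]
  linarith

lemma near_dom {k f : Euc n → ℝ} (hk0 : ∀ z, 2 < ‖z‖ → k z = 0) {B : ℝ} {x : Euc n}
    (hB : ∀ z : Euc n, ‖z‖ ≤ 2 → |f (x - z)| ≤ B) (z : Euc n) : |k z * f (x - z)| ≤ |k z| * B := by
  rw [abs_mul]
  rcases le_or_gt ‖z‖ 2 with hz | hz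
  · exact mul_le_mul_of_nonneg_left (hB z hz) (abs_nonneg _)
  · simp [hk0 z hz]

lemma near_integrable {k f : Euc n → ℝ} (hk : Integrable k) (hk0 : ∀ z, 2 < ‖z‖ → k z = 0)
    (hf : Continuous f) (x : Euc n) : Integrable fun z => k z * f (x - z) := by
  obtain ⟨B, hB0, hB⟩ := near_bound hf x
  exact Integrable.mono' (hk.abs.mul_const B)
    (hk.1.mul (hf.comp (by fun_prop)).aestronglyMeasurable)
    (Eventually.of_forall fun z => near_dom hk0 (hB x (Metric.mem_ball_self one_pos)) z)

lemma near_continuous {k f : Euc n → ℝ} (hk : Integrable k) (hk0 : ∀ z, 2 < ‖z‖ → k z = 0)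
    (hf : Continuous f) : Continuous fun x => ∫ z, k z * f (x - z) := by
  rw [continuous_iff_continuousAt]
  intro x
  obtain ⟨B, hB0, hB⟩ := near_bound hf x
  refine continuousAt_of_dominated (bound := fun z => |k z| * B)
    (Eventually.of_forall fun x' => (near_integrable hk hk0 hf x').1) ?_ (hk.abs.mul_const B)
    (Eventually.of_forall fun z => ?_)
  · filter_upwards [Metric.ball_mem_nhds x one_pos] with x' hx'
    exact Eventually.of_forall fun z => near_dom hk0 (hB x' hx') z
  · exact (continuous_const.mul (hf.comp (by fun_prop))).continuousAt

lemma near_hasFDerivAt {k f : Euc n → ℝ} (hk : Integrable k) (hk0 : ∀ z, 2 < ‖z‖ → k z = 0)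
    (hf : ContDiff ℝ 1 f) (x : Euc n) :
    HasFDerivAt (fun x => ∫ z, k z * f (x - z)) (∫ z, k z • fderiv ℝ f (x - z)) x := by
  have hfc : Continuous (fderiv ℝ f) := hf.continuous_fderiv (by norm_num)
  obtain ⟨B, hB0, hB⟩ := near_bound (f := fun y => ‖fderiv ℝ f y‖) hfc.norm x
  refine hasFDerivAt_integral_of_dominated_of_fderiv_le (F := fun x z => k z * f (x - z))
    (F' := fun x z => k z • fderiv ℝ f (x - z)) (s := Metric.ball x 1)
    (bound := fun z => |k z| * B) (Metric.ball_mem_nhds x one_pos)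
    (Eventually.of_forall fun x' => (near_integrable hk hk0 hf.continuous x').1)
    (near_integrable hk hk0 hf.continuous x)
    (hk.1.smul (hfc.comp (by fun_prop)).aestronglyMeasurable)
    (Eventually.of_forall fun z x' hx' => ?_) (hk.abs.mul_const B)
    (Eventually.of_forall fun z x' _ => ?_)
  · have := near_dom (f := fun y => ‖fderiv ℝ f y‖) hk0 (hB x' hx') z
    rw [abs_mul, abs_norm] at this
    rwa [norm_smul, Real.norm_eq_abs]
  · have h1 : HasFDerivAt (fun x' => f (x' - z)) (fderiv ℝ f (x' - z)) x' := by
      have := (hf.differentiable (by norm_num) (x' - z)).hasFDerivAt.comp x'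
        ((hasFDerivAt_id x').sub_const z)
      rwa [ContinuousLinearMap.comp_id] at this
    exact h1.const_mul (k z)

lemma near_pd {k f : Euc n → ℝ} (hk : Integrable k) (hk0 : ∀ z, 2 < ‖z‖ → k z = 0)
    (hf : ContDiff ℝ 1 f) (i : Fin n) :
    pd i (fun x => ∫ z, k z * f (x - z)) = fun x => ∫ z, k z * pd i f (x - z) := by
  funext x
  rw [pd_eq_of_hasFDerivAt i (near_hasFDerivAt hk hk0 hf x)]
  have hfc : Continuous (fderiv ℝ f) := hf.continuous_fderiv (by norm_num)
  obtain ⟨B, hB0, hB⟩ := near_bound (f := fun y => ‖fderiv ℝ f y‖) hfc.norm x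
  have hI : Integrable fun z => k z • fderiv ℝ f (x - z) := by
    refine Integrable.mono' (hk.abs.mul_const B) (hk.1.smul (hfc.comp
        (by fun_prop)).aestronglyMeasurable) (Eventually.of_forall fun z => ?_)
    have := near_dom (f := fun y => ‖fderiv ℝ f y‖) hk0
      (hB x (Metric.mem_ball_self one_pos)) z
    rw [abs_mul, abs_norm] at this
    rwa [norm_smul, Real.norm_eq_abs]
  rw [ContinuousLinearMap.integral_apply hI]
  congr 1

lemma near_contDiff {k : Euc n → ℝ} (hk : Integrable k) (hk0 : ∀ z, 2 < ‖z‖ → k z = 0) (m : ℕ) :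
    ∀ {f : Euc n → ℝ}, ContDiff ℝ m f → ContDiff ℝ m fun x => ∫ z, k z * f (x - z) := by
  induction m with
  | zero => exact fun hf => contDiff_zero.2 (near_continuous hk hk0 hf.continuous)
  | succ m ih =>
    intro f hf
    push_cast at hf ⊢
    have hf1 : ContDiff ℝ 1 f := hf.of_le (by norm_cast; omega)
    refine contDiff_succ_of_pd (fun x => (near_hasFDerivAt hk hk0 hf1 x).differentiableAt)
      fun i => ?_
    rw [near_pd hk hk0 hf1 i]
    exact ih (hf.pdD le_rfl i)

end Kernels

/-! ### Differentiation of potentials -/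

section Splitting

variable {n : ℕ} {d : ℝ} {K f : Euc n → ℝ}

/-- The part of a kernel near its singularity. -/
def kn (K : Euc n → ℝ) (z : Euc n) : ℝ := cut 1 z * K z

/-- The regularised kernel, cut off at scale `ε` around its singularity. -/
def kf (ε : ℝ) (K : Euc n → ℝ) (z : Euc n) : ℝ := (1 - cut ε z) * K z

lemma cut_continuous (R : ℝ) : Continuous (cut R : Euc n → ℝ) := (cut_contDiff R).continuous

lemma cut_differentiable (R : ℝ) : Differentiable ℝ (cut R : Euc n → ℝ) :=
  (cut_contDiff R).differentiable (by norm_num)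

lemma cut_eventually_one {R : ℝ} {z : Euc n} (h : ‖z‖ < R) : cut R =ᶠ[𝓝 z] fun _ => (1 : ℝ) := by
  have hR : 0 < R := (norm_nonneg z).trans_lt h
  filter_upwards [(isOpen_lt continuous_norm continuous_const).mem_nhds h] with y hy
    using cut_eq_one hR (le_of_lt hy)

lemma cut_eventually_zero {R : ℝ} (hR : 0 < R) {z : Euc n} (h : 2 * R < ‖z‖) :
    cut R =ᶠ[𝓝 z] fun _ => (0 : ℝ) := by
  filter_upwards [(isOpen_lt continuous_const continuous_norm).mem_nhds h] with y hy
    using cut_eq_zero hR (le_of_lt hy)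

lemma kn_zero (z : Euc n) (hz : 2 < ‖z‖) : kn K z = 0 := by
  rw [kn, cut_eq_zero one_pos (by linarith), zero_mul]

lemma loc_int_mul {g : Euc n → ℝ} (hK : LocallyIntegrable K) (hg : Continuous g)
    (hc : HasCompactSupport g) : Integrable fun z => K z * g z := by
  have := hK.integrable_smul_left_of_hasCompactSupport hg hc
  simpa only [smul_eq_mul, mul_comm] using this

lemma kn_integrable (hn : 0 < n) (hK : Hom d K) (hd : -(n : ℝ) < d) : Integrable (kn K) := by
  have := loc_int_mul (hK.locallyIntegrable hn hd) (cut_continuous 1) (cut_hasCompactSupport one_pos)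
  exact this.congr (Eventually.of_forall fun z => mul_comm _ _)

lemma kf_contDiff {ε : ℝ} (hε : 0 < ε) (hK : Hom d K) : ContDiff ℝ (⊤ : ℕ∞) (kf ε K) := by
  rw [contDiff_iff_contDiffAt]
  intro z
  by_cases hz : z = 0
  · have h1 : kf ε K =ᶠ[𝓝 z] fun _ => 0 := by
      filter_upwards [cut_eventually_one (R := ε) (z := z) (by simpa [hz] using hε)] with y hy
      simp [kf, hy]
    exact contDiffAt_const.congr_of_eventuallyEq h1
  · exact ((contDiff_const.sub (cut_contDiff ε)).contDiffAt).mul (hK.contDiffAt hz)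

lemma kf_far (hK : Hom d K) (hd : d ≤ 2 - n) : Far (kf 1 K) :=
  ⟨kf_contDiff one_pos hK, d, hd, K, hK, fun z hz => by
    rw [kf, cut_eq_zero one_pos (by linarith)]; simp⟩

lemma Hom.integrable_mul (hn : 3 ≤ n) (hK : Hom d K) (hd0 : -(n : ℝ) < d) (hd : d ≤ 2 - n)
    (hf : Continuous f) (hw : WI f) (x : Euc n) :
    (Integrable fun z => kn K z * f (x - z)) ∧ (Integrable fun z => kf 1 K z * f (x - z)) := by
  refine ⟨near_integrable (kn_integrable (by omega) hK hd0) kn_zero hf x, ?_⟩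
  have := ((kf_far hK hd).integrable hn hw x).comp_sub_left x
  simpa using this

lemma kn_add_kf (z : Euc n) : kn K z + kf 1 K z = K z := by simp only [kn, kf]; ring

lemma Hom.integrable (hn : 3 ≤ n) (hK : Hom d K) (hd0 : -(n : ℝ) < d) (hd : d ≤ 2 - n)
    (hf : Continuous f) (hw : WI f) (x : Euc n) : Integrable fun z => K z * f (x - z) := by
  have := (hK.integrable_mul hn hd0 hd hf hw x).1.add (hK.integrable_mul hn hd0 hd hf hw x).2
  refine this.congr (Eventually.of_forall fun z => ?_)
  simp only [Pi.add_apply]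
  rw [← add_mul, kn_add_kf]

lemma Hom.cv_split (hn : 3 ≤ n) (hK : Hom d K) (hd0 : -(n : ℝ) < d) (hd : d ≤ 2 - n)
    (hf : Continuous f) (hw : WI f) :
    cv K f = fun x => (∫ z, kn K z * f (x - z)) + cv (kf 1 K) f x := by
  funext x
  rw [cv_eq, cv_eq, ← integral_add (hK.integrable_mul hn hd0 hd hf hw x).1
    (hK.integrable_mul hn hd0 hd hf hw x).2]
  congr 1
  funext z
  rw [← add_mul, kn_add_kf]

lemma Hom.contDiff_cv (hn : 3 ≤ n) (hK : Hom d K) (hd0 : -(n : ℝ) < d) (hd : d ≤ 2 - n)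
    (hw : WI f) {m : ℕ} (hf : ContDiff ℝ m f) : ContDiff ℝ m (cv K f) := by
  rw [hK.cv_split hn hd0 hd hf.continuous hw]
  exact (near_contDiff (kn_integrable (by omega) hK hd0) kn_zero m hf).add
    ((kf_far hK hd).contDiff_cv hn hw m)

lemma abs_pd_cut_le (n : ℕ) : ∃ C : ℝ, 0 < C ∧ ∀ ε : ℝ, 0 < ε → ∀ k (z : Euc n), z ≠ 0 →
    |pd k (cut ε) z| ≤ C * ‖z‖⁻¹ := by
  obtain ⟨C, hC, h⟩ := cut_bounds n
  refine ⟨2 * C, by positivity, fun ε hε k z hz => ?_⟩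
  have hz' := norm_pos_iff.2 hz
  rcases lt_or_ge (2 * ε) ‖z‖ with hlt | hge
  · rw [pd_congr k (cut_eventually_zero hε hlt), pd_const, abs_zero]; positivity
  · refine ((h ε hε).1 k z).trans ?_
    rw [mul_comm 2 C, mul_assoc]
    gcongr
    rw [← div_eq_mul_inv, inv_le_iff_one_le_mul₀ hε, mul_comm, ← mul_div_assoc, one_le_div hz']
    linarith

lemma pd_kf {ε : ℝ} (hK : Hom d K) (i : Fin n) {z : Euc n} (hz : z ≠ 0) :
    pd i (kf ε K) z = (1 - cut ε z) * pd i K z - pd i (cut ε) z * K z := by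
  have h1 : DifferentiableAt ℝ (fun z : Euc n => 1 - cut ε z) z :=
    (differentiableAt_const 1).sub (cut_differentiable ε z)
  have h2 : pd i (kf ε K) z = pd i (fun z => (1 - cut ε z) * K z) z := rfl
  rw [h2, pd_mul i h1 (hK.differentiableAt hz), pd_sub i (differentiableAt_const 1)
    (cut_differentiable ε z), pd_const]
  ring

/-- Integration by parts against a homogeneous kernel whose derivative is locally integrable:
no boundary term appears at the singularity. -/
lemma Hom.ibp (hn : 0 < n) (hK : Hom d K) (hd : 1 - (n : ℝ) < d) {v : Euc n → ℝ}
    (hv : ContDiff ℝ 1 v) (hc : HasCompactSupport v) (i : Fin n) :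
    ∫ z, _root_.pd i K z * v z = - ∫ z, K z * _root_.pd i v z := by
  obtain ⟨C, hC, hcut⟩ := abs_pd_cut_le n
  obtain ⟨A, hA, hKb⟩ := hK.bound
  obtain ⟨B, hB, hKb'⟩ := (hK.pd i).bound
  have hpos : ∀ k : ℕ, (0 : ℝ) < 1 / ((k : ℝ) + 1) := fun k => by positivity
  have hlim0 := tendsto_one_div_add_atTop_nhds_zero_nat (𝕜 := ℝ)
  have heq : ∀ k : ℕ, ∫ z, _root_.pd i (kf (1 / ((k : ℝ) + 1)) K) z * v z =
      - ∫ z, kf (1 / ((k : ℝ) + 1)) K z * _root_.pd i v z := fun k =>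
    integral_pd_mul ((kf_contDiff (hpos k) hK).of_le (by norm_cast)) hv hc i
  have hev : ∀ z : Euc n, z ≠ 0 → ∀ᶠ k : ℕ in atTop,
      cut (1 / ((k : ℝ) + 1)) =ᶠ[𝓝 z] fun _ => (0 : ℝ) := by
    intro z hz
    have hz' : 0 < ‖z‖ / 2 := by have := norm_pos_iff.2 hz; positivity
    filter_upwards [hlim0.eventually (gt_mem_nhds hz')] with k hk
    exact cut_eventually_zero (hpos k) (by linarith)
  have hpi := pd_continuous hv i
  have L1 : Tendsto (fun k : ℕ => ∫ z, _root_.pd i (kf (1 / ((k : ℝ) + 1)) K) z * v z) atTop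
      (𝓝 (∫ z, _root_.pd i K z * v z)) := by
    have hintg : Integrable fun z : Euc n => ‖z‖ ^ (d - 1) * v z :=
      loc_int_mul ((Hom_norm (d - 1)).locallyIntegrable hn (by linarith)) hv.continuous hc
    refine tendsto_integral_of_dominated_convergence
      (fun z => (B + C * A) * |‖z‖ ^ (d - 1) * v z|) (fun k => ?_) (hintg.abs.const_mul _)
      (fun k => ?_) ?_
    · exact ((pd_continuous ((kf_contDiff (hpos k) hK).of_le (by norm_cast)) i).mul
        hv.continuous).aestronglyMeasurable
    · filter_upwards [ae_ne_zero hn] with z hz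
      have hz' := norm_pos_iff.2 hz
      rw [norm_mul, Real.norm_eq_abs, Real.norm_eq_abs, abs_mul, ← mul_assoc,
        abs_of_nonneg (by positivity : (0:ℝ) ≤ ‖z‖ ^ (d - 1)), pd_kf hK i hz]
      gcongr
      refine (abs_sub _ _).trans ?_
      rw [add_mul, abs_mul, abs_mul]
      have h1 : |1 - cut (1 / ((k : ℝ) + 1)) z| ≤ 1 := by
        rw [abs_le]; constructor <;> linarith [cut_nonneg (1 / ((k : ℝ) + 1)) z, cut_le_one (1 / ((k : ℝ) + 1)) z]
      have h2 := hKb' z hz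
      have h3 := hKb z hz
      have h4 := hcut _ (hpos k) i z hz
      refine add_le_add ((mul_le_of_le_one_left (abs_nonneg _) h1).trans h2) ?_
      calc _ ≤ (C * ‖z‖⁻¹) * (A * ‖z‖ ^ d) := by gcongr
        _ = _ := by rw [Real.rpow_sub_one hz'.ne']; field_simp
    · filter_upwards [ae_ne_zero hn] with z hz
      refine tendsto_const_nhds.congr' ?_
      filter_upwards [hev z hz] with k hk
      rw [pd_kf hK i hz, pd_congr i hk, hk.self_of_nhds, pd_const]; ring
  have L2 : Tendsto (fun k : ℕ => ∫ z, kf (1 / ((k : ℝ) + 1)) K z * _root_.pd i v z) atTop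
      (𝓝 (∫ z, K z * _root_.pd i v z)) := by
    have hintg : Integrable fun z : Euc n => K z * _root_.pd i v z :=
      loc_int_mul (hK.locallyIntegrable hn (by linarith)) hpi (hc.pdD i)
    refine tendsto_integral_of_dominated_convergence
      (fun z => |K z * _root_.pd i v z|) (fun k => ?_) hintg.abs
      (fun k => Eventually.of_forall fun z => ?_) ?_
    · exact ((kf_contDiff (hpos k) hK).continuous.mul hpi).aestronglyMeasurable
    · have h1 : |1 - cut (1 / ((k : ℝ) + 1)) z| ≤ 1 := by
        rw [abs_le]; constructor <;> linarith [cut_nonneg (1 / ((k : ℝ) + 1)) z, cut_le_one (1 / ((k : ℝ) + 1)) z]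
      rw [kf, mul_assoc, norm_mul, Real.norm_eq_abs, Real.norm_eq_abs]
      exact mul_le_of_le_one_left (abs_nonneg _) h1
    · filter_upwards [ae_ne_zero hn] with z hz
      refine tendsto_const_nhds.congr' ?_
      filter_upwards [hev z hz] with k hk
      rw [kf, hk.self_of_nhds]; ring
  simp_rw [heq] at L1
  exact tendsto_nhds_unique L1 L2.neg

lemma pd_reflect (i : Fin n) (hf : Differentiable ℝ f) (x : Euc n) :
    pd i (fun z => f (x - z)) = fun z => - pd i f (x - z) := by
  funext z
  have h := (hf (x - z)).hasFDerivAt.comp z ((hasFDerivAt_id z).const_sub x)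
  have h' : HasFDerivAt (fun z => f (x - z)) _ z := h
  rw [pd_eq_of_hasFDerivAt i h']
  simp [pd, eb]

lemma reflect_contDiff {m : WithTop ℕ∞} (hf : ContDiff ℝ m f) (x : Euc n) :
    ContDiff ℝ m fun z => f (x - z) := hf.comp (contDiff_const.sub contDiff_id)

/-- Differentiation of a potential falls on the kernel. -/
lemma Hom.pd_cv (hn : 3 ≤ n) (hK : Hom d K) (hd0 : 1 - (n : ℝ) < d) (hd : d ≤ 2 - n)
    (hw : WI f) (hf : ContDiff ℝ 1 f) (i : Fin n) :
    _root_.pd i (cv K f) = cv (_root_.pd i K) f := by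
  have hn0 : 0 < n := by omega
  have hN := kn_integrable hn0 hK (by linarith)
  have hFar := kf_far hK hd
  have hfd : Differentiable ℝ f := hf.differentiable (by norm_num)
  funext x
  rw [hK.cv_split hn (by linarith) hd hf.continuous hw,
    pd_add i (near_hasFDerivAt hN kn_zero hf x).differentiableAt
      (hFar.hasFDerivAt hn hw x).differentiableAt, near_pd hN kn_zero hf i, hFar.pd_cv hn hw i,
    (hK.pd i).cv_split hn (by linarith) (by linarith) hf.continuous hw]
  beta_reduce
  rw [cv_eq, cv_eq]
  have hv1 : ContDiff ℝ 1 fun z => cut 1 z * f (x - z) :=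
    ((cut_contDiff 1).of_le (by norm_cast)).mul (reflect_contDiff hf x)
  have hvc : HasCompactSupport fun z => cut 1 z * f (x - z) :=
    (cut_hasCompactSupport one_pos).mul_right
  have h1 := hK.ibp hn0 hd0 hv1 hvc i
  have h2 : ∀ z, _root_.pd i (fun z => cut 1 z * f (x - z)) z
      = _root_.pd i (cut 1) z * f (x - z) - cut 1 z * _root_.pd i f (x - z) := by
    intro z
    rw [pd_mul i (cut_differentiable 1 z) ((reflect_contDiff hf x).differentiable (by norm_num) z),
      pd_reflect i hfd]
    ring
  have i1 : Integrable fun z => kn K z * _root_.pd i f (x - z) :=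
    near_integrable hN kn_zero (pd_continuous hf i) x
  have i2 : Integrable fun z => K z * (_root_.pd i (cut 1) z * f (x - z)) :=
    loc_int_mul (hK.locallyIntegrable hn0 (by linarith))
      ((pd_continuous ((cut_contDiff 1).of_le (by norm_cast)) i).mul
        (hf.continuous.comp (by fun_prop))) (((cut_hasCompactSupport one_pos).pdD i).mul_right)
  have i3 := ((hK.pd i).integrable_mul hn (by linarith) (by linarith) hf.continuous hw x).2
  have e1 : ∫ z, kn (_root_.pd i K) z * f (x - z) =
      (∫ z, kn K z * _root_.pd i f (x - z)) - ∫ z, K z * (_root_.pd i (cut 1) z * f (x - z)) := by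
    have e0 : ∫ z, kn (_root_.pd i K) z * f (x - z)
      = ∫ z, _root_.pd i K z * (cut 1 z * f (x - z)) := by
      congr 1; funext z; rw [kn]; ring
    rw [e0, h1, ← integral_sub i1 i2, ← integral_neg]
    congr 1; funext z; rw [h2, kn]; ring
  have e2 : ∫ z, _root_.pd i (kf 1 K) z * f (x - z) =
      (∫ z, kf 1 (_root_.pd i K) z * f (x - z))
        - ∫ z, K z * (_root_.pd i (cut 1) z * f (x - z)) := by
    rw [← integral_sub i3 i2]
    refine integral_congr_ae ?_
    filter_upwards [ae_ne_zero hn0] with z hz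
    rw [pd_kf hK i hz, kf]; ring
  rw [e1, e2]; ring

lemma Hom.differentiable_cv (hn : 3 ≤ n) (hK : Hom d K) (hd0 : -(n : ℝ) < d) (hd : d ≤ 2 - n)
    (hw : WI f) (hf : ContDiff ℝ 1 f) : Differentiable ℝ (cv K f) :=
  (hK.contDiff_cv hn hd0 hd hw (m := 1) (by exact_mod_cast hf)).differentiable (by norm_num)

/-- Second derivatives of a potential at `x` are the limits of the pairings of the kernel with the
second derivatives of truncations of `z ↦ f (x - z)`. This reduces identities between potentials
to distributional identities for the kernels. -/
lemma Hom.tendsto_pd_pd (hn : 3 ≤ n) (hK : Hom d K) (hd0 : -(n : ℝ) < d) (hd : d ≤ 2 - n)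
    (hw : WI f) (hf : ContDiff ℝ 2 f) (i j : Fin n) (x : Euc n) :
    Tendsto (fun R : ℕ => ∫ z, K z * _root_.pd i (_root_.pd j fun z => cut ((R : ℝ) + 1) z *
      f (x - z)) z) atTop (𝓝 (_root_.pd i (_root_.pd j (cv K f)) x)) := by
  have hn0 : 0 < n := by omega
  have hN := kn_integrable hn0 hK hd0
  have hFar := kf_far hK hd
  have hf1 : ContDiff ℝ 1 f := hf.of_le (by norm_num)
  have hfj : ContDiff ℝ 1 (_root_.pd j f) := hf.pdD (by norm_num) j
  have hfd : Differentiable ℝ f := hf1.differentiable (by norm_num)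
  set v : Euc n → ℝ := fun z => f (x - z) with hv
  have hv2 : ContDiff ℝ 2 v := reflect_contDiff hf x
  have hvR : ∀ R : ℝ, ContDiff ℝ 2 fun z => cut R z * v z := fun R =>
    ((cut_contDiff R).of_le (by norm_cast)).mul hv2
  have hvc : ∀ R : ℝ, 0 < R → HasCompactSupport fun z => cut R z * v z := fun R hR =>
    (cut_hasCompactSupport hR).mul_right
  have hS : ContDiff ℝ 2 (kf 1 K) := hFar.1.of_le (by norm_cast)
  have hpdv : _root_.pd i (_root_.pd j v) = fun z => _root_.pd i (_root_.pd j f) (x - z) := by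
    rw [hv, pd_reflect j hfd]
    funext z
    rw [pd_neg, pd_reflect i (hfj.differentiable (by norm_num))]
    simp
  have htarget : _root_.pd i (_root_.pd j (cv K f)) x =
      (∫ z, kn K z * _root_.pd i (_root_.pd j v) z)
        + ∫ z, _root_.pd j (_root_.pd i (kf 1 K)) z * v z := by
    have e1 : _root_.pd j (cv K f) = fun x => (∫ z, kn K z * _root_.pd j f (x - z))
        + cv (_root_.pd j (kf 1 K)) f x := by
      funext y
      rw [hK.cv_split hn hd0 hd hf.continuous hw,
        pd_add j (near_hasFDerivAt hN kn_zero hf1 y).differentiableAt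
        (hFar.hasFDerivAt hn hw y).differentiableAt, near_pd hN kn_zero hf1 j, hFar.pd_cv hn hw j]
    rw [e1, pd_add i (near_hasFDerivAt hN kn_zero hfj x).differentiableAt
        ((hFar.pd j).hasFDerivAt hn hw x).differentiableAt, near_pd hN kn_zero hfj i,
        (hFar.pd j).pd_cv hn hw i, cv_eq, hpdv]
    congr 1
    refine integral_congr_ae (Eventually.of_forall fun z => ?_)
    simp only
    rw [pd_comm i j hS.contDiffAt]
  have hRHS : ∀ᶠ R : ℕ in atTop, (∫ z, K z * _root_.pd i (_root_.pd j fun z =>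
      cut ((R : ℝ) + 1) z * v z) z) = (∫ z, kn K z * _root_.pd i (_root_.pd j v) z)
        + ∫ z, _root_.pd j (_root_.pd i (kf 1 K)) z * (cut ((R : ℝ) + 1) z * v z) := by
    filter_upwards [eventually_ge_atTop 2] with R hR
    have hR' : (2 : ℝ) ≤ R := by exact_mod_cast hR
    have hRp : (0 : ℝ) < (R : ℝ) + 1 := by positivity
    set w : Euc n → ℝ := fun z => cut ((R : ℝ) + 1) z * v z with hw
    have hw2 : ContDiff ℝ 2 w := hvR _
    have hwc : HasCompactSupport w := hvc _ hRp
    have hw1 : ContDiff ℝ 1 w := hw2.of_le (by norm_num)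
    have hwj : ContDiff ℝ 1 (_root_.pd j w) := hw2.pdD (by norm_num) j
    have hS1 : ContDiff ℝ 1 (kf 1 K) := hS.of_le (by norm_num)
    have hSi : ContDiff ℝ 1 (_root_.pd i (kf 1 K)) := hS.pdD (by norm_num) i
    have q1 := integral_pd_mul hS1 hwj (hwc.pdD j) i
    have q2 := integral_pd_mul hSi hw1 hwc j
    have hcw : Continuous (_root_.pd i (_root_.pd j w)) := pd_continuous hwj i
    have hcs : HasCompactSupport (_root_.pd i (_root_.pd j w)) := (hwc.pdD j).pdD i
    have j1 : Integrable fun z => kf 1 K z * _root_.pd i (_root_.pd j w) z :=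
      loc_int_mul hFar.1.continuous.locallyIntegrable hcw hcs
    have j2 : Integrable fun z => kn K z * _root_.pd i (_root_.pd j w) z :=
      loc_int_mul hN.locallyIntegrable hcw hcs
    have e3 : ∫ z, K z * _root_.pd i (_root_.pd j w) z =
        (∫ z, kn K z * _root_.pd i (_root_.pd j w) z)
          + ∫ z, kf 1 K z * _root_.pd i (_root_.pd j w) z := by
      rw [← integral_add j2 j1]
      congr 1; funext z; rw [← add_mul, kn_add_kf]
    rw [e3]
    congr 1
    · congr 1
      funext z
      rcases le_or_gt ‖z‖ 2 with hz | hz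
      · have : w =ᶠ[𝓝 z] v := by
          filter_upwards [cut_eventually_one (R := (R : ℝ) + 1) (z := z) (by linarith)] with y hy
          simp [hw, hy]
        rw [pd_congr i (pd_congr_nhds j this)]
      · rw [kn_zero z hz, zero_mul, zero_mul]
    · linarith
  rw [htarget]
  refine Tendsto.congr' (EventuallyEq.symm hRHS) (tendsto_const_nhds.add ?_)
  have hintg : Integrable fun z => _root_.pd j (_root_.pd i (kf 1 K)) z * v z := by
    have := (((hFar.pd i).pd j).integrable hn hw x).comp_sub_left x
    simpa using this
  refine tendsto_integral_of_dominated_convergence _ (fun R => ?_) hintg.abs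
    (fun R => Eventually.of_forall fun z => ?_) (Eventually.of_forall fun z => ?_)
  · exact ((pd_continuous (hS.pdD (by norm_num) i) j).mul
      ((cut_continuous _).mul hv2.continuous)).aestronglyMeasurable
  · rw [Real.norm_eq_abs, mul_left_comm, abs_mul, abs_of_nonneg (cut_nonneg _ _)]
    exact mul_le_of_le_one_left (abs_nonneg _) (cut_le_one _ _)
  · refine tendsto_const_nhds.congr' ?_
    filter_upwards [(tendsto_natCast_atTop_atTop (R := ℝ)).eventually_ge_atTop ‖z‖] with R hR
    rw [cut_eq_one (by have := norm_nonneg z; linarith) (by linarith), one_mul]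

end Splitting

/-! ### The fundamental solution of the Laplacian and of the vector Laplacian -/

section Fundamental

variable {n : ℕ}

lemma lap_jap (x : Euc n) : lap (fun x : Euc n => jap x ^ (2 - (n : ℝ))) x
    = -((n : ℝ) * (n - 2) * jap x ^ (-(n : ℝ) - 2)) := by
  have h1 : ∀ k : Fin n, pd k (pd k fun x : Euc n => jap x ^ (2 - (n : ℝ))) x
      = (2 - n) * jap x ^ (-(n : ℝ)) + (2 - n) * (-n) * jap x ^ (-(n : ℝ) - 2) * (x k) ^ 2 := by
    intro k
    rw [pd_jap_rpow]
    have hd : Differentiable ℝ fun x : Euc n => jap x ^ (2 - (n : ℝ) - 2) :=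
      (jap_rpow_contDiff _).differentiable (n := (⊤ : ℕ∞)) (by norm_num)
    have hc : Differentiable ℝ fun x : Euc n => x k := by fun_prop
    rw [pd_const_mul k _ ((hc x).fun_mul (hd x)), pd_mul k (hc x) (hd x), pd_coord, pd_jap_rpow]
    simp only [if_true]
    rw [show (2 - (n : ℝ) - 2) = -(n : ℝ) by ring]
    ring
  unfold lap
  simp_rw [h1]
  rw [Finset.sum_add_distrib, ← Finset.mul_sum, ← Finset.mul_sum]
  have h2 : ∑ k, (x k) ^ 2 = jap x ^ 2 - 1 := by
    rw [jap_sq, EuclideanSpace.norm_sq_eq]; simp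
  have h3 : jap x ^ (-(n : ℝ)) = jap x ^ (-(n : ℝ) - 2) * jap x ^ 2 := by
    rw [← Real.rpow_natCast, ← Real.rpow_add (jap_pos x)]; norm_num
  rw [h2, h3]
  simp
  ring

/-- The normalising constant of the fundamental solution. -/
def gamInv (n : ℕ) : ℝ := ∫ x : Euc n, lap (fun x : Euc n => jap x ^ (2 - (n : ℝ))) x

lemma lap_jap_integrable : Integrable (lap fun x : Euc n => jap x ^ (2 - (n : ℝ))) := by
  have h : (lap fun x : Euc n => jap x ^ (2 - (n : ℝ))) = fun x : Euc n =>
      -((n : ℝ) * (n - 2)) * jap x ^ (-((n : ℝ) + 2)) := by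
    funext x; rw [lap_jap, neg_add']; ring
  rw [h]
  exact (jap_integrable (by linarith)).const_mul _

lemma gamInv_ne (hn : 3 ≤ n) : gamInv n ≠ 0 := by
  have hn' : (3 : ℝ) ≤ n := by exact_mod_cast hn
  have h : gamInv n = -((n : ℝ) * (n - 2)) * ∫ x : Euc n, jap x ^ (-((n : ℝ) + 2)) := by
    rw [gamInv, ← integral_const_mul]
    congr 1; funext x; rw [lap_jap, neg_add']; ring
  have hpos : 0 < ∫ x : Euc n, jap x ^ (-((n : ℝ) + 2)) := by
    have hc : Continuous fun x : Euc n => jap x ^ (-((n : ℝ) + 2)) := jap_rpow_continuous _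
    exact integral_pos_of_integrable_nonneg_nonzero (x := 0) hc (jap_integrable (by linarith))
      (fun x => (jap_rpow_pos x _).le) (jap_rpow_pos 0 _).ne'
  rw [h]
  have : 0 < (n : ℝ) * (n - 2) := by nlinarith
  nlinarith [mul_pos this hpos]

/-- The fundamental solution `Γ = c‖z‖^{2-n}` of the Laplacian. -/
def gam (n : ℕ) (z : Euc n) : ℝ := (gamInv n)⁻¹ * ‖z‖ ^ (2 - (n : ℝ))

lemma gam_hom : Hom (2 - (n : ℝ)) (gam n) := (Hom_norm _).const_mul _

/-- `ΔΓ = δ₀` in the sense of distributions. -/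
lemma gam_lap (hn : 3 ≤ n) {v : Euc n → ℝ} (hv : ContDiff ℝ (⊤ : ℕ∞) v)
    (hc : HasCompactSupport v) : ∫ z, gam n z * lap v z = v 0 := by
  have hn0 : 0 < n := by omega
  have hn' : (3 : ℝ) ≤ n := by exact_mod_cast hn
  set w : Euc n → ℝ := fun x => jap x ^ (2 - (n : ℝ)) with hw
  have hw2 : ContDiff ℝ 2 w := (jap_rpow_contDiff _).of_le (by norm_cast)
  have hv2 : ContDiff ℝ 2 v := hv.of_le (by norm_cast)
  have hlv : Continuous (lap v) := lap_cont hv2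
  have hlc : HasCompactSupport (lap v) := hc.lapD
  have e : ∀ ε : ℝ, 0 < ε → ∫ z, lap w z * v (ε • z)
      = ∫ y, (ε * jap (ε⁻¹ • y)) ^ (2 - (n : ℝ)) * lap v y := by
    intro ε hε
    have hvε : ContDiff ℝ 2 fun z => v (ε • z) := hv2.comp (contDiff_const_smul ε)
    have hcε : HasCompactSupport fun z => v (ε • z) :=
      hc.comp_homeomorph (Homeomorph.smulOfNeZero ε hε.ne')
    rw [integral_lap_mul hw2 hvε hcε]
    have hl : ∀ z, lap (fun z => v (ε • z)) z = ε ^ 2 * lap v (ε • z) := by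
      intro z
      unfold lap
      rw [Finset.mul_sum]
      refine Finset.sum_congr rfl fun k _ => ?_
      have : pd k (fun z => v (ε • z)) = fun z => ε * pd k v (ε • z) := by
        funext z; exact pd_scale k ε (hv.differentiable (by norm_num) _)
      have hk : Differentiable ℝ (pd k v) := (hv2.pdD (k := 1) (by norm_num) k).differentiable
        (by norm_num)
      have hkz : DifferentiableAt ℝ (fun z => pd k v (ε • z)) z :=
        (hk _).comp z ((differentiable_id.const_smul ε) z)
      rw [this, pd_const_mul k ε hkz, pd_scale k ε (hk _)]
      ring
    have := Measure.integral_comp_smul (volume : Measure (Euc n))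
      (fun y => w (ε⁻¹ • y) * (ε ^ 2 * lap v y)) ε
    simp only [smul_smul, inv_mul_cancel₀ hε.ne', one_smul] at this
    simp_rw [hl]
    rw [this, smul_eq_mul, ← integral_const_mul]
    congr 1; funext y
    have h3 : |(ε ^ Module.finrank ℝ (Euc n))⁻¹| * ε ^ 2 = ε ^ (2 - (n : ℝ)) := by
      rw [finrank_euclideanSpace_fin, abs_of_pos (by positivity), Real.rpow_sub hε,
        Real.rpow_natCast, Real.rpow_ofNat]
      field_simp
    rw [Real.mul_rpow hε.le (jap_pos _).le, ← h3]
    ring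
  have hjn : ∀ ε : ℝ, 0 < ε → ∀ y : Euc n, ε * jap (ε⁻¹ • y) = Real.sqrt (ε ^ 2 + ‖y‖ ^ 2) := by
    intro ε hε y
    rw [jap, ← Real.sqrt_sq hε.le, ← Real.sqrt_mul (sq_nonneg _), Real.sqrt_sq hε.le, norm_smul,
      Real.norm_of_nonneg (by positivity)]
    congr 1; field_simp
  have hε : ∀ k : ℕ, (0 : ℝ) < 1 / ((k : ℝ) + 1) := fun k => by positivity
  have t0 : Tendsto (fun k : ℕ => 1 / ((k : ℝ) + 1)) atTop (𝓝 0) :=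
    tendsto_one_div_add_atTop_nhds_zero_nat
  obtain ⟨B, -, hB⟩ := bdd_of_cc hv.continuous hc
  have L1 : Tendsto (fun k : ℕ => ∫ z, lap w z * v ((1 / ((k : ℝ) + 1)) • z)) atTop
      (𝓝 (∫ z, lap w z * v 0)) := by
    refine tendsto_integral_of_dominated_convergence (fun z => |lap w z| * B) (fun k => ?_)
      (lap_jap_integrable.abs.mul_const B) (fun k => Eventually.of_forall fun z => ?_)
      (Eventually.of_forall fun z => ?_)
    · exact ((lap_cont hw2).mul (hv.continuous.comp (by fun_prop))).aestronglyMeasurable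
    · rw [norm_mul]; exact mul_le_mul_of_nonneg_left (hB _) (abs_nonneg _)
    · refine tendsto_const_nhds.mul ?_
      have : Tendsto (fun k : ℕ => (1 / ((k : ℝ) + 1)) • z) atTop (𝓝 ((0 : ℝ) • z)) :=
        t0.smul_const z
      rw [zero_smul] at this
      exact (hv.continuous.tendsto 0).comp this
  have L2 : Tendsto (fun k : ℕ => ∫ z, lap w z * v ((1 / ((k : ℝ) + 1)) • z)) atTop
      (𝓝 (∫ y, ‖y‖ ^ (2 - (n : ℝ)) * lap v y)) := by
    simp_rw [fun k : ℕ => e _ (hε k)]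
    refine tendsto_integral_of_dominated_convergence (fun y => |‖y‖ ^ (2 - (n : ℝ)) * lap v y|)
      (fun k => ?_) ?_ (fun k => ?_) ?_
    · refine Measurable.aestronglyMeasurable ?_
      simp_rw [hjn _ (hε k)]
      exact Measurable.mul (by fun_prop) hlv.measurable
    · exact (loc_int_mul ((Hom_norm _).locallyIntegrable hn0 (by linarith)) hlv hlc).abs
    · filter_upwards [ae_ne_zero hn0] with y hy
      have hy' := norm_pos_iff.2 hy
      rw [hjn _ (hε k), norm_mul, abs_mul]
      refine mul_le_mul_of_nonneg_right ?_ (abs_nonneg _)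
      rw [Real.norm_of_nonneg (by positivity), abs_of_nonneg (by positivity)]
      refine Real.rpow_le_rpow_of_nonpos hy' ?_ (by linarith)
      exact Real.le_sqrt_of_sq_le (by nlinarith [sq_nonneg (1 / ((k : ℝ) + 1))])
    · filter_upwards [ae_ne_zero hn0] with y hy
      have hy' := norm_pos_iff.2 hy
      refine Tendsto.mul_const _ ?_
      simp_rw [fun k => hjn _ (hε k) y]
      have h4 : Tendsto (fun k : ℕ => Real.sqrt ((1 / ((k : ℝ) + 1)) ^ 2 + ‖y‖ ^ 2)) atTop
          (𝓝 ‖y‖) := by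
        have := ((t0.pow 2).add_const (‖y‖ ^ 2)).sqrt
        simpa using this
      exact h4.rpow_const (Or.inl hy'.ne')
  have h5 := tendsto_nhds_unique L2 L1
  rw [integral_mul_const] at h5
  have h6 : ∫ z, gam n z * lap v z = (gamInv n)⁻¹ * ∫ y, ‖y‖ ^ (2 - (n : ℝ)) * lap v y := by
    rw [← integral_const_mul]; congr 1; funext z; rw [gam]; ring
  rw [h6, h5, ← mul_assoc]
  change (gamInv n)⁻¹ * gamInv n * v 0 = v 0
  rw [inv_mul_cancel₀ (gamInv_ne hn), one_mul]

/-- The kernels `z_i Γ(z)`. -/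
def gamM (i : Fin n) (z : Euc n) : ℝ := z i * gam n z

lemma gamM_hom (i : Fin n) : Hom (3 - (n : ℝ)) (gamM i) := by
  have := (gam_hom (n := n)).coord_mul i
  rwa [show 2 - (n : ℝ) + 1 = 3 - n by ring] at this

lemma gamM_lap (hn : 3 ≤ n) (i : Fin n) {v : Euc n → ℝ} (hv : ContDiff ℝ (⊤ : ℕ∞) v)
    (hc : HasCompactSupport v) : ∫ z, gamM i z * lap v z = -(2 * ∫ z, gam n z * pd i v z) := by
  have hn0 : 0 < n := by omega
  have hv2 : ContDiff ℝ 2 v := hv.of_le (by norm_cast)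
  have hx : ContDiff ℝ (⊤ : ℕ∞) fun z : Euc n => z i := by fun_prop
  have hx2 : ContDiff ℝ 2 fun z : Euc n => z i := by fun_prop
  have h := gam_lap hn (hx.mul hv) hc.mul_left
  have hl : ∀ z, lap (fun z : Euc n => z i * v z) z = 2 * pd i v z + z i * lap v z := by
    intro z
    rw [lap_mul hx2 hv2]
    have h0 : lap (fun z : Euc n => z i) z = 0 := by
      unfold lap
      refine Finset.sum_eq_zero fun k _ => ?_
      have : pd k (fun z : Euc n => z i) = fun _ => if k = i then 1 else 0 := by
        funext z; rw [pd_coord]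
      rw [this, pd_const]
    rw [h0]
    simp only [pd_coord]
    simp
  have hli := (gam_hom (n := n)).locallyIntegrable hn0 (by linarith)
  have i1 : Integrable fun z => gam n z * (2 * pd i v z) :=
    loc_int_mul hli (continuous_const.mul (pd_continuous (hv.of_le (by norm_cast)) i))
      (hc.pdD i).mul_left
  have i2 : Integrable fun z => gam n z * (z i * lap v z) :=
    loc_int_mul hli (hx.continuous.mul (lap_cont hv2)) hc.lapD.mul_left
  have h' : (∫ z, gam n z * (2 * pd i v z)) + ∫ z, gam n z * (z i * lap v z) = 0 := by
    rw [← integral_add i1 i2]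
    simp only [PiLp.zero_apply, zero_mul] at h
    rw [← h]
    congr 1; funext z; rw [← mul_add, hl]
  have e1 : ∫ z, gam n z * (2 * pd i v z) = 2 * ∫ z, gam n z * pd i v z := by
    rw [← integral_const_mul]; congr 1; funext z; ring
  have e2 : ∫ z, gam n z * (z i * lap v z) = ∫ z, gamM i z * lap v z := by
    congr 1; funext z; rw [gamM]; ring
  linarith

end Fundamental

/-! ### The Poisson and momentum equations -/

section Identities

variable {n : ℕ} {d : ℝ} {K f : Euc n → ℝ}

/-- The truncation of `z ↦ f (x - z)` to a ball of radius about `R`. -/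
def trunc (f : Euc n → ℝ) (x : Euc n) (R : ℕ) (z : Euc n) : ℝ := cut ((R : ℝ) + 1) z * f (x - z)

lemma trunc_contDiff (hf : ContDiff ℝ (⊤ : ℕ∞) f) (x : Euc n) (R : ℕ) :
    ContDiff ℝ (⊤ : ℕ∞) (trunc f x R) := (cut_contDiff _).mul (reflect_contDiff hf x)

lemma trunc_hasCompactSupport (x : Euc n) (R : ℕ) : HasCompactSupport (trunc f x R) :=
  (cut_hasCompactSupport (by positivity)).mul_right

lemma trunc_zero (x : Euc n) (R : ℕ) : trunc f x R 0 = f x := by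
  rw [trunc, cut_eq_one (by positivity) (by simp; positivity)]; simp

lemma Hom.int_mul (hn : 3 ≤ n) (hK : Hom d K) (hd0 : -(n : ℝ) < d) {v : Euc n → ℝ}
    (hv : ContDiff ℝ (⊤ : ℕ∞) v) (hc : HasCompactSupport v) : Integrable fun z => K z * v z :=
  loc_int_mul (hK.locallyIntegrable (by omega) hd0) hv.continuous hc

lemma Hom.tendsto_lap (hn : 3 ≤ n) (hK : Hom d K) (hd0 : -(n : ℝ) < d) (hd : d ≤ 2 - n)
    (hw : WI f) (hf : ContDiff ℝ (⊤ : ℕ∞) f) (x : Euc n) :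
    Tendsto (fun R : ℕ => ∫ z, K z * lap (trunc f x R) z) atTop (𝓝 (lap (cv K f) x)) := by
  have h := tendsto_finsetSum (Finset.univ : Finset (Fin n)) fun k _ =>
    hK.tendsto_pd_pd hn hd0 hd hw (hf.of_le (by norm_cast)) k k x
  refine h.congr fun R => ?_
  rw [← integral_finsetSum]
  · congr 1; funext z; unfold lap; rw [Finset.mul_sum]; rfl
  · intro k _
    exact hK.int_mul hn hd0 ((ContDiff.pd_top ((trunc_contDiff hf x R).pd_top k) k))
      (((trunc_hasCompactSupport x R).pdD k).pdD k)

/-- The Newtonian potential solves the Poisson equation. -/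
lemma lap_cv_gam (hn : 3 ≤ n) (hw : WI f) (hf : ContDiff ℝ (⊤ : ℕ∞) f) (x : Euc n) :
    lap (cv (gam n) f) x = f x := by
  have h := gam_hom.tendsto_lap hn (by linarith) le_rfl hw hf x
  simp_rw [fun R => gam_lap hn (trunc_contDiff hf x R) (trunc_hasCompactSupport x R),
    trunc_zero] at h
  exact tendsto_nhds_unique h tendsto_const_nhds

lemma lap_pd_comm {v : Euc n → ℝ} (hv : ContDiff ℝ (⊤ : ℕ∞) v) (j : Fin n) :
    lap (pd j v) = pd j (lap v) := by
  have h2 : ∀ {g : Euc n → ℝ}, ContDiff ℝ (⊤ : ℕ∞) g → ContDiff ℝ 2 g := fun h =>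
    h.of_le (by norm_cast)
  funext x
  unfold lap
  rw [pd_sum _ j (fun k _ => ((hv.pd_top k).pd_top k).differentiable (by norm_num) x)]
  refine Finset.sum_congr rfl fun k _ => ?_
  have : pd k (pd j v) = pd j (pd k v) := by
    funext y; exact pd_comm k j (h2 hv).contDiffAt
  rw [this, pd_comm k j (h2 (hv.pd_top k)).contDiffAt]

lemma gamM_pair (hn : 3 ≤ n) (i j : Fin n) {v : Euc n → ℝ} (hv : ContDiff ℝ (⊤ : ℕ∞) v)
    (hc : HasCompactSupport v) :
    ∫ z, gamM i z * pd j (lap v) z = -(2 * ∫ z, gam n z * pd j (pd i v) z) := by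
  rw [← lap_pd_comm hv, gamM_lap hn i (hv.pd_top j) (hc.pdD j)]
  have : pd i (pd j v) = pd j (pd i v) := by
    funext y; exact pd_comm i j (hv.of_le (by norm_cast)).contDiffAt
  rw [this]

lemma tendsto_gam_pd_pd (hn : 3 ≤ n) (hw : WI f) (hf : ContDiff ℝ (⊤ : ℕ∞) f) (i j : Fin n)
    (x : Euc n) : Tendsto (fun R : ℕ => 2 * ∫ z, gam n z * pd j (pd i (trunc f x R)) z) atTop
      (𝓝 (2 * pd j (pd i (cv (gam n) f)) x)) :=
  (gam_hom.tendsto_pd_pd hn (by linarith) le_rfl hw (hf.of_le (by norm_cast)) j i x).const_mul 2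

lemma gamMd_hom (i j : Fin n) : Hom (2 - (n : ℝ)) (pd j (gamM i)) := by
  have := (gamM_hom i).pd j
  rwa [show 3 - (n : ℝ) - 1 = 2 - n by ring] at this

lemma lap_cv_gamM (hn : 3 ≤ n) (hw : WI f) (hf : ContDiff ℝ (⊤ : ℕ∞) f) (i j : Fin n)
    (x : Euc n) : lap (cv (pd j (gamM i)) f) x = 2 * pd j (pd i (cv (gam n) f)) x := by
  have h := (gamMd_hom i j).tendsto_lap hn (by linarith) le_rfl hw hf x
  refine tendsto_nhds_unique (h.congr fun R => ?_) (tendsto_gam_pd_pd hn hw hf i j x)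
  have hv := trunc_contDiff hf x R
  have hc := trunc_hasCompactSupport (f := f) x R
  rw [(gamM_hom i).ibp (by omega) (by linarith) ((hv.lap_top).of_le (by norm_cast)) hc.lapD j,
    gamM_pair hn i j hv hc, neg_neg]

lemma div_cv_gamM (hn : 3 ≤ n) (hw : WI f) (hf : ContDiff ℝ (⊤ : ℕ∞) f) (i j : Fin n)
    (x : Euc n) : ∑ l, pd j (pd l (cv (pd l (gamM i)) f)) x
      = 2 * pd j (pd i (cv (gam n) f)) x := by
  have h := tendsto_finsetSum (Finset.univ : Finset (Fin n)) fun l _ =>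
    (gamMd_hom i l).tendsto_pd_pd hn (by linarith) le_rfl hw (hf.of_le (by norm_cast)) j l x
  refine tendsto_nhds_unique (h.congr fun R => ?_) (tendsto_gam_pd_pd hn hw hf i j x)
  have hv := trunc_contDiff hf x R
  have hc := trunc_hasCompactSupport (f := f) x R
  have e : ∀ l, ∫ z, pd l (gamM i) z * pd j (pd l (trunc f x R)) z
      = -∫ z, gamM i z * pd j (pd l (pd l (trunc f x R))) z := by
    intro l
    rw [(gamM_hom i).ibp (by omega) (by linarith)
      (((hv.pd_top l).pd_top j).of_le (by norm_cast)) ((hc.pdD l).pdD j) l]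
    congr 2; funext z
    rw [pd_comm l j ((hv.pd_top l).of_le (by norm_cast)).contDiffAt]
  change ∑ l, ∫ z, pd l (gamM i) z * pd j (pd l (trunc f x R)) z = _
  simp_rw [e]
  rw [Finset.sum_neg_distrib, ← integral_finsetSum _ (fun l _ => (gamM_hom i).int_mul hn
    (by linarith) (((hv.pd_top l).pd_top l).pd_top j) (((hc.pdD l).pdD l).pdD j)),
    ← neg_neg (2 * _), ← gamM_pair hn i j hv hc]
  congr 2; funext z
  unfold lap
  rw [pd_sum _ j (fun k _ => ((hv.pd_top k).pd_top k).differentiable (by norm_num) z),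
    Finset.mul_sum]

/-- The constant `κ = a / (1 + a)` with `a = 1 - 2 / n`. -/
def msκ (n : ℕ) : ℝ := (1 - 2 / (n : ℝ)) / (2 - 2 / (n : ℝ))

/-- The fundamental solution of the operator `W ↦ ΔW + (1 - 2/n) ∇ div W`, that is of `-Δ_L`. -/
def msK (i j : Fin n) (z : Euc n) : ℝ :=
  (if i = j then 1 else 0) * gam n z + (-(msκ n / 2)) * pd j (gamM i) z

lemma msK_hom (i j : Fin n) : Hom (2 - (n : ℝ)) (msK i j) :=
  (gam_hom.const_mul _).add ((gamMd_hom i j).const_mul _)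

lemma cv_msK (hn : 3 ≤ n) (hw : WI f) (hf : ContDiff ℝ (⊤ : ℕ∞) f) (i j : Fin n) :
    cv (msK i j) f = fun x => (if i = j then 1 else 0) * cv (gam n) f x
      + (-(msκ n / 2)) * cv (pd j (gamM i)) f x := by
  funext x
  have i1 := (gam_hom.integrable hn (by linarith) le_rfl hf.continuous hw x).const_mul
    (if i = j then (1 : ℝ) else 0)
  have i2 := ((gamMd_hom i j).integrable hn (by linarith) le_rfl hf.continuous hw x).const_mul
    (-(msκ n / 2))
  rw [cv_eq, cv_eq, cv_eq, ← integral_const_mul, ← integral_const_mul, ← integral_add i1 i2]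
  congr 1; funext z; rw [msK]; ring

lemma Hom.smooth_cv (hn : 3 ≤ n) (hK : Hom (2 - (n : ℝ)) K) (hw : WI f)
    (hf : ContDiff ℝ (⊤ : ℕ∞) f) : ContDiff ℝ (⊤ : ℕ∞) (cv K f) := by
  rw [contDiff_infty]
  exact fun m => hK.contDiff_cv hn (by linarith) le_rfl hw (hf.of_le (by exact_mod_cast le_top))

lemma pd_pd_lin {u v : Euc n → ℝ} (hu : ContDiff ℝ (⊤ : ℕ∞) u) (hv : ContDiff ℝ (⊤ : ℕ∞) v)
    (a b : ℝ) (k l : Fin n) : pd k (pd l fun x => a * u x + b * v x)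
      = fun x => a * pd k (pd l u) x + b * pd k (pd l v) x := by
  have hd : ∀ {g : Euc n → ℝ}, ContDiff ℝ (⊤ : ℕ∞) g → Differentiable ℝ g := fun h =>
    h.differentiable (by norm_num)
  have e : ∀ {u v : Euc n → ℝ}, ContDiff ℝ (⊤ : ℕ∞) u → ContDiff ℝ (⊤ : ℕ∞) v → ∀ l,
      pd l (fun x => a * u x + b * v x) = fun x => a * pd l u x + b * pd l v x := by
    intro u v hu hv l
    funext x
    rw [pd_add l ((hd hu x).const_mul a) ((hd hv x).const_mul b), pd_const_mul l a (hd hu x),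
      pd_const_mul l b (hd hv x)]
  rw [e hu hv, e (hu.pd_top l) (hv.pd_top l)]

lemma lap_cv_msK (hn : 3 ≤ n) (hw : WI f) (hf : ContDiff ℝ (⊤ : ℕ∞) f) (i j : Fin n)
    (x : Euc n) : lap (cv (msK i j) f) x
      = (if i = j then 1 else 0) * f x - msκ n * pd j (pd i (cv (gam n) f)) x := by
  rw [cv_msK hn hw hf]
  have h1 := gam_hom.smooth_cv hn hw hf
  have h2 := (gamMd_hom i j).smooth_cv hn hw hf
  unfold lap
  simp only [pd_pd_lin h1 h2]
  rw [Finset.sum_add_distrib, ← Finset.mul_sum, ← Finset.mul_sum]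
  change _ * lap (cv (gam n) f) x + _ * lap (cv (pd j (gamM i)) f) x = _
  rw [lap_cv_gam hn hw hf, lap_cv_gamM hn hw hf]
  ring

lemma div_cv_msK (hn : 3 ≤ n) (hw : WI f) (hf : ContDiff ℝ (⊤ : ℕ∞) f) (i j : Fin n)
    (x : Euc n) : ∑ l, pd j (pd l (cv (msK i l) f)) x
      = (1 - msκ n) * pd j (pd i (cv (gam n) f)) x := by
  have h1 := gam_hom.smooth_cv hn hw hf
  have h2 := fun l => (gamMd_hom i l).smooth_cv hn hw hf
  simp_rw [cv_msK hn hw hf, pd_pd_lin h1 (h2 _)]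
  rw [Finset.sum_add_distrib, ← Finset.mul_sum, div_cv_gamM hn hw hf]
  simp
  ring

/-- The vector potential of a source `g`. -/
def ms (g : Fin n → Euc n → ℝ) (x : Euc n) : Euc n :=
  (EuclideanSpace.equiv (Fin n) ℝ).symm fun j => ∑ i, cv (msK i j) (g i) x

lemma ms_apply (g : Fin n → Euc n → ℝ) (x : Euc n) (j : Fin n) :
    ms g x j = ∑ i, cv (msK i j) (g i) x := rfl

lemma ms_smooth (hn : 3 ≤ n) {g : Fin n → Euc n → ℝ} (hw : ∀ i, WI (g i))
    (hg : ∀ i, ContDiff ℝ (⊤ : ℕ∞) (g i)) : ContDiff ℝ (⊤ : ℕ∞) (ms g) := by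
  rw [contDiff_euclidean]
  intro j
  simp only [ms_apply]
  exact ContDiff.sum fun i _ => (msK_hom i j).smooth_cv hn (hw i) (hg i)

lemma vecLap_apply {W : Euc n → Euc n} (hW : ∀ j, ContDiff ℝ (⊤ : ℕ∞) fun y => W y j)
    (x : Euc n) (j : Fin n) : vecLap W x j = -(lap (fun y => W y j) x
      + (1 - 2 / (n : ℝ)) * ∑ l, pd j (pd l fun y => W y l) x) := by
  have hd : ∀ {g : Euc n → ℝ}, ContDiff ℝ (⊤ : ℕ∞) g → Differentiable ℝ g := fun h =>
    h.differentiable (by norm_num)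
  have hdv : ContDiff ℝ (⊤ : ℕ∞) (divg W) := ContDiff.sum fun i _ => (hW i).pd_top i
  have e1 : pd j (divg W) x = ∑ l, pd j (pd l fun y => W y l) x :=
    pd_sum _ j fun l _ => hd ((hW l).pd_top l) x
  have e2 : ∀ i, pd i (fun y => confKill W y i j) x = pd i (pd i fun y => W y j) x
      + pd j (pd i fun y => W y i) x
      - (2 / (n : ℝ)) * (if i = j then 1 else 0) * pd i (divg W) x := by
    intro i
    have : (fun y => confKill W y i j) = fun y => (pd i (fun y => W y j) y
      + pd j (fun y => W y i) y) - ((2 / (n : ℝ)) * (if i = j then 1 else 0)) * divg W y := by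
      funext y; simp only [confKill, Matrix.of_apply]; ring
    have h1 := hd ((hW j).pd_top i) x
    have h2 := hd ((hW i).pd_top j) x
    rw [this, pd_sub i (h1.fun_add h2) ((hd hdv x).const_mul _), pd_add i h1 h2,
      pd_const_mul i _ (hd hdv x), pd_comm i j ((hW i).of_le (by norm_cast)).contDiffAt]
  change -∑ i, pd i (fun y => confKill W y i j) x = _
  simp_rw [e2]
  rw [Finset.sum_sub_distrib, Finset.sum_add_distrib]
  simp only [mul_ite, ite_mul, mul_one, mul_zero, zero_mul, Finset.sum_ite_eq',
    Finset.mem_univ, if_true]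
  rw [e1, lap]
  ring

/-- The vector potential solves the momentum constraint. -/
lemma vecLap_ms (hn : 3 ≤ n) {g : Fin n → Euc n → ℝ} (hw : ∀ i, WI (g i))
    (hg : ∀ i, ContDiff ℝ (⊤ : ℕ∞) (g i)) (x : Euc n) (j : Fin n) :
    vecLap (ms g) x j = - g j x := by
  have hn' : (3 : ℝ) ≤ n := by exact_mod_cast hn
  have hs := fun i j => (msK_hom i j).smooth_cv hn (hw i) (hg i)
  have hd : ∀ {g : Euc n → ℝ}, ContDiff ℝ (⊤ : ℕ∞) g → Differentiable ℝ g := fun h =>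
    h.differentiable (by norm_num)
  have e : ∀ k l m, pd k (pd l fun y => ms g y m) x = ∑ i, pd k (pd l (cv (msK i m) (g i))) x := by
    intro k l m
    have : (pd l fun y => ms g y m) = fun y => ∑ i, pd l (cv (msK i m) (g i)) y := by
      funext y; simp only [ms_apply]; exact pd_sum _ l fun i _ => hd (hs i m) y
    rw [this]; exact pd_sum _ k fun i _ => hd ((hs i m).pd_top l) x
  rw [vecLap_apply (contDiff_euclidean.1 (ms_smooth hn hw hg))]
  unfold lap
  simp_rw [e]
  rw [Finset.sum_comm, Finset.sum_comm (s := Finset.univ) (f := fun l i =>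
    pd j (pd l (cv (msK i l) (g i))) x)]
  change -(∑ i, lap (cv (msK i j) (g i)) x + _) = _
  simp_rw [lap_cv_msK hn (hw _) (hg _), div_cv_msK hn (hw _) (hg _)]
  rw [Finset.sum_sub_distrib, ← Finset.mul_sum, ← Finset.mul_sum]
  have hk : (1 - 2 / (n : ℝ)) * (1 - msκ n) = msκ n := by
    rw [msκ]
    have h2 : 2 / (n : ℝ) ≤ 1 := by rw [div_le_one (by linarith)]; linarith
    have : (2 - 2 / (n : ℝ)) ≠ 0 := by linarith
    generalize 2 / (n : ℝ) = b at *
    field_simp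
    ring
  rw [← mul_assoc, hk]
  simp

end Identities

/-! ### Weighted estimates for Riesz potentials -/

section Riesz

variable {n : ℕ}

lemma G_integrable (hn : 0 < n) {a b : ℝ} (ha : 0 ≤ a) (hb : 0 < b) (hbn : b < n)
    (hab : (n : ℝ) < a + b) :
    Integrable fun u : Euc n => (‖u‖ + 1) ^ (-a) * ‖u‖ ^ (-b) := by
  have i1 : Integrable fun u : Euc n => ‖u‖ ^ (-b) * cut 1 u :=
    loc_int_mul ((Hom_norm (-b)).locallyIntegrable hn (by linarith)) (cut_continuous 1)
      (cut_hasCompactSupport one_pos)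
  have i2 := (jap_integrable (n := n) hab).const_mul (2 ^ b)
  refine (i1.add i2).mono' (Measurable.aestronglyMeasurable (by fun_prop))
    (Eventually.of_forall fun u => ?_)
  have hu := norm_nonneg u
  rw [Real.norm_of_nonneg (by positivity), Pi.add_apply]
  have hj := jap_pos u
  rcases le_or_gt ‖u‖ 1 with h | h
  · have h1 : (‖u‖ + 1) ^ (-a) ≤ 1 :=
      Real.rpow_le_one_of_one_le_of_nonpos (by linarith) (by linarith)
    rw [cut_eq_one one_pos h, mul_one]
    have h2 : 0 ≤ ‖u‖ ^ (-b) := by positivity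
    have h3 : 0 ≤ (2 : ℝ) ^ b * jap u ^ (-(a + b)) := by positivity
    nlinarith
  · have h1 : jap u ≤ ‖u‖ + 1 := by have := jap_le u; linarith
    have h2 : (‖u‖ + 1) ^ (-a) ≤ jap u ^ (-a) :=
      Real.rpow_le_rpow_of_nonpos hj h1 (by linarith)
    have h3 : ‖u‖ ^ (-b) ≤ (jap u / 2) ^ (-b) :=
      Real.rpow_le_rpow_of_nonpos (by positivity) (by linarith) (by linarith)
    have h4 : (jap u / 2) ^ (-b) = 2 ^ b * jap u ^ (-b) := by
      rw [Real.div_rpow hj.le (by norm_num), Real.rpow_neg (by norm_num : (0:ℝ) ≤ 2)]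
      field_simp
    have h5 : 0 ≤ ‖u‖ ^ (-b) * cut 1 u := mul_nonneg (by positivity) (cut_nonneg _ _)
    rw [neg_add, jap_rpow_add]
    calc _ ≤ jap u ^ (-a) * (2 ^ b * jap u ^ (-b)) := by
          rw [← h4]; exact mul_le_mul h2 h3 (by positivity) (by positivity)
      _ ≤ _ := by nlinarith

lemma G_scaled (hn : 0 < n) {a b : ℝ} (ha : 0 ≤ a) (hb : 0 < b) (hbn : b < n)
    (hab : (n : ℝ) < a + b) : ∃ C : ℝ, 0 ≤ C ∧ ∀ t : ℝ, 0 < t →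
    Integrable (fun u : Euc n => (‖u‖ + t) ^ (-a) * ‖u‖ ^ (-b)) ∧
    ∫ u : Euc n, (‖u‖ + t) ^ (-a) * ‖u‖ ^ (-b) = C * t ^ ((n : ℝ) - a - b) := by
  have hG := G_integrable hn ha hb hbn hab
  refine ⟨∫ u : Euc n, (‖u‖ + 1) ^ (-a) * ‖u‖ ^ (-b), integral_nonneg fun u => by positivity,
    fun t ht => ?_⟩
  have e : ∀ u : Euc n, (‖u‖ + t) ^ (-a) * ‖u‖ ^ (-b) = t ^ (-a - b) *
      ((‖t⁻¹ • u‖ + 1) ^ (-a) * ‖t⁻¹ • u‖ ^ (-b)) := by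
    intro u
    rw [norm_smul, Real.norm_of_nonneg (by positivity)]
    have h1 : t⁻¹ * ‖u‖ + 1 = t⁻¹ * (‖u‖ + t) := by field_simp
    rw [h1, Real.mul_rpow (by positivity) (by positivity),
      Real.mul_rpow (by positivity) (norm_nonneg u), Real.inv_rpow ht.le, Real.inv_rpow ht.le,
      Real.rpow_sub ht, Real.rpow_neg ht.le b]
    have := Real.rpow_pos_of_pos ht (-a)
    have := Real.rpow_pos_of_pos ht b
    field_simp
  simp_rw [e]
  constructor
  · exact ((integrable_comp_smul_iff volume _ (inv_ne_zero ht.ne')).2 hG).const_mul _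
  · rw [integral_const_mul, Measure.integral_comp_smul volume
      (fun u : Euc n => (‖u‖ + 1) ^ (-a) * ‖u‖ ^ (-b)) t⁻¹, finrank_euclideanSpace_fin,
      inv_pow, inv_inv, abs_of_pos (by positivity), smul_eq_mul, ← mul_assoc, mul_comm,
      ← Real.rpow_natCast, ← Real.rpow_add ht]
    congr 2; ring

/-- The potential of a power of the weight. -/
lemma riesz_jap (hn : 0 < n) {l s : ℝ} (hl : 0 < l) (hln : l < n) (hs : s < n)
    (hls : (n : ℝ) < l + s) : ∃ C : ℝ, 0 ≤ C ∧ ∀ x : Euc n,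
    Integrable (fun y => ‖x - y‖ ^ (-l) * jap y ^ (-s)) ∧
    ∫ y, ‖x - y‖ ^ (-l) * jap y ^ (-s) ≤ C * jap x ^ ((n : ℝ) - l - s) := by
  have hs0 : 0 < s := by linarith
  obtain ⟨C1, hC1, h1⟩ := G_scaled (n := n) hn hs0.le hl hln (by linarith)
  obtain ⟨C2, hC2, h2⟩ := G_scaled (n := n) hn hl.le hs0 hs (by linarith)
  refine ⟨3 ^ s * C1 + 5 ^ l * C2, by positivity, fun x => ?_⟩
  have ht := jap_pos x
  obtain ⟨i1, e1⟩ := h1 _ ht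
  obtain ⟨i2, e2⟩ := h2 _ ht
  have i1' := (i1.comp_sub_left x).const_mul (3 ^ s)
  have i2' := i2.const_mul (5 ^ l)
  have key : ∀ᵐ y : Euc n, ‖x - y‖ ^ (-l) * jap y ^ (-s) ≤
      3 ^ s * ((‖x - y‖ + jap x) ^ (-s) * ‖x - y‖ ^ (-l)) +
      5 ^ l * ((‖y‖ + jap x) ^ (-l) * ‖y‖ ^ (-s)) := by
    filter_upwards [ae_ne_zero hn] with y hy
    have hy' := norm_pos_iff.2 hy
    have hjy := jap_pos y
    have hxy := norm_nonneg (x - y)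
    have htri : jap x ≤ jap y + ‖x - y‖ := by
      rw [jap, Real.sqrt_le_left (by positivity)]
      have h3 := jap_sq y
      have h4 := norm_le_jap y
      have h5 : ‖x‖ ≤ ‖y‖ + ‖x - y‖ := by
        calc ‖x‖ = ‖y + (x - y)‖ := by congr 1; abel
          _ ≤ _ := norm_add_le _ _
      have h6 : ‖x‖ ^ 2 ≤ (‖y‖ + ‖x - y‖) ^ 2 := by
        exact pow_le_pow_left₀ (norm_nonneg _) h5 2
      nlinarith
    have p1 : 0 ≤ 3 ^ s * ((‖x - y‖ + jap x) ^ (-s) * ‖x - y‖ ^ (-l)) := by positivity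
    have p2 : 0 ≤ 5 ^ l * ((‖y‖ + jap x) ^ (-l) * ‖y‖ ^ (-s)) := by positivity
    have inv3 : ∀ c r : ℝ, 0 < c → ∀ b : ℝ, 0 < b → (b / c) ^ (-r) = c ^ r * b ^ (-r) := by
      intro c r hc b hb
      rw [Real.div_rpow hb.le hc.le, Real.rpow_neg hc.le]; field_simp
    rcases le_or_gt ‖x - y‖ (jap x / 2) with h | h
    · refine le_trans ?_ (le_add_of_nonneg_right p2)
      have h3 : jap y ^ (-s) ≤ ((‖x - y‖ + jap x) / 3) ^ (-s) :=
        Real.rpow_le_rpow_of_nonpos (by positivity) (by linarith) (by linarith)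
      rw [inv3 3 s (by norm_num) _ (by positivity)] at h3
      have h4 : 0 ≤ ‖x - y‖ ^ (-l) := by positivity
      nlinarith [mul_le_mul_of_nonneg_left h3 h4]
    · refine le_trans ?_ (le_add_of_nonneg_left p1)
      have hy2 : ‖y‖ ≤ jap x + ‖x - y‖ := by
        have : ‖y‖ ≤ ‖x‖ + ‖x - y‖ := by
          calc ‖y‖ = ‖x - (x - y)‖ := by congr 1; abel
            _ ≤ _ := norm_sub_le _ _
        have := norm_le_jap x
        linarith
      have h3 : ‖x - y‖ ^ (-l) ≤ ((‖y‖ + jap x) / 5) ^ (-l) :=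
        Real.rpow_le_rpow_of_nonpos (by positivity) (by linarith) (by linarith)
      rw [inv3 5 l (by norm_num) _ (by positivity)] at h3
      have h4 : jap y ^ (-s) ≤ ‖y‖ ^ (-s) :=
        Real.rpow_le_rpow_of_nonpos hy' (norm_le_jap y) (by linarith)
      calc _ ≤ (5 ^ l * (‖y‖ + jap x) ^ (-l)) * ‖y‖ ^ (-s) :=
            mul_le_mul h3 h4 (by positivity) (by positivity)
        _ = _ := by ring
  have hintg : Integrable (fun y => ‖x - y‖ ^ (-l) * jap y ^ (-s)) := by
    refine (i1'.add i2').mono' (Measurable.aestronglyMeasurable ?_) ?_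
    · exact Measurable.mul (by fun_prop) (jap_rpow_continuous _).measurable
    · filter_upwards [key] with y hy
      have := jap_rpow_pos y (-s)
      rw [Real.norm_of_nonneg (by positivity)]
      exact hy
  refine ⟨hintg, ?_⟩
  calc _ ≤ ∫ y, (3 ^ s * ((‖x - y‖ + jap x) ^ (-s) * ‖x - y‖ ^ (-l)) +
      5 ^ l * ((‖y‖ + jap x) ^ (-l) * ‖y‖ ^ (-s))) :=
        integral_mono_ae hintg (i1'.add i2') key
    _ = _ := by
      rw [integral_add i1' i2', integral_const_mul, integral_const_mul, e2,
        integral_sub_left_eq_self (fun z => (‖z‖ + jap x) ^ (-s) * ‖z‖ ^ (-l)) volume x, e1,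
        show (n : ℝ) - s - l = n - l - s by ring]
      ring

variable {p : ℝ} {f : Euc n → ℝ}

lemma hold {p : ℝ} (hp : 1 < p) : p.HolderConjugate (p / (p - 1)) :=
  Real.HolderConjugate.conjExponent hp

/-- Weighted `L^p → L^∞` bound for the Riesz potential of order `m`. -/
lemma riesz_bound (hn : 0 < n) {m β : ℝ} (hm : 1 ≤ m) (hmn : m < n) (hp : (n : ℝ) < p)
    (h1 : m - n < β) (h2 : β < 0) (hf : MW p (m - β - n / p) f) : ∃ C : ℝ, 0 ≤ C ∧ ∀ x : Euc n,
    Integrable (fun y => ‖x - y‖ ^ (m - n) * |f y|) ∧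
    ∫ y, ‖x - y‖ ^ (m - n) * |f y| ≤ C * jap x ^ β := by
  have hn1 : (1 : ℝ) ≤ n := by exact_mod_cast hn
  have hp1 : 1 < p := by linarith
  have hp0 : 0 < p := by linarith
  set q := p / (p - 1) with hq
  have hq0 : 0 < q := by have : 0 < p - 1 := by linarith
                         positivity
  have hqp : 1 / q = 1 - 1 / p := by
    rw [hq]; have : p - 1 ≠ 0 := by linarith
    field_simp
  have hqq : ∀ {a b : ℝ}, a * (1 - 1 / p) < b → a < b * q := by
    intro a b h
    rw [← hqp] at h
    have := mul_lt_mul_of_pos_right h hq0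
    rwa [mul_assoc, one_div, inv_mul_cancel₀ hq0.ne', mul_one] at this
  have hqq' : ∀ {a b : ℝ}, b < a * (1 - 1 / p) → b * q < a := by
    intro a b h
    rw [← hqp] at h
    have := mul_lt_mul_of_pos_right h hq0
    rwa [mul_assoc a, one_div, inv_mul_cancel₀ hq0.ne', mul_one] at this
  have hnp : (n : ℝ) / p < 1 := by rw [div_lt_one hp0]; exact hp
  have hnp' : (n : ℝ) * (1 - 1 / p) = n - n / p := by ring
  set r := m - β - n / p with hr
  obtain ⟨C, hC, hI⟩ := riesz_jap (n := n) hn (l := (n - m) * q) (s := r * q)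
    (by have : 0 < (n : ℝ) - m := by linarith
        positivity) (hqq' (by rw [hnp']; linarith)) (hqq' (by rw [hnp']; linarith))
    (by rw [← add_mul]; exact hqq (by rw [hnp']; linarith))
  set A := (∫ y, (jap y ^ r * |f y|) ^ p) ^ (1 / p) with hA
  have hA0 : 0 ≤ A := by
    rw [hA]
    exact Real.rpow_nonneg (integral_nonneg fun y => Real.rpow_nonneg
      (mul_nonneg (jap_rpow_pos y _).le (abs_nonneg _)) _) _
  refine ⟨A * C ^ (1 / q), by positivity, fun x => ?_⟩
  obtain ⟨i, hi⟩ := hI x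
  have e1 : ∀ y, (‖x - y‖ ^ (m - n) * jap y ^ (-r)) ^ q
      = ‖x - y‖ ^ (-((n - m) * q)) * jap y ^ (-(r * q)) := by
    intro y
    rw [Real.mul_rpow (by positivity) (jap_rpow_pos y _).le, ← Real.rpow_mul (norm_nonneg _),
      ← Real.rpow_mul (jap_pos y).le]
    congr 2 <;> ring
  have hg0 : ∀ y, 0 ≤ ‖x - y‖ ^ (m - n) * jap y ^ (-r) := fun y =>
    mul_nonneg (by positivity) (jap_rpow_pos y _).le
  have hgm : MemLp (fun y => ‖x - y‖ ^ (m - n) * jap y ^ (-r)) (ENNReal.ofReal q) volume := by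
    refine (integrable_norm_rpow_iff ?_ (by simpa using hq0) ENNReal.ofReal_ne_top).1 ?_
    · exact Measurable.aestronglyMeasurable
        (Measurable.mul (by fun_prop) (jap_rpow_continuous _).measurable)
    · rw [ENNReal.toReal_ofReal hq0.le]
      simp_rw [fun y => Real.norm_of_nonneg (hg0 y), e1]
      exact i
  have hfm : MemLp (fun y => jap y ^ r * |f y|) (ENNReal.ofReal p) volume := hf.abs
  have hpq : p.HolderConjugate q := hold hp1
  have e2 : ∀ y, (jap y ^ r * |f y|) * (‖x - y‖ ^ (m - n) * jap y ^ (-r))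
      = ‖x - y‖ ^ (m - n) * |f y| := by
    intro y
    have : jap y ^ r * jap y ^ (-r) = 1 := by rw [← jap_rpow_add]; simp
    linear_combination ‖x - y‖ ^ (m - n) * |f y| * this
  constructor
  · have : ENNReal.HolderConjugate (ENNReal.ofReal p) (ENNReal.ofReal q) := hpq.ennrealOfReal
    have := MemLp.integrable_mul hfm hgm
    refine this.congr (Eventually.of_forall e2)
  · have := integral_mul_le_Lp_mul_Lq_of_nonneg hpq (Eventually.of_forall fun y =>
      mul_nonneg (jap_rpow_pos y r).le (abs_nonneg (f y))) (Eventually.of_forall hg0) hfm hgm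
    simp_rw [e2, e1] at this
    refine this.trans ?_
    rw [mul_assoc]
    refine mul_le_mul_of_nonneg_left ?_ hA0
    calc _ ≤ (C * jap x ^ ((n : ℝ) - (n - m) * q - r * q)) ^ (1 / q) :=
          Real.rpow_le_rpow (integral_nonneg fun y => mul_nonneg (by positivity)
            (jap_rpow_pos y _).le) hi (by positivity)
      _ = C ^ (1 / q) * jap x ^ β := by
          rw [Real.mul_rpow hC (jap_rpow_pos x _).le, ← Real.rpow_mul (jap_pos x).le]
          congr 2
          have : q * (1 / q) = 1 := by field_simp
          have h3 : ((n : ℝ) - (n - m) * q - r * q) * (1 / q) = n * (1 / q) - (n - m) - r := by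
            linear_combination (-(n - m) - r) * this
          rw [h3, hqp, hnp']; linarith

/-- Sources in `L^p_{δ-2}` with `δ < 0` have well defined potentials. -/
lemma MW.WI {δ : ℝ} (hn : 0 < n) (hp : (n : ℝ) < p) (hδ : δ < 0) (hf : MW p (2 - δ - n / p) f) :
    WI f := by
  have hn1 : (1 : ℝ) ≤ n := by exact_mod_cast hn
  have hp1 : 1 < p := by linarith
  have hpq := hold hp1
  set q := p / (p - 1) with hq
  have hp1' : 0 < p - 1 := by linarith
  have hq0 : 0 < q := by positivity
  have hg : MW (n := n) q 0 fun y => jap y ^ (δ - n + n / p) := by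
    refine MW_of_bound hq0 (jap_rpow_continuous _).aestronglyMeasurable (C := 1)
      (a := δ - n + n / p) (fun x => by rw [abs_of_pos (jap_rpow_pos x _), one_mul]) ?_
    rw [zero_add, hq, mul_div_assoc', div_lt_iff₀ hp1']
    field_simp
    nlinarith
  have : ENNReal.HolderConjugate (ENNReal.ofReal p) (ENNReal.ofReal q) := hpq.ennrealOfReal
  have := MemLp.integrable_mul hf hg
  refine this.congr (Eventually.of_forall fun y => ?_)
  simp only [Pi.mul_apply, Real.rpow_zero, one_mul]
  have : jap y ^ (2 - (n : ℝ)) = jap y ^ (2 - δ - n / p) * jap y ^ (δ - n + n / p) := by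
    rw [← jap_rpow_add]; congr 1; ring
  rw [this]; ring

end Riesz

/-! ### Boundedness of Riesz potentials on weighted spaces -/

section Schur

variable {n : ℕ} {p δ : ℝ} {f F : Euc n → ℝ}

lemma jap_measurable (s : ℝ) : Measurable fun x : Euc n => jap x ^ s :=
  (jap_rpow_continuous s).measurable

/-- Schur test: the Riesz potential of order `m` maps `L^p_{δ-2}` to `L^p_{δ-2+m}`. -/
lemma schur (hn : 3 ≤ n) {m : ℝ} (hm : 1 ≤ m) (hm2 : m ≤ 2) (hp : (n : ℝ) < p)
    (h1 : 2 - (n : ℝ) < δ) (h2 : δ < 0) (hfm : Measurable f) (hf : MW p (2 - δ - n / p) f)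
    (hF : AEStronglyMeasurable F volume) {C : ℝ} (hC : 0 ≤ C)
    (hFb : ∀ x, |F x| ≤ C * ∫ y, ‖x - y‖ ^ (m - n) * |f y|) : MW p (2 - δ - m - n / p) F := by
  have hn0 : 0 < n := by omega
  have hn3 : (3 : ℝ) ≤ n := by exact_mod_cast hn
  have hp1 : 1 < p := by linarith
  have hp0 : 0 < p := by linarith
  have hp1' : 0 < p - 1 := by linarith
  have hpq := hold hp1
  set q := p / (p - 1) with hq
  have hq0 : 0 < q := by positivity
  obtain ⟨a, ha1, ha2, ha3, ha4⟩ : ∃ a : ℝ, 2 - δ - n / p < a ∧ a < 2 - δ - m / p ∧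
      m - m / p < a ∧ a < n - n / p := by
    have h : max (2 - δ - n / p) (m - m / p) < min (2 - δ - m / p) (n - n / p) := by
      have : m / p < n / p := by gcongr; linarith
      have : (m - m / p) < n - n / p := by
        have h3 : m * (1 - 1 / p) < n * (1 - 1 / p) := by
          refine mul_lt_mul_of_pos_right (by linarith) ?_
          rw [sub_pos, div_lt_one hp0]; exact hp1
        have e : ∀ b : ℝ, b * (1 - 1 / p) = b - b / p := fun b => by ring
        rw [e, e] at h3; exact h3
      rw [max_lt_iff, lt_min_iff, lt_min_iff]
      refine ⟨⟨?_, ?_⟩, ?_, ?_⟩ <;> linarith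
    obtain ⟨a, h3, h4⟩ := exists_between h
    rw [max_lt_iff] at h3
    rw [lt_min_iff] at h4
    exact ⟨a, h3.1, h4.1, h3.2, h4.2⟩
  have hdiv : ∀ b : ℝ, b / p * p = b := fun b => div_mul_cancel₀ b hp0.ne'
  have haq : a * q = a * p / (p - 1) := by rw [hq]; ring
  obtain ⟨C1, hC1, hI1⟩ := riesz_jap (n := n) hn0 (l := n - m) (s := a * q) (by linarith)
    (by linarith)
    (by rw [haq, div_lt_iff₀ hp1']
        have := mul_lt_mul_of_pos_right ha4 hp0
        rw [sub_mul, hdiv] at this; linarith)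
    (by have : m < a * q := by
          rw [haq, lt_div_iff₀ hp1']
          have := mul_lt_mul_of_pos_right ha3 hp0
          rw [sub_mul, hdiv] at this; linarith
        linarith)
  set s' := n + m + a * p - (2 - δ) * p with hs'
  obtain ⟨C2, hC2, hI2⟩ := riesz_jap (n := n) hn0 (l := n - m) (s := s') (by linarith)
    (by linarith)
    (by have := mul_lt_mul_of_pos_right ha2 hp0
        rw [sub_mul, hdiv] at this; linarith)
    (by have := mul_lt_mul_of_pos_right ha1 hp0
        rw [sub_mul, hdiv] at this; linarith)
  have hrb0 := riesz_bound (f := f) hn0 hm (by linarith) hp (β := δ - 2 + m) (by linarith)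
    (by linarith) (by rwa [show m - (δ - 2 + m) - n / p = 2 - δ - n / p by ring])
  obtain ⟨_, _, hrb⟩ := hrb0
  have hk0 : ∀ x y : Euc n, 0 ≤ ‖x - y‖ ^ (m - n) := fun x y => by positivity
  have hkm : Measurable fun z : Euc n × Euc n => ‖z.1 - z.2‖ ^ (m - n) := by fun_prop
  -- Hölder's inequality against the auxiliary weight `⟨y⟩^a`
  have step1 : ∀ x, ENNReal.ofReal (∫ y, ‖x - y‖ ^ (m - n) * |f y|) ^ p ≤
      ENNReal.ofReal (C1 ^ (p - 1) * jap x ^ (m * (p - 1) - a * p)) *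
        ∫⁻ y, ENNReal.ofReal (‖x - y‖ ^ (m - n) * (jap y ^ (a * p) * |f y| ^ p)) := by
    intro x
    rw [ofReal_integral_eq_lintegral_ofReal (hrb x).1
      (Eventually.of_forall fun y => mul_nonneg (hk0 x y) (abs_nonneg _))]
    have e : ∀ y, ENNReal.ofReal (‖x - y‖ ^ (m - n) * |f y|) =
        ENNReal.ofReal ((‖x - y‖ ^ (m - n)) ^ (1 / p) * (jap y ^ a * |f y|)) *
        ENNReal.ofReal ((‖x - y‖ ^ (m - n)) ^ (1 / q) * jap y ^ (-a)) := by
      intro y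
      have hj := jap_rpow_pos y a
      have hk := hk0 x y
      rw [← ENNReal.ofReal_mul (by positivity)]
      congr 1
      have e1 : (‖x - y‖ ^ (m - n)) ^ (1 / p) * (‖x - y‖ ^ (m - n)) ^ (1 / q)
          = ‖x - y‖ ^ (m - n) := by
        have hpq1 : 1 / p + 1 / q = 1 := by
          have := hpq.inv_add_inv_eq_one; simpa using this
        rw [← Real.rpow_add_of_nonneg hk (by positivity) (by positivity), hpq1, Real.rpow_one]
      have e2 : jap y ^ a * jap y ^ (-a) = 1 := by rw [← jap_rpow_add]; simp
      calc _ = ((‖x - y‖ ^ (m - n)) ^ (1 / p) * (‖x - y‖ ^ (m - n)) ^ (1 / q)) *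
            (jap y ^ a * jap y ^ (-a)) * |f y| := by rw [e1, e2]; ring
        _ = _ := by ring
    simp_rw [e]
    have hH := ENNReal.lintegral_mul_le_Lp_mul_Lq (volume : Measure (Euc n)) hpq
      (f := fun y => ENNReal.ofReal ((‖x - y‖ ^ (m - n)) ^ (1 / p) * (jap y ^ a * |f y|)))
      (g := fun y => ENNReal.ofReal ((‖x - y‖ ^ (m - n)) ^ (1 / q) * jap y ^ (-a)))
      (by
        have := jap_measurable (n := n) a
        have := hfm.norm
        simp only [Real.norm_eq_abs] at this
        exact Measurable.aemeasurable (by fun_prop))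
      (by
        have := jap_measurable (n := n) (-a)
        exact Measurable.aemeasurable (by fun_prop))
    have hH' := ENNReal.rpow_le_rpow hH hp0.le
    simp only [Pi.mul_apply] at hH'
    refine hH'.trans ?_
    rw [ENNReal.mul_rpow_of_nonneg _ _ hp0.le, ← ENNReal.rpow_mul, one_div_mul_cancel hp0.ne',
      ENNReal.rpow_one, mul_comm]
    refine mul_le_mul' ?_ (le_of_eq ?_)
    · have e3 : ∀ y, ENNReal.ofReal ((‖x - y‖ ^ (m - n)) ^ (1 / q) * jap y ^ (-a)) ^ q =
          ENNReal.ofReal (‖x - y‖ ^ (-(n - m)) * jap y ^ (-(a * q))) := by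
        intro y
        have hj := jap_rpow_pos y (-a)
        have hk := hk0 x y
        rw [ENNReal.ofReal_rpow_of_nonneg (by positivity) hq0.le, Real.mul_rpow (by positivity)
          hj.le, ← Real.rpow_mul hk, one_div_mul_cancel hq0.ne', Real.rpow_one,
          ← Real.rpow_mul (jap_pos y).le, neg_sub, neg_mul]
      simp_rw [e3]
      rw [← ofReal_integral_eq_lintegral_ofReal (hI1 x).1 (Eventually.of_forall fun y =>
        mul_nonneg (by positivity) (jap_rpow_pos y _).le), ← ENNReal.rpow_mul]
      have e4 : 1 / q * p = p - 1 := by rw [hq]; field_simp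
      rw [e4, ENNReal.ofReal_rpow_of_nonneg (integral_nonneg fun y =>
        mul_nonneg (by positivity) (jap_rpow_pos y _).le) hp1'.le]
      refine ENNReal.ofReal_le_ofReal ?_
      refine (Real.rpow_le_rpow (integral_nonneg fun y =>
        mul_nonneg (by positivity) (jap_rpow_pos y _).le) (hI1 x).2 hp1'.le).trans (le_of_eq ?_)
      rw [Real.mul_rpow hC1 (jap_rpow_pos x _).le, ← Real.rpow_mul (jap_pos x).le]
      congr 2
      rw [haq]; field_simp; ring
    · congr 1; funext y
      have hj := jap_rpow_pos y a
      have hk := hk0 x y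
      rw [ENNReal.ofReal_rpow_of_nonneg (by positivity) hp0.le, Real.mul_rpow (by positivity)
        (by positivity), Real.mul_rpow hj.le (abs_nonneg _), ← Real.rpow_mul hk,
        one_div_mul_cancel hp0.ne', Real.rpow_one, ← Real.rpow_mul (jap_pos y).le]
  have hC1p : 0 ≤ C1 ^ (p - 1) := by positivity
  have hCp : 0 ≤ C ^ p := by positivity
  have step2 : ∀ x, ENNReal.ofReal ((jap x ^ (2 - δ - m - n / p) * |F x|) ^ p) ≤
      ENNReal.ofReal (C ^ p * C1 ^ (p - 1)) *
      ∫⁻ y, ENNReal.ofReal ((‖y - x‖ ^ (-(n - m)) * jap x ^ (-s')) *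
        (jap y ^ (a * p) * |f y| ^ p)) := by
    intro x
    have hj := jap_rpow_pos x (2 - δ - m - n / p)
    have hR0 : 0 ≤ ∫ y, ‖x - y‖ ^ (m - n) * |f y| :=
      integral_nonneg fun y => mul_nonneg (hk0 x y) (abs_nonneg _)
    have e5 : (jap x ^ (2 - δ - m - n / p) * |F x|) ^ p ≤ C ^ p *
        (jap x ^ ((2 - δ - m - n / p) * p) * (∫ y, ‖x - y‖ ^ (m - n) * |f y|) ^ p) := by
      calc _ ≤ (jap x ^ (2 - δ - m - n / p) * (C * ∫ y, ‖x - y‖ ^ (m - n) * |f y|)) ^ p :=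
            Real.rpow_le_rpow (by positivity) (mul_le_mul_of_nonneg_left (hFb x) hj.le) hp0.le
        _ = _ := by
          rw [Real.mul_rpow hj.le (by positivity), Real.mul_rpow hC hR0,
            ← Real.rpow_mul (jap_pos x).le]
          ring
    have hj2 := jap_rpow_pos x ((2 - δ - m - n / p) * p)
    refine (ENNReal.ofReal_le_ofReal e5).trans ?_
    rw [ENNReal.ofReal_mul hCp, ENNReal.ofReal_mul hj2.le, ENNReal.ofReal_mul hCp, mul_assoc]
    refine mul_le_mul_right ?_ _
    rw [← ENNReal.ofReal_rpow_of_nonneg hR0 hp0.le]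
    refine (mul_le_mul_right (step1 x) _).trans (le_of_eq ?_)
    have hj3 := jap_rpow_pos x (m * (p - 1) - a * p)
    rw [ENNReal.ofReal_mul hC1p, mul_left_comm, mul_assoc]
    congr 1
    rw [← mul_assoc, ← ENNReal.ofReal_mul hj3.le, ← jap_rpow_add,
      ← lintegral_const_mul' _ _ ENNReal.ofReal_ne_top]
    congr 1; funext y
    rw [← ENNReal.ofReal_mul (jap_rpow_pos x _).le]
    congr 1
    rw [norm_sub_rev, neg_sub, show (m * (p - 1) - a * p) + (2 - δ - m - n / p) * p = -s' by
      rw [hs']; linear_combination -(hdiv n)]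
    ring
  rw [MW_iff_lintegral hp0 hF]
  have hmeas : Measurable (Function.uncurry fun x y : Euc n => ENNReal.ofReal
      ((‖y - x‖ ^ (-(n - m)) * jap x ^ (-s')) * (jap y ^ (a * p) * |f y| ^ p))) := by
    have m1 : Measurable fun z : Euc n × Euc n => jap z.1 ^ (-s') :=
      (jap_measurable (n := n) (-s')).comp measurable_fst
    have m2 : Measurable fun z : Euc n × Euc n => jap z.2 ^ (a * p) :=
      (jap_measurable (n := n) (a * p)).comp measurable_snd
    have m3 : Measurable fun z : Euc n × Euc n => |f z.2| := by
      exact hfm.norm.comp measurable_snd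
    unfold Function.uncurry
    fun_prop
  calc _ ≤ ∫⁻ x, ENNReal.ofReal (C ^ p * C1 ^ (p - 1)) * ∫⁻ y, ENNReal.ofReal
        ((‖y - x‖ ^ (-(n - m)) * jap x ^ (-s')) * (jap y ^ (a * p) * |f y| ^ p)) :=
        lintegral_mono step2
    _ = ENNReal.ofReal (C ^ p * C1 ^ (p - 1)) * ∫⁻ y, ∫⁻ x, ENNReal.ofReal
        ((‖y - x‖ ^ (-(n - m)) * jap x ^ (-s')) * (jap y ^ (a * p) * |f y| ^ p)) := by
        rw [lintegral_const_mul' _ _ ENNReal.ofReal_ne_top,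
          lintegral_lintegral_swap hmeas.aemeasurable]
    _ ≤ ENNReal.ofReal (C ^ p * C1 ^ (p - 1)) * ∫⁻ y, ENNReal.ofReal C2 *
        ENNReal.ofReal ((jap y ^ (2 - δ - n / p) * |f y|) ^ p) := by
        refine mul_le_mul_right (lintegral_mono fun y => ?_) _
        have hj := jap_rpow_pos y (a * p)
        have hw0 : 0 ≤ jap y ^ (a * p) * |f y| ^ p := by positivity
        simp_rw [ENNReal.ofReal_mul' hw0]
        rw [lintegral_mul_const' _ _ ENNReal.ofReal_ne_top,
          ← ofReal_integral_eq_lintegral_ofReal (hI2 y).1 (Eventually.of_forall fun x =>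
            mul_nonneg (by positivity) (jap_rpow_pos x _).le), ← ENNReal.ofReal_mul' hw0,
          ← ENNReal.ofReal_mul hC2]
        refine ENNReal.ofReal_le_ofReal ?_
        refine (mul_le_mul_of_nonneg_right (hI2 y).2 hw0).trans (le_of_eq ?_)
        rw [Real.mul_rpow (jap_rpow_pos y _).le (abs_nonneg _), ← Real.rpow_mul (jap_pos y).le,
          show (2 - δ - n / p) * p = (n - (n - m) - s') + a * p by
            rw [hs']; linear_combination -(hdiv n), jap_rpow_add]
        ring
    _ < ⊤ := by
        rw [lintegral_const_mul' _ _ ENNReal.ofReal_ne_top]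
        refine ENNReal.mul_lt_top ENNReal.ofReal_lt_top (ENNReal.mul_lt_top ENNReal.ofReal_lt_top ?_)
        exact (MW_iff_lintegral hp0 hfm.aestronglyMeasurable).1 hf

end Schur

/-! ### Potentials in weighted Sobolev spaces -/

section Potentials

variable {n : ℕ} {p δ d : ℝ} {K f g : Euc n → ℝ}

lemma Hom.abs_cv_le (hn : 0 < n) (hK : Hom d K) : ∃ C : ℝ, 0 < C ∧ ∀ (f F : Euc n → ℝ) (x : Euc n),
    (∀ y, |f y| ≤ |F y|) → Integrable (fun y => ‖x - y‖ ^ d * |F y|) →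
    |cv K f x| ≤ C * ∫ y, ‖x - y‖ ^ d * |F y| := by
  obtain ⟨C, hC, hb⟩ := hK.bound
  refine ⟨C, hC, fun f F x hfF hi => ?_⟩
  rw [← integral_const_mul, ← Real.norm_eq_abs]
  refine norm_integral_le_of_norm_le (hi.const_mul C) ?_
  have hne : ∀ᵐ y : Euc n, x - y ≠ 0 := by
    have : Nonempty (Fin n) := ⟨⟨0, hn⟩⟩
    have h : ∀ᵐ y : Euc n, y ≠ x := compl_mem_ae_iff.2 (measure_singleton x)
    filter_upwards [h] with y hy
    exact sub_ne_zero.2 (Ne.symm hy)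
  filter_upwards [hne] with y hy
  rw [Real.norm_eq_abs, abs_mul, ← mul_assoc]
  exact mul_le_mul (hb _ hy) (hfF y) (abs_nonneg _) (by positivity)

/-- Uniform weighted decay of potentials of order `m` whose densities have a common majorant. -/
lemma Hom.cv_decay (hn : 3 ≤ n) {m : ℝ} (hm : 1 ≤ m) (hm2 : m ≤ 2) (hp : (n : ℝ) < p)
    (h1 : 2 - (n : ℝ) < δ) (h2 : δ < 0) (hK : Hom (m - n) K) {F : Euc n → ℝ}
    (hF : MW p (2 - δ - n / p) F) : ∃ C : ℝ, 0 ≤ C ∧ ∀ f : Euc n → ℝ, (∀ y, |f y| ≤ |F y|) →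
      ∀ x, |cv K f x| ≤ C * jap x ^ (δ - 2 + m) := by
  have hn3 : (3 : ℝ) ≤ n := by exact_mod_cast hn
  obtain ⟨C, hC, hb⟩ := hK.abs_cv_le (by omega)
  obtain ⟨D, hD, hr⟩ := riesz_bound (f := F) (p := p) (m := m) (β := δ - 2 + m) (by omega) hm
    (by linarith) hp (by linarith) (by linarith)
    (by convert hF using 1; ring)
  refine ⟨C * D, by positivity, fun f hf x => (hb f F x hf (hr x).1).trans ?_⟩
  rw [mul_assoc]
  exact mul_le_mul_of_nonneg_left (hr x).2 hC.le

lemma Hom.cv_MW (hn : 3 ≤ n) {m : ℝ} (hm : 1 ≤ m) (hm2 : m ≤ 2) (hp : (n : ℝ) < p)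
    (h1 : 2 - (n : ℝ) < δ) (h2 : δ < 0) (hK : Hom (m - n) K)
    (hfc : Continuous f) (hf : MW p (2 - δ - n / p) f) : MW p (2 - δ - m - n / p) (cv K f) := by
  have hn3 : (3 : ℝ) ≤ n := by exact_mod_cast hn
  obtain ⟨C, hC, hb⟩ := hK.abs_cv_le (by omega)
  obtain ⟨D, hD, hr⟩ := riesz_bound (f := f) (p := p) (m := m) (β := δ - 2 + m) (by omega) hm
    (by linarith) hp (by linarith) (by linarith)
    (by convert hf using 1; ring)
  have hc := hK.contDiff_cv hn (by linarith) (by linarith) (MW.WI (by omega) hp h2 hf) (m := 0)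
    (contDiff_zero.2 hfc)
  exact schur hn hm hm2 hp h1 h2 hfc.measurable hf hc.continuous.aestronglyMeasurable hC.le
    fun x => hb f f x (fun _ => le_rfl) (hr x).1

/-- Membership in `W^{2,p}_δ`, expressed through partial derivatives. -/
def W2 (p δ : ℝ) (v : Euc n → ℝ) : Prop :=
  MW p (-δ - n / p) v ∧ (∀ k, MW p (1 - δ - n / p) (pd k v)) ∧
    ∀ i j, MW p (2 - δ - n / p) (pd j (pd i v))

lemma Hom.cv_W1 (hn : 3 ≤ n) (hp : (n : ℝ) < p)
    (h1 : 2 - (n : ℝ) < δ) (h2 : δ < 0) (hK : Hom (2 - (n : ℝ)) K)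
    (hfs : ContDiff ℝ 1 f) (hf : MW p (2 - δ - n / p) f) :
    MW p (-δ - n / p) (cv K f) ∧ ∀ k, MW p (1 - δ - n / p) (_root_.pd k (cv K f)) := by
  have hw := MW.WI (by omega) hp h2 hf
  constructor
  · have := hK.cv_MW hn (m := 2) (by norm_num) le_rfl hp h1 h2 hfs.continuous hf
    convert this using 1; ring
  · intro k
    have hK' : Hom (1 - (n : ℝ)) (_root_.pd k K) := by convert hK.pd k using 1; ring
    have := hK'.cv_MW hn (m := 1) (by norm_num) (by norm_num) hp h1 h2 hfs.continuous hf
    rw [hK.pd_cv hn (by linarith) le_rfl hw hfs]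
    convert this using 1; ring

lemma cv_gam_W2 (hn : 3 ≤ n) (hp : (n : ℝ) < p) (h1 : 2 - (n : ℝ) < δ) (h2 : δ < 0)
    (hfs : ContDiff ℝ (⊤ : ℕ∞) f) (hf : MW p (2 - δ - n / p) f) : W2 p δ (cv (gam n) f) := by
  have hn3 : (3 : ℝ) ≤ n := by exact_mod_cast hn
  have hw := MW.WI (by omega) hp h2 hf
  obtain ⟨a, b⟩ := gam_hom.cv_W1 hn hp h1 h2 (hfs.of_le (by norm_cast)) hf
  refine ⟨a, b, fun i j => weighted_cz (by omega) (by linarith) (gam_hom.smooth_cv hn hw hfs)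
    (by convert a using 1; ring) (fun k => by convert b k using 1; ring) ?_ i j⟩
  have : lap (cv (gam n) f) = f := funext fun x => lap_cv_gam hn hw hfs x
  rwa [this]

lemma cv_msK_W2 (hn : 3 ≤ n) (hp : (n : ℝ) < p) (h1 : 2 - (n : ℝ) < δ) (h2 : δ < 0)
    (hfs : ContDiff ℝ (⊤ : ℕ∞) f) (hf : MW p (2 - δ - n / p) f) (k l : Fin n) :
    W2 p δ (cv (msK k l) f) := by
  have hn3 : (3 : ℝ) ≤ n := by exact_mod_cast hn
  have hw := MW.WI (by omega) hp h2 hf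
  obtain ⟨a, b⟩ := (msK_hom k l).cv_W1 hn hp h1 h2 (hfs.of_le (by norm_cast)) hf
  refine ⟨a, b, fun i j => weighted_cz (by omega) (by linarith) ((msK_hom k l).smooth_cv hn hw hfs)
    (by convert a using 1; ring) (fun k => by convert b k using 1; ring) ?_ i j⟩
  have : lap (cv (msK k l) f) = fun x => (if k = l then 1 else 0) * f x
      - msκ n * pd l (pd k (cv (gam n) f)) x := funext fun x => lap_cv_msK hn hw hfs k l x
  rw [this]
  exact (hf.const_mul _).sub (((cv_gam_W2 hn hp h1 h2 hfs hf).2.2 k l).const_mul _)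

lemma W2.sum {ι : Type*} (t : Finset ι) {F : ι → Euc n → ℝ}
    (hs : ∀ k ∈ t, ContDiff ℝ (⊤ : ℕ∞) (F k)) (h : ∀ k ∈ t, W2 p δ (F k)) :
    W2 p δ fun x => ∑ k ∈ t, F k x := by
  have e1 : ∀ i, pd i (fun x => ∑ k ∈ t, F k x) = fun x => ∑ k ∈ t, pd i (F k) x := fun i =>
    funext fun x => pd_sum t i fun k hk => (hs k hk).differentiable (by simp) x
  refine ⟨MW.sum t fun k hk => (h k hk).1, fun i => ?_, fun i j => ?_⟩
  · rw [e1]; exact MW.sum t fun k hk => (h k hk).2.1 i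
  · rw [e1]
    have : pd j (fun x => ∑ k ∈ t, pd i (F k) x) = fun x => ∑ k ∈ t, pd j (pd i (F k)) x :=
      funext fun x => pd_sum t j fun k hk =>
        (ContDiff.pd_top (hs k hk) i).differentiable (by simp) x
    rw [this]
    exact MW.sum t fun k hk => (h k hk).2.2 i j

/-! ### Potentials of continuous densities -/

lemma WI.of_close (hf : WI f) (hg : Continuous g) {ε : ℝ}
    (h : ∀ y, |g y - f y| ≤ ε * jap y ^ (-((n : ℝ) + 1))) (hn : 2 ≤ n) : WI g := by
  have hi : Integrable fun y : Euc n => jap y ^ (2 - (n : ℝ)) * (g y - f y) := by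
    refine ((jap_integrable (n := n) (r := (n : ℝ) + 1) (by linarith)).const_mul ε).mono'
      ((jap_rpow_continuous _).aestronglyMeasurable.mul
        (hg.aestronglyMeasurable.sub hf.aesm)) (Eventually.of_forall fun y => ?_)
    have hn2 : (2 : ℝ) ≤ n := by exact_mod_cast hn
    have h1 : jap y ^ (2 - (n : ℝ)) ≤ 1 := by
      have := jap_rpow_mono y (s := 2 - (n : ℝ)) (t := 0) (by linarith)
      simpa using this
    rw [Real.norm_eq_abs, abs_mul, abs_of_pos (jap_rpow_pos y _)]
    calc _ ≤ 1 * |g y - f y| := mul_le_mul_of_nonneg_right h1 (abs_nonneg _)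
      _ ≤ _ := by rw [one_mul]; exact h y
  have := Integrable.add hf hi
  refine this.congr (Eventually.of_forall fun y => ?_)
  simp only [Pi.add_apply]; ring

lemma Hom.cv_close (hn : 3 ≤ n) {m : ℝ} (hm : 1 ≤ m) (hm2 : m ≤ 2) (hK : Hom (m - n) K) :
    ∃ C : ℝ, 0 ≤ C ∧ ∀ (f g : Euc n → ℝ) (ε : ℝ), Continuous f → Continuous g → WI f → WI g →
      0 ≤ ε → (∀ y, |f y - g y| ≤ ε * jap y ^ (-((n : ℝ) + 1))) →
      ∀ x, |cv K f x - cv K g x| ≤ C * ε := by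
  have hn3 : (3 : ℝ) ≤ n := by exact_mod_cast hn
  obtain ⟨C, hC, hb⟩ := hK.abs_cv_le (by omega)
  obtain ⟨D, hD, hr⟩ := riesz_jap (n := n) (l := n - m) (s := n - 1 / 2) (by omega) (by linarith)
    (by linarith) (by linarith) (by linarith)
  refine ⟨C * D, by positivity, fun f g ε hf hg hwf hwg hε h x => ?_⟩
  have e : cv K f x - cv K g x = cv K (fun y => f y - g y) x := by
    have i1 := hK.integrable hn (by linarith) (by linarith) hf hwf x
    have i2 := hK.integrable hn (by linarith) (by linarith) hg hwg x
    rw [cv_eq, cv_eq, cv_eq, ← integral_sub i1 i2]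
    congr 1; funext z; ring
  have hexp : m - (n : ℝ) = -((n : ℝ) - m) := by ring
  have hF : ∀ y : Euc n, |ε * jap y ^ (-((n : ℝ) - 1 / 2))| = ε * jap y ^ (-((n : ℝ) - 1 / 2)) :=
    fun y => abs_of_nonneg (mul_nonneg hε (jap_rpow_pos y _).le)
  have e2 : ∀ y : Euc n, ‖x - y‖ ^ (m - (n : ℝ)) * |ε * jap y ^ (-((n : ℝ) - 1 / 2))|
      = ε * (‖x - y‖ ^ (-((n : ℝ) - m)) * jap y ^ (-((n : ℝ) - 1 / 2))) := fun y => by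
    rw [hF, hexp]; ring
  have := hb (fun y => f y - g y) (fun y => ε * jap y ^ (-((n : ℝ) - 1 / 2))) x (fun y => by
    rw [hF]
    exact (h y).trans (mul_le_mul_of_nonneg_left (jap_rpow_mono y (by linarith)) hε)) (by
    simp_rw [e2]; exact (hr x).1.const_mul ε)
  rw [e]
  refine this.trans ?_
  simp_rw [e2]
  rw [integral_const_mul]
  have h3 := (hr x).2
  have h4 : jap x ^ ((n : ℝ) - (n - m) - (n - 1 / 2)) ≤ 1 := by
    have := jap_rpow_mono x (s := (n : ℝ) - (n - m) - (n - 1 / 2)) (t := 0) (by linarith)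
    simpa using this
  have h5 : ∫ y, ‖x - y‖ ^ (-((n : ℝ) - m)) * jap y ^ (-((n : ℝ) - 1 / 2)) ≤ D :=
    h3.trans (mul_le_of_le_one_right hD h4)
  calc _ ≤ C * (ε * D) := by gcongr
    _ = _ := by ring

lemma exists_smooth_close (hf : Continuous f) {ε : ℝ} (hε : 0 < ε) :
    ∃ g : Euc n → ℝ, ContDiff ℝ (⊤ : ℕ∞) g ∧
      ∀ y, |g y - f y| ≤ ε * jap y ^ (-((n : ℝ) + 1)) := by
  obtain ⟨g, hg, h, _⟩ := hf.exists_contDiff_approx ⊤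
    (ε := fun y => ε * jap y ^ (-((n : ℝ) + 1))) ((jap_rpow_continuous _).const_mul ε)
    (fun y => mul_pos hε (jap_rpow_pos y _))
  exact ⟨g, hg, fun y => (h y).le⟩

/-- The first derivatives of a potential of order two of a merely continuous density. -/
lemma Hom.hasFDerivAt_cv (hn : 3 ≤ n) (hK : Hom (2 - (n : ℝ)) K) (hf : Continuous f) (hw : WI f)
    (x : Euc n) : HasFDerivAt (cv K f)
      (∑ i, cv (_root_.pd i K) f x • (EuclideanSpace.proj i : Euc n →L[ℝ] ℝ)) x := by
  have hpos : ∀ k : ℕ, (0 : ℝ) < 1 / ((k : ℝ) + 1) := fun k => by positivity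
  have hlim0 := tendsto_one_div_add_atTop_nhds_zero_nat (𝕜 := ℝ)
  choose g hg hgf using fun k : ℕ => exists_smooth_close hf (hpos k)
  have hgw : ∀ k, WI (g k) := fun k => hw.of_close (hg k).continuous (hgf k) (by omega)
  have hK' : ∀ i, Hom (1 - (n : ℝ)) (_root_.pd i K) := fun i => by
    convert hK.pd i using 1; ring
  obtain ⟨C, hC, hCb⟩ := hK.cv_close hn (by norm_num) le_rfl
  choose D hD hDb using fun i => (hK' i).cv_close hn le_rfl (by norm_num)
  refine hasFDerivAt_of_tendstoUniformly (l := atTop) (f := fun k => cv K (g k))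
    (f' := fun k x => ∑ i, cv (_root_.pd i K) (g k) x • (EuclideanSpace.proj i : Euc n →L[ℝ] ℝ))
    (g' := fun x => ∑ i, cv (_root_.pd i K) f x • (EuclideanSpace.proj i : Euc n →L[ℝ] ℝ))
    ?_ (fun k x => ?_) (fun x => ?_) x
  · rw [Metric.tendstoUniformly_iff]
    intro ε hε
    have hl : Tendsto (fun k : ℕ => (∑ i, D i) * (1 / ((k : ℝ) + 1))) atTop (𝓝 0) := by
      simpa using hlim0.const_mul (∑ i, D i)
    filter_upwards [hl.eventually (gt_mem_nhds hε)] with k hk y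
    refine lt_of_le_of_lt ?_ hk
    rw [dist_eq_norm, ← Finset.sum_sub_distrib, Finset.sum_mul]
    refine (norm_sum_le _ _).trans (Finset.sum_le_sum fun i _ => ?_)
    rw [← sub_smul, norm_smul, Real.norm_eq_abs, abs_sub_comm]
    have hpr : ‖(EuclideanSpace.proj i : Euc n →L[ℝ] ℝ)‖ ≤ 1 :=
      ContinuousLinearMap.opNorm_le_bound _ zero_le_one fun v => by
        rw [one_mul]; exact abs_coord_le v i
    calc _ ≤ (D i * (1 / ((k : ℝ) + 1))) * 1 := mul_le_mul
          (hDb i _ _ _ (hg k).continuous hf (hgw k) hw (hpos k).le (hgf k) y) hpr (norm_nonneg _)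
          (mul_nonneg (hD i) (hpos k).le)
      _ = _ := mul_one _
  · have hd := hK.differentiable_cv hn (by linarith) le_rfl (hgw k) ((hg k).of_le (by norm_cast))
    have e : (∑ i, cv (_root_.pd i K) (g k) x • (EuclideanSpace.proj i : Euc n →L[ℝ] ℝ))
        = fderiv ℝ (cv K (g k)) x := by
     refine ContinuousLinearMap.ext fun v => ?_
     rw [fderiv_apply_eq_sum_pd]
     simp only [sum_apply, smul_apply, smul_eq_mul]
     refine Finset.sum_congr rfl fun i _ => ?_
     rw [hK.pd_cv hn (by linarith) le_rfl (hgw k) ((hg k).of_le (by norm_cast)), mul_comm]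
     rfl
    rw [e]
    exact (hd x).hasFDerivAt
  · rw [tendsto_iff_dist_tendsto_zero]
    refine squeeze_zero (fun _ => dist_nonneg) (fun k => ?_)
      (by simpa only [mul_zero] using hlim0.const_mul C)
    exact hCb _ _ _ (hg k).continuous hf (hgw k) hw (hpos k).le (hgf k) x

lemma Hom.pd_cv' (hn : 3 ≤ n) (hK : Hom (2 - (n : ℝ)) K) (hf : Continuous f) (hw : WI f)
    (i : Fin n) : _root_.pd i (cv K f) = cv (_root_.pd i K) f := by
  funext x
  rw [pd_eq_of_hasFDerivAt i (hK.hasFDerivAt_cv hn hf hw x)]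
  simp

/-- Potentials of order two gain one derivative. -/
lemma Hom.contDiff_cv_succ (hn : 3 ≤ n) (hK : Hom (2 - (n : ℝ)) K) (hw : WI f) {m : ℕ}
    (hf : ContDiff ℝ m f) : ContDiff ℝ (m + 1) (cv K f) := by
  refine contDiff_succ_of_pd
    (fun x => (hK.hasFDerivAt_cv hn hf.continuous hw x).differentiableAt) fun i => ?_
  rw [hK.pd_cv' hn hf.continuous hw]
  exact (hK.pd i).contDiff_cv hn (by linarith) (by linarith) hw hf

end Potentials

/-! ### A weighted Morrey inequality -/

section Morrey

variable {n : ℕ} {p δ : ℝ} {g v : Euc n → ℝ}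

/-- A test function is recovered from its gradient by convolution with `∇Γ`. -/
lemma repr_grad (hn : 3 ≤ n) (hv : ContDiff ℝ (⊤ : ℕ∞) v) (hc : HasCompactSupport v) (x : Euc n) :
    v x = ∑ i, cv (pd i (gam n)) (pd i v) x := by
  have hn3 : (3 : ℝ) ≤ n := by exact_mod_cast hn
  have hw : ∀ {u : Euc n → ℝ}, Continuous u → HasCompactSupport u → WI u := fun hu hcu =>
    ((jap_rpow_continuous _).mul hu).integrable_of_hasCompactSupport hcu.mul_left
  have hv1 : ContDiff ℝ 1 v := hv.of_le (by norm_cast)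
  have hpv : ∀ i, ContDiff ℝ (⊤ : ℕ∞) (pd i v) := fun i => ContDiff.pd_top hv i
  have e1 : ∀ i, pd i (cv (gam n) v) = cv (gam n) (pd i v) := by
    intro i
    rw [gam_hom.pd_cv hn (by linarith) le_rfl (hw hv.continuous hc) hv1]
    funext y
    rw [cv_eq, cv_eq]
    have hc' : HasCompactSupport fun z => v (y - z) := by
      have : (fun z => v (y - z)) = v ∘ (Homeomorph.subLeft y) := rfl
      rw [this]
      exact hc.comp_homeomorph _
    rw [gam_hom.ibp (by omega) (by linarith) (reflect_contDiff hv1 y) hc' i,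
      pd_reflect i (hv1.differentiable (by norm_num)) y, ← integral_neg]
    congr 1; funext z; ring
  have h := lap_cv_gam hn (hw hv.continuous hc) hv x
  rw [← h, lap]
  refine Finset.sum_congr rfl fun i _ => ?_
  rw [e1, gam_hom.pd_cv hn (by linarith) le_rfl (hw (hpv i).continuous (hc.pdD i))
    ((hpv i).of_le (by norm_cast))]

lemma abs_pd_cut_jap (n : ℕ) : ∃ C : ℝ, 0 < C ∧ ∀ R : ℝ, 1 ≤ R → ∀ k (z : Euc n),
    |pd k (cut R) z| ≤ C * jap z ^ (-1 : ℝ) := by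
  obtain ⟨C, hC, h⟩ := abs_pd_cut_le n
  refine ⟨C * 2, by positivity, fun R hR k z => ?_⟩
  have hj := jap_pos z
  by_cases hz : ‖z‖ < R
  · rw [(pd_congr_nhds k (cut_eventually_one hz)).eq_of_nhds, pd_const, abs_zero]
    exact mul_nonneg (by positivity) (jap_rpow_pos z _).le
  · push Not at hz
    have hz0 : 0 < ‖z‖ := by linarith
    refine (h R (by linarith) k z (norm_pos_iff.1 hz0)).trans ?_
    rw [mul_assoc, Real.rpow_neg_one]
    refine mul_le_mul_of_nonneg_left ?_ hC.le
    rw [← div_eq_mul_inv, inv_eq_one_div, div_le_div_iff₀ hz0 hj]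
    have := jap_le z
    linarith

lemma morrey (hn : 3 ≤ n) {β : ℝ} (hp : (n : ℝ) < p) (h1 : 1 - (n : ℝ) < β) (h2 : β < 0)
    (hg : ContDiff ℝ (⊤ : ℕ∞) g) (hg0 : MW p (-β - n / p) g)
    (hg1 : ∀ i, MW p (1 - β - n / p) (pd i g)) :
    ∃ C : ℝ, 0 ≤ C ∧ ∀ x, |g x| ≤ C * jap x ^ β := by
  have hn3 : (3 : ℝ) ≤ n := by exact_mod_cast hn
  have hn0 : 0 < n := by omega
  obtain ⟨A, hA, hcut⟩ := abs_pd_cut_jap n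
  set F : Fin n → Euc n → ℝ := fun i y => |pd i g y| + |A * (jap y ^ (-1 : ℝ) * g y)| with hF
  have hFW : ∀ i, MW p (1 - β - n / p) (F i) := fun i => by
    refine (hg1 i).abs.add (MW.abs (MW.const_mul ((MW.jap_mul (-1)).2 ?_) A))
    convert hg0 using 1; ring
  choose C hC hr using fun i => riesz_bound (p := p) (f := F i) (m := 1) (β := β) hn0 le_rfl
    (by linarith) hp (by linarith) h2 (hFW i)
  have hK : ∀ i, Hom (1 - (n : ℝ)) (pd i (gam n)) := fun i => by
    convert gam_hom.pd i using 1; ring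
  choose D hD hb using fun i => (hK i).abs_cv_le hn0
  refine ⟨∑ i, D i * C i, Finset.sum_nonneg fun i _ => mul_nonneg (hD i).le (hC i), fun x => ?_⟩
  set R := ‖x‖ + 1
  have hR : 1 ≤ R := by have := norm_nonneg x; simp only [R]; linarith
  have hR0 : 0 < R := by linarith
  have hs : ContDiff ℝ (⊤ : ℕ∞) fun y => cut R y * g y := (cut_contDiff R).mul hg
  have hr0 := repr_grad hn hs (cut_hasCompactSupport hR0).mul_right x
  rw [cut_eq_one hR0 (by simp only [R]; linarith), one_mul] at hr0
  rw [hr0, Finset.sum_mul]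
  refine (Finset.abs_sum_le_sum_abs _ _).trans (Finset.sum_le_sum fun i _ => ?_)
  refine (hb i _ (F i) x (fun y => ?_) (hr i x).1).trans ?_
  · rw [pd_mul i (cut_differentiable R y) (hg.differentiable (by simp) y)]
    simp only [hF]
    rw [abs_of_nonneg (by positivity : 0 ≤ |pd i g y| + |A * (jap y ^ (-1 : ℝ) * g y)|), add_comm]
    refine (abs_add_le _ _).trans (add_le_add ?_ ?_)
    · rw [abs_mul, abs_of_nonneg (cut_nonneg R y)]
      exact mul_le_of_le_one_left (abs_nonneg _) (cut_le_one R y)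
    · rw [← mul_assoc, abs_mul, abs_mul (A * _)]
      refine mul_le_mul_of_nonneg_right ?_ (abs_nonneg _)
      exact (hcut R hR i y).trans (le_abs_self _)
  · rw [mul_assoc]
    exact mul_le_mul_of_nonneg_left (hr i x).2 (hD i).le

end Morrey

/-! ### Weighted norms and partial derivatives -/

section Norms

variable {n : ℕ} {p δ : ℝ}

lemma MW_of_lintegral {F : Type*} [NormedAddCommGroup F] {s : ℝ} {f : Euc n → ℝ} {G : Euc n → F}
    (hp : 0 < p) (hf : Continuous f) (hfG : ∀ x, |f x| ≤ ‖G x‖)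
    (h : (∫⁻ x, ENNReal.ofReal ((jap x ^ s * ‖G x‖) ^ p)) ^ (1 / p) < ⊤) : MW p s f := by
  rw [ENNReal.rpow_lt_top_iff_of_pos (by positivity)] at h
  rw [MW_iff_lintegral hp hf.aestronglyMeasurable]
  refine lt_of_le_of_lt (lintegral_mono fun x => ENNReal.ofReal_le_ofReal ?_) h
  have := (jap_rpow_pos x s).le
  refine Real.rpow_le_rpow (mul_nonneg this (abs_nonneg _)) ?_ hp.le
  exact mul_le_mul_of_nonneg_left (hfG x) this

lemma lintegral_of_MW {F : Type*} [NormedAddCommGroup F] {s : ℝ} {f : Euc n → ℝ} {G : Euc n → F}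
    (hp : 0 < p) (hf : MW p s f) (hfG : ∀ x, ‖G x‖ ≤ |f x|) :
    (∫⁻ x, ENNReal.ofReal ((jap x ^ s * ‖G x‖) ^ p)) ^ (1 / p) < ⊤ := by
  rw [ENNReal.rpow_lt_top_iff_of_pos (by positivity)]
  have hm : AEStronglyMeasurable f volume := by
    have h1 : AEStronglyMeasurable (fun x => jap x ^ (-s) * (jap x ^ s * f x)) volume :=
      (jap_rpow_continuous _).aestronglyMeasurable.mul hf.1
    refine h1.congr (Eventually.of_forall fun x => ?_)
    simp only
    rw [← mul_assoc, ← jap_rpow_add]; simp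
  have h := (MW_iff_lintegral hp hm).1 hf
  refine lt_of_le_of_lt (lintegral_mono fun x => ENNReal.ofReal_le_ofReal ?_) h
  have := (jap_rpow_pos x s).le
  refine Real.rpow_le_rpow (mul_nonneg this (norm_nonneg _)) ?_ hp.le
  exact mul_le_mul_of_nonneg_left (hfG x) this

lemma LpW.MW {F : Type*} [NormedAddCommGroup F] {f : Euc n → ℝ} {G : Euc n → F}
    (hp : 0 < p) (hf : Continuous f) (hfG : ∀ x, |f x| ≤ ‖G x‖)
    (h : LpW p δ G < ⊤) : MW p (-δ - n / p) f := MW_of_lintegral hp hf hfG h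

lemma SobW.MW0 {k : ℕ} {f : Euc n → ℝ} (hp : 0 < p) (hf : ContDiff ℝ (⊤ : ℕ∞) f)
    (h : SobW k p δ f < ⊤) : MW p (-δ - n / p) f := by
  have := (ENNReal.sum_lt_top.1 h) 0 (by simp)
  simp only [Nat.cast_zero, add_zero, norm_iteratedFDeriv_zero] at this
  exact MW_of_lintegral hp hf.continuous (fun x => le_rfl) this

lemma SobW.MW1 {k : ℕ} (hk : 1 ≤ k) {f : Euc n → ℝ} (hp : 0 < p) (hf : ContDiff ℝ (⊤ : ℕ∞) f)
    (h : SobW k p δ f < ⊤) (i : Fin n) : MW p (1 - δ - n / p) (pd i f) := by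
  have := (ENNReal.sum_lt_top.1 h) 1 (by simp; omega)
  simp only [Nat.cast_one, norm_iteratedFDeriv_one] at this
  have h2 := MW_of_lintegral hp (ContDiff.pd_top hf i).continuous (fun x => abs_pd_le i f x) this
  convert h2 using 1; ring

lemma norm_iteratedFDeriv_two_le {f : Euc n → ℝ} (hf : ContDiff ℝ (⊤ : ℕ∞) f) (x : Euc n) :
    ‖iteratedFDeriv ℝ 2 f x‖ ≤ ∑ i, ∑ j, |pd j (pd i f) x| := by
  have hd : DifferentiableAt ℝ (fderiv ℝ f) x :=
    ((hf.of_le (by norm_cast) : ContDiff ℝ 2 f).fderiv_right (m := 1) (by norm_num)).differentiable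
      (by norm_num) x
  refine ContinuousMultilinearMap.opNorm_le_bound (by positivity) fun m => ?_
  rw [iteratedFDeriv_two_apply, Fin.prod_univ_two]
  have e : fderiv ℝ (fderiv ℝ f) x (m 0) (m 1)
      = fderiv ℝ (fun z => fderiv ℝ f z (m 1)) x (m 0) := by
    rw [fderiv_clm_apply hd (differentiableAt_const _)]
    simp
  have e2 : (fun z => fderiv ℝ f z (m 1)) = fun z => ∑ i, (m 1) i * pd i f z :=
    funext fun z => fderiv_apply_eq_sum_pd f z (m 1)
  have hpd : ∀ i, DifferentiableAt ℝ (pd i f) x := fun i =>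
    (ContDiff.pd_top hf i).differentiable (by simp) x
  have e3 : ∀ j, pd j (fun z => ∑ i, (m 1) i * pd i f z) x = ∑ i, (m 1) i * pd j (pd i f) x := by
    intro j
    rw [pd_sum _ j fun i _ => (hpd i).const_mul _]
    exact Finset.sum_congr rfl fun i _ => pd_const_mul j _ (hpd i)
  rw [e, e2, fderiv_apply_eq_sum_pd]
  simp_rw [e3]
  have e4 : (∑ i, ∑ j, |pd j (pd i f) x|) * (‖m 0‖ * ‖m 1‖)
      = ∑ j, ∑ i, ‖m 0‖ * (‖m 1‖ * |pd j (pd i f) x|) := by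
    rw [Finset.sum_comm, Finset.sum_mul]
    refine Finset.sum_congr rfl fun j _ => ?_
    rw [Finset.sum_mul]
    exact Finset.sum_congr rfl fun i _ => by ring
  rw [e4, Real.norm_eq_abs]
  refine (Finset.abs_sum_le_sum_abs _ _).trans (Finset.sum_le_sum fun j _ => ?_)
  rw [Finset.mul_sum]
  refine (Finset.abs_sum_le_sum_abs _ _).trans (Finset.sum_le_sum fun i _ => ?_)
  rw [abs_mul, abs_mul]
  have h1 := abs_coord_le (m 0) j
  have h2 := abs_coord_le (m 1) i
  gcongr

lemma norm_iteratedFDeriv_le_sum {W : Euc n → Euc n} (hW : ContDiff ℝ (⊤ : ℕ∞) W) (k : ℕ)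
    (x : Euc n) : ‖iteratedFDeriv ℝ k W x‖ ≤ ∑ l, ‖iteratedFDeriv ℝ k (fun y => W y l) x‖ := by
  refine ContinuousMultilinearMap.opNorm_le_bound (by positivity) fun m => ?_
  have e : ∀ l, (iteratedFDeriv ℝ k W x m) l = iteratedFDeriv ℝ k (fun y => W y l) x m := by
    intro l
    have := ContinuousLinearMap.iteratedFDeriv_comp_left (x := x) (f := W) (n := (⊤ : ℕ∞))
      (EuclideanSpace.proj l : Euc n →L[ℝ] ℝ) hW.contDiffAt (i := k)
      (by exact_mod_cast le_top)
    have e2 : (fun y => W y l) = (EuclideanSpace.proj l : Euc n →L[ℝ] ℝ) ∘ W := rfl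
    rw [e2, this]
    rfl
  have h1 : ‖iteratedFDeriv ℝ k W x m‖ ≤ ∑ l, |(iteratedFDeriv ℝ k W x m) l| := by
    conv_lhs => rw [euc_eq_sum (iteratedFDeriv ℝ k W x m)]
    refine (norm_sum_le _ _).trans (Finset.sum_le_sum fun l _ => ?_)
    rw [norm_smul, norm_eb, mul_one, Real.norm_eq_abs]
  refine h1.trans ?_
  rw [Finset.sum_mul]
  refine Finset.sum_le_sum fun l _ => ?_
  rw [e]
  exact (iteratedFDeriv ℝ k (fun y => W y l) x).le_opNorm m

/-- A majorant of the `k`-th derivative in terms of partial derivatives. -/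
def dmaj (k : ℕ) (f : Euc n → ℝ) (x : Euc n) : ℝ :=
  match k with
  | 0 => |f x|
  | 1 => ∑ i, |pd i f x|
  | _ => ∑ i, ∑ j, |pd j (pd i f) x|

lemma W2.dmaj {f : Euc n → ℝ} (h : W2 p δ f) {k : ℕ} (hk : k < 3) :
    MW p (-δ - n / p + k) (dmaj k f) := by
  interval_cases k
  · unfold _root_.dmaj; simp only [Nat.cast_zero, add_zero]; exact h.1.abs
  · refine MW.sum _ fun i _ => MW.abs ?_
    convert h.2.1 i using 1; push_cast; ring
  · refine MW.sum _ fun i _ => MW.sum _ fun j _ => MW.abs ?_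
    convert h.2.2 i j using 1; push_cast; ring

lemma norm_le_dmaj {f : Euc n → ℝ} (hf : ContDiff ℝ (⊤ : ℕ∞) f) {k : ℕ} (hk : k < 3) (x : Euc n) :
    ‖iteratedFDeriv ℝ k f x‖ ≤ dmaj k f x := by
  interval_cases k
  · rw [norm_iteratedFDeriv_zero]; exact le_rfl
  · rw [norm_iteratedFDeriv_one]; exact norm_fderiv_le_sum_pd f x
  · exact norm_iteratedFDeriv_two_le hf x

lemma W2.sobW {f : Euc n → ℝ} (hp : 0 < p) (hf : ContDiff ℝ (⊤ : ℕ∞) f) (h : W2 p δ f) :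
    SobW 2 p δ f < ⊤ := by
  refine ENNReal.sum_lt_top.2 fun k hk => ?_
  have hk' : k < 3 := by simpa using hk
  exact lintegral_of_MW hp (h.dmaj hk') fun x => (norm_le_dmaj hf hk' x).trans (le_abs_self _)

lemma W2.sobW_vec {W : Euc n → Euc n} (hp : 0 < p) (hW : ContDiff ℝ (⊤ : ℕ∞) W)
    (h : ∀ l, W2 p δ fun x => W x l) : SobW 2 p δ W < ⊤ := by
  have hc : ∀ l, ContDiff ℝ (⊤ : ℕ∞) fun x => W x l := fun l =>
    (EuclideanSpace.proj l : Euc n →L[ℝ] ℝ).contDiff.comp hW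
  refine ENNReal.sum_lt_top.2 fun k hk => ?_
  have hk' : k < 3 := by simpa using hk
  refine lintegral_of_MW hp (MW.sum Finset.univ fun l _ => (h l).dmaj hk') fun x => ?_
  refine (norm_iteratedFDeriv_le_sum hW k x).trans (le_trans ?_ (le_abs_self _))
  exact Finset.sum_le_sum fun l _ => norm_le_dmaj (hc l) hk' x

end Norms

/-! ### The constraint operators on continuous functions -/

section Operators

variable {n : ℕ}

/-- The density `((n-1)/n) u^N ∂ᵢτ + Jᵢ` of the momentum equation. -/
def mdens (τ : Euc n → ℝ) (J : Euc n → Euc n) (u : Euc n → ℝ) (i : Fin n) (x : Euc n) : ℝ :=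
  (((n : ℝ) - 1) / n) * u x ^ Nc n * pd i τ x + J x i

/-- The decaying solution of the momentum equation with conformal factor `u`. -/
def mW (τ : Euc n → ℝ) (J : Euc n → Euc n) (u : Euc n → ℝ) : Euc n → Euc n := ms (mdens τ J u)

/-- The zeroth order part of the Lichnerowicz equation, written as `Δu = F`. -/
def hF (τ : Euc n → ℝ) (σ : Euc n → Matrix (Fin n) (Fin n) ℝ) (ρ : Euc n → ℝ) (u : Euc n → ℝ)
    (W : Euc n → Euc n) (x : Euc n) : ℝ :=
  - (cc n * frob (σ x + confKill W x) ^ 2 * u x ^ (-(Nc n) - 1))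
    + bc n * τ x ^ 2 * u x ^ (Nc n - 1) - cc n * ρ x * u x ^ (-(Nc n) / 2)

lemma HamExpr_eq (τ : Euc n → ℝ) (σ : Euc n → Matrix (Fin n) (Fin n) ℝ) (ρ : Euc n → ℝ)
    (u : Euc n → ℝ) (W : Euc n → Euc n) (x : Euc n) :
    HamExpr τ σ ρ u W x = lap u x - hF τ σ ρ u W x := by
  unfold HamExpr hF; ring

/-- The analytic consequences of the hypotheses on the data, together with positive bounds
`m ≤ u ≤ M` for the conformal factors under consideration. -/
structure Dat (n : ℕ) (p δ : ℝ) (τ : Euc n → ℝ) (σ : Euc n → Matrix (Fin n) (Fin n) ℝ)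
    (ρ : Euc n → ℝ) (J : Euc n → Euc n) (m M : ℝ) : Prop where
  hn : 3 ≤ n
  hp : (n : ℝ) < p
  h1 : 2 - (n : ℝ) < δ
  h2 : δ < 0
  τs : ContDiff ℝ (⊤ : ℕ∞) τ
  σs : SmoothMat σ
  ρs : ContDiff ℝ (⊤ : ℕ∞) ρ
  Js : ∀ i, ContDiff ℝ (⊤ : ℕ∞) fun x => J x i
  τd : ∀ i, MW p (2 - δ - n / p) (pd i τ)
  Jd : ∀ i, MW p (2 - δ - n / p) fun x => J x i
  ρd : MW p (2 - δ - n / p) ρ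
  τb : ∃ C : ℝ, 0 ≤ C ∧ ∀ x, |τ x| ≤ C * jap x ^ (δ - 1)
  σb : ∃ C : ℝ, 0 ≤ C ∧ ∀ x, frob (σ x) ≤ C * jap x ^ (δ - 1)
  hm : 0 < m
  hmM : m ≤ M

/-- Continuous functions with values in `[m, M]`. -/
def Adm (m M : ℝ) (u : Euc n → ℝ) : Prop := Continuous u ∧ ∀ x, m ≤ u x ∧ u x ≤ M

lemma rpow_le_ends {m M t : ℝ} (s : ℝ) (hm : 0 < m) (h1 : m ≤ t) (h2 : t ≤ M) :
    t ^ s ≤ m ^ s + M ^ s := by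
  have h3 : 0 < t := by linarith
  have h4 : 0 < M := by linarith
  rcases le_or_gt 0 s with hs | hs
  · have := Real.rpow_le_rpow h3.le h2 hs
    have := Real.rpow_nonneg hm.le s
    linarith
  · have := Real.rpow_le_rpow_of_nonpos hm h1 hs.le
    have := Real.rpow_nonneg h4.le s
    linarith

lemma frob_sq (A : Matrix (Fin n) (Fin n) ℝ) : frob A ^ 2 = ∑ i, ∑ j, A i j ^ 2 :=
  Real.sq_sqrt (Finset.sum_nonneg fun _ _ => Finset.sum_nonneg fun _ _ => sq_nonneg _)

lemma frob_add_sq_le (A B : Matrix (Fin n) (Fin n) ℝ) :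
    frob (A + B) ^ 2 ≤ 2 * frob A ^ 2 + 2 * frob B ^ 2 := by
  rw [frob_sq, frob_sq, frob_sq, Finset.mul_sum, Finset.mul_sum, ← Finset.sum_add_distrib]
  refine Finset.sum_le_sum fun i _ => ?_
  rw [Finset.mul_sum, Finset.mul_sum, ← Finset.sum_add_distrib]
  refine Finset.sum_le_sum fun j _ => ?_
  rw [Matrix.add_apply]
  nlinarith [sq_nonneg (A i j - B i j)]

lemma Adm.pos {m M : ℝ} {u : Euc n → ℝ} (hu : Adm m M u) (hm : 0 < m) (x : Euc n) : 0 < u x :=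
  lt_of_lt_of_le hm (hu.2 x).1

lemma Adm.rpow_cont {m M : ℝ} {u : Euc n → ℝ} (hu : Adm m M u) (hm : 0 < m) (s : ℝ) :
    Continuous fun x => u x ^ s :=
  hu.1.rpow_const fun x => Or.inl (hu.pos hm x).ne'

variable {p δ m M : ℝ} {τ ρ : Euc n → ℝ} {σ : Euc n → Matrix (Fin n) (Fin n) ℝ}
  {J : Euc n → Euc n} {u : Euc n → ℝ}

/-- A majorant of the densities `mdens` valid for all admissible `u`. -/
def mbar (τ : Euc n → ℝ) (J : Euc n → Euc n) (m M : ℝ) (i : Fin n) (x : Euc n) : ℝ :=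
  (((n : ℝ) - 1) / n) * (m ^ Nc n + M ^ Nc n) * |pd i τ x| + |J x i|

namespace Dat

lemma mdens_le (D : Dat n p δ τ σ ρ J m M) (hu : Adm m M u) (i : Fin n) (x : Euc n) :
    |mdens τ J u i x| ≤ |mbar τ J m M i x| := by
  have hn3 : (3 : ℝ) ≤ n := by exact_mod_cast D.hn
  have h0 : 0 ≤ ((n : ℝ) - 1) / n := by apply div_nonneg <;> linarith
  refine le_trans ?_ (le_abs_self _)
  unfold mdens mbar
  refine (abs_add_le _ _).trans (add_le_add ?_ le_rfl)
  rw [abs_mul, abs_mul, abs_of_nonneg h0, abs_of_nonneg (Real.rpow_nonneg (hu.pos D.hm x).le _)]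
  have := rpow_le_ends (Nc n) D.hm (hu.2 x).1 (hu.2 x).2
  gcongr

lemma mbar_MW (D : Dat n p δ τ σ ρ J m M) (i : Fin n) : MW p (2 - δ - n / p) (mbar τ J m M i) :=
  ((D.τd i).abs.const_mul _).add (D.Jd i).abs

lemma mdens_contDiff (D : Dat n p δ τ σ ρ J m M) (hu : Adm m M u) (i : Fin n) {k : WithTop ℕ∞}
    (hk : k ≤ (⊤ : ℕ∞)) (huk : ContDiff ℝ k u) : ContDiff ℝ k (mdens τ J u i) :=
  ((contDiff_const.mul (huk.rpow_const_of_ne fun x => (hu.pos D.hm x).ne')).mul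
    ((ContDiff.pd_top D.τs i).of_le hk)).add ((D.Js i).of_le hk)

lemma mdens_cont (D : Dat n p δ τ σ ρ J m M) (hu : Adm m M u) (i : Fin n) :
    Continuous (mdens τ J u i) :=
  (D.mdens_contDiff hu i (k := 0) (by simp) (contDiff_zero.2 hu.1)).continuous

lemma mdens_MW (D : Dat n p δ τ σ ρ J m M) (hu : Adm m M u) (i : Fin n) :
    MW p (2 - δ - n / p) (mdens τ J u i) :=
  (D.mbar_MW i).mono (D.mdens_cont hu i).aestronglyMeasurable (C := 1) fun x => by
    rw [one_mul]; exact D.mdens_le hu i x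

lemma mdens_WI (D : Dat n p δ τ σ ρ J m M) (hu : Adm m M u) (i : Fin n) : WI (mdens τ J u i) :=
  MW.WI (by have := D.hn; omega) D.hp D.h2 (D.mdens_MW hu i)

lemma pd_mW (D : Dat n p δ τ σ ρ J m M) (hu : Adm m M u) (k l : Fin n) (x : Euc n) :
    pd k (fun y => mW τ J u y l) x = ∑ i, cv (pd k (msK i l)) (mdens τ J u i) x := by
  have e : (fun y => mW τ J u y l) = fun y => ∑ i, cv (msK i l) (mdens τ J u i) y := rfl
  rw [e, pd_sum _ k fun i _ => ((msK_hom i l).hasFDerivAt_cv D.hn (D.mdens_cont hu i)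
    (D.mdens_WI hu i) x).differentiableAt]
  refine Finset.sum_congr rfl fun i _ => ?_
  rw [(msK_hom i l).pd_cv' D.hn (D.mdens_cont hu i) (D.mdens_WI hu i)]

lemma dK_hom (k i l : Fin n) : Hom (1 - (n : ℝ)) (pd k (msK i l)) := by
  convert (msK_hom i l).pd k using 1; ring

lemma pd_mW_bound (D : Dat n p δ τ σ ρ J m M) : ∃ C : ℝ, 0 ≤ C ∧ ∀ u, Adm m M u → ∀ k l x,
    |pd k (fun y => mW τ J u y l) x| ≤ C * jap x ^ (δ - 1) := by
  choose C hC hb using fun q : Fin n × Fin n × Fin n => (dK_hom q.1 q.2.1 q.2.2).cv_decay D.hn le_rfl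
    (by norm_num) D.hp D.h1 D.h2 (D.mbar_MW q.2.1)
  refine ⟨∑ q, C q, Finset.sum_nonneg fun q _ => hC q, fun u hu k l x => ?_⟩
  rw [D.pd_mW hu]
  have h2 : ∑ i, C (k, i, l) ≤ ∑ q, C q := by
    refine le_trans (b := ∑ q ∈ Finset.univ.image fun i => (k, i, l), C q) ?_
      (Finset.sum_le_sum_of_subset_of_nonneg (Finset.subset_univ _) fun q _ _ => hC q)
    rw [Finset.sum_image (fun a _ b _ h => by simpa using h)]
  refine le_trans ?_ (mul_le_mul_of_nonneg_right h2 (jap_rpow_pos x _).le)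
  rw [Finset.sum_mul]
  refine (Finset.abs_sum_le_sum_abs _ _).trans (Finset.sum_le_sum fun i _ => ?_)
  have h3 := hb (k, i, l) _ (D.mdens_le hu i) x
  rwa [show δ - 2 + 1 = δ - 1 by ring] at h3

lemma pd_mW_contDiff (D : Dat n p δ τ σ ρ J m M) (hu : Adm m M u) {j : ℕ} (hj : ContDiff ℝ j u)
    (k l : Fin n) : ContDiff ℝ j (pd k fun y => mW τ J u y l) := by
  have e : (pd k fun y => mW τ J u y l) = fun x => ∑ i, cv (pd k (msK i l)) (mdens τ J u i) x :=
    funext fun x => D.pd_mW hu k l x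
  have hn3 : (3 : ℝ) ≤ n := by exact_mod_cast D.hn
  rw [e]
  exact ContDiff.sum fun i _ => (dK_hom k i l).contDiff_cv D.hn (by linarith) (by linarith)
    (D.mdens_WI hu i) (D.mdens_contDiff hu i (by exact_mod_cast le_top) hj)

lemma confKill_contDiff (D : Dat n p δ τ σ ρ J m M) (hu : Adm m M u) {j : ℕ} (hj : ContDiff ℝ j u)
    (k l : Fin n) : ContDiff ℝ j fun x => confKill (mW τ J u) x k l := by
  unfold confKill divg
  simp only [Matrix.of_apply]
  exact ((D.pd_mW_contDiff hu hj k l).add (D.pd_mW_contDiff hu hj l k)).sub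
    ((contDiff_const.mul (ContDiff.sum fun i _ => D.pd_mW_contDiff hu hj i i)).mul contDiff_const)

lemma confKill_bound (D : Dat n p δ τ σ ρ J m M) : ∃ C : ℝ, 0 ≤ C ∧ ∀ u, Adm m M u → ∀ k l x,
    |confKill (mW τ J u) x k l| ≤ C * jap x ^ (δ - 1) := by
  obtain ⟨C, hC, hb⟩ := D.pd_mW_bound
  refine ⟨4 * C, by positivity, fun u hu k l x => ?_⟩
  have hn3 : (3 : ℝ) ≤ n := by exact_mod_cast D.hn
  have hj := jap_rpow_pos x (δ - 1)
  have hdiv : |divg (mW τ J u) x| ≤ n * (C * jap x ^ (δ - 1)) := by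
    refine (Finset.abs_sum_le_sum_abs _ _).trans ?_
    refine (Finset.sum_le_sum fun i _ => hb u hu i i x).trans ?_
    simp
  have h3 : |2 / (n : ℝ) * divg (mW τ J u) x * (if k = l then 1 else 0)|
      ≤ 2 * (C * jap x ^ (δ - 1)) := by
    have hif : |(if k = l then (1 : ℝ) else 0)| ≤ 1 := by split_ifs <;> simp
    rw [abs_mul, abs_mul, abs_of_nonneg (by positivity : 0 ≤ 2 / (n : ℝ))]
    calc _ ≤ 2 / (n : ℝ) * (n * (C * jap x ^ (δ - 1))) * 1 := by gcongr
      _ = _ := by field_simp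
  have h1 := hb u hu k l x
  have h2 := hb u hu l k x
  simp only [confKill, Matrix.of_apply]
  rw [abs_le] at *
  constructor <;> linarith [h1.1, h1.2, h2.1, h2.2, h3.1, h3.2]

lemma frob_sq_bound (D : Dat n p δ τ σ ρ J m M) : ∃ C : ℝ, 0 ≤ C ∧ ∀ u, Adm m M u → ∀ x,
    frob (σ x + confKill (mW τ J u) x) ^ 2 ≤ C * jap x ^ (2 * δ - 2) := by
  obtain ⟨A, hA, hσ⟩ := D.σb
  obtain ⟨B, hB, hb⟩ := D.confKill_bound
  refine ⟨2 * A ^ 2 + 2 * (n * (n * B ^ 2)), by positivity, fun u hu x => ?_⟩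
  refine (frob_add_sq_le _ _).trans ?_
  have ej : jap x ^ (2 * δ - 2) = (jap x ^ (δ - 1)) ^ 2 := by
    rw [sq, ← jap_rpow_add]; congr 1; ring
  have hj := jap_rpow_pos x (δ - 1)
  have h1 : frob (σ x) ^ 2 ≤ A ^ 2 * (jap x ^ (δ - 1)) ^ 2 := by
    rw [← mul_pow]
    exact pow_le_pow_left₀ (Real.sqrt_nonneg _) (hσ x) 2
  have h2 : frob (confKill (mW τ J u) x) ^ 2 ≤ n * (n * (B ^ 2 * (jap x ^ (δ - 1)) ^ 2)) := by
    rw [frob_sq]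
    have h3 : ∀ k l, confKill (mW τ J u) x k l ^ 2 ≤ B ^ 2 * (jap x ^ (δ - 1)) ^ 2 := fun k l => by
      rw [← mul_pow, ← sq_abs]
      exact pow_le_pow_left₀ (abs_nonneg _) (hb u hu k l x) 2
    refine (Finset.sum_le_sum fun k _ => Finset.sum_le_sum fun l _ => h3 k l).trans ?_
    simp
  rw [ej]
  nlinarith

lemma cc_nonneg (hn : 3 ≤ n) : 0 ≤ cc n := by
  have hn3 : (3 : ℝ) ≤ n := by exact_mod_cast hn
  unfold cc; apply div_nonneg <;> linarith

lemma bc_nonneg (hn : 3 ≤ n) : 0 ≤ bc n := by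
  have hn3 : (3 : ℝ) ≤ n := by exact_mod_cast hn
  unfold bc; apply div_nonneg <;> linarith

/-- The nonlinearity has a majorant in `L^p_{δ-2}` independent of the admissible functions. -/
lemma hF_bound (D : Dat n p δ τ σ ρ J m M) : ∃ F : Euc n → ℝ, MW p (2 - δ - n / p) F ∧
    ∀ u v, Adm m M u → Adm m M v → ∀ x, |hF τ σ ρ v (mW τ J u) x| ≤ |F x| := by
  obtain ⟨A, hA, ha⟩ := D.frob_sq_bound
  obtain ⟨B, hB, hb⟩ := D.τb
  have hc := cc_nonneg D.hn
  have hbc := bc_nonneg D.hn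
  have hn3 : (3 : ℝ) ≤ n := by exact_mod_cast D.hn
  have hp0 : 0 < p := by linarith [D.hp]
  set E : ℝ → ℝ := fun s => m ^ s + M ^ s with hE
  have hE0 : ∀ s, 0 ≤ E s := fun s => add_nonneg (Real.rpow_nonneg D.hm.le s)
    (Real.rpow_nonneg (D.hm.le.trans D.hmM) s)
  refine ⟨fun x => (cc n * A * E (-(Nc n) - 1) + bc n * B ^ 2 * E (Nc n - 1)) * jap x ^ (2 * δ - 2)
    + cc n * E (-(Nc n) / 2) * |ρ x|, ?_, fun u v hu hv x => ?_⟩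
  · refine MW.add (MW.const_mul ?_ _) (D.ρd.abs.const_mul _)
    refine MW_of_bound hp0 (jap_rpow_continuous _).aestronglyMeasurable (C := 1) (a := 2 * δ - 2)
      (fun x => by rw [one_mul, abs_of_pos (jap_rpow_pos x _)]) ?_
    have e : (2 - δ - n / p + (2 * δ - 2)) * p = δ * p - n := by field_simp; ring
    rw [e]
    have := mul_neg_of_neg_of_pos D.h2 hp0
    linarith
  · refine le_trans ?_ (le_abs_self _)
    have hv0 := hv.pos D.hm x
    have hv1 : ∀ s : ℝ, v x ^ s ≤ E s := fun s => rpow_le_ends s D.hm (hv.2 x).1 (hv.2 x).2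
    have hv2 : ∀ s : ℝ, 0 ≤ v x ^ s := fun s => Real.rpow_nonneg hv0.le s
    have hj := jap_rpow_pos x (2 * δ - 2)
    have ht : τ x ^ 2 ≤ B ^ 2 * jap x ^ (2 * δ - 2) := by
      have ej : jap x ^ (2 * δ - 2) = (jap x ^ (δ - 1)) ^ 2 := by
        rw [sq, ← jap_rpow_add]; congr 1; ring
      rw [ej, ← mul_pow, ← sq_abs]
      exact pow_le_pow_left₀ (abs_nonneg _) (hb x) 2
    have b1 : |cc n * frob (σ x + confKill (mW τ J u) x) ^ 2 * v x ^ (-(Nc n) - 1)|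
        ≤ cc n * (A * jap x ^ (2 * δ - 2)) * E (-(Nc n) - 1) := by
      rw [abs_of_nonneg (mul_nonneg (mul_nonneg hc (sq_nonneg _)) (hv2 _))]
      have := ha u hu x
      have := hv1 (-(Nc n) - 1)
      have := hE0 (-(Nc n) - 1)
      have := hv2 (-(Nc n) - 1)
      gcongr
    have b2 : |bc n * τ x ^ 2 * v x ^ (Nc n - 1)|
        ≤ bc n * (B ^ 2 * jap x ^ (2 * δ - 2)) * E (Nc n - 1) := by
      rw [abs_of_nonneg (mul_nonneg (mul_nonneg hbc (sq_nonneg _)) (hv2 _))]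
      have := hv1 (Nc n - 1)
      have := hv2 (Nc n - 1)
      gcongr
    have b3 : |cc n * ρ x * v x ^ (-(Nc n) / 2)| ≤ cc n * |ρ x| * E (-(Nc n) / 2) := by
      rw [abs_mul, abs_mul, abs_of_nonneg hc, abs_of_nonneg (hv2 _)]
      have := hv1 (-(Nc n) / 2)
      gcongr
    unfold hF
    rw [abs_le] at *
    constructor <;> nlinarith [b1.1, b1.2, b2.1, b2.2, b3.1, b3.2]

lemma hF_contDiff (D : Dat n p δ τ σ ρ J m M) {v : Euc n → ℝ} (hu : Adm m M u) (hv : Adm m M v)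
    {j : ℕ} (huj : ContDiff ℝ j u) (hvj : ContDiff ℝ j v) :
    ContDiff ℝ j (hF τ σ ρ v (mW τ J u)) := by
  have hr : ∀ s : ℝ, ContDiff ℝ j fun x => v x ^ s := fun s =>
    hvj.rpow_const_of_ne fun x => (hv.pos D.hm x).ne'
  have hk : (j : WithTop ℕ∞) ≤ (⊤ : ℕ∞) := by exact_mod_cast le_top
  have hfr : ContDiff ℝ j fun x => frob (σ x + confKill (mW τ J u) x) ^ 2 := by
    simp_rw [frob_sq, Matrix.add_apply]
    exact ContDiff.sum fun k _ => ContDiff.sum fun l _ =>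
      (((D.σs k l).of_le hk).add (D.confKill_contDiff hu huj k l)).pow 2
  unfold hF
  exact ((((contDiff_const.mul hfr).mul (hr _)).neg).add
    ((contDiff_const.mul ((D.τs.of_le hk).pow 2)).mul (hr _))).sub
    ((contDiff_const.mul (D.ρs.of_le hk)).mul (hr _))

lemma hF_cont (D : Dat n p δ τ σ ρ J m M) {v : Euc n → ℝ} (hu : Adm m M u) (hv : Adm m M v) :
    Continuous (hF τ σ ρ v (mW τ J u)) :=
  (D.hF_contDiff hu hv (j := 0) (contDiff_zero.2 hu.1) (contDiff_zero.2 hv.1)).continuous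

lemma hF_MW (D : Dat n p δ τ σ ρ J m M) {v : Euc n → ℝ} (hu : Adm m M u) (hv : Adm m M v) :
    MW p (2 - δ - n / p) (hF τ σ ρ v (mW τ J u)) := by
  obtain ⟨F, hF, hb⟩ := D.hF_bound
  exact hF.mono (D.hF_cont hu hv).aestronglyMeasurable (C := 1) fun x => by
    rw [one_mul]; exact hb u v hu hv x

lemma hF_WI (D : Dat n p δ τ σ ρ J m M) {v : Euc n → ℝ} (hu : Adm m M u) (hv : Adm m M v) :
    WI (hF τ σ ρ v (mW τ J u)) :=
  MW.WI (by have := D.hn; omega) D.hp D.h2 (D.hF_MW hu hv)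

end Dat

/-- Dominated convergence for potentials. -/
lemma Hom.tendsto_cv (hn : 3 ≤ n) {r : ℝ} (hr : 1 ≤ r) (hr2 : r ≤ 2) (hp : (n : ℝ) < p)
    (h1 : 2 - (n : ℝ) < δ) (h2 : δ < 0) {K : Euc n → ℝ} (hK : Hom (r - n) K) {F : Euc n → ℝ}
    (hF : MW p (2 - δ - n / p) F) {f : ℕ → Euc n → ℝ} {g : Euc n → ℝ}
    (hfc : ∀ k, Continuous (f k)) (hfF : ∀ k y, |f k y| ≤ |F y|)
    (hlim : ∀ y, Tendsto (fun k => f k y) atTop (𝓝 (g y))) (x : Euc n) :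
    Tendsto (fun k => cv K (f k) x) atTop (𝓝 (cv K g x)) := by
  have hn3 : (3 : ℝ) ≤ n := by exact_mod_cast hn
  obtain ⟨C, hC, hb⟩ := hK.bound
  obtain ⟨E, hE, hr⟩ := riesz_bound (f := F) (p := p) (m := r) (β := δ - 2 + r) (by omega) hr
    (by linarith) hp (by linarith) (by linarith) (by convert hF using 1; ring)
  have hne : ∀ᵐ y : Euc n, x - y ≠ 0 := by
    have : Nonempty (Fin n) := ⟨⟨0, by omega⟩⟩
    have h : ∀ᵐ y : Euc n, y ≠ x := compl_mem_ae_iff.2 (measure_singleton x)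
    filter_upwards [h] with y hy
    exact sub_ne_zero.2 (Ne.symm hy)
  refine tendsto_integral_of_dominated_convergence _ (fun k => ?_) ((hr x).1.const_mul C)
    (fun k => ?_) (Eventually.of_forall fun y => (hlim y).const_mul _)
  · exact ((hK.measurable.comp (measurable_const.sub measurable_id)).mul
      (hfc k).measurable).aestronglyMeasurable
  · filter_upwards [hne] with y hy
    rw [Real.norm_eq_abs, abs_mul, ← mul_assoc]
    exact mul_le_mul (hb _ hy) (hfF k y) (abs_nonneg _) (by positivity)

namespace Dat

/-- Pointwise sequential continuity of `(u, v) ↦ F(v, W_u)`. -/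
lemma tendsto_hF (D : Dat n p δ τ σ ρ J m M) {us vs : ℕ → Euc n → ℝ} {u v : Euc n → ℝ}
    (hus : ∀ k, Adm m M (us k)) (hu : Adm m M u) (hv : Adm m M v)
    (hul : ∀ x, Tendsto (fun k => us k x) atTop (𝓝 (u x)))
    (hvl : ∀ x, Tendsto (fun k => vs k x) atTop (𝓝 (v x))) (x : Euc n) :
    Tendsto (fun k => hF τ σ ρ (vs k) (mW τ J (us k)) x) atTop
      (𝓝 (hF τ σ ρ v (mW τ J u) x)) := by
  have hd : ∀ i y, Tendsto (fun k => mdens τ J (us k) i y) atTop (𝓝 (mdens τ J u i y)) :=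
    fun i y => ((((hul y).rpow_const (Or.inl (hu.pos D.hm y).ne')).const_mul _).mul_const _).add_const _
  have hpd : ∀ a l, Tendsto (fun k => pd a (fun y => mW τ J (us k) y l) x) atTop
      (𝓝 (pd a (fun y => mW τ J u y l) x)) := fun a l => by
    rw [D.pd_mW hu]
    simp_rw [fun k => D.pd_mW (hus k) a l x]
    exact tendsto_finsetSum _ fun i _ => (dK_hom a i l).tendsto_cv D.hn le_rfl (by norm_num) D.hp
      D.h1 D.h2 (D.mbar_MW i) (fun k => D.mdens_cont (hus k) i) (fun k => D.mdens_le (hus k) i)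
      (hd i) x
  have hck : ∀ a l, Tendsto (fun k => confKill (mW τ J (us k)) x a l) atTop
      (𝓝 (confKill (mW τ J u) x a l)) := fun a l => by
    unfold confKill divg
    simp only [Matrix.of_apply]
    exact ((hpd a l).add (hpd l a)).sub
      (((tendsto_finsetSum _ fun i _ => hpd i i).const_mul _).mul_const _)
  have hfr : Tendsto (fun k => frob (σ x + confKill (mW τ J (us k)) x) ^ 2) atTop
      (𝓝 (frob (σ x + confKill (mW τ J u) x) ^ 2)) := by
    simp_rw [frob_sq, Matrix.add_apply]
    exact tendsto_finsetSum _ fun a _ => tendsto_finsetSum _ fun l _ =>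
      ((hck a l).const_add _).pow 2
  have hr : ∀ s : ℝ, Tendsto (fun k => vs k x ^ s) atTop (𝓝 (v x ^ s)) := fun s =>
    (hvl x).rpow_const (Or.inl (hv.pos D.hm x).ne')
  unfold hF
  exact (((hfr.const_mul _).mul (hr _)).neg.add ((hr _).const_mul _)).sub ((hr _).const_mul _)

end Dat

end Operators

/-! ### A fixed point theorem for equi-Lipschitz maps -/

section FixedPoint

variable {n : ℕ} {T : (Euc n → ℝ) → Euc n → ℝ} {M L : ℝ}

/-- Approximate fixed points on balls, by Brouwer's theorem applied to interpolation along a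
partition of unity subordinate to a finite net. -/
lemma approx_fixed (hb : ∀ θ, Continuous θ → ∀ x, |T θ x| ≤ M)
    (hL : ∀ θ, Continuous θ → ∀ x y, |T θ x - T θ y| ≤ L * ‖x - y‖)
    (hc : ∀ (θs : ℕ → Euc n → ℝ) (θ : Euc n → ℝ), (∀ k, Continuous (θs k)) → Continuous θ →
      (∀ x, Tendsto (fun k => θs k x) atTop (𝓝 (θ x))) →
      ∀ x, Tendsto (fun k => T (θs k) x) atTop (𝓝 (T θ x)))
    (hL0 : 0 ≤ L) (R : ℝ) {r : ℝ} (hr : 0 < r) :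
    ∃ θ : Euc n → ℝ, Continuous θ ∧ ∀ x, ‖x‖ ≤ R → |T θ x - θ x| ≤ L * (2 * r) := by
  obtain ⟨t, -, htf, hcov⟩ := (isCompact_closedBall (0 : Euc n) R).finite_cover_balls hr
  obtain ⟨N, a, ha⟩ : ∃ (N : ℕ) (a : Fin N → Euc n), Set.range a = t := by
    have := htf.fintype
    exact ⟨Fintype.card t, fun i => ((Fintype.equivFin t).symm i : Euc n), by
      ext y; constructor
      · rintro ⟨i, rfl⟩; exact ((Fintype.equivFin t).symm i).2
      · intro hy; exact ⟨Fintype.equivFin t ⟨y, hy⟩, by simp⟩⟩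
  set w : Fin N → Euc n → ℝ := fun i x => max 0 (2 * r - ‖x - a i‖) with hw
  have hw0 : ∀ i x, 0 ≤ w i x := fun i x => le_max_left _ _
  have hwc : ∀ i, Continuous (w i) := fun i => by simp only [hw]; fun_prop
  set S : Euc n → ℝ := fun x => max (∑ i, w i x) r with hS
  have hSc : Continuous S := (continuous_finsetSum _ fun i _ => hwc i).max continuous_const
  have hS0 : ∀ x, 0 < S x := fun x => lt_of_lt_of_le hr (le_max_right _ _)
  have hSe : ∀ x, ‖x‖ ≤ R → S x = ∑ i, w i x := fun x hx => by
    have hx' : x ∈ Metric.closedBall (0 : Euc n) R := by simpa using hx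
    obtain ⟨y, hy, hxy⟩ := Set.mem_iUnion₂.1 (hcov hx')
    rw [← ha] at hy
    obtain ⟨i, rfl⟩ := hy
    rw [Metric.mem_ball, dist_eq_norm] at hxy
    refine max_eq_left ?_
    have h1 : r ≤ w i x := le_trans (by linarith) (le_max_right _ _)
    exact h1.trans (Finset.single_le_sum (fun j _ => hw0 j x) (Finset.mem_univ i))
  set θ : Euc N → Euc n → ℝ := fun c x => ∑ i, c i * (w i x / S x) with hθ
  have hθc : ∀ c, Continuous (θ c) := fun c => continuous_finsetSum _ fun i _ =>
    continuous_const.mul ((hwc i).div hSc fun x => (hS0 x).ne')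
  obtain ⟨c, hcfix⟩ := brouwer (F := fun c : Euc N => WithLp.toLp 2 fun i => T (θ c) (a i))
    (M := ∑ _i : Fin N, |M|) (by
      refine (PiLp.continuous_toLp 2 _).comp (continuous_pi fun i => ?_)
      rw [continuous_iff_seqContinuous]
      intro cs c hcs
      refine hc (fun k => θ (cs k)) (θ c) (fun k => hθc _) (hθc c) (fun x => ?_) (a i)
      refine tendsto_finsetSum _ fun j _ => Tendsto.mul_const _ ?_
      exact ((EuclideanSpace.proj j : Euc N →L[ℝ] ℝ).continuous.tendsto c).comp hcs) (by
      intro c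
      rw [euc_eq_sum (WithLp.toLp 2 fun i => T (θ c) (a i))]
      refine (norm_sum_le _ _).trans (Finset.sum_le_sum fun i _ => ?_)
      rw [norm_smul, norm_eb, mul_one, Real.norm_eq_abs]
      exact (hb _ (hθc c) _).trans (le_abs_self _))
  have hci : ∀ i, T (θ c) (a i) = c i := fun i => congrArg (fun v : Euc N => v i) hcfix
  refine ⟨θ c, hθc c, fun x hx => ?_⟩
  have hsum : ∑ i, w i x / S x = 1 := by
    rw [← Finset.sum_div, ← hSe x hx, div_self (hS0 x).ne']
  have e : T (θ c) x - θ c x = ∑ i, (T (θ c) x - T (θ c) (a i)) * (w i x / S x) := by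
    simp_rw [sub_mul, Finset.sum_sub_distrib, hci]
    rw [← Finset.mul_sum, hsum, mul_one]
  rw [e]
  have hχ : ∀ i, 0 ≤ w i x / S x := fun i => div_nonneg (hw0 i x) (hS0 x).le
  calc |∑ i, (T (θ c) x - T (θ c) (a i)) * (w i x / S x)|
      ≤ ∑ i, L * (2 * r) * (w i x / S x) := by
        refine (Finset.abs_sum_le_sum_abs _ _).trans (Finset.sum_le_sum fun i _ => ?_)
        rw [abs_mul, abs_of_nonneg (hχ i)]
        by_cases h : ‖x - a i‖ ≤ 2 * r
        · refine mul_le_mul_of_nonneg_right ((hL _ (hθc c) _ _).trans ?_) (hχ i)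
          gcongr
        · have : w i x = 0 := max_eq_left (by push Not at h; linarith)
          simp [this]
    _ = L * (2 * r) := by rw [← Finset.mul_sum, hsum, mul_one]

/-- A uniformly bounded, equi-Lipschitz sequence has a pointwise convergent subsequence. -/
lemma exists_subseq {f : ℕ → Euc n → ℝ} (hb : ∀ k x, |f k x| ≤ M)
    (hL : ∀ k x y, |f k x - f k y| ≤ L * ‖x - y‖) (hL0 : 0 ≤ L) :
    ∃ (φ : Euc n → ℝ) (s : ℕ → ℕ), StrictMono s ∧
      ∀ x, Tendsto (fun k => f (s k) x) atTop (𝓝 (φ x)) := by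
  set q := TopologicalSpace.denseSeq (Euc n) with hq
  have hcpt : IsCompact (Set.univ.pi fun _ : ℕ => Set.Icc (-M) M) :=
    isCompact_univ_pi fun _ => isCompact_Icc
  obtain ⟨ψ, -, s, hs, hlim⟩ := hcpt.tendsto_subseq (x := fun k j => f k (q j))
    fun k => Set.mem_univ_pi.2 fun j => abs_le.1 (hb k (q j))
  rw [tendsto_pi_nhds] at hlim
  have hC : ∀ x, CauchySeq fun k => f (s k) x := by
    intro x
    rw [Metric.cauchySeq_iff']
    intro ε hε
    obtain ⟨j, hj⟩ := (TopologicalSpace.denseRange_denseSeq (Euc n)).exists_dist_lt x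
      (ε := ε / (3 * (L + 1))) (by positivity)
    have hj' : L * ‖x - q j‖ < ε / 3 := by
      rw [dist_eq_norm] at hj
      have : ‖x - q j‖ * (3 * (L + 1)) < ε := by rwa [lt_div_iff₀ (by positivity)] at hj
      nlinarith [norm_nonneg (x - q j)]
    have hc := (hlim j).cauchySeq
    rw [Metric.cauchySeq_iff'] at hc
    obtain ⟨N, hN⟩ := hc (ε / 3) (by positivity)
    refine ⟨N, fun k hk => ?_⟩
    have h1 := hN k hk
    have h2 := hL (s k) x (q j)
    have h3 := hL (s N) x (q j)
    simp only [Function.comp, Real.dist_eq] at h1 ⊢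
    rw [abs_lt] at h1 ⊢
    rw [abs_le] at h2 h3
    constructor <;> linarith [h1.1, h1.2, h2.1, h2.2, h3.1, h3.2]
  choose φ hφ using fun x => cauchySeq_tendsto_of_complete (hC x)
  exact ⟨φ, s, hs, hφ⟩

/-- Schauder's theorem in the form needed here: maps with equi-Lipschitz, bounded range which are
sequentially continuous for pointwise convergence have fixed points. -/
lemma exists_fixed (hb : ∀ θ, Continuous θ → ∀ x, |T θ x| ≤ M)
    (hL : ∀ θ, Continuous θ → ∀ x y, |T θ x - T θ y| ≤ L * ‖x - y‖)
    (hc : ∀ (θs : ℕ → Euc n → ℝ) (θ : Euc n → ℝ), (∀ k, Continuous (θs k)) → Continuous θ →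
      (∀ x, Tendsto (fun k => θs k x) atTop (𝓝 (θ x))) →
      ∀ x, Tendsto (fun k => T (θs k) x) atTop (𝓝 (T θ x)))
    (hL0 : 0 ≤ L) : ∃ φ : Euc n → ℝ, Continuous φ ∧ T φ = φ := by
  have hpos : ∀ k : ℕ, (0 : ℝ) < 1 / ((k : ℝ) + 1) := fun k => by positivity
  have hlim0 := tendsto_one_div_add_atTop_nhds_zero_nat (𝕜 := ℝ)
  choose θ hθc hθ using fun k : ℕ => approx_fixed hb hL hc hL0 (k : ℝ) (hpos k)
  obtain ⟨φ, s, hs, hlim⟩ := exists_subseq (f := fun k => T (θ k)) (fun k => hb _ (hθc k))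
    (fun k => hL _ (hθc k)) hL0
  have hφL : ∀ x y, |φ x - φ y| ≤ L * ‖x - y‖ := fun x y =>
    le_of_tendsto ((hlim x).sub (hlim y)).abs (Eventually.of_forall fun k => hL _ (hθc _) x y)
  have hφc : Continuous φ := by
    have : LipschitzWith L.toNNReal φ := LipschitzWith.of_dist_le_mul fun x y => by
      rw [Real.coe_toNNReal L hL0, Real.dist_eq, dist_eq_norm]; exact hφL x y
    exact this.continuous
  have hθlim : ∀ x, Tendsto (fun k => θ (s k) x) atTop (𝓝 (φ x)) := by
    intro x
    have h0 : Tendsto (fun k => T (θ (s k)) x - θ (s k) x) atTop (𝓝 0) := by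
      have hl : Tendsto (fun k : ℕ => L * (2 * (1 / ((s k : ℝ) + 1)))) atTop (𝓝 0) := by
        have := ((hlim0.const_mul 2).const_mul L).comp hs.tendsto_atTop
        simp only [mul_zero] at this
        exact this
      refine squeeze_zero_norm' ?_ hl
      obtain ⟨N, hN⟩ := exists_nat_ge ‖x‖
      filter_upwards [eventually_ge_atTop N] with k hk
      refine hθ (s k) x (hN.trans ?_)
      exact_mod_cast hk.trans (hs.id_le k)
    have := (hlim x).sub h0
    simpa using this
  refine ⟨φ, hφc, funext fun x => ?_⟩
  exact tendsto_nhds_unique (hc (fun k => θ (s k)) φ (fun k => hθc _) hφc hθlim x) (hlim x)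

end FixedPoint

/-! ### The maximum principle for potentials of continuous densities -/

section MaxPrinciple

variable {n : ℕ}

lemma lap_sub {f g : Euc n → ℝ} (hf : ContDiff ℝ 2 f) (hg : ContDiff ℝ 2 g) (x : Euc n) :
    lap (fun y => f y - g y) x = lap f x - lap g x := by
  unfold lap
  rw [← Finset.sum_sub_distrib]
  refine Finset.sum_congr rfl fun i _ => ?_
  have e : pd i (fun y => f y - g y) = fun y => pd i f y - pd i g y := by
    funext y
    exact pd_sub i (hf.differentiable (by norm_num) y) (hg.differentiable (by norm_num) y)
  rw [e]
  exact pd_sub i ((hf.pdD (k := 1) (by norm_num) i).differentiable (by norm_num) x)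
    ((hg.pdD (k := 1) (by norm_num) i).differentiable (by norm_num) x)

lemma lap_const (c : ℝ) (x : Euc n) : lap (fun _ => c) x = 0 := by
  refine Finset.sum_eq_zero fun i _ => ?_
  have e : pd i (fun _ : Euc n => c) = fun _ => 0 := by funext y; exact pd_const i c y
  rw [e]; exact pd_const i 0 x

lemma lap_normsq_sub (x0 x : Euc n) : lap (fun y : Euc n => ‖y - x0‖ ^ 2) x = 2 * n := by
  have e : ∀ i : Fin n, pd i (fun y : Euc n => ‖y - x0‖ ^ 2) = fun y => 2 * y i - 2 * x0 i := by
    intro i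
    funext y
    have h := (HasStrictFDerivAt.hasFDerivAt (hasStrictFDerivAt_norm_sq (y - x0))).comp y
      ((hasFDerivAt_id y).sub_const x0)
    refine (pd_eq_of_hasFDerivAt i h).trans ?_
    simp [eb, EuclideanSpace.inner_single_right]
    ring
  have h2 : ∀ i : Fin n, pd i (pd i (fun y : Euc n => ‖y - x0‖ ^ 2)) x = 2 := by
    intro i
    have hd : DifferentiableAt ℝ (fun y : Euc n => y i) x :=
      (EuclideanSpace.proj i : Euc n →L[ℝ] ℝ).differentiableAt
    rw [e, pd_sub i (hd.const_mul 2) (differentiableAt_const _), pd_const_mul i 2 hd, pd_coord,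
      pd_const]
    simp
  unfold lap
  simp [h2, mul_comm]

/-- If `Δψ ≤ F = Δg` holds, in the weak sense given by `g = Γ * F` with `F` merely continuous,
wherever `g > ψ`, and `g - ψ` is asymptotically nonpositive, then `g ≤ ψ`. A touching point is
produced with the strictly superharmonic function `⟨x⟩^(2-n)` and transferred to smooth
approximations of `F`. -/
lemma le_of_lap_le (hn : 3 ≤ n) {δ C : ℝ} (h2 : δ < 0) {F ψ : Euc n → ℝ} (hFc : Continuous F)
    (hw : WI F) (hgc : Continuous (cv (gam n) F)) (hψ : ContDiff ℝ 2 ψ)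
    (hle : ∀ x, 0 < cv (gam n) F x - ψ x → lap ψ x ≤ F x)
    (hdec : ∀ x, cv (gam n) F x - ψ x ≤ C * jap x ^ δ) (x1 : Euc n) :
    cv (gam n) F x1 ≤ ψ x1 := by
  have hn3 : (3 : ℝ) ≤ n := by exact_mod_cast hn
  by_contra hcon
  push Not at hcon
  set v : Euc n → ℝ := fun x => cv (gam n) F x - ψ x with hv
  have hvc : Continuous v := hgc.sub hψ.continuous
  have hv1 : 0 < v x1 := by simp only [hv]; linarith
  set κ : ℝ := v x1 / 2 with hκ
  have hκ0 : 0 < κ := by positivity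
  set ω : Euc n → ℝ := fun x => jap x ^ (2 - (n : ℝ)) with hω
  have hωs : ContDiff ℝ 2 ω := (jap_rpow_contDiff _).of_le (by norm_cast)
  have hω0 : ∀ x, 0 < ω x := fun x => jap_rpow_pos x _
  have hω1 : ∀ x, ω x ≤ 1 := fun x => by
    have := jap_rpow_mono x (show 2 - (n : ℝ) ≤ 0 by linarith)
    simpa [hω] using this
  set V : Euc n → ℝ := fun x => v x - κ * ω x with hV
  have hVc : Continuous V := hvc.sub (continuous_const.mul hωs.continuous)
  have hV1 : κ ≤ V x1 := by
    simp only [hV]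
    have := mul_le_mul_of_nonneg_left (hω1 x1) hκ0.le
    have : v x1 = 2 * κ := by rw [hκ]; ring
    linarith
  -- outside a large ball `V < κ`, so that `V` attains its maximum
  have hfar : ∃ R, ‖x1‖ ≤ R ∧ ∀ x, R < ‖x‖ → V x < κ := by
    have hl : Tendsto (fun r : ℝ => |C| * r ^ δ) atTop (𝓝 0) := by
      have := (tendsto_rpow_neg_atTop (neg_pos.2 h2)).const_mul |C|
      simpa using this
    obtain ⟨R, hR⟩ := eventually_atTop.1 (hl.eventually (gt_mem_nhds hκ0))
    refine ⟨max R ‖x1‖, le_max_right _ _, fun x hx => ?_⟩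
    have h3 : R ≤ jap x := ((le_max_left _ _).trans hx.le).trans (norm_le_jap x)
    have h4 := hR _ h3
    have h5 : v x ≤ C * jap x ^ δ := hdec x
    have h6 : C * jap x ^ δ ≤ |C| * jap x ^ δ :=
      mul_le_mul_of_nonneg_right (le_abs_self C) (jap_rpow_pos x _).le
    have h7 := mul_pos hκ0 (hω0 x)
    simp only [hV]; linarith
  obtain ⟨R, hR1, hR⟩ := hfar
  obtain ⟨x0, hx0, hmax⟩ := (isCompact_closedBall (0 : Euc n) R).exists_isMaxOn
    ⟨x1, by simpa using hR1⟩ hVc.continuousOn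
  have hVx0 : κ ≤ V x0 := hV1.trans (hmax (by simpa using hR1))
  have hVmax : ∀ x, V x ≤ V x0 := by
    intro x
    rcases le_or_gt ‖x‖ R with h | h
    · exact hmax (by simpa using h)
    · exact (hR x h).le.trans hVx0
  have hvx0 : 0 < v x0 := by
    have : V x0 = v x0 - κ * ω x0 := rfl
    have := mul_pos hκ0 (hω0 x0)
    linarith
  -- `-κ Δω ≥ c` near `x0`
  set q : Euc n → ℝ := fun x => κ * ((n : ℝ) * (n - 2) * jap x ^ (-(n : ℝ) - 2)) with hq
  have hqc : Continuous q := continuous_const.mul (continuous_const.mul (jap_rpow_continuous _))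
  have hq0 : 0 < q x0 := by
    have := jap_rpow_pos x0 (-(n : ℝ) - 2)
    have : 0 < (n : ℝ) - 2 := by linarith
    simp only [hq]; positivity
  set c : ℝ := q x0 / 2 with hc
  have hc0 : 0 < c := by positivity
  have hnear : ∀ᶠ x in 𝓝 x0, 0 < v x ∧ c < q x :=
    (hvc.continuousAt.eventually (lt_mem_nhds hvx0)).and
      (hqc.continuousAt.eventually (lt_mem_nhds (by rw [hc]; linarith)))
  obtain ⟨r, hr0, hr⟩ := Metric.nhds_basis_closedBall.eventually_iff.1 hnear
  obtain ⟨C', hC', hclose⟩ := (gam_hom (n := n)).cv_close hn (m := 2) (by norm_num) le_rfl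
  set s : ℝ := c / (4 * n) with hs
  have hs0 : 0 < s := by positivity
  have hsn : s * (2 * n) = c / 2 := by rw [hs]; field_simp; norm_num
  set ε : ℝ := min (c / 4) (s * r ^ 2 / (4 * (C' + 1))) with hε
  have hε0 : 0 < ε := lt_min (by positivity) (by positivity)
  have hεc : ε ≤ c / 4 := min_le_left _ _
  have hεs : 2 * (C' * ε) < s * r ^ 2 := by
    have h3 : ε * (4 * (C' + 1)) ≤ s * r ^ 2 :=
      (le_div_iff₀ (by positivity)).1 (min_le_right _ _)
    nlinarith [mul_nonneg hC' hε0.le]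
  obtain ⟨G, hGs, hG⟩ := exists_smooth_close hFc hε0
  have hGw : WI G := hw.of_close hGs.continuous hG (by omega)
  have hgG : ∀ x, |cv (gam n) G x - cv (gam n) F x| ≤ C' * ε :=
    hclose G F ε hGs.continuous hFc hGw hw hε0.le hG
  have hGF : ∀ y, |G y - F y| ≤ ε := fun y => (hG y).trans <| by
    have := jap_rpow_mono y (show -((n : ℝ) + 1) ≤ 0 by linarith)
    rw [Real.rpow_zero] at this
    nlinarith
  have hcs : ContDiff ℝ 2 (cv (gam n) G) := (gam_hom.smooth_cv hn hGw hGs).of_le (by norm_cast)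
  have hns : ContDiff ℝ 2 (fun y : Euc n => s * ‖y - x0‖ ^ 2) :=
    contDiff_const.mul ((contDiff_id.sub contDiff_const).norm_sq ℝ)
  have hns' : ContDiff ℝ (⊤ : ℕ∞) (fun y : Euc n => ‖y - x0‖ ^ 2) :=
    (contDiff_id.sub contDiff_const).norm_sq ℝ
  have hkω : ContDiff ℝ 2 (fun y => κ * ω y) := contDiff_const.mul hωs
  set Z : Euc n → ℝ := fun y => cv (gam n) G y - ψ y - κ * ω y - s * ‖y - x0‖ ^ 2 with hZ
  have hZs : ContDiff ℝ 2 Z := ((hcs.sub hψ).sub hkω).sub hns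
  have hZlap : ∀ y, lap Z y = G y - lap ψ y + q y - c / 2 := by
    intro y
    rw [hZ, lap_sub ((hcs.sub hψ).sub hkω) hns, lap_sub (hcs.sub hψ) hkω, lap_sub hcs hψ,
      lap_cv_gam hn hGw hGs, congrFun (lap_const_mul (jap_rpow_contDiff (2 - (n : ℝ))) κ) y, congrFun (lap_const_mul hns' s) y, lap_normsq_sub, hsn, lap_jap]
    simp only [hq]; ring
  obtain ⟨y, hy, hymax⟩ := (isCompact_closedBall x0 r).exists_isMaxOn
    ⟨x0, Metric.mem_closedBall_self hr0.le⟩ hZs.continuous.continuousOn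
  have hZV : ∀ z, Z z = V z + (cv (gam n) G z - cv (gam n) F z) - s * ‖z - x0‖ ^ 2 := fun z => by
    simp only [hZ, hV, hv]; ring
  have hyin : y ∈ Metric.ball x0 r := by
    rw [Metric.mem_ball]
    refine lt_of_le_of_ne (Metric.mem_closedBall.1 hy) fun hyr => ?_
    have h3 : Z x0 ≤ Z y := hymax (Metric.mem_closedBall_self hr0.le)
    rw [dist_eq_norm] at hyr
    rw [hZV, hZV, hyr, sub_self, norm_zero] at h3
    have h4 := abs_le.1 (hgG y)
    have h5 := abs_le.1 (hgG x0)
    have h6 := hVmax y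
    nlinarith [h4.1, h4.2, h5.1, h5.2]
  have hloc : IsLocalMax Z y := by
    filter_upwards [Metric.isOpen_ball.mem_nhds hyin] with z hz
    exact hymax (Metric.ball_subset_closedBall hz)
  have hfin := lap_nonpos_of_isLocalMax hZs.contDiffAt hloc
  rw [hZlap] at hfin
  obtain ⟨h3, h4⟩ := hr hy
  have h5 := hle y h3
  have h6 := abs_le.1 (hGF y)
  linarith [h6.1]

end MaxPrinciple

/-! ### The truncated fixed point problem -/

section Truncated

variable {n : ℕ} {p δ m M : ℝ} {τ ρ : Euc n → ℝ} {σ : Euc n → Matrix (Fin n) (Fin n) ℝ}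
  {J : Euc n → Euc n} {φm φp : Euc n → ℝ}

/-- The truncation of `θ` to values between `φm` and `φp`. -/
def clamp (φm φp θ : Euc n → ℝ) (x : Euc n) : ℝ := max (φm x) (min (θ x) (φp x))

lemma clamp_le (h : ∀ x, φm x ≤ φp x) (θ : Euc n → ℝ) (x : Euc n) : clamp φm φp θ x ≤ φp x :=
  max_le (h x) (min_le_right _ _)

lemma le_clamp (θ : Euc n → ℝ) (x : Euc n) : φm x ≤ clamp φm φp θ x := le_max_left _ _

lemma clamp_adm {θ : Euc n → ℝ} (hm : Adm m M φm) (hp : Adm m M φp) (h : ∀ x, φm x ≤ φp x)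
    (hθ : Continuous θ) : Adm m M (clamp φm φp θ) :=
  ⟨hm.1.max (hθ.min hp.1), fun x => ⟨(hm.2 x).1.trans (le_clamp θ x),
    (clamp_le h θ x).trans (hp.2 x).2⟩⟩

lemma Hom.cv_lipschitz (hn : 3 ≤ n) (hp : (n : ℝ) < p) (h1 : 2 - (n : ℝ) < δ) (h2 : δ < 0)
    {K F : Euc n → ℝ} (hK : Hom (2 - (n : ℝ)) K) (hF : MW p (2 - δ - n / p) F) :
    ∃ L : ℝ, 0 ≤ L ∧ ∀ f : Euc n → ℝ, Continuous f → WI f → (∀ y, |f y| ≤ |F y|) →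
      ∀ x y, |cv K f x - cv K f y| ≤ L * ‖x - y‖ := by
  have hK1 : ∀ i, Hom (1 - (n : ℝ)) (_root_.pd i K) := fun i => by
    convert hK.pd i using 1; ring
  choose C hC hb using fun i => (hK1 i).cv_decay hn le_rfl (by norm_num) hp h1 h2 hF
  refine ⟨∑ i, C i, Finset.sum_nonneg fun i _ => hC i, fun f hf hw hfF x y => ?_⟩
  have hd : ∀ z ∈ (Set.univ : Set (Euc n)), DifferentiableAt ℝ (cv K f) z := fun z _ =>
    (hK.hasFDerivAt_cv hn hf hw z).differentiableAt
  have hbd : ∀ z ∈ (Set.univ : Set (Euc n)), ‖fderiv ℝ (cv K f) z‖ ≤ ∑ i, C i := fun z _ => by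
    refine (norm_fderiv_le_sum_pd _ z).trans (Finset.sum_le_sum fun i _ => ?_)
    rw [hK.pd_cv' hn hf hw]
    refine (hb i f hfF z).trans ?_
    have := jap_rpow_mono z (show δ - 2 + 1 ≤ 0 by linarith)
    rw [Real.rpow_zero] at this
    nlinarith [hC i]
  exact convex_univ.norm_image_sub_le_of_norm_fderiv_le hd hbd (Set.mem_univ y) (Set.mem_univ x)

/-- Solvability of the truncated problem `φ = α + Γ * F(c(φ), W(c(φ)))`, where `c` truncates to
the interval between the barriers. -/
lemma Dat.exists_truncated (D : Dat n p δ τ σ ρ J m M) (hm : Adm m M φm) (hp : Adm m M φp)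
    (h : ∀ x, φm x ≤ φp x) (α : ℝ) : ∃ φ : Euc n → ℝ, Continuous φ ∧ ∀ x, φ x = α +
      cv (gam n) (hF τ σ ρ (clamp φm φp φ) (mW τ J (clamp φm φp φ))) x := by
  obtain ⟨F, hFM, hFb⟩ := D.hF_bound
  have ha : ∀ {θ}, Continuous θ → Adm m M (clamp φm φp θ) := fun hθ => clamp_adm hm hp h hθ
  obtain ⟨C, hC, hCb⟩ := (gam_hom (n := n)).cv_decay D.hn (by norm_num) le_rfl D.hp D.h1 D.h2 hFM
  obtain ⟨L, hL, hLb⟩ := (gam_hom (n := n)).cv_lipschitz D.hn D.hp D.h1 D.h2 hFM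
  have key := exists_fixed (n := n) (M := |α| + C) (L := L) (T := fun θ x => α +
      cv (gam n) (hF τ σ ρ (clamp φm φp θ) (mW τ J (clamp φm φp θ))) x) ?_ ?_ ?_ hL
  · obtain ⟨φ, hφ, he⟩ := key
    exact ⟨φ, hφ, fun x => (congrFun he x).symm⟩
  · intro θ hθ x
    refine (abs_add_le _ _).trans (add_le_add le_rfl ?_)
    refine (hCb _ (hFb _ _ (ha hθ) (ha hθ)) x).trans ?_
    have := jap_rpow_mono x (show δ - 2 + 2 ≤ 0 by linarith [D.h2])
    rw [Real.rpow_zero] at this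
    nlinarith
  · intro θ hθ x y
    rw [add_sub_add_left_eq_sub]
    exact hLb _ (D.hF_cont (ha hθ) (ha hθ)) (D.hF_WI (ha hθ) (ha hθ))
      (hFb _ _ (ha hθ) (ha hθ)) x y
  · intro θs θ hθs hθ hl x
    have hcl : ∀ y, Tendsto (fun k => clamp φm φp (θs k) y) atTop (𝓝 (clamp φm φp θ y)) :=
      fun y => tendsto_const_nhds.max ((hl y).min tendsto_const_nhds)
    refine tendsto_const_nhds.add (Hom.tendsto_cv D.hn (by norm_num) le_rfl D.hp D.h1 D.h2
      (gam_hom (n := n)) hFM (fun k => D.hF_cont (ha (hθs k)) (ha (hθs k)))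
      (fun k => hFb _ _ (ha (hθs k)) (ha (hθs k))) (fun y => ?_) x)
    exact D.tendsto_hF (fun k => ha (hθs k)) (ha hθ) (ha hθ) hcl hcl y

/-! ### The barriers for continuous conformal factors -/

lemma gradient_coord {τ : Euc n → ℝ} {x : Euc n} (j : Fin n) :
    gradient τ x j = pd j τ x := by
  have h : inner ℝ (gradient τ x) (EuclideanSpace.single j (1 : ℝ)) = pd j τ x := by
    unfold gradient pd
    rw [InnerProductSpace.toDual_symm_apply]
  rw [← h, EuclideanSpace.inner_single_right]
  simp

/-- For smooth conformal factors, `mW` is an admissible solution of the momentum equation. -/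
lemma Dat.mW_spec (D : Dat n p δ τ σ ρ J m M) {u : Euc n → ℝ} (hu : Adm m M u)
    (hus : ContDiff ℝ (⊤ : ℕ∞) u) : ContDiff ℝ (⊤ : ℕ∞) (mW τ J u) ∧
      SobW 2 p δ (mW τ J u) < ⊤ ∧ MomEq τ J u (mW τ J u) := by
  have hs : ∀ i, ContDiff ℝ (⊤ : ℕ∞) (mdens τ J u i) := fun i => D.mdens_contDiff hu i le_rfl hus
  have hsm : ContDiff ℝ (⊤ : ℕ∞) (mW τ J u) := ms_smooth D.hn (D.mdens_WI hu) hs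
  have hp0 : 0 < p := lt_of_le_of_lt (Nat.cast_nonneg n) D.hp
  refine ⟨hsm, W2.sobW_vec hp0 hsm fun l => ?_, fun x => ?_⟩
  · have e : (fun x => mW τ J u x l) = fun x => ∑ i, cv (msK i l) (mdens τ J u i) x := rfl
    rw [e]
    exact W2.sum _ (fun i _ => (msK_hom i l).smooth_cv D.hn (D.mdens_WI hu i) (hs i))
      fun i _ => cv_msK_W2 D.hn D.hp D.h1 D.h2 (hs i) (D.mdens_MW hu i) i l
  · ext j
    have := vecLap_ms D.hn (D.mdens_WI hu) hs x j
    simp only [PiLp.add_apply, PiLp.smul_apply, smul_eq_mul, PiLp.zero_apply, gradient_coord]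
    rw [show mW τ J u = ms (mdens τ J u) from rfl, this]
    unfold mdens; ring

/-- Approximation of a continuous function by smooth functions from above. -/
lemma exists_seq_above {u : Euc n → ℝ} (hu : Continuous u) {μ : ℝ} (hμ : 0 < μ) :
    ∃ f : ℕ → Euc n → ℝ, (∀ k, ContDiff ℝ (⊤ : ℕ∞) (f k)) ∧
      (∀ k x, u x ≤ f k x ∧ f k x ≤ u x + 2 * μ) ∧
      ∀ x, Tendsto (fun k => f k x) atTop (𝓝 (u x)) := by
  have hpos : ∀ k : ℕ, 0 < μ * (1 / ((k : ℝ) + 1)) := fun k => by positivity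
  choose f hfs hf using fun k : ℕ =>
    exists_smooth_close (f := fun x => u x + μ * (1 / ((k : ℝ) + 1)))
      (hu.add continuous_const) (hpos k)
  have hb : ∀ k x, u x ≤ f k x ∧ f k x ≤ u x + 2 * (μ * (1 / ((k : ℝ) + 1))) := fun k x => by
    have h1 := jap_rpow_mono x (show -((n : ℝ) + 1) ≤ 0 by have := n.cast_nonneg (α := ℝ); linarith)
    rw [Real.rpow_zero] at h1
    have h2 := (hf k x).trans (mul_le_of_le_one_right (hpos k).le h1)
    have h3 := abs_le.1 h2
    constructor <;> linarith [h3.1, h3.2]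
  refine ⟨f, hfs, fun k x => ⟨(hb k x).1, (hb k x).2.trans ?_⟩, fun x => ?_⟩
  · have : 1 / ((k : ℝ) + 1) ≤ 1 := by
      rw [div_le_one (by positivity)]; have := k.cast_nonneg (α := ℝ); linarith
    nlinarith
  · refine tendsto_of_tendsto_of_tendsto_of_le_of_le tendsto_const_nhds ?_ (fun k => (hb k x).1)
      (fun k => (hb k x).2)
    have := (((tendsto_one_div_add_atTop_nhds_zero_nat (𝕜 := ℝ)).const_mul μ).const_mul 2).const_add
      (u x)
    simpa using this

lemma Dat.super (D : Dat n p δ τ σ ρ J m M) (hsup : GlobalSuperSol p δ τ σ ρ J φp)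
    (hp : Adm m M φp) {u : Euc n → ℝ} (hu : Continuous u) (hum : ∀ x, 2 * m ≤ u x)
    (hup : ∀ x, u x ≤ φp x) (x : Euc n) : lap φp x ≤ hF τ σ ρ φp (mW τ J u) x := by
  have hm := D.hm
  obtain ⟨f, hfs, hfb, hfl⟩ := exists_seq_above (u := fun y => -u y) hu.neg (half_pos hm)
  have hua : Adm m M u := ⟨hu, fun y => ⟨by linarith [hum y], (hup y).trans (hp.2 y).2⟩⟩
  have hle : ∀ k y, -f k y ≤ u y := fun k y => by linarith [(hfb k y).1]
  have hge : ∀ k y, m ≤ -f k y := fun k y => by linarith [(hfb k y).2, hum y]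
  have hfa : ∀ k, Adm m M (fun y => -f k y) := fun k =>
    ⟨(hfs k).continuous.neg, fun y => ⟨hge k y, (hle k y).trans (hua.2 y).2⟩⟩
  refine ge_of_tendsto (D.tendsto_hF hfa hua hp (fun y => by simpa using (hfl y).neg)
    (vs := fun _ => φp) (fun y => tendsto_const_nhds) x) (Eventually.of_forall fun k => ?_)
  obtain ⟨h1, h2, h3⟩ := D.mW_spec (hfa k) (hfs k).neg
  have := hsup _ (hfa k).1 (fun y => ⟨(hfa k).pos hm y, (hle k y).trans (hup y)⟩) _ h1 h2 h3 x
  rw [HamExpr_eq] at this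
  linarith

lemma Dat.sub (D : Dat n p δ τ σ ρ J m M) (hsub : GlobalSubSol p δ τ σ ρ J φm)
    (hp : Adm m M φm) {u : Euc n → ℝ} (hu : Continuous u) (huM : ∀ x, u x ≤ M - 1)
    (hup : ∀ x, φm x ≤ u x) (x : Euc n) : hF τ σ ρ φm (mW τ J u) x ≤ lap φm x := by
  obtain ⟨f, hfs, hfb, hfl⟩ := exists_seq_above hu (show (0 : ℝ) < 1 / 2 by norm_num)
  have hua : Adm m M u := ⟨hu, fun y => ⟨(hp.2 y).1.trans (hup y), by linarith [huM y]⟩⟩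
  have hfa : ∀ k, Adm m M (f k) := fun k =>
    ⟨(hfs k).continuous, fun y => ⟨(hua.2 y).1.trans (hfb k y).1, by
      linarith [(hfb k y).2, huM y]⟩⟩
  refine le_of_tendsto (D.tendsto_hF hfa hua hp hfl
    (vs := fun _ => φm) (fun y => tendsto_const_nhds) x) (Eventually.of_forall fun k => ?_)
  obtain ⟨h1, h2, h3⟩ := D.mW_spec (hfa k) (hfs k)
  have := hsub _ (hfa k).1 (fun y => (hup y).trans (hfb k y).1) _ h1 h2 h3 x
  rw [HamExpr_eq] at this
  linarith

lemma cv_neg' (K f : Euc n → ℝ) (x : Euc n) : cv K (fun y => -f y) x = -cv K f x := by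
  unfold cv
  rw [← integral_neg]
  simp

/-- The existence theorem, in terms of the analytic consequences of the hypotheses. -/
lemma Dat.exists_solution (D : Dat n p δ τ σ ρ J m M) {α η C : ℝ} (hαη : α ≤ η)
    (hφms : ContDiff ℝ (⊤ : ℕ∞) φm) (hφps : ContDiff ℝ (⊤ : ℕ∞) φp)
    (hφmp : ∀ x, φm x ≤ φp x) (hlow : ∀ x, 2 * m ≤ φm x) (hhigh : ∀ x, φp x ≤ M - 1)
    (hdm : ∀ x, |φm x - α| ≤ C * jap x ^ δ) (hdp : ∀ x, |φp x - η| ≤ C * jap x ^ δ)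
    (hsup : GlobalSuperSol p δ τ σ ρ J φp) (hsub : GlobalSubSol p δ τ σ ρ J φm) :
    ∃ (φ : Euc n → ℝ) (W : Euc n → Euc n),
      ContDiff ℝ (⊤ : ℕ∞) φ ∧ ContDiff ℝ (⊤ : ℕ∞) W ∧
      (∀ x, φm x ≤ φ x ∧ φ x ≤ φp x) ∧ SobW 2 p δ W < ⊤ ∧
      HamEq τ σ ρ φ W ∧ MomEq τ J φ W ∧ SobW 2 p δ (fun x => φ x - α) < ⊤ := by
  have hm := D.hm
  have ham : Adm m M φm := ⟨hφms.continuous, fun x =>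
    ⟨by linarith [hlow x], by linarith [hφmp x, hhigh x]⟩⟩
  have hap : Adm m M φp := ⟨hφps.continuous, fun x =>
    ⟨by linarith [hlow x, hφmp x], by linarith [hhigh x]⟩⟩
  obtain ⟨φ, hφ, he⟩ := D.exists_truncated ham hap hφmp α
  set u := clamp φm φp φ with hu
  have hua : Adm m M u := clamp_adm ham hap hφmp hφ
  have hule : ∀ x, u x ≤ φp x := clamp_le hφmp φ
  have hleu : ∀ x, φm x ≤ u x := le_clamp φ
  set F := hF τ σ ρ u (mW τ J u) with hFdef
  have hFc : Continuous F := D.hF_cont hua hua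
  have hFw : WI F := D.hF_WI hua hua
  have hFM : MW p (2 - δ - n / p) F := D.hF_MW hua hua
  obtain ⟨C', hC', hdec⟩ := (gam_hom (n := n)).cv_decay D.hn (by norm_num) le_rfl D.hp D.h1 D.h2 hFM
  have hg : ∀ x, |cv (gam n) F x| ≤ C' * jap x ^ δ := fun x => by
    have := hdec F (fun _ => le_rfl) x
    rwa [sub_add_cancel] at this
  have hgc : Continuous (cv (gam n) F) := by
    have e : cv (gam n) F = fun x => φ x - α := by funext x; rw [he x]; ring
    rw [e]; exact hφ.sub continuous_const
  have h2 : ∀ {f : Euc n → ℝ}, ContDiff ℝ (⊤ : ℕ∞) f → ContDiff ℝ 2 f := fun h =>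
    h.of_le (by norm_cast)
  -- comparison with the upper barrier
  have hup : ∀ x, φ x ≤ φp x := by
    intro x
    have key := le_of_lap_le D.hn (C := C' + C) D.h2 (ψ := fun y => φp y - α) hFc hFw hgc
      ((h2 hφps).sub contDiff_const) ?_ ?_ x
    · rw [he x]; linarith
    · intro y hy
      have hy' : φp y < φ y := by rw [he y]; linarith
      have huy : u y = φp y := by
        rw [hu]; unfold clamp; rw [min_eq_right hy'.le, max_eq_right (hφmp y)]
      rw [lap_sub (h2 hφps) contDiff_const, lap_const, sub_zero]
      refine (D.super hsup hap hua.1 (fun z => (hlow z).trans (hleu z)) hule y).trans (le_of_eq ?_)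
      rw [hFdef]; unfold hF; rw [huy]
    · intro y
      have h3 := abs_le.1 (hg y)
      have h4 := abs_le.1 (hdp y)
      linarith [h3.2, h4.1]
  -- comparison with the lower barrier
  have hlo : ∀ x, φm x ≤ φ x := by
    intro x
    have hcn : cv (gam n) (fun y => -F y) = fun y => -cv (gam n) F y :=
      funext fun y => cv_neg' _ _ y
    have hwn : WI fun y => -F y := by
      unfold WI at hFw ⊢
      simpa using hFw.neg
    have key := le_of_lap_le D.hn (C := C' + C) D.h2 (ψ := fun y => α - φm y)
      (F := fun y => -F y) hFc.neg hwn (by rw [hcn]; exact hgc.neg)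
      (contDiff_const.sub (h2 hφms)) ?_ ?_ x
    · rw [hcn] at key; rw [he x]; linarith
    · intro y hy
      rw [hcn] at hy
      have hy' : φ y < φm y := by rw [he y]; linarith
      have huy : u y = φm y := by
        rw [hu]; unfold clamp
        rw [min_eq_left (hy'.le.trans (hφmp y)), max_eq_left hy'.le]
      rw [lap_sub contDiff_const (h2 hφms), lap_const, zero_sub]
      refine neg_le_neg (le_trans (le_of_eq ?_)
        (D.sub hsub ham hua.1 (fun z => (hule z).trans (hhigh z)) hleu y))
      rw [hFdef]; unfold hF; rw [huy]
    · intro y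
      have h3 := abs_le.1 (hg y)
      have h4 := abs_le.1 (hdm y)
      rw [hcn]
      linarith [h3.1, h4.2]
  have huφ : u = φ := by
    funext x
    rw [hu]; unfold clamp; rw [min_eq_left (hup x), max_eq_right (hlo x)]
  -- regularity by bootstrapping
  have hreg : ∀ k : ℕ, ContDiff ℝ k φ := by
    intro k
    induction k with
    | zero => exact contDiff_zero.2 hφ
    | succ k ih =>
      have hFk : ContDiff ℝ k F := by
        have hk : ContDiff ℝ k u := by rw [huφ]; exact ih
        exact D.hF_contDiff hua hua hk hk
      have e : φ = fun x => α + cv (gam n) F x := funext he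
      rw [e]
      push_cast
      exact contDiff_const.add ((gam_hom (n := n)).contDiff_cv_succ D.hn hFw hFk)
  have hφs : ContDiff ℝ (⊤ : ℕ∞) φ := contDiff_infty.2 hreg
  have hus : ContDiff ℝ (⊤ : ℕ∞) u := by rw [huφ]; exact hφs
  have hFs : ContDiff ℝ (⊤ : ℕ∞) F := contDiff_infty.2 fun k =>
    D.hF_contDiff hua hua (contDiff_infty.1 hus k) (contDiff_infty.1 hus k)
  obtain ⟨h3, h4, h5⟩ := D.mW_spec hua hus
  have hp0 : 0 < p := lt_of_le_of_lt (Nat.cast_nonneg n) D.hp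
  have hgs : ContDiff ℝ (⊤ : ℕ∞) (cv (gam n) F) := gam_hom.smooth_cv D.hn hFw hFs
  refine ⟨φ, mW τ J u, hφs, h3, fun x => ⟨hlo x, hup x⟩, h4, fun x => ?_, by rwa [huφ] at h5 ⊢, ?_⟩
  · have e : φ = fun x => cv (gam n) F x - (-α) := by funext x; rw [he x]; ring
    rw [HamExpr_eq]
    have h6 : lap φ x = F x := by
      rw [e, lap_sub (h2 hgs) contDiff_const, lap_const, sub_zero, lap_cv_gam D.hn hFw hFs]
    rw [h6, hFdef, huφ, sub_self]
  · have e : (fun x => φ x - α) = cv (gam n) F := by funext x; rw [he x]; ring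
    rw [e]
    exact W2.sobW hp0 hgs (cv_gam_W2 D.hn D.hp D.h1 D.h2 hFs hFM)

end Truncated

/-! ### Verification of the analytic hypotheses -/

section Final

variable {n : ℕ} {p δ : ℝ}

/-- A positive continuous function with a positive limit at infinity has a positive lower bound. -/
lemma exists_pos_lower {f : Euc n → ℝ} {α C : ℝ} (hf : Continuous f) (hpos : ∀ x, 0 < f x)
    (hα : 0 < α) (hδ : δ < 0) (hd : ∀ x, |f x - α| ≤ C * jap x ^ δ) :
    ∃ m : ℝ, 0 < m ∧ ∀ x, m ≤ f x := by
  have hl : Tendsto (fun r : ℝ => |C| * r ^ δ) atTop (𝓝 0) := by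
    have := (tendsto_rpow_neg_atTop (neg_pos.2 hδ)).const_mul |C|
    simpa using this
  obtain ⟨R, hR⟩ := eventually_atTop.1 (hl.eventually (gt_mem_nhds (half_pos hα)))
  have hne : (Metric.closedBall (0 : Euc n) |R|).Nonempty :=
    ⟨0, Metric.mem_closedBall_self (abs_nonneg R)⟩
  obtain ⟨x0, -, hmin⟩ := (isCompact_closedBall (0 : Euc n) |R|).exists_isMinOn hne hf.continuousOn
  refine ⟨min (f x0) (α / 2), lt_min (hpos x0) (half_pos hα), fun x => ?_⟩
  rcases le_or_gt ‖x‖ |R| with h | h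
  · exact (min_le_left _ _).trans (hmin (by simpa using h))
  · refine (min_le_right _ _).trans ?_
    have h3 := hR (jap x) ((le_abs_self R).trans (h.le.trans (norm_le_jap x)))
    have h4 : C * jap x ^ δ ≤ |C| * jap x ^ δ :=
      mul_le_mul_of_nonneg_right (le_abs_self C) (jap_rpow_pos x _).le
    have h5 := abs_le.1 (hd x)
    linarith [h5.1]

/-- The weighted Sobolev embedding of the barriers. -/
lemma SobW.decay (hn : 3 ≤ n) {k : ℕ} (hk : 1 ≤ k) (hp : (n : ℝ) < p) (h1 : 1 - (n : ℝ) < δ)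
    (h2 : δ < 0) {g : Euc n → ℝ} (hg : ContDiff ℝ (⊤ : ℕ∞) g) (h : SobW k p δ g < ⊤) :
    ∃ C : ℝ, 0 ≤ C ∧ ∀ x, |g x| ≤ C * jap x ^ δ := by
  have hp0 : 0 < p := lt_of_le_of_lt (Nat.cast_nonneg n) hp
  exact morrey hn hp h1 h2 hg (SobW.MW0 hp0 hg h) (SobW.MW1 hk hp0 hg h)

lemma LinfWM.bound {σ : Euc n → Matrix (Fin n) (Fin n) ℝ} (h : LinfWM δ σ < ⊤) :
    ∃ C : ℝ, 0 ≤ C ∧ ∀ x, frob (σ x) ≤ C * jap x ^ δ := by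
  refine ⟨(LinfWM δ σ).toReal, ENNReal.toReal_nonneg, fun x => ?_⟩
  have h1 : ENNReal.ofReal (jap x ^ (-δ) * frob (σ x)) ≤ LinfWM δ σ :=
    le_iSup (fun x => ENNReal.ofReal (jap x ^ (-δ) * frob (σ x))) x
  have h2 := (ENNReal.ofReal_le_iff_le_toReal h.ne).1 h1
  have h3 : jap x ^ δ * jap x ^ (-δ) = 1 := by rw [← jap_rpow_add]; simp
  calc frob (σ x) = (jap x ^ (-δ) * frob (σ x)) * jap x ^ δ := by
        rw [mul_right_comm, mul_comm (jap x ^ (-δ)), h3, one_mul]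
    _ ≤ _ := mul_le_mul_of_nonneg_right h2 (jap_rpow_pos x _).le

end Final

/-- **Sub/supersolution existence theorem (flat case of Theorem 5.1).** -/
theorem subsupersolution_existence (n : ℕ) (hn : 3 ≤ n) (p γ δ : ℝ)
    (hp : (n : ℝ) < p) (hγ1 : 2 - (n : ℝ) < γ) (hγ2 : γ < 0) (hδ : δ = γ / 2)
    (τ : Euc n → ℝ) (σ : Euc n → Matrix (Fin n) (Fin n) ℝ)
    (ρ : Euc n → ℝ) (J : Euc n → Euc n)
    (hτs : ContDiff ℝ (⊤ : ℕ∞) τ) (hτ : SobW 1 p (δ - 1) τ < ⊤)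
    (hσs : SmoothMat σ) (hσtt : SymTT σ) (hσ : LinfWM (δ - 1) σ < ⊤)
    (hρs : ContDiff ℝ (⊤ : ℕ∞) ρ) (hρ0 : ∀ x, 0 ≤ ρ x) (hρ : LpW p (2 * δ - 2) ρ < ⊤)
    (hJs : ContDiff ℝ (⊤ : ℕ∞) J) (hJ : LpW p (δ - 2) J < ⊤)
    (φm φp : Euc n → ℝ) (α η : ℝ) (hα : 0 < α) (hαη : α ≤ η)
    (hφms : ContDiff ℝ (⊤ : ℕ∞) φm) (hφps : ContDiff ℝ (⊤ : ℕ∞) φp)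
    (hφmW : SobW 2 p δ (fun x => φm x - α) < ⊤)
    (hφpW : SobW 2 p δ (fun x => φp x - η) < ⊤)
    (hφmpos : ∀ x, 0 < φm x) (hφmp : ∀ x, φm x ≤ φp x)
    (hsup : GlobalSuperSol p δ τ σ ρ J φp)
    (hsub : GlobalSubSol p δ τ σ ρ J φm) :
    ∃ (φ : Euc n → ℝ) (W : Euc n → Euc n),
      ContDiff ℝ (⊤ : ℕ∞) φ ∧ ContDiff ℝ (⊤ : ℕ∞) W ∧
      (∀ x, φm x ≤ φ x ∧ φ x ≤ φp x) ∧ SobW 2 p δ W < ⊤ ∧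
      HamEq τ σ ρ φ W ∧ MomEq τ J φ W ∧
      (∃ A > (0 : ℝ), SobW 2 p δ (fun x => φ x - A) < ⊤) := by
  have hn3 : (3 : ℝ) ≤ n := by exact_mod_cast hn
  have hp0 : 0 < p := by linarith
  have h1 : 2 - (n : ℝ) < δ := by rw [hδ]; linarith
  have h2 : δ < 0 := by rw [hδ]; linarith
  obtain ⟨C1, hC1, hdm⟩ := SobW.decay hn (by norm_num) hp (by linarith) h2
    (hφms.sub contDiff_const) hφmW
  obtain ⟨C2, hC2, hdp⟩ := SobW.decay hn (by norm_num) hp (by linarith) h2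
    (hφps.sub contDiff_const) hφpW
  obtain ⟨m, hm, hlow⟩ := exists_pos_lower hφms.continuous hφmpos hα h2 hdm
  have hj : ∀ x : Euc n, jap x ^ δ ≤ 1 := fun x => by
    have := jap_rpow_mono x h2.le
    rwa [Real.rpow_zero] at this
  have hhigh : ∀ x, φp x ≤ η + C2 := fun x => by
    have h3 := abs_le.1 (hdp x)
    nlinarith [h3.2, hj x]
  have D : Dat n p δ τ σ ρ J (m / 2) (η + C2 + 1) :=
    { hn := hn
      hp := hp
      h1 := h1
      h2 := h2
      τs := hτs
      σs := hσs
      ρs := hρs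
      Js := fun i => (contDiff_euclidean.1 hJs) i
      τd := fun i => by
        convert SobW.MW1 le_rfl hp0 hτs hτ i using 1; ring
      Jd := fun i => by
        convert LpW.MW hp0 ((contDiff_euclidean.1 hJs) i).continuous
          (fun x => abs_coord_le (J x) i) hJ using 1; ring
      ρd := by
        refine (LpW.MW hp0 hρs.continuous (fun x => le_rfl) hρ).mono_weight
          hρs.continuous.aestronglyMeasurable ?_
        linarith
      τb := SobW.decay hn le_rfl hp (by linarith) (by linarith) hτs hτ
      σb := LinfWM.bound hσ
      hm := half_pos hm
      hmM := by linarith [hlow 0, hφmp 0, hhigh 0] }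
  have hC : ∀ x : Euc n, C1 * jap x ^ δ ≤ (C1 + C2) * jap x ^ δ ∧
      C2 * jap x ^ δ ≤ (C1 + C2) * jap x ^ δ := fun x => by
    have := jap_rpow_pos x δ
    constructor <;> exact mul_le_mul_of_nonneg_right (by linarith) this.le
  obtain ⟨φ, W, h3, h4, h5, h6, h7, h8, h9⟩ := D.exists_solution (C := C1 + C2) hαη hφms hφps hφmp
    (fun x => by linarith [hlow x]) (fun x => by linarith [hhigh x])
    (fun x => (hdm x).trans (hC x).1) (fun x => (hdp x).trans (hC x).2) hsup hsub
  exact ⟨φ, W, h3, h4, h5, h6, h7, h8, α, hα, h9⟩
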